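/- Assume either (a) γ > 1 and n = 3, or (b) γ = 7/5 and n is an odd integer exceeding some sufficiently large absolute threshold N (the statement asserts the existence of such N). Let r satisfy 1 < r < r*(γ) and n < k(r) < n+1, and let (W^{(r)}, Z^{(r)}) be the power-series solution of the autonomous ODE system built from the recursively defined Taylor coefficients. Then there exists a smooth solution (W, Z) : [0, +∞) → ℝ² of the autonomous ODE system that agrees with (W^{(r)}, Z^{(r)}) on a neighborhood of ξ = 0 in [0, ∞), satisfies lim_{ξ→+∞} (W(ξ), Z(ξ)) = (0, 0), and for which D_W(W(ξ), Z(ξ)) > 0 and D_Z(W(ξ), Z(ξ)) > 0 for every ξ > 0. -/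

import Mathlib

/-!
Write `γ = 1 + 2 / ℓ`, `u = 1 / (1 + (W + Z) / 2)` and `q = (W - Z) u / (2 ℓ)`. In these variables
the lines `D_Z = 0` and `D_W = 0` are `q = ± 1`, the point `(W, Z) = (0, 0)` is `(u, q) = (1, 0)`,
and the sonic point is `(1 + v, 1)`, where `v` parametrizes `r` rationally: `r = 1 + cG ℓ v`. The
range `1 < r < r*` becomes `v ^ 2 < ℓ`, `3 v ^ 2 < ℓ ^ 2` (`exists_param`). All quantities at the
sonic point, including `k`, are then explicit (`k_eq`). In normalized variables `Y` (affine in `u`)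
and `E` (a multiple of `1 - q ^ 2`) the orbits near the sonic point satisfy
`E Y' = C (1 + ν (1 - η) Y) gQ`, `E E' = C (1 - 2 ν E) gP`, and the linear part at the origin has
eigenvalues `L < 1` and `S - L` with `k = (S - L) / L`. The power series is tangent to the
eigenvector of `L`.

*The power series.* Since `k` is not an integer, `|m - k| ≥ c m`, so the recursion has a convergent
majorant (`coeff_growth`), and comparison of jets gives the differential equation (`series_ode`).

*Reduction to a barrier.* A `Barrier` is a curve `E = T Y` on `[0, Y₁]` which the flow crosses
upwards (`gN > 0`), which agrees with the formal invariant curve to order `n`, and at whose end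
`gQ ≤ 0`. Let `D = E - T Y` along the solution. Then `ξ D' = k D + O(ξ ^ (n + 1))`, plus a positive
term. As `n < k` and `k` is no integer, all jets of `D` up to order `n` vanish; as `k < n + 1`,
the function `ξ ^ (-k) D` tends to `0`; it increases, so `D > 0` (`contact`). From then on the orbit
stays above the barrier while `u` increases, hence the sign of `u'` changes before `Y₁` (`phase1`).
At that moment the damping rate `dL` of `q` is positive. The region reached is invariant, `q` decays
exponentially there, and a Lyapunov function gives `(u, q) → (1, 0)` (`phase2_tendsto`). Throughout
`u > 0` and `0 < q < 1`, so `D_W` and `D_Z` stay positive.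

*The barrier for `n = 3`.* It is the rational function `T = Y (h - κ Y) / Ψ` with
`Ψ = ρ + Y + Θ`, `Θ = 1 - L + t Y - q Y ^ 2`; then `gQ = Y (h - κ Y) Θ / Ψ`, which
vanishes at the root of `Θ`. The parameters `t` and `q` remove the two lowest nontrivial orders of
the residual (`res3_identity`). Positivity of the remaining polynomial follows from a few
inequalities in the two parameters `η = 1 / (ℓ + 1)` and `w = v (ℓ + 1) / ℓ`, valid where
`3 < k < 4`. The parameters range over a compact rectangle, and the inequalities are verified by
interval arithmetic and bisection (`bisect_all`).

*The barrier for `γ = 7/5` and large odd `n`.* Here `k > n` forces `L`, hence `h`, to be tiny, so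
`v` is extremely close to `√5`. The barrier is the Taylor polynomial of degree `n` of the formal
invariant curve, `T = ∑ (-1) ^ (m + 1) e_m Y ^ m`, for which the residual vanishes to order `n` by
construction. All `e_m` with `2 ≤ m ≤ n` are positive, and
`β (m + 50) e_{m - 1} ≤ (S - (m + 1) L) e_m ≤ β (m + 537) e_{m - 1}`
with a constant `β` near `0.0075`. For `m ≤ 500` this is an interval computation (`base_test`), for
larger `m` an induction in which the quadratic terms are controlled by monotonicity of the ratios
(`Rec.step`). The end point is defined by `e_n Y₁ ^ (n - 1) = L`. There, all terms of `T` strictly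
between the second and the last are negligible (`Rat.final`): factorial growth of `e_m`
makes only the ends of the sum matter. Therefore the coefficient of `Y ^ (n + 1)` in the residual
dominates, and its sign is positive because `n` is odd (`Rec.lead`, `Rec.gN_pos`).
-/

noncomputable section

open Real Filter Set Topology

namespace SelfSimilarImplosion

/-- `α = (γ−1)/2`. -/
def alphaF (γ : ℝ) : ℝ := (γ - 1) / 2

/-- `D_W(W,Z) = 1 + (1/2)(W + Z + α(W − Z))`. -/
def DW (γ W Z : ℝ) : ℝ := 1 + (1 / 2) * (W + Z + alphaF γ * (W - Z))

/-- `D_Z(W,Z) = 1 + (1/2)(W + Z − α(W − Z))`. -/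
def DZ (γ W Z : ℝ) : ℝ := 1 + (1 / 2) * (W + Z - alphaF γ * (W - Z))

/-- `N_W(W,Z) = −(r + (1/2)((1+2α)W + (1−α)Z))·W + (α/2)Z²`. -/
def NW (γ r W Z : ℝ) : ℝ :=
  -(r + (1 / 2) * ((1 + 2 * alphaF γ) * W + (1 - alphaF γ) * Z)) * W + (alphaF γ / 2) * Z ^ 2

/-- `N_Z(W,Z) = −(r + (1/2)((1−α)W + (1+2α)Z))·Z + (α/2)W²`. -/
def NZ (γ r W Z : ℝ) : ℝ :=
  -(r + (1 / 2) * ((1 - alphaF γ) * W + (1 + 2 * alphaF γ) * Z)) * Z + (alphaF γ / 2) * W ^ 2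

/-- The critical self-similar exponent `r*(γ)`. -/
def rStar (γ : ℝ) : ℝ :=
  if γ < 5 / 3 then 1 + 2 / (Real.sqrt (2 / (γ - 1)) + 1) ^ 2
  else (3 * γ - 1) / (2 + Real.sqrt 3 * (γ - 1))

/-- `ℛ₁`. -/
def R1 (γ r : ℝ) : ℝ :=
  Real.sqrt (γ ^ 2 * (r - 3) ^ 2 - 2 * γ * (3 * r ^ 2 - 6 * r + 7) + 9 * r ^ 2 - 14 * r + 9)

/-- First coordinate `W₀` of the sonic point `P_s`. -/
def W₀ (γ r : ℝ) : ℝ :=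
  (γ ^ 2 * r + (γ + 1) * R1 γ r - 3 * γ ^ 2 - 2 * γ * r + 10 * γ - 3 * r - 3) / (4 * (γ - 1) ^ 2)

/-- Second coordinate `Z₀` of the sonic point `P_s`. -/
def Z₀ (γ r : ℝ) : ℝ :=
  (γ ^ 2 * r + (γ - 3) * R1 γ r - 3 * γ ^ 2 - 6 * γ * r + 6 * γ + 9 * r - 7) / (4 * (γ - 1) ^ 2)

/-- `ℛ₂`. -/
def R2 (γ r : ℝ) : ℝ :=
  (1 / (γ - 1)) *
    Real.sqrt (γ * ((76 - 27 * γ) * γ - 71) - (3 * γ - 5) * ((γ - 5) * γ + 2) * r ^ 2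
      + (γ * (γ * (18 * γ - 52) + 50) - 8) * r
      + R1 γ r * (9 * (γ - 2) * γ + ((2 - 3 * γ) * γ + 5) * r + 5) + 18)

/-- The first Taylor coefficient `W₁`. -/
def W₁ (γ r : ℝ) : ℝ :=
  (γ * (-3 * (R1 γ r + 6) - 3 * γ * (r - 3) + 2 * r) + R1 γ r + 5 * r + 5) / (4 * (γ - 1) ^ 2)

/-- The first Taylor coefficient `Z₁`. -/
def Z₁ (γ r : ℝ) : ℝ :=
  (-(3 * γ ^ 3 - 7 * γ ^ 2 + γ + 11) * r
      + γ * (γ * (9 * γ - 3 * R1 γ r - 25) + 10 * R1 γ r - 4 * (γ - 1) * R2 γ r + 27)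
      - 3 * R1 γ r + 4 * (γ - 1) * R2 γ r - 3)
    / (4 * (γ - 1) ^ 2 * (γ + 1))

/-- The eigenvalue-ratio function `k(r)`. -/
def kFun (γ r : ℝ) : ℝ :=
  (-4 + (1 + γ) * (r - 1) / (γ - 1) - R2 γ r) / (-4 + (1 + γ) * (r - 1) / (γ - 1) + R2 γ r)

/-- The self-similar profile equation for a function `𝒲` of `ζ`. -/
def ProfileEqn (γ r : ℝ) (Wc : ℝ → ℝ) (ζ : ℝ) : Prop :=
  (r - 1) * Wc ζ
      + (ζ + (1 / 2) * (Wc ζ - Wc (-ζ) + alphaF γ * (Wc ζ + Wc (-ζ)))) * deriv Wc ζ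
      + (alphaF γ / (2 * ζ)) * ((Wc ζ) ^ 2 - (Wc (-ζ)) ^ 2) = 0

/-- `(W, Z)` solves the autonomous ODE system on the set `s`. -/
def IsOdeSolutionOn (γ r : ℝ) (W Z : ℝ → ℝ) (s : Set ℝ) : Prop :=
  ∀ ξ ∈ s,
    DW γ (W ξ) (Z ξ) * deriv W ξ = NW γ r (W ξ) (Z ξ) ∧
    DZ γ (W ξ) (Z ξ) * deriv Z ξ = NZ γ r (W ξ) (Z ξ)

/-- The `Z`-partial derivative of `N_Z` at `(W, Z)`. -/
def pZNZ (γ r W Z : ℝ) : ℝ :=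
  -(r + (1 / 2) * ((1 - alphaF γ) * W + (1 + 2 * alphaF γ) * Z)) - ((1 + 2 * alphaF γ) / 2) * Z

/-- `∂_W N_W(W,Z)`. -/
def gradNW1 (γ r W Z : ℝ) : ℝ := -r - (1 + 2 * alphaF γ) * W - ((1 - alphaF γ) / 2) * Z

/-- `∂_Z N_W(W,Z)`. -/
def gradNW2 (γ W Z : ℝ) : ℝ := -((1 - alphaF γ) / 2) * W + alphaF γ * Z

/-- `∂_W N_Z(W,Z)`. -/
def gradNZ1 (γ W Z : ℝ) : ℝ := alphaF γ * W - ((1 - alphaF γ) / 2) * Z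

/-- `∂_Z N_Z(W,Z)`. -/
def gradNZ2 (γ r W Z : ℝ) : ℝ := -r - ((1 - alphaF γ) / 2) * W - (1 + 2 * alphaF γ) * Z

/-- The quadratic form `(a,b)·HN_W·(c,d)ᵀ` of the constant Hessian of `N_W`. -/
def hessNW (γ a b c d : ℝ) : ℝ :=
  -(1 + 2 * alphaF γ) * a * c - ((1 - alphaF γ) / 2) * (a * d + b * c) + alphaF γ * b * d

/-- The quadratic form `(a,b)·HN_Z·(c,d)ᵀ` of the constant Hessian of `N_Z`. -/
def hessNZ (γ a b c d : ℝ) : ℝ :=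
  alphaF γ * a * c - ((1 - alphaF γ) / 2) * (a * d + b * c) - (1 + 2 * alphaF γ) * b * d

/-- `D_{W,m}` computed from the sequences `(W_m)`, `(Z_m)`. -/
def DWseq (γ : ℝ) (Ws Zs : ℕ → ℝ) : ℕ → ℝ
  | 0 => DW γ (Ws 0) (Zs 0)
  | m + 1 => ((1 + alphaF γ) / 2) * Ws (m + 1) + ((1 - alphaF γ) / 2) * Zs (m + 1)

/-- `D_{Z,m}` computed from the sequences `(W_m)`, `(Z_m)`. -/
def DZseq (γ : ℝ) (Ws Zs : ℕ → ℝ) : ℕ → ℝ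
  | 0 => DZ γ (Ws 0) (Zs 0)
  | m + 1 => ((1 - alphaF γ) / 2) * Ws (m + 1) + ((1 + alphaF γ) / 2) * Zs (m + 1)

/-- `N_{W,m}` computed from the sequences `(W_m)`, `(Z_m)`. -/
def NWseq (γ r : ℝ) (Ws Zs : ℕ → ℝ) : ℕ → ℝ
  | 0 => NW γ r (Ws 0) (Zs 0)
  | m + 1 =>
      gradNW1 γ r (Ws 0) (Zs 0) * Ws (m + 1) + gradNW2 γ (Ws 0) (Zs 0) * Zs (m + 1)
        + ∑ j ∈ Finset.Ico 1 (m + 1),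
            (Nat.choose m (j - 1) : ℝ) * hessNW γ (Ws (m + 1 - j)) (Zs (m + 1 - j)) (Ws j) (Zs j)

/-- `N_{Z,m}` computed from the sequences `(W_m)`, `(Z_m)`. -/
def NZseq (γ r : ℝ) (Ws Zs : ℕ → ℝ) : ℕ → ℝ
  | 0 => NZ γ r (Ws 0) (Zs 0)
  | m + 1 =>
      gradNZ1 γ (Ws 0) (Zs 0) * Ws (m + 1) + gradNZ2 γ r (Ws 0) (Zs 0) * Zs (m + 1)
        + ∑ j ∈ Finset.Ico 1 (m + 1),
            (Nat.choose m (j - 1) : ℝ) * hessNZ γ (Ws (m + 1 - j)) (Zs (m + 1 - j)) (Ws j) (Zs j)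

/-- The recursively defined Taylor coefficients `(W_m, Z_m)` of the smooth solution at the
sonic point `P_s`, following Proposition 2.2 (`eq:Wn`–`eq:Zn`). -/
def coeff (γ r : ℝ) : ℕ → ℝ × ℝ
  | 0 => (W₀ γ r, Z₀ γ r)
  | 1 => (W₁ γ r, Z₁ γ r)
  | m + 2 =>
      let pW : ℕ → ℝ := fun j => if _h : j < m + 2 then (coeff γ r j).1 else 0
      let pZ : ℕ → ℝ := fun j => if _h : j < m + 2 then (coeff γ r j).2 else 0
      let newW : ℝ :=
        (NWseq γ r pW pZ (m + 1)
            - ∑ j ∈ Finset.range (m + 1),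
                (Nat.choose (m + 1) j : ℝ) * DWseq γ pW pZ (m + 1 - j) * pW (j + 1))
          / DWseq γ pW pZ 0
      let newZ : ℝ :=
        (-(∑ j ∈ Finset.Ico 1 (m + 1),
              (Nat.choose (m + 2) j : ℝ) * DZseq γ pW pZ (m + 2 - j) * pZ (j + 1))
            + (gradNZ1 γ (pW 0) (pZ 0) * newW
                + ∑ j ∈ Finset.Ico 1 (m + 2),
                    (Nat.choose (m + 1) (j - 1) : ℝ)
                      * hessNZ γ (pW (m + 2 - j)) (pZ (m + 2 - j)) (pW j) (pZ j))
            - Z₁ γ r * newW * ((1 - alphaF γ) / 2))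
          / (DZseq γ pW pZ 1 * (((m : ℝ) + 2) - kFun γ r))
      (newW, newZ)
  termination_by n => n
  decreasing_by all_goals omega

/-- The power series `W^{(r)}(ξ) = Σ_{i≥0} W_i ξ^i / i!`. -/
def Wfun (γ r ξ : ℝ) : ℝ := ∑' i : ℕ, (coeff γ r i).1 * ξ ^ i / (Nat.factorial i : ℝ)

/-- The power series `Z^{(r)}(ξ) = Σ_{i≥0} Z_i ξ^i / i!`. -/
def Zfun (γ r ξ : ℝ) : ℝ := ∑' i : ℕ, (coeff γ r i).2 * ξ ^ i / (Nat.factorial i : ℝ)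

/-! ### Continuation and comparison for planar differential equations -/

/-- A bounded globally Lipschitz autonomous field has a solution on all of `ℝ`. -/
lemma exists_global_of_lipschitz {E : Type*} [NormedAddCommGroup E] [NormedSpace ℝ E]
    [CompleteSpace E] (g : E → E) (K L : NNReal) (hK : LipschitzWith K g)
    (hL : ∀ x, ‖g x‖ ≤ L) (x₀ : E) :
    ∃ p : ℝ → E, p 0 = x₀ ∧ ∀ t, HasDerivAt p (g (p t)) t := by
  have key : ∀ N : ℕ, ∃ p : ℝ → E, p 0 = x₀ ∧
      ∀ t ∈ Ioo (-((N : ℝ) + 1)) ((N : ℝ) + 1), HasDerivAt p (g (p t)) t := by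
    intro N
    have h0 : (0 : ℝ) ∈ Icc (-((N : ℝ) + 1)) ((N : ℝ) + 1) := by
      constructor <;> [have := N.cast_nonneg (α := ℝ); have := N.cast_nonneg (α := ℝ)] <;> linarith
    have hPL : IsPicardLindelof (fun _ => g) (⟨0, h0⟩ : Icc (-((N : ℝ) + 1)) ((N : ℝ) + 1)) x₀
        (L * (N + 1)) 0 L K := by
      refine IsPicardLindelof.of_time_independent (fun x _ => hL x) hK.lipschitzOnWith ?_
      simp
    obtain ⟨p, hp0, hp⟩ := hPL.exists_eq_forall_mem_Icc_hasDerivWithinAt₀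
    refine ⟨p, hp0, fun t ht => (hp t ⟨ht.1.le, ht.2.le⟩).hasDerivAt (Icc_mem_nhds ht.1 ht.2)⟩
  choose P hP0 hP using key
  have agree : ∀ M N : ℕ, M ≤ N → EqOn (P M) (P N) (Ioo (-((M : ℝ) + 1)) ((M : ℝ) + 1)) := by
    intro M N hMN
    have hc : (M : ℝ) ≤ N := by exact_mod_cast hMN
    have hM := M.cast_nonneg (α := ℝ)
    refine ODE_solution_unique_of_mem_Ioo (v := fun _ => g) (s := fun _ => univ) (t₀ := 0)
      (fun t _ => hK.lipschitzOnWith) ⟨by linarith, by linarith⟩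
      (fun t ht => ⟨hP M t ht, trivial⟩)
      (fun t ht => ⟨hP N t ⟨by linarith [ht.1], by linarith [ht.2]⟩, trivial⟩)
      (by rw [hP0, hP0])
  refine ⟨fun t => P ⌈|t|⌉₊ t, by simp [hP0], fun t => ?_⟩
  set N := ⌈|t|⌉₊ with hN
  have hNt : |t| ≤ N := Nat.le_ceil _
  have hmem : t ∈ Ioo (-((N : ℝ) + 1)) ((N : ℝ) + 1) := by
    constructor <;> [have := neg_abs_le t; have := le_abs_self t] <;> linarith
  refine (hP N t hmem).congr_of_eventuallyEq ?_
  filter_upwards [isOpen_Ioo.mem_nhds hmem] with s hs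
  have hs' : s ∈ Ioo (-((⌈|s|⌉₊ : ℝ) + 1)) ((⌈|s|⌉₊ : ℝ) + 1) := by
    have h1 : |s| ≤ ⌈|s|⌉₊ := Nat.le_ceil _
    constructor <;> [have := neg_abs_le s; have := le_abs_self s] <;> linarith
  rcases le_total ⌈|s|⌉₊ N with h | h
  · exact agree _ _ h hs'
  · exact (agree _ _ h hs).symm

/-- Continuation principle in a box: if every solution that stays in the closed box up to time `T`
is at time `T` in the open box, then the solution exists for all positive times in the box. -/
lemma exists_global_of_apriori (f : ℝ × ℝ → ℝ × ℝ) (a₁ b₁ a₂ b₂ : ℝ) (h₁ : a₁ ≤ b₁) (h₂ : a₂ ≤ b₂)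
    (U : Set (ℝ × ℝ)) (hU : IsOpen U) (hsub : Icc a₁ b₁ ×ˢ Icc a₂ b₂ ⊆ U)
    (hf : ContDiffOn ℝ 1 f U) (x₀ : ℝ × ℝ) (hx : x₀ ∈ Ioo a₁ b₁ ×ˢ Ioo a₂ b₂)
    (hap : ∀ (p : ℝ → ℝ × ℝ) (T : ℝ), 0 ≤ T → p 0 = x₀ →
      (∀ t ∈ Icc 0 T, p t ∈ Icc a₁ b₁ ×ˢ Icc a₂ b₂) →
      (∀ t ∈ Icc 0 T, HasDerivAt p (f (p t)) t) → p T ∈ Ioo a₁ b₁ ×ˢ Ioo a₂ b₂) :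
    ∃ p : ℝ → ℝ × ℝ, p 0 = x₀ ∧ (∀ t, 0 ≤ t → p t ∈ Icc a₁ b₁ ×ˢ Icc a₂ b₂) ∧
      ∀ t, 0 ≤ t → HasDerivAt p (f (p t)) t := by
  set B : Set (ℝ × ℝ) := Icc a₁ b₁ ×ˢ Icc a₂ b₂ with hB
  have hBc : IsCompact B := isCompact_Icc.prod isCompact_Icc
  have hBne : B.Nonempty := ⟨(a₁, a₂), ⟨⟨le_rfl, h₁⟩, ⟨le_rfl, h₂⟩⟩⟩
  let cl : ℝ × ℝ → ℝ × ℝ := fun x => ((projIcc a₁ b₁ h₁ x.1 : ℝ), (projIcc a₂ b₂ h₂ x.2 : ℝ))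
  have hclB : ∀ x, cl x ∈ B := fun x => ⟨(projIcc a₁ b₁ h₁ x.1).2, (projIcc a₂ b₂ h₂ x.2).2⟩
  have hclid : ∀ x ∈ B, cl x = x := by
    rintro ⟨x, y⟩ ⟨hx, hy⟩
    simp only [cl]
    rw [projIcc_of_mem h₁ hx, projIcc_of_mem h₂ hy]
  have hclL : LipschitzWith 1 cl := by
    have e1 : LipschitzWith 1 (fun x : ℝ × ℝ => (projIcc a₁ b₁ h₁ x.1 : ℝ)) := by
      have := (LipschitzWith.subtype_val _).comp ((LipschitzWith.projIcc h₁).comp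
        (LipschitzWith.prod_fst (α := ℝ) (β := ℝ)))
      rw [one_mul, one_mul] at this
      exact this
    have e2 : LipschitzWith 1 (fun x : ℝ × ℝ => (projIcc a₂ b₂ h₂ x.2 : ℝ)) := by
      have := (LipschitzWith.subtype_val _).comp ((LipschitzWith.projIcc h₂).comp
        (LipschitzWith.prod_snd (α := ℝ) (β := ℝ)))
      rw [one_mul, one_mul] at this
      exact this
    simpa using e1.prodMk e2
  obtain ⟨K, hK⟩ : ∃ K, LipschitzOnWith K f B := by
    refine LocallyLipschitzOn.exists_lipschitzOnWith_of_compact hBc ?_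
    intro x hxB
    obtain ⟨K, s, hs, hl⟩ := (hf.contDiffAt (hU.mem_nhds (hsub hxB))).exists_lipschitzOnWith
    exact ⟨K, s, mem_nhdsWithin_of_mem_nhds hs, hl⟩
  have hgL : LipschitzWith K (f ∘ cl) := by
    intro x y
    have := hK (hclB x) (hclB y)
    refine this.trans ?_
    have h3 := hclL x y
    simp only [ENNReal.coe_one, one_mul] at h3
    gcongr
  obtain ⟨L, hL⟩ := hBc.exists_bound_of_continuousOn hK.continuousOn
  obtain ⟨p, hp0, hp⟩ := exists_global_of_lipschitz (f ∘ cl) K (Real.toNNReal L) hgL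
    (fun x => (hL _ (hclB x)).trans (Real.le_coe_toNNReal L)) x₀
  have hpc : Continuous p := continuous_iff_continuousAt.2 fun t => (hp t).continuousAt
  have hin : ∀ t, 0 ≤ t → p t ∈ B := by
    by_contra! hcon
    obtain ⟨t₁, ht₁, ht₁B⟩ := hcon
    let S : Set ℝ := {t | 0 ≤ t ∧ p t ∉ Ioo a₁ b₁ ×ˢ Ioo a₂ b₂}
    have hSc : IsClosed S := by
      have : IsOpen (Ioo a₁ b₁ ×ˢ Ioo a₂ b₂ : Set (ℝ × ℝ)) := isOpen_Ioo.prod isOpen_Ioo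
      exact isClosed_Ici.inter ((this.preimage hpc).isClosed_compl)
    have hSne : S.Nonempty := ⟨t₁, ht₁, fun h => ht₁B
      ⟨⟨h.1.1.le, h.1.2.le⟩, ⟨h.2.1.le, h.2.2.le⟩⟩⟩
    have hSb : BddBelow S := ⟨0, fun t ht => ht.1⟩
    have hmem := hSc.csInf_mem hSne hSb
    set T := sInf S with hT
    have hlt : ∀ t ∈ Ico 0 T, p t ∈ Ioo a₁ b₁ ×ˢ Ioo a₂ b₂ := by
      intro t ht
      by_contra h
      exact absurd (csInf_le hSb (show t ∈ S from ⟨ht.1, h⟩)) (not_le.2 ht.2)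
    have hTpos : 0 < T := by
      rcases hmem.1.lt_or_eq with h | h
      · exact h
      · exfalso; apply hmem.2; rw [← h, hp0]; exact hx
    have hle : ∀ t ∈ Icc 0 T, p t ∈ B := by
      intro t ht
      rcases ht.2.lt_or_eq with h | h
      · have := hlt t ⟨ht.1, h⟩
        exact ⟨⟨this.1.1.le, this.1.2.le⟩, ⟨this.2.1.le, this.2.2.le⟩⟩
      · have hcl : p T ∈ closure B := by
          have : Tendsto p (𝓝[<] T) (𝓝 (p T)) := hpc.continuousAt.tendsto.mono_left nhdsWithin_le_nhds
          refine mem_closure_of_tendsto this ?_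
          filter_upwards [Ioo_mem_nhdsLT hTpos] with s hs
          have := hlt s ⟨hs.1.le, hs.2⟩
          exact ⟨⟨this.1.1.le, this.1.2.le⟩, ⟨this.2.1.le, this.2.2.le⟩⟩
        rw [h]; rwa [hBc.isClosed.closure_eq] at hcl
    exact hmem.2 (hap p T hTpos.le hp0 hle fun t ht => by
      have := hp t
      simpa [Function.comp, hclid _ (hle t ht)] using this)
  refine ⟨p, hp0, hin, fun t ht => ?_⟩
  have := hp t
  simpa [Function.comp, hclid _ (hin t ht)] using this

/-- First-contact argument: a function which is positive initially and has positive derivative at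
every zero that it would reach from above stays positive. -/
lemma pos_of_barrier {g g' : ℝ → ℝ} {s T : ℝ}
    (hd : ∀ t ∈ Icc s T, HasDerivAt g (g' t) t) (h0 : 0 < g s)
    (hb : ∀ t ∈ Ioc s T, (∀ τ ∈ Ico s t, 0 < g τ) → g t = 0 → 0 < g' t) :
    ∀ t ∈ Icc s T, 0 < g t := by
  by_contra! hcon
  obtain ⟨t₁, ht₁, hneg⟩ := hcon
  have hc : ContinuousOn g (Icc s t₁) := fun t ht =>
    (hd t ⟨ht.1, ht.2.trans ht₁.2⟩).continuousAt.continuousWithinAt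
  let S : Set ℝ := Icc s t₁ ∩ g ⁻¹' (Iic 0)
  have hSc : IsClosed S := hc.preimage_isClosed_of_isClosed isClosed_Icc isClosed_Iic
  have hSne : S.Nonempty := ⟨t₁, ⟨ht₁.1, le_rfl⟩, hneg⟩
  have hSb : BddBelow S := ⟨s, fun t ht => ht.1.1⟩
  have hmem := hSc.csInf_mem hSne hSb
  set t := sInf S with hT
  have hlt : ∀ τ ∈ Ico s t, 0 < g τ := by
    intro τ hτ
    by_contra h
    exact absurd (csInf_le hSb (show τ ∈ S from ⟨⟨hτ.1, hτ.2.le.trans hmem.1.2⟩, not_lt.1 h⟩))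
      (not_le.2 hτ.2)
  have hst : s < t := by
    rcases hmem.1.1.lt_or_eq with h | h
    · exact h
    · exfalso; have := hmem.2; rw [← h] at this; exact absurd h0 (not_lt.2 this)
  have htT : t ∈ Icc s T := ⟨hst.le, hmem.1.2.trans ht₁.2⟩
  have hg0 : g t = 0 := by
    refine le_antisymm hmem.2 ?_
    have : Tendsto g (𝓝[<] t) (𝓝 (g t)) := (hd t htT).continuousAt.tendsto.mono_left nhdsWithin_le_nhds
    refine ge_of_tendsto this ?_
    filter_upwards [Ioo_mem_nhdsLT hst] with τ hτ using (hlt τ ⟨hτ.1.le, hτ.2⟩).le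
  have hpos := hb t ⟨hst, htT.2⟩ hlt hg0
  have hslope := (hd t htT).tendsto_slope
  have h2 : Tendsto (slope g t) (𝓝[<] t) (𝓝 (g' t)) :=
    hslope.mono_left (nhdsWithin_mono _ fun x hx => ne_of_lt hx)
  have h3 : g' t ≤ 0 := by
    refine le_of_tendsto h2 ?_
    filter_upwards [Ioo_mem_nhdsLT hst] with τ hτ
    rw [slope_def_field, hg0]
    have := hlt τ ⟨hτ.1.le, hτ.2⟩
    exact div_nonpos_of_nonneg_of_nonpos (by linarith) (by linarith [hτ.2])
  linarith

/-- If `f` has nonpositive derivative wherever it exceeds the level `c`, it never exceeds a level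
`d ≥ c` that bounds it initially. -/
lemma le_of_deriv_nonpos_above {f f' : ℝ → ℝ} {s T d : ℝ}
    (hd : ∀ t ∈ Icc s T, HasDerivAt f (f' t) t) (h0 : f s ≤ d)
    (hb : ∀ t ∈ Icc s T, d < f t → f' t ≤ 0) : ∀ t ∈ Icc s T, f t ≤ d := by
  intro t ht
  refine le_of_forall_pos_le_add fun ε hε => ?_
  set η := ε / (2 * (1 + (T - s))) with hη
  have hTs : 0 ≤ T - s := by linarith [ht.1, ht.2]
  have hη0 : 0 < η := by positivity
  have hpos := pos_of_barrier (g := fun t => d + η * (1 + (t - s)) - f t)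
    (g' := fun t => η - f' t) (s := s) (T := T) ?_ ?_ ?_ t ht
  · have h1 : η * (1 + (t - s)) ≤ ε := by
      calc η * (1 + (t - s)) ≤ η * (2 * (1 + (T - s))) := by
            gcongr; linarith [ht.1, ht.2]
        _ = ε := by rw [hη]; field_simp
    have : 0 < d + η * (1 + (t - s)) - f t := hpos
    linarith
  · intro x hx
    have h1 : HasDerivAt (fun t : ℝ => d + η * (1 + (t - s))) η x := by
      have := (((hasDerivAt_id x).sub_const s).const_add 1).const_mul η |>.const_add d
      simpa using this
    exact h1.sub (hd x hx)
  · show 0 < d + η * (1 + (s - s)) - f s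
    have : η * (1 + (s - s)) = η := by ring
    linarith
  · intro x hx _ hx0
    have hx0' : d + η * (1 + (x - s)) - f x = 0 := hx0
    have h2 : 0 < η * (1 + (x - s)) := by
      have : 0 < 1 + (x - s) := by linarith [hx.1]
      positivity
    have := hb x ⟨hx.1.le, hx.2⟩ (by linarith)
    show 0 < η - f' x
    linarith

/-! ### The system in the variables `(u, q)` -/

section

lemma exists_first_mem {C : Set ℝ} {s T : ℝ} (hC : IsClosed (Icc s T ∩ C))
    (hne : (Icc s T ∩ C).Nonempty) :
    ∃ t ∈ Icc s T, t ∈ C ∧ ∀ τ ∈ Ico s t, τ ∉ C := by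
  have hSb : BddBelow (Icc s T ∩ C) := ⟨s, fun t ht => ht.1.1⟩
  have hmem := hC.csInf_mem hne hSb
  refine ⟨_, hmem.1, hmem.2, fun τ hτ hτC => ?_⟩
  exact absurd (csInf_le hSb ⟨⟨hτ.1, hτ.2.le.trans hmem.1.2⟩, hτC⟩) (not_le.2 hτ.2)

/-- The numerator `X₁` of `-u'/u`. -/
def dX (l g u q : ℝ) : ℝ := (u - 1) * (1 + g * u) - ((3 - l * g) * u - 3) * q ^ 2

/-- The damping rate `λ(u)` of `q`. -/
def dL (l g u : ℝ) : ℝ := (l + 3 - (3 - l * g) * u) / l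

/-- `u' = uF`. -/
def uF (l g u q : ℝ) : ℝ := -(u * dX l g u q / (1 - q ^ 2))

/-- `q' = qF`. -/
def qF (l g u q : ℝ) : ℝ := -(q * ((1 + 1 / l) * dX l g u q / (1 - q ^ 2) + dL l g u))

/-- `(u, q)` solves the system at all times of `s` and takes values in the physical range. -/
def Sol (l g : ℝ) (u q : ℝ → ℝ) (s : Set ℝ) : Prop :=
  ∀ t ∈ s, HasDerivAt u (uF l g (u t) (q t)) t ∧ HasDerivAt q (qF l g (u t) (q t)) t ∧
    0 < u t ∧ 0 < q t ∧ q t < 1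

section
variable {l g : ℝ} {u q : ℝ → ℝ}

lemma Sol.mono {s s' : Set ℝ} (h : Sol l g u q s) (hs : s' ⊆ s) : Sol l g u q s' :=
  fun t ht => h t (hs ht)

lemma one_sub_sq_pos {x : ℝ} (h0 : 0 < x) (h1 : x < 1) : 0 < 1 - x ^ 2 := by nlinarith

lemma hasDerivAt_dX {t u' q' : ℝ} (hu : HasDerivAt u u' t) (hq : HasDerivAt q q' t) :
    HasDerivAt (fun t => dX l g (u t) (q t))
      ((1 + g * u t + (u t - 1) * g - (3 - l * g) * q t ^ 2) * u'
        - ((3 - l * g) * u t - 3) * (2 * q t * q')) t := by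
  unfold dX
  have h1 := ((hu.sub_const 1).mul ((hu.const_mul g).const_add 1)).sub
    (((hu.const_mul (3 - l * g)).sub_const 3).mul (hq.pow 2))
  exact h1.congr_deriv (by rw [Pi.pow_apply]; push_cast; ring)

lemma Sol.continuousOn_u {s : Set ℝ} (h : Sol l g u q s) : ContinuousOn u s :=
  fun t ht => (h t ht).1.continuousAt.continuousWithinAt

lemma Sol.continuousOn_q {s : Set ℝ} (h : Sol l g u q s) : ContinuousOn q s :=
  fun t ht => (h t ht).2.1.continuousAt.continuousWithinAt

lemma Sol.continuousOn_dX {s : Set ℝ} (h : Sol l g u q s) :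
    ContinuousOn (fun t => dX l g (u t) (q t)) s := by
  have h1 := h.continuousOn_u
  have h2 := h.continuousOn_q
  unfold dX
  fun_prop

/-- At a zero of `X₁` with `u > 1`, the flow enters `X₁ > 0`. -/
lemma dX_deriv_pos {U Q : ℝ} (hl : 0 < l) (hg : 0 < g) (hX : dX l g U Q = 0) (hU : 1 < U)
    (hUl : (3 - l * g) * U < l + 3) :
    0 < (1 + g * U + (U - 1) * g - (3 - l * g) * Q ^ 2) * uF l g U Q
        - ((3 - l * g) * U - 3) * (2 * Q * qF l g U Q) := by
  have h1 : 0 < (U - 1) * (1 + g * U) := by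
    have : 0 < g * U := by positivity
    exact mul_pos (by linarith) (by linarith)
  have h2 : ((3 - l * g) * U - 3) * Q ^ 2 = (U - 1) * (1 + g * U) := by
    unfold dX at hX; linarith
  have hL : 0 < dL l g U := by unfold dL; exact div_pos (by linarith) hl
  have e : (1 + g * U + (U - 1) * g - (3 - l * g) * Q ^ 2) * uF l g U Q
        - ((3 - l * g) * U - 3) * (2 * Q * qF l g U Q)
      = 2 * (((3 - l * g) * U - 3) * Q ^ 2) * dL l g U := by
    unfold uF qF; rw [hX]; ring
  rw [e, h2]; positivity

/-- The region `{X₁ > 0, u < u_λ} ∪ {u < 1}` is entered from `X₁ = 0` and never left. -/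
lemma region_invariant (hl : 0 < l) (hg : 0 < g) (hb : l * g < 3) {s T : ℝ}
    (hsol : Sol l g u q (Icc s T)) (hX : dX l g (u s) (q s) = 0) (hu1 : 1 < u s)
    (hul : (3 - l * g) * u s < l + 3) :
    ∀ t ∈ Ioc s T, (0 < dX l g (u t) (q t) ∧ (3 - l * g) * u t < l + 3) ∨ u t < 1 := by
  by_contra! hcon
  obtain ⟨t₀, ht₀, hbad⟩ := hcon
  have hsT : s ∈ Icc s T := ⟨le_rfl, ht₀.1.le.trans ht₀.2⟩
  -- initially the region is entered
  have hDs := hasDerivAt_dX (l := l) (g := g) (hsol s hsT).1 (hsol s hsT).2.1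
  have hDpos := dX_deriv_pos hl hg hX hu1 hul
  have hev : ∀ᶠ t in 𝓝[>] s, 0 < dX l g (u t) (q t) := by
    have h1 := hDs.tendsto_slope
    have h2 := h1.mono_left (nhdsWithin_mono s (fun x hx => ne_of_gt hx : Ioi s ⊆ {s}ᶜ))
    filter_upwards [h2.eventually (lt_mem_nhds hDpos), self_mem_nhdsWithin] with t ht hts
    rw [slope_def_field, hX] at ht
    have hts' : 0 < t - s := sub_pos.2 hts
    have := (div_pos_iff_of_pos_right hts').1 ht
    linarith
  have hev2 : ∀ᶠ t in 𝓝[>] s, (3 - l * g) * u t < l + 3 := by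
    have hc : ContinuousAt (fun t => (3 - l * g) * u t) s :=
      continuousAt_const.mul (hsol s hsT).1.continuousAt
    exact (hc.eventually (gt_mem_nhds hul)).filter_mono nhdsWithin_le_nhds
  obtain ⟨s', hs', hgood⟩ := (mem_nhdsGT_iff_exists_Ioo_subset' ht₀.1).1 (hev.and hev2)
  rcases le_or_gt s' t₀ with hst | hst
  swap
  · have := hgood (show t₀ ∈ Ioo s s' from ⟨ht₀.1, hst⟩)
    have h2 := hbad.1 this.1
    exact absurd this.2 (not_lt.2 h2)
  set s₁ := (s + s') / 2 with hs₁
  have hs₁' : s₁ ∈ Ioo s s' := by constructor <;> [skip; skip] <;> simp only [hs₁] <;> linarith [mem_Ioi.1 hs']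
  have hsub : Icc s₁ t₀ ⊆ Icc s T := fun t ht => ⟨hs₁'.1.le.trans ht.1, ht.2.trans ht₀.2⟩
  have hsol₁ := hsol.mono hsub
  let C : Set ℝ := {t | (0 < dX l g (u t) (q t) → l + 3 ≤ (3 - l * g) * u t) ∧ 1 ≤ u t}
  have hCcl : IsClosed (Icc s₁ t₀ ∩ C) := by
    have hc1 := hsol₁.continuousOn_dX
    have hc2 := hsol₁.continuousOn_u
    have e : Icc s₁ t₀ ∩ C = (Icc s₁ t₀ ∩ (fun t => dX l g (u t) (q t)) ⁻¹' Iic 0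
        ∪ Icc s₁ t₀ ∩ (fun t => (3 - l * g) * u t) ⁻¹' Ici (l + 3)) ∩ (Icc s₁ t₀ ∩ u ⁻¹' Ici 1) := by
      ext t
      simp only [C, mem_inter_iff, mem_ofPred_eq, mem_union, mem_preimage, mem_Iic, mem_Ici]
      constructor
      · rintro ⟨h1, h2, h3⟩
        refine ⟨?_, h1, h3⟩
        rcases lt_or_ge 0 (dX l g (u t) (q t)) with h | h
        · exact Or.inr ⟨h1, h2 h⟩
        · exact Or.inl ⟨h1, h⟩
      · rintro ⟨h | h, h1, h3⟩
        · exact ⟨h1, fun h' => absurd h.2 (not_le.2 h'), h3⟩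
        · exact ⟨h1, fun _ => h.2, h3⟩
    rw [e]
    exact ((hc1.preimage_isClosed_of_isClosed isClosed_Icc isClosed_Iic).union
      ((continuousOn_const.mul hc2).preimage_isClosed_of_isClosed isClosed_Icc isClosed_Ici)).inter
      (hc2.preimage_isClosed_of_isClosed isClosed_Icc isClosed_Ici)
  obtain ⟨t₂, ht₂, ht₂C, hbefore⟩ := exists_first_mem hCcl
    ⟨t₀, ⟨hs₁'.2.le.trans hst, le_rfl⟩, hbad⟩
  have hs₁t₂ : s₁ < t₂ := by
    rcases ht₂.1.lt_or_eq with h | h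
    · exact h
    · exfalso
      rw [← h] at ht₂C
      have := hgood hs₁'
      exact absurd this.2 (not_lt.2 (ht₂C.1 this.1))
  obtain ⟨hu', hq', hup, hqp, hq1⟩ := hsol₁ t₂ ht₂
  have hu2 : 1 < u t₂ := by
    rcases ht₂C.2.lt_or_eq with h | h
    · exact h
    · exfalso
      have hlg : 0 < l * g := by positivity
      have : 0 < dX l g (u t₂) (q t₂) := by
        rw [← h]; unfold dX
        have : 0 < l * g * q t₂ ^ 2 := by positivity
        linarith
      have h2 := ht₂C.1 this
      rw [← h] at h2
      linarith
  -- on a left neighbourhood `u > 1`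
  have hev3 : ∀ᶠ t in 𝓝[<] t₂, 1 < u t :=
    (hu'.continuousAt.eventually (lt_mem_nhds hu2)).filter_mono nhdsWithin_le_nhds
  obtain ⟨τ', hτ', hτ'g⟩ := (mem_nhdsLT_iff_exists_Ioo_subset' hs₁t₂).1 hev3
  set τ := (max s₁ τ' + t₂) / 2 with hτ
  have hmax : max s₁ τ' < t₂ := max_lt hs₁t₂ hτ'
  have hτ1 : max s₁ τ' < τ := by simp only [hτ]; linarith
  have hτ2 : τ < t₂ := by simp only [hτ]; linarith
  have hgt : ∀ x ∈ Icc τ t₂, 1 < u x := by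
    intro x hx
    rcases hx.2.lt_or_eq with h | h
    · exact hτ'g ⟨(le_max_right _ _).trans_lt (hτ1.trans_le hx.1), h⟩
    · rw [h]; exact hu2
  have hsub2 : Icc τ t₂ ⊆ Icc s₁ t₀ := fun x hx =>
    ⟨((le_max_left _ _).trans_lt hτ1).le.trans hx.1, hx.2.trans ht₂.2⟩
  have hin : ∀ x ∈ Ico τ t₂, 0 < dX l g (u x) (q x) ∧ (3 - l * g) * u x < l + 3 := by
    intro x hx
    have h1 := hbefore x ⟨(hsub2 ⟨hx.1, hx.2.le⟩).1, hx.2⟩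
    have h2 := hgt x ⟨hx.1, hx.2.le⟩
    by_contra hh
    refine h1 ⟨fun hp => ?_, h2.le⟩
    by_contra h3
    exact hh ⟨hp, not_le.1 h3⟩
  have hule : ∀ x ∈ Icc τ t₂, u x ≤ u τ := by
    refine fun x hx => antitoneOn_of_deriv_nonpos (convex_Icc τ t₂)
      (hsol₁.mono hsub2).continuousOn_u ?_ ?_ ⟨le_rfl, hτ2.le⟩ hx hx.1
    · intro y hy
      rw [interior_Icc] at hy
      exact (hsol₁ y (hsub2 ⟨hy.1.le, hy.2.le⟩)).1.differentiableAt.differentiableWithinAt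
    · intro y hy
      rw [interior_Icc] at hy
      obtain ⟨h1, -, h3, h4, h5⟩ := hsol₁ y (hsub2 ⟨hy.1.le, hy.2.le⟩)
      rw [h1.deriv]
      have := (hin y ⟨hy.1.le, hy.2⟩).1
      have := one_sub_sq_pos h4 h5
      unfold uF
      rw [neg_nonpos]; positivity
  have hb' : 0 < 3 - l * g := by linarith
  have hlt : ∀ x ∈ Icc τ t₂, (3 - l * g) * u x < l + 3 := by
    intro x hx
    have h1 := (hin τ ⟨le_rfl, hτ2⟩).2
    have h2 := mul_le_mul_of_nonneg_left (hule x hx) hb'.le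
    linarith
  have hpos := pos_of_barrier (g := fun t => dX l g (u t) (q t)) (s := τ) (T := t₂)
    (g' := fun t => (1 + g * u t + (u t - 1) * g - (3 - l * g) * q t ^ 2) * uF l g (u t) (q t)
        - ((3 - l * g) * u t - 3) * (2 * q t * qF l g (u t) (q t)))
    (fun t ht => hasDerivAt_dX (hsol₁ t (hsub2 ht)).1 (hsol₁ t (hsub2 ht)).2.1)
    (hin τ ⟨le_rfl, hτ2⟩).1
    (fun t ht _ h0 => dX_deriv_pos hl hg h0 (hgt t ⟨ht.1.le, ht.2⟩) (hlt t ⟨ht.1.le, ht.2⟩)) t₂ ⟨hτ2.le, le_rfl⟩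
  exact absurd (hlt t₂ ⟨hτ2.le, le_rfl⟩) (not_lt.2 (ht₂C.1 hpos))

/-- Damping of `q` for `u ≤ 1`. -/
lemma damping_left (hl : 0 < l) (hg : 0 < g) (hg1 : g < 1) {U Q : ℝ}
    (hU : 0 < U) (hU1 : U ≤ 1) (hQ : 0 < Q) (hQ1 : Q < 1) :
    min (min 1 (l * g)) (1 / l) * (1 - Q ^ 2) ≤ (1 + 1 / l) * dX l g U Q + dL l g U * (1 - Q ^ 2) := by
  have he : 0 < 1 - Q ^ 2 := one_sub_sq_pos hQ hQ1
  set e := 1 - Q ^ 2 with hedef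
  have hQ2 : Q ^ 2 = 1 - e := by rw [hedef]; ring
  have he1 : e < 1 := by rw [hedef]; nlinarith
  set c := min (min 1 (l * g)) (1 / l) with hc
  have hlg : 0 < l * g := by positivity
  have hl' : 0 < 1 / l := by positivity
  have hc0 : 0 < c := by rw [hc]; positivity
  have hc1 : c ≤ 1 := (min_le_left _ _).trans (min_le_left _ _)
  have hc2 : c ≤ l * g := (min_le_left _ _).trans (min_le_right _ _)
  have hc3 : c ≤ 1 / l := min_le_right _ _
  set A := (1 - U) * (2 - g * U) + l * g * U with hA
  have hgU : g * U < 1 := by nlinarith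
  have hA1 : c ≤ A := by
    have : (1 - U) * 1 ≤ (1 - U) * (2 - g * U) := mul_le_mul_of_nonneg_left (by linarith) (by linarith)
    nlinarith
  have id1 : (1 + 1 / l) * dX l g U Q + dL l g U * e
      = (1 + 1 / l) * A * (1 - e)
        + (1 / l * ((1 - U) * (2 - g * U)) + (U + g * U ^ 2)) * e := by
    unfold dX dL; rw [hQ2, hA]; field_simp; ring
  have hA2 : c ≤ 1 / l * ((1 - U) * (2 - g * U)) + (U + g * U ^ 2) := by
    have h1 : (1 - U) * 1 ≤ (1 - U) * (2 - g * U) := mul_le_mul_of_nonneg_left (by linarith) (by linarith)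
    have h2 : 1 / l * ((1 - U) * 1) ≤ 1 / l * ((1 - U) * (2 - g * U)) :=
      mul_le_mul_of_nonneg_left h1 hl'.le
    have h3 : c * (1 - U) ≤ 1 / l * (1 - U) := mul_le_mul_of_nonneg_right hc3 (by linarith)
    have h4 : 0 < g * U ^ 2 := by positivity
    nlinarith
  rw [id1]
  have h5 : A ≤ (1 + 1 / l) * A := by nlinarith
  have h6 : c * (1 - e) ≤ (1 + 1 / l) * A * (1 - e) :=
    mul_le_mul_of_nonneg_right (hA1.trans h5) (by linarith)
  have h7 := mul_le_mul_of_nonneg_right hA2 he.le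
  nlinarith

/-- In the invariant region, `q' ≤ -c q`. -/
lemma qF_le (hl : 0 < l) (hg : 0 < g) (hg1 : g < 1) (hb : l * g < 3) {U Q u₁ : ℝ}
    (hU : 0 < U) (hQ : 0 < Q) (hQ1 : Q < 1) (hUu : U ≤ u₁)
    (hreg : 0 ≤ dX l g U Q ∨ U ≤ 1) :
    qF l g U Q ≤ -(min (min (min 1 (l * g)) (1 / l)) (dL l g u₁)) * Q := by
  have he : 0 < 1 - Q ^ 2 := one_sub_sq_pos hQ hQ1
  have key : min (min (min 1 (l * g)) (1 / l)) (dL l g u₁)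
      ≤ (1 + 1 / l) * dX l g U Q / (1 - Q ^ 2) + dL l g U := by
    rcases hreg with h | h
    · refine (min_le_right _ _).trans ?_
      have h1 : dL l g u₁ ≤ dL l g U := by
        unfold dL
        have : 0 < 3 - l * g := by linarith
        gcongr
      have : 0 ≤ (1 + 1 / l) * dX l g U Q / (1 - Q ^ 2) := by positivity
      linarith
    · refine (min_le_left _ _).trans ?_
      have := damping_left hl hg hg1 hU h hQ hQ1
      rw [← le_div_iff₀ he] at this
      refine this.trans (le_of_eq ?_)
      field_simp
  unfold qF
  have := mul_le_mul_of_nonneg_left key hQ.le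
  linarith

end

end

section

section
variable {l g : ℝ} {u q : ℝ → ℝ}

/-- `min(1, ℓϱ, 1/ℓ, λ(u₁))`, the damping rate of `q` in the invariant region. -/
def dC (l g u₁ : ℝ) : ℝ := min (min (min 1 (l * g)) (1 / l)) (dL l g u₁)

lemma dC_pos (hl : 0 < l) (hg : 0 < g) {u₁ : ℝ} (h : (3 - l * g) * u₁ < l + 3) : 0 < dC l g u₁ := by
  unfold dC
  have : 0 < dL l g u₁ := by unfold dL; exact div_pos (by linarith) hl
  positivity

/-- Estimates in the invariant region. -/
lemma phase2 (hl : 0 < l) (hg : 0 < g) (hg1 : g < 1) (hb : l * g < 3) {s T u₁ : ℝ} (hsT : s ≤ T)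
    (hsol : Sol l g u q (Icc s T)) (hX : dX l g (u s) (q s) = 0) (hu1 : 1 < u s)
    (hu₁ : u s ≤ u₁) (hul : (3 - l * g) * u₁ < l + 3) :
    u T ≤ u s ∧ q T ≤ q s ∧ qF l g (u T) (q T) ≤ -dC l g u₁ * q T ∧
      exp (-(3 / (1 - q s ^ 2) / dC l g u₁)) ≤ u T := by
  have hb' : 0 < 3 - l * g := by linarith
  have hul' : (3 - l * g) * u s < l + 3 := lt_of_le_of_lt (by gcongr) hul
  have hreg := region_invariant hl hg hb hsol hX hu1 hul'
  have hreg' : ∀ t ∈ Icc s T, 0 ≤ dX l g (u t) (q t) ∨ u t ≤ 1 := by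
    intro t ht
    rcases ht.1.lt_or_eq with h | h
    · rcases hreg t ⟨h, ht.2⟩ with h1 | h1
      · exact Or.inl h1.1.le
      · exact Or.inr h1.le
    · left; rw [← h, hX]
  have hule : ∀ t ∈ Icc s T, u t ≤ u s := by
    refine le_of_deriv_nonpos_above (f' := fun t => uF l g (u t) (q t))
      (fun t ht => (hsol t ht).1) le_rfl ?_
    intro t ht hlt
    obtain ⟨-, -, h3, h4, h5⟩ := hsol t ht
    rcases hreg' t ht with h | h
    · have := one_sub_sq_pos h4 h5
      show -(u t * dX l g (u t) (q t) / (1 - q t ^ 2)) ≤ 0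
      rw [neg_nonpos]; positivity
    · linarith
  have hc0 : 0 < dC l g u₁ := dC_pos hl hg hul
  have hqF : ∀ t ∈ Icc s T, qF l g (u t) (q t) ≤ -dC l g u₁ * q t := by
    intro t ht
    obtain ⟨-, -, h3, h4, h5⟩ := hsol t ht
    exact qF_le hl hg hg1 hb h3 h4 h5 ((hule t ht).trans hu₁) (hreg' t ht)
  have hqanti : AntitoneOn q (Icc s T) := by
    refine antitoneOn_of_deriv_nonpos (convex_Icc s T) hsol.continuousOn_q ?_ ?_
    · intro y hy
      rw [interior_Icc] at hy
      exact (hsol y ⟨hy.1.le, hy.2.le⟩).2.1.differentiableAt.differentiableWithinAt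
    · intro y hy
      rw [interior_Icc] at hy
      have hy' : y ∈ Icc s T := ⟨hy.1.le, hy.2.le⟩
      obtain ⟨-, h2, -, h4, -⟩ := hsol y hy'
      rw [h2.deriv]
      have := hqF y hy'
      have : 0 < dC l g u₁ * q y := by positivity
      linarith
  have hsm : s ∈ Icc s T := ⟨le_rfl, hsT⟩
  have hTm : T ∈ Icc s T := ⟨hsT, le_rfl⟩
  refine ⟨hule T hTm, hqanti hsm hTm hsT, hqF T hTm, ?_⟩
  set c := dC l g u₁ with hc
  obtain ⟨-, -, -, hqs0, hqs1⟩ := hsol s hsm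
  have hes := one_sub_sq_pos hqs0 hqs1
  set K := 3 / (2 * (1 - q s ^ 2) * c) with hK
  have hK0 : 0 < K := by positivity
  -- `log u - K q²` is nondecreasing as long as `u ≤ 1`
  have hd : ∀ t ∈ Icc s T, HasDerivAt (fun t => -(log (u t) - K * q t ^ 2))
      (-(uF l g (u t) (q t) / u t - K * (2 * q t * qF l g (u t) (q t)))) t := by
    intro t ht
    obtain ⟨h1, h2, h3, -, -⟩ := hsol t ht
    have := ((h1.log h3.ne').sub ((h2.pow 2).const_mul K)).neg
    exact this.congr_deriv (by push_cast; ring)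
  have hfin := le_of_deriv_nonpos_above (d := K) hd ?_ ?_ T hTm
  · have h1 : -(log (u T) - K * q T ^ 2) ≤ K := hfin
    have h2 : -K ≤ log (u T) := by
      have : 0 ≤ K * q T ^ 2 := by positivity
      linarith
    have h3 := (le_log_iff_exp_le (hsol T hTm).2.2.1).1 h2
    refine le_trans (exp_le_exp.2 ?_) h3
    rw [neg_le_neg_iff, hK, div_div]
    apply div_le_div_of_nonneg_left (by norm_num) (by positivity)
    have : 0 < (1 - q s ^ 2) * c := by positivity
    linarith
  · have h1 : 0 < log (u s) := log_pos hu1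
    have h2 : K * q s ^ 2 ≤ K * 1 := by gcongr; nlinarith
    linarith
  · intro t ht hlt
    obtain ⟨-, -, h3, h4, h5⟩ := hsol t ht
    have hqK : K * q t ^ 2 ≤ K := by
      have : q t ^ 2 ≤ 1 := by nlinarith
      nlinarith
    have hut : u t < 1 := by
      have : log (u t) < 0 := by linarith
      by_contra hh
      exact absurd (log_nonneg (not_lt.1 hh)) (not_le.2 this)
    have he := one_sub_sq_pos h4 h5
    have hqs : q t ≤ q s := hqanti hsm ht ht.1
    have hee : 1 - q s ^ 2 ≤ 1 - q t ^ 2 := by nlinarith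
    have hX3 : dX l g (u t) (q t) ≤ 3 * q t ^ 2 := by
      unfold dX
      have h6 : 0 < g * u t := by positivity
      have h7 : (u t - 1) * (1 + g * u t) ≤ 0 := mul_nonpos_of_nonpos_of_nonneg (by linarith) (by linarith)
      have h8 : 0 < (3 - l * g) * u t * q t ^ 2 := by positivity
      linarith
    have hlog : -(3 * q t ^ 2 / (1 - q s ^ 2)) ≤ uF l g (u t) (q t) / u t := by
      have e1 : uF l g (u t) (q t) / u t = -(dX l g (u t) (q t) / (1 - q t ^ 2)) := by
        unfold uF; field_simp
      rw [e1, neg_le_neg_iff]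
      calc dX l g (u t) (q t) / (1 - q t ^ 2) ≤ 3 * q t ^ 2 / (1 - q t ^ 2) := by gcongr
        _ ≤ 3 * q t ^ 2 / (1 - q s ^ 2) := by gcongr
    have hq' := hqF t ht
    have h9 : K * (2 * q t * qF l g (u t) (q t)) ≤ K * (2 * q t * (-c * q t)) := by gcongr
    have h10 : K * (2 * q t * (-c * q t)) = -(3 * q t ^ 2 / (1 - q s ^ 2)) := by
      rw [hK]; field_simp
    linarith

/-- A solution staying in the region where `X₁ < 0` has `u` nondecreasing. -/
lemma phase1_u_mono {s T : ℝ} (hsol : Sol l g u q (Icc s T))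
    (hX : ∀ t ∈ Ico s T, dX l g (u t) (q t) < 0) : MonotoneOn u (Icc s T) := by
  refine monotoneOn_of_deriv_nonneg (convex_Icc s T) hsol.continuousOn_u ?_ ?_
  · intro y hy
    rw [interior_Icc] at hy
    exact (hsol y ⟨hy.1.le, hy.2.le⟩).1.differentiableAt.differentiableWithinAt
  · intro y hy
    rw [interior_Icc] at hy
    obtain ⟨h1, -, h3, h4, h5⟩ := hsol y ⟨hy.1.le, hy.2.le⟩
    rw [h1.deriv]
    have h6 := hX y ⟨hy.1.le, hy.2⟩
    have := one_sub_sq_pos h4 h5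
    unfold uF
    rw [neg_nonneg]
    exact div_nonpos_of_nonpos_of_nonneg (mul_nonpos_of_nonneg_of_nonpos h3.le h6.le) this.le

end

end

section

section
variable {l g : ℝ}

lemma contDiffOn_field (l g : ℝ) (n : WithTop ℕ∞) : ContDiffOn ℝ n
    (fun p : ℝ × ℝ => (uF l g p.1 p.2, qF l g p.1 p.2)) {p : ℝ × ℝ | p.2 ^ 2 < 1} := by
  have h0 : ∀ p ∈ {p : ℝ × ℝ | p.2 ^ 2 < 1}, (1 - p.2 ^ 2) ≠ 0 := by
    intro p hp
    have : p.2 ^ 2 < 1 := hp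
    linarith
  have hdX : ContDiff ℝ n (fun p : ℝ × ℝ => dX l g p.1 p.2) := by unfold dX; fun_prop
  have hdL : ContDiff ℝ n (fun p : ℝ × ℝ => dL l g p.1) := by unfold dL; fun_prop
  have he : ContDiff ℝ n (fun p : ℝ × ℝ => 1 - p.2 ^ 2) := by fun_prop
  refine ContDiffOn.prodMk ?_ ?_
  · unfold uF
    exact ((contDiff_fst.mul hdX).contDiffOn.div he.contDiffOn h0).neg
  · unfold qF
    exact (contDiff_snd.contDiffOn.mul
      (((contDiff_const.mul hdX).contDiffOn.div he.contDiffOn h0).add hdL.contDiffOn)).neg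

/-- `q` stays positive, since `q'/q` is bounded. -/
lemma q_pos_of_box {u q : ℝ → ℝ} {a b h T : ℝ} (hh : h < 1) (hh0 : 0 < h)
    (hbox : ∀ t ∈ Icc 0 T, u t ∈ Icc a b ∧ q t ∈ Icc (-h) h)
    (hq : ∀ t ∈ Icc 0 T, HasDerivAt q (qF l g (u t) (q t)) t) (hq0 : 0 < q 0) :
    ∀ t ∈ Icc 0 T, 0 < q t := by
  have hcomp : IsCompact (Icc a b ×ˢ Icc (-h) h) := isCompact_Icc.prod isCompact_Icc
  have hcont : ContinuousOn (fun p : ℝ × ℝ =>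
      (1 + 1 / l) * dX l g p.1 p.2 / (1 - p.2 ^ 2) + dL l g p.1) (Icc a b ×ˢ Icc (-h) h) := by
    have hdX : Continuous (fun p : ℝ × ℝ => dX l g p.1 p.2) := by unfold dX; fun_prop
    have hdL : Continuous (fun p : ℝ × ℝ => dL l g p.1) := by unfold dL; fun_prop
    refine (ContinuousOn.div (by fun_prop) (by fun_prop) ?_).add hdL.continuousOn
    rintro p ⟨-, h1, h2⟩
    have : p.2 ^ 2 ≤ h ^ 2 := sq_le_sq' h1 h2
    nlinarith
  obtain ⟨M, hM⟩ := hcomp.exists_bound_of_continuousOn hcont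
  intro t ht
  have := pos_of_barrier (g := fun t => q t - q 0 / 2 * exp (-(M + 1) * t))
    (g' := fun t => qF l g (u t) (q t) + (M + 1) * (q 0 / 2 * exp (-(M + 1) * t)))
    (s := 0) (T := T) ?_ ?_ ?_ t ht
  · have h1 : 0 < q 0 / 2 * exp (-(M + 1) * t) := by positivity
    have h2 : 0 < q t - q 0 / 2 * exp (-(M + 1) * t) := this
    linarith
  · intro x hx
    have h1 := (((hasDerivAt_id x).const_mul (-(M + 1))).exp).const_mul (q 0 / 2)
    exact ((hq x hx).sub h1).congr_deriv (by simp only [id]; ring)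
  · show 0 < q 0 - q 0 / 2 * exp (-(M + 1) * 0)
    rw [mul_zero, exp_zero]; linarith
  · intro x hx _ h0
    have h0' : q x - q 0 / 2 * exp (-(M + 1) * x) = 0 := h0
    have hxI : x ∈ Icc 0 T := ⟨hx.1.le, hx.2⟩
    have h1 : 0 < q 0 / 2 * exp (-(M + 1) * x) := by positivity
    have h2 := hM (u x, q x) ⟨(hbox x hxI).1, (hbox x hxI).2⟩
    have h3 := (abs_le.1 h2).2
    simp only at h3
    have h4 : q 0 / 2 * exp (-(M + 1) * x) = q x := by linarith
    show 0 < qF l g (u x) (q x) + (M + 1) * (q 0 / 2 * exp (-(M + 1) * x))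
    rw [h4] at h1 ⊢
    unfold qF
    nlinarith

/-- The time-one-sided dichotomy: either `X₁ < 0` throughout or there is a first time where
`X₁ = 0`. -/
lemma first_crossing {u q : ℝ → ℝ} {T : ℝ} (hsol : Sol l g u q (Icc 0 T))
    (h0 : dX l g (u 0) (q 0) < 0) :
    (∀ t ∈ Icc 0 T, dX l g (u t) (q t) < 0) ∨
      ∃ t₁ ∈ Icc 0 T, dX l g (u t₁) (q t₁) = 0 ∧ ∀ t ∈ Ico 0 t₁, dX l g (u t) (q t) < 0 := by
  by_cases hall : ∀ t ∈ Icc 0 T, dX l g (u t) (q t) < 0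
  · exact Or.inl hall
  right
  push Not at hall
  obtain ⟨t₀, ht₀, hge⟩ := hall
  have hcl : IsClosed (Icc 0 T ∩ (fun t => dX l g (u t) (q t)) ⁻¹' Ici 0) :=
    hsol.continuousOn_dX.preimage_isClosed_of_isClosed isClosed_Icc isClosed_Ici
  obtain ⟨t₁, ht₁, hC, hbefore⟩ := exists_first_mem hcl ⟨t₀, ht₀, hge⟩
  have hneg : ∀ t ∈ Ico 0 t₁, dX l g (u t) (q t) < 0 := fun t ht => not_le.1 (hbefore t ht)
  refine ⟨t₁, ht₁, le_antisymm ?_ hC, hneg⟩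
  have h0t : 0 < t₁ := by
    rcases ht₁.1.lt_or_eq with h | h
    · exact h
    · exfalso
      have hC' : 0 ≤ dX l g (u t₁) (q t₁) := hC
      rw [← h] at hC'
      exact absurd h0 (not_lt.2 hC')
  have hc : ContinuousAt (fun t => dX l g (u t) (q t)) t₁ :=
    (hasDerivAt_dX (hsol t₁ ht₁).1 (hsol t₁ ht₁).2.1).continuousAt
  refine le_of_tendsto (hc.tendsto.mono_left nhdsWithin_le_nhds : Tendsto _ (𝓝[<] t₁) _) ?_
  filter_upwards [Ioo_mem_nhdsLT h0t] with t ht using (hneg t ⟨ht.1.le, ht.2⟩).le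

/-- Phase 1 ends in finite time. -/
lemma phase1_ends (hl : 0 < l) (hb : l * g < 3) (hg : 0 < g) {u q : ℝ → ℝ} {u₁ : ℝ}
    (hsol : Sol l g u q (Ici 0)) (hu0 : 1 < u 0) (hu1 : ∀ t, 0 ≤ t → u t ≤ u₁)
    (hul : (3 - l * g) * u₁ < l + 3) (hX : ∀ t, 0 ≤ t → dX l g (u t) (q t) < 0) : False := by
  have hb' : 0 < 3 - l * g := by linarith
  have hmono : ∀ t, 0 ≤ t → u 0 ≤ u t := by
    intro t ht
    exact phase1_u_mono (hsol.mono (fun x hx => hx.1)) (fun x hx => hX x hx.1)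
      ⟨le_rfl, ht⟩ ⟨ht, le_rfl⟩ ht
  have hL : 0 < dL l g u₁ := by unfold dL; exact div_pos (by linarith) hl
  set m := (u 0 - 1) / (l + 3) with hm
  have hm0 : 0 < m := by
    rw [hm]; exact div_pos (by linarith) (by linarith)
  have hqm : ∀ t, 0 ≤ t → m < q t ^ 2 := by
    intro t ht
    have h1 := hX t ht
    unfold dX at h1
    have h2 := hmono t ht
    have h3 : (3 - l * g) * u t ≤ (3 - l * g) * u₁ := by gcongr; exact hu1 t ht
    have h4 : (u t - 1) * 1 ≤ (u t - 1) * (1 + g * u t) := by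
      apply mul_le_mul_of_nonneg_left _ (by linarith)
      have := (hsol t ht).2.2.1
      nlinarith
    have h5 : ((3 - l * g) * u t - 3) * q t ^ 2 ≤ (l + 3) * q t ^ 2 := by
      apply mul_le_mul_of_nonneg_right _ (sq_nonneg _); linarith
    rw [hm, div_lt_iff₀ (by linarith)]
    linarith
  -- `a u - log q` grows at least linearly
  have hV : ∀ t, 0 ≤ t → (1 + 1 / l) * u 0 - log (q 0) + dL l g u₁ * t
      ≤ (1 + 1 / l) * u t - log (q t) := by
    intro t ht
    have hd : ∀ x ∈ Icc 0 t, HasDerivAt (fun x => (1 + 1 / l) * u 0 - log (q 0) + dL l g u₁ * x -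
        ((1 + 1 / l) * u x - log (q x)))
        (dL l g u₁ - ((1 + 1 / l) * uF l g (u x) (q x) - qF l g (u x) (q x) / q x)) x := by
      intro x hx
      obtain ⟨h1, h2, -, h4, -⟩ := hsol x hx.1
      have := (((hasDerivAt_id x).const_mul (dL l g u₁)).const_add
        ((1 + 1 / l) * u 0 - log (q 0))).sub ((h1.const_mul (1 + 1 / l)).sub (h2.log h4.ne'))
      exact this.congr_deriv (by ring)
    have := le_of_deriv_nonpos_above (d := 0) hd (by simp) ?_ t ⟨ht, le_rfl⟩
    · linarith
    · intro x hx _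
      obtain ⟨-, -, h3, h4, h5⟩ := hsol x hx.1
      have he := one_sub_sq_pos h4 h5
      have e1 : (1 + 1 / l) * uF l g (u x) (q x) - qF l g (u x) (q x) / q x
          = dL l g (u x) + (1 + 1 / l) * (u x - 1) * (-dX l g (u x) (q x)) / (1 - q x ^ 2) := by
        unfold uF qF; field_simp; ring
      rw [e1]
      have h6 : dL l g u₁ ≤ dL l g (u x) := by
        unfold dL; have := hu1 x hx.1; gcongr
      have h7 := hX x hx.1
      have h8 := hmono x hx.1
      have : 0 ≤ (1 + 1 / l) * (u x - 1) * (-dX l g (u x) (q x)) / (1 - q x ^ 2) := by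
        apply div_nonneg _ he.le
        apply mul_nonneg (mul_nonneg (by positivity) (by linarith)) (by linarith)
      linarith
  have hlogq : ∀ t, 0 ≤ t → log m / 2 ≤ log (q t) := by
    intro t ht
    have h4 := (hsol t ht).2.2.2.1
    have : log m ≤ log (q t ^ 2) := log_le_log hm0 (hqm t ht).le
    rw [log_pow] at this
    push_cast at this
    linarith
  set t := (|(1 + 1 / l) * u₁ - log m / 2 - ((1 + 1 / l) * u 0 - log (q 0))| + 1) / dL l g u₁ with htdef
  have ht : 0 ≤ t := by positivity
  have h1 := hV t ht
  have h2 := hlogq t ht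
  have h3 : (1 + 1 / l) * u t ≤ (1 + 1 / l) * u₁ := by
    have := hu1 t ht
    gcongr
  have h4 : dL l g u₁ * t = |(1 + 1 / l) * u₁ - log m / 2 - ((1 + 1 / l) * u 0 - log (q 0))| + 1 := by
    rw [htdef]; field_simp
  have h5 := le_abs_self ((1 + 1 / l) * u₁ - log m / 2 - ((1 + 1 / l) * u 0 - log (q 0)))
  linarith

end

end

/-! ### Convergence to `(1, 0)` -/

section

section
variable {l g : ℝ}

/-- Grönwall: `V' ≤ -k V` and `V ≥ 0` give `V → 0`. -/
lemma tendsto_zero_of_deriv_le {V V' : ℝ → ℝ} {s k : ℝ} (hk : 0 < k)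
    (hd : ∀ t, s ≤ t → HasDerivAt V (V' t) t) (hV : ∀ t, s ≤ t → 0 ≤ V t)
    (hle : ∀ t, s ≤ t → V' t ≤ -k * V t) : Tendsto V atTop (𝓝 0) := by
  have key : ∀ t, s ≤ t → V t * exp (k * (t - s)) ≤ V s := by
    intro t ht
    refine le_of_deriv_nonpos_above (f := fun t => V t * exp (k * (t - s)))
      (f' := fun t => V' t * exp (k * (t - s)) + V t * (exp (k * (t - s)) * k)) (s := s) (T := t)
      (fun x hx => ?_) (by simp) (fun x hx _ => ?_) t ⟨ht, le_rfl⟩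
    · have := (hd x hx.1).mul ((((hasDerivAt_id x).sub_const s).const_mul k).exp)
      exact this.congr_deriv (by simp)
    · have h1 := hle x hx.1
      have h2 : 0 < exp (k * (x - s)) := exp_pos _
      show V' x * exp (k * (x - s)) + V x * (exp (k * (x - s)) * k) ≤ 0
      nlinarith
  have hlim : Tendsto (fun t => V s * exp (-(k * (t - s)))) atTop (𝓝 0) := by
    have h1 : Tendsto (fun t : ℝ => k * (t - s)) atTop atTop :=
      (tendsto_atTop_add_const_right atTop (-s) tendsto_id).const_mul_atTop hk
    have h2 := (tendsto_exp_neg_atTop_nhds_zero.comp h1).const_mul (V s)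
    simpa using h2
  refine tendsto_of_tendsto_of_tendsto_of_le_of_le' tendsto_const_nhds hlim ?_ ?_
  · filter_upwards [eventually_ge_atTop s] with t ht using hV t ht
  · filter_upwards [eventually_ge_atTop s] with t ht
    have := key t ht
    rw [exp_neg, ← div_eq_mul_inv, le_div_iff₀ (exp_pos _)]
    exact this

/-- Decay of `(U - 1) ^ 2 + A q ^ 2`: the weight `A` absorbs the coupling of `u` to `q`. -/
lemma lyapunov_le (hg : 0 < g) (hl : 0 < l) (hb : l * g < 3) {us qs U q c ulo : ℝ} (hus : 0 < us)
    (hc : 0 < c) (hqs : 0 < qs) (hqs1 : qs < 1) (hU : 0 < U) (hq : 0 < q)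
    (p1 : ulo ≤ U) (p2 : U ≤ us) (p3 : q ≤ qs) (p4 : qF l g U q ≤ -c * q) (hulo : 0 < ulo) :
    2 * (U - 1) * uF l g U q
      + 2 * (us * (us + 1) * (3 * us + 3) / (1 - qs ^ 2)) / c * (2 * q * qF l g U q)
      ≤ -min ulo c * ((U - 1) ^ 2
        + 2 * (us * (us + 1) * (3 * us + 3) / (1 - qs ^ 2)) / c * q ^ 2) := by
  have hes : 0 < 1 - qs ^ 2 := one_sub_sq_pos hqs hqs1
  have hlg : 0 < l * g := by positivity
  set C := us * (us + 1) * (3 * us + 3) / (1 - qs ^ 2) with hC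
  have hC0 : 0 < C := by positivity
  set K := 2 * C / c with hK
  have hK0 : 0 < K := by positivity
  have he : 0 < 1 - q ^ 2 := one_sub_sq_pos hq (p3.trans_lt hqs1)
  have hee : 1 - qs ^ 2 ≤ 1 - q ^ 2 := by
    have : q ^ 2 ≤ qs ^ 2 := by gcongr
    linarith
  have he1 : 1 - q ^ 2 ≤ 1 := by linarith [sq_nonneg q]
  have e1 : 2 * (U - 1) * uF l g U q
      = -(2 * ((U - 1) ^ 2 * (U * (1 + g * U) / (1 - q ^ 2))))
        + 2 * ((U - 1) * (((3 - l * g) * U - 3)) * U / (1 - q ^ 2)) * q ^ 2 := by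
    have := he.ne'
    unfold uF dX; field_simp; ring
  have h6 : ulo ≤ U * (1 + g * U) / (1 - q ^ 2) := by
    rw [le_div_iff₀ he]
    have a1 : ulo * (1 - q ^ 2) ≤ ulo * 1 := by gcongr
    have a2 : 0 < g * U ^ 2 := by positivity
    linarith
  have h7 : (U - 1) * (((3 - l * g) * U - 3)) * U / (1 - q ^ 2) ≤ C := by
    rw [hC]
    have a1 : |U - 1| ≤ us + 1 := by rw [abs_le]; constructor <;> linarith
    have a4 : (3 - l * g) * U ≤ 3 * us := by
      have : 0 < l * g * U := by positivity
      linarith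
    have a5 : 0 < (3 - l * g) * U := mul_pos (by linarith) hU
    have a2 : |(3 - l * g) * U - 3| ≤ 3 * us + 3 := by
      rw [abs_le]; constructor <;> linarith
    have a3 : (U - 1) * ((3 - l * g) * U - 3) ≤ (us + 1) * (3 * us + 3) := by
      calc (U - 1) * ((3 - l * g) * U - 3) ≤ |(U - 1) * ((3 - l * g) * U - 3)| := le_abs_self _
        _ = |U - 1| * |(3 - l * g) * U - 3| := abs_mul _ _
        _ ≤ _ := by gcongr
    calc (U - 1) * (((3 - l * g) * U - 3)) * U / (1 - q ^ 2)
        ≤ (us + 1) * (3 * us + 3) * U / (1 - q ^ 2) := by gcongr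
      _ ≤ (us + 1) * (3 * us + 3) * us / (1 - q ^ 2) := by gcongr
      _ ≤ (us + 1) * (3 * us + 3) * us / (1 - qs ^ 2) := by gcongr
      _ = _ := by ring
  have h8 : K * (2 * q * qF l g U q) ≤ K * (2 * q * (-c * q)) := by gcongr
  have h9 : K * (2 * q * (-c * q)) = -(2 * C * q ^ 2) - K * c * q ^ 2 - 2 * C * q ^ 2 + 2 * C * q ^ 2 := by
    rw [hK]; field_simp; ring
  have h10 : (U - 1) ^ 2 * ulo ≤ (U - 1) ^ 2 * (U * (1 + g * U) / (1 - q ^ 2)) := by gcongr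
  have h11 : 2 * ((U - 1) * (((3 - l * g) * U - 3)) * U / (1 - q ^ 2)) * q ^ 2 ≤ 2 * C * q ^ 2 := by
    gcongr
  have h12 : min ulo c * (U - 1) ^ 2 ≤ ulo * (U - 1) ^ 2 := by gcongr; exact min_le_left _ _
  have h13 : min ulo c * (K * q ^ 2) ≤ c * (K * q ^ 2) := by gcongr; exact min_le_right _ _
  have h14 : 0 ≤ (U - 1) ^ 2 * ulo := by positivity
  rw [e1]
  linarith

/-- Convergence after the time `s` at which `u` turns back, provided that `q` is damped there. -/
lemma phase2_tendsto (hl : 0 < l) (hg : 0 < g) (hg1 : g < 1) (hb : l * g < 3) {u q : ℝ → ℝ}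
    {s : ℝ}
    (hsol : Sol l g u q (Ici s)) (hX : dX l g (u s) (q s) = 0) (hu1 : 1 < u s)
    (hul : (3 - l * g) * u s < l + 3) :
    Tendsto u atTop (𝓝 1) ∧ Tendsto q atTop (𝓝 0) := by
  have hph : ∀ t, s ≤ t → _ := fun t ht => phase2 hl hg hg1 hb ht
    (hsol.mono (fun x hx => hx.1)) hX hu1 le_rfl hul
  have hc0 := dC_pos hl hg hul
  set c := dC l g (u s) with hc
  obtain ⟨-, -, -, hqs0, hqs1⟩ := hsol s (mem_Ici.2 le_rfl)
  have hes := one_sub_sq_pos hqs0 hqs1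
  set ulo := exp (-(3 / (1 - q s ^ 2) / c)) with hulo
  have hulo0 : 0 < ulo := exp_pos _
  have hU0 : 0 < u s := by linarith
  set C := u s * (u s + 1) * (3 * u s + 3) / (1 - q s ^ 2) with hC
  have hC0 : 0 < C := by positivity
  set K := 2 * C / c with hK
  have hK0 : 0 < K := by positivity
  have hVt : Tendsto (fun t => (u t - 1) ^ 2 + K * q t ^ 2) atTop (𝓝 0) := by
    refine tendsto_zero_of_deriv_le (k := min ulo c) (s := s)
      (V' := fun t => 2 * (u t - 1) * uF l g (u t) (q t) + K * (2 * q t * qF l g (u t) (q t)))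
      (by positivity) ?_ (fun t _ => by positivity) ?_
    · intro t ht
      obtain ⟨h1, h2, -⟩ := hsol t ht
      have := ((h1.sub_const 1).pow 2).add ((h2.pow 2).const_mul K)
      exact this.congr_deriv (by push_cast; ring)
    · intro t ht
      obtain ⟨h1, h2, h3, h4, h5⟩ := hsol t ht
      obtain ⟨p1, p2, p3, p4⟩ := hph t ht
      exact lyapunov_le hg hl hb hU0 hc0 hqs0 hqs1 h3 h4 p4 p1 p2 p3 hulo0
  have hsq : Tendsto (fun t => √((u t - 1) ^ 2 + K * q t ^ 2)) atTop (𝓝 0) := by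
    have := (continuous_sqrt.tendsto 0).comp hVt
    rw [sqrt_zero] at this
    exact this
  constructor
  · have : Tendsto (fun t => u t - 1) atTop (𝓝 0) := by
      refine squeeze_zero_norm (fun t => ?_) hsq
      rw [norm_eq_abs]
      apply abs_le_sqrt
      have : 0 ≤ K * q t ^ 2 := by positivity
      linarith
    simpa using this.add_const 1
  · have h2 : Tendsto (fun t => (√K)⁻¹ * √((u t - 1) ^ 2 + K * q t ^ 2)) atTop (𝓝 0) := by
      simpa using hsq.const_mul (√K)⁻¹
    refine squeeze_zero_norm (fun t => ?_) h2
    rw [norm_eq_abs, ← div_eq_inv_mul, le_div_iff₀ (by positivity), mul_comm]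
    have : √K * |q t| = √(K * q t ^ 2) := by
      rw [sqrt_mul hK0.le, sqrt_sq_eq_abs]
    rw [this]
    apply sqrt_le_sqrt
    have : 0 ≤ (u t - 1) ^ 2 := by positivity
    linarith

/-- Global dynamics after the start: if phase 1 (`X₁ < 0`) is confined by `u < u₁`, `q < h`, the
solution exists for all times and converges to `(1, 0)`. -/
theorem dyn_global (hl : 0 < l) (hg : 0 < g) (hg1 : g < 1) (hb : l * g < 3)
    {u₀ q₀ u₁ h : ℝ} (hu0 : 1 < u₀) (hu01 : u₀ < u₁) (hul : (3 - l * g) * u₁ < l + 3)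
    (hq0 : 0 < q₀) (hq0h : q₀ < h) (hh : h < 1) (hX0 : dX l g u₀ q₀ < 0)
    (hP1 : ∀ (u q : ℝ → ℝ) (T : ℝ), 0 ≤ T → u 0 = u₀ → q 0 = q₀ → Sol l g u q (Icc 0 T) →
      (∀ t ∈ Ico 0 T, dX l g (u t) (q t) < 0) → u T < u₁ ∧ q T < h) :
    ∃ u q : ℝ → ℝ, u 0 = u₀ ∧ q 0 = q₀ ∧ Sol l g u q (Ici 0) ∧
      Tendsto u atTop (𝓝 1) ∧ Tendsto q atTop (𝓝 0) := by
  have hc0 := dC_pos hl hg hul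
  have hh0 : 0 < h := hq0.trans hq0h
  have heh := one_sub_sq_pos hh0 hh
  have hb' : 0 < 3 - l * g := by linarith
  set ulo := exp (-(3 / (1 - h ^ 2) / dC l g u₁) - 1) with hulo
  have hulo0 : 0 < ulo := exp_pos _
  have hulo1 : ulo < 1 := by
    rw [hulo, exp_lt_one_iff]
    have : 0 < 3 / (1 - h ^ 2) / dC l g u₁ := by positivity
    linarith
  obtain ⟨p, hp0, hpB, hpd⟩ := exists_global_of_apriori
    (fun p => (uF l g p.1 p.2, qF l g p.1 p.2)) ulo u₁ (-h) h (by linarith) (by linarith)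
    {p : ℝ × ℝ | p.2 ^ 2 < 1} (isOpen_lt (by fun_prop) (by fun_prop))
    (by
      rintro ⟨a, b⟩ ⟨-, h1, h2⟩
      show b ^ 2 < 1
      have : b ^ 2 ≤ h ^ 2 := sq_le_sq' h1 h2
      linarith)
    (contDiffOn_field l g 1) (u₀, q₀)
    ⟨⟨by linarith, hu01⟩, ⟨by linarith, hq0h⟩⟩ (by
      intro p T hT hp0 hbox hd
      have hdu : ∀ t ∈ Icc 0 T, HasDerivAt (fun t => (p t).1) (uF l g (p t).1 (p t).2) t :=
        fun t ht => (hd t ht).fst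
      have hdq : ∀ t ∈ Icc 0 T, HasDerivAt (fun t => (p t).2) (qF l g (p t).1 (p t).2) t :=
        fun t ht => (hd t ht).snd
      have hqpos := q_pos_of_box (l := l) (g := g) (u := fun t => (p t).1) (q := fun t => (p t).2)
        hh hh0 (fun t ht => ⟨(hbox t ht).1, (hbox t ht).2⟩) hdq (by simp [hp0, hq0])
      have hsol : Sol l g (fun t => (p t).1) (fun t => (p t).2) (Icc 0 T) := fun t ht =>
        ⟨hdu t ht, hdq t ht, hulo0.trans_le (hbox t ht).1.1, hqpos t ht, (hbox t ht).2.2.trans_lt hh⟩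
      have hTm : T ∈ Icc 0 T := ⟨hT, le_rfl⟩
      have hX0' : dX l g (p 0).1 (p 0).2 < 0 := by rw [hp0]; exact hX0
      have hq := hqpos T hTm
      rcases first_crossing hsol hX0' with hc | ⟨t₁, ht₁, hXt, hneg⟩
      · obtain ⟨a1, a2⟩ := hP1 (fun t => (p t).1) (fun t => (p t).2) T hT (by simp [hp0])
          (by simp [hp0]) hsol (fun t ht => hc t ⟨ht.1, ht.2.le⟩)
        have := phase1_u_mono hsol (fun t ht => hc t ⟨ht.1, ht.2.le⟩) ⟨le_rfl, hT⟩ hTm hT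
        have e0 : (p 0).1 = u₀ := by rw [hp0]
        exact ⟨⟨by linarith, a1⟩, ⟨by linarith, a2⟩⟩
      · have hs1 : Sol l g (fun t => (p t).1) (fun t => (p t).2) (Icc 0 t₁) :=
          hsol.mono (Icc_subset_Icc_right ht₁.2)
        obtain ⟨a1, a2⟩ := hP1 (fun t => (p t).1) (fun t => (p t).2) t₁ ht₁.1 (by simp [hp0])
          (by simp [hp0]) hs1 hneg
        have hm := phase1_u_mono hs1 hneg ⟨le_rfl, ht₁.1⟩ ⟨ht₁.1, le_rfl⟩ ht₁.1
        have e0 : (p 0).1 = u₀ := by rw [hp0]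
        obtain ⟨b1, b2, -, b4⟩ := phase2 hl hg hg1 hb ht₁.2
          (hsol.mono (Icc_subset_Icc_left ht₁.1)) hXt (by linarith) a1.le hul
        refine ⟨⟨lt_of_lt_of_le ?_ b4, by linarith⟩, ⟨by linarith, by linarith⟩⟩
        rw [hulo]
        apply exp_lt_exp.2
        have hq1 := hqpos t₁ ht₁
        have : 3 / (1 - (p t₁).2 ^ 2) / dC l g u₁ ≤ 3 / (1 - h ^ 2) / dC l g u₁ := by
          gcongr
        linarith)
  have hdu : ∀ t, 0 ≤ t → HasDerivAt (fun t => (p t).1) (uF l g (p t).1 (p t).2) t :=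
    fun t ht => (hpd t ht).fst
  have hdq : ∀ t, 0 ≤ t → HasDerivAt (fun t => (p t).2) (qF l g (p t).1 (p t).2) t :=
    fun t ht => (hpd t ht).snd
  have hsol : Sol l g (fun t => (p t).1) (fun t => (p t).2) (Ici 0) := fun t ht =>
    ⟨hdu t ht, hdq t ht, hulo0.trans_le (hpB t ht).1.1,
      q_pos_of_box (l := l) (g := g) (u := fun t => (p t).1) (q := fun t => (p t).2) (T := t)
        hh hh0 (fun x hx => ⟨(hpB x hx.1).1, (hpB x hx.1).2⟩) (fun x hx => hdq x hx.1)
        (by simp [hp0, hq0]) t ⟨ht, le_rfl⟩,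
      (hpB t ht).2.2.trans_lt hh⟩
  refine ⟨fun t => (p t).1, fun t => (p t).2, by simp [hp0], by simp [hp0], hsol, ?_⟩
  have hX0' : dX l g (p 0).1 (p 0).2 < 0 := by rw [hp0]; exact hX0
  have e0 : (p 0).1 = u₀ := by rw [hp0]
  obtain ⟨t₁, ht₁, hXt, hneg⟩ : ∃ t₁, 0 ≤ t₁ ∧ dX l g (p t₁).1 (p t₁).2 = 0 ∧
      ∀ t ∈ Ico 0 t₁, dX l g (p t).1 (p t).2 < 0 := by
    by_contra hcon
    refine phase1_ends hl hb hg hsol (by linarith) (u₁ := u₁)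
      (fun t ht => (hpB t ht).1.2) hul ?_
    intro t ht
    rcases first_crossing (hsol.mono (fun x hx => hx.1) : Sol l g _ _ (Icc 0 t)) hX0' with hc | ⟨t₁, h1, h2, h3⟩
    · exact hc t ⟨ht, le_rfl⟩
    · exact absurd ⟨t₁, h1.1, h2, h3⟩ hcon
  have hm := phase1_u_mono (hsol.mono (fun x hx => hx.1) : Sol l g _ _ (Icc 0 t₁)) hneg
    ⟨le_rfl, ht₁⟩ ⟨ht₁, le_rfl⟩ ht₁
  have hle := (hpB t₁ ht₁).1.2
  refine phase2_tendsto hl hg hg1 hb (hsol.mono (Ici_subset_Ici.2 ht₁)) hXt (by linarith) ?_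
  exact lt_of_le_of_lt (by gcongr) hul

end

end

/-! ### The normalized phase portrait -/

section

/-- `r - 1` as a function of `ℓ` and of the sonic parameter `v`. -/
def cG (l v : ℝ) : ℝ := 2 * v / ((1 + v) * (v + l))
/-- Coefficient `h` of `Y` in `gQ`; it tends to `0` as `v ^ 2 → ℓ`. -/
def cH (l v : ℝ) : ℝ := l * (l - v ^ 2) / (l ^ 2 - 3 * v ^ 2)
/-- Coefficient `ρ` of `-E` in `gQ`. -/
def cR (l v : ℝ) : ℝ := (l + 1) * v * (3 * v + l) / (l ^ 2 - 3 * v ^ 2)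
/-- `η`; the damping rate of `q` is a multiple of `1 - η Y`. -/
def cE (l : ℝ) : ℝ := 1 / (l + 1)
/-- `ν`, the scale of `E = (1 - q ^ 2) / (2 ν)`. -/
def cN (l v : ℝ) : ℝ := (l ^ 2 - 3 * v ^ 2) / (l * (3 * v ^ 2 + (l + 3) * v + 3 * l))
/-- Coefficient `κ` of `-Y ^ 2` in `gQ`. -/
def cK (l v : ℝ) : ℝ := l / (l + 1) * (v * (1 + v)) / (3 * v ^ 2 + (l + 3) * v + 3 * l)
/-- Common factor of the two normalized equations, a time scale. -/
def cC (l v : ℝ) : ℝ := (3 * v ^ 2 + (l + 3) * v + 3 * l) / (v + l)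
/-- `dY/du`. -/
def cY (l v : ℝ) : ℝ :=
  (l + 1) * (3 * v ^ 2 + (l + 3) * v + 3 * l) / ((1 + v) * (l ^ 2 - 3 * v ^ 2))

/-- `Y'` up to a positive factor. -/
def gQ (h κ ρ Y E : ℝ) : ℝ := h * Y - κ * Y ^ 2 - (ρ + Y) * E
/-- `E'` up to a positive factor. -/
def gP (h κ ρ η Y E : ℝ) : ℝ := (1 - η * Y) * E - gQ h κ ρ Y E
/-- Residual of a curve `E = T Y` with `E' = T' Y`: positive where the flow crosses it upwards. -/
def gN (h κ ρ η ν Y E E' : ℝ) : ℝ :=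
  (1 - 2 * ν * E) * gP h κ ρ η Y E - E' * (1 + ν * (1 - η) * Y) * gQ h κ ρ Y E

/-- Admissible range of the parameters. -/
structure Adm (l v : ℝ) : Prop where
  l0 : 0 < l
  v0 : 0 < v
  v1 : v ^ 2 < l
  v2 : 3 * v ^ 2 < l ^ 2

section
variable {l v : ℝ}

lemma Adm.p3 (h : Adm l v) : 0 < 3 * v ^ 2 + (l + 3) * v + 3 * l := by
  have := h.l0; have := h.v0; positivity
lemma Adm.d (h : Adm l v) : 0 < l ^ 2 - 3 * v ^ 2 := by linarith [h.v2]
lemma Adm.vl (h : Adm l v) : v < l := by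
  have := h.l0; have := h.v0; have := h.v2
  by_contra! hc
  nlinarith
lemma Adm.hh (h : Adm l v) : 0 < cH l v := by
  have := h.l0; have := h.d; have : 0 < l - v ^ 2 := by linarith [h.v1]
  unfold cH; positivity
lemma Adm.hR (h : Adm l v) : 0 < cR l v := by
  have := h.l0; have := h.d; have := h.v0
  unfold cR; positivity
lemma Adm.hE (h : Adm l v) : 0 < cE l := by
  have := h.l0
  unfold cE; positivity
lemma Adm.hE1 (h : Adm l v) : cE l < 1 := by
  have := h.l0
  unfold cE; rw [div_lt_one (by linarith)]; linarith
lemma Adm.hN (h : Adm l v) : 0 < cN l v := by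
  have := h.l0; have := h.d; have := h.p3
  unfold cN; positivity
lemma Adm.hK (h : Adm l v) : 0 < cK l v := by
  have := h.l0; have := h.v0; have := h.p3
  unfold cK; positivity
lemma Adm.hC (h : Adm l v) : 0 < cC l v := by
  have := h.l0; have := h.v0; have := h.p3
  unfold cC; positivity
lemma Adm.hY (h : Adm l v) : 0 < cY l v := by
  have := h.l0; have := h.v0; have := h.p3; have := h.d
  unfold cY; positivity
lemma Adm.hG (h : Adm l v) : 0 < cG l v := by
  have := h.l0; have := h.v0
  unfold cG; positivity
lemma Adm.hb (h : Adm l v) : l * cG l v < 3 := by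
  have := h.l0; have := h.v0
  unfold cG; rw [mul_div_assoc', div_lt_iff₀ (by positivity)]; nlinarith
lemma Adm.hG1 (h : Adm l v) : cG l v < 1 := by
  have h1 := h.l0; have h2 := h.v0; have h3 := h.v1; have h4 := h.vl
  unfold cG; rw [div_lt_iff₀ (by positivity)]; nlinarith

/-- Identity linking `X₁` and `Q`. -/
lemma dX_eq (h : Adm l v) (u q : ℝ) :
    dX l (cG l v) u q = -(2 * cN l v * ((l ^ 2 - 3 * v ^ 2) / ((l + 1) * (v + l)))) *
      gQ (cH l v) (cK l v) (cR l v) (cY l v * (u - 1 - v)) ((1 - q ^ 2) / (2 * cN l v)) := by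
  have h1 := h.l0; have h2 := h.v0; have h3 := h.p3.ne'; have h4 := h.d.ne'
  have h5 : l + 1 ≠ 0 := by positivity
  have h6 : v + l ≠ 0 := by positivity
  have h7 : 1 + v ≠ 0 := by positivity
  unfold dX gQ cN cH cK cR cY cG
  obtain ⟨D, hD⟩ : ∃ D, D = l ^ 2 - 3 * v ^ 2 := ⟨_, rfl⟩
  rw [← hD] at h4 ⊢
  field_simp
  ring

/-- The equation of `u` in the normalized variables. -/
lemma uF_eq (h : Adm l v) {u q : ℝ} (hq : 1 - q ^ 2 ≠ 0) :
    cY l v * uF l (cG l v) u q * ((1 - q ^ 2) / (2 * cN l v))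
      = cC l v * (1 + cN l v * (1 - cE l) * (cY l v * (u - 1 - v))) *
      gQ (cH l v) (cK l v) (cR l v) (cY l v * (u - 1 - v)) ((1 - q ^ 2) / (2 * cN l v)) := by
  have h0 : uF l (cG l v) u q * (1 - q ^ 2) = - u * dX l (cG l v) u q := by
    unfold uF; field_simp
  have : cY l v * uF l (cG l v) u q * ((1 - q ^ 2) / (2 * cN l v))
    = cY l v * (uF l (cG l v) u q * (1 - q ^ 2)) / (2 * cN l v) := by ring
  rw [this, h0, dX_eq h]
  generalize gQ (cH l v) (cK l v) (cR l v) (cY l v * (u - 1 - v)) ((1 - q ^ 2) / (2 * cN l v)) = G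
  have h1 := h.l0; have h2 := h.v0; have h3 := h.p3.ne'; have h4 := h.d.ne'
  have h5 : l + 1 ≠ 0 := by positivity
  have h6 : v + l ≠ 0 := by positivity
  have h7 : 1 + v ≠ 0 := by positivity
  unfold cN cY cE cC
  field_simp
  ring

/-- The equation of `q` in the normalized variables. -/
lemma qF_eq (h : Adm l v) {u q : ℝ} (hq : 1 - q ^ 2 ≠ 0) :
    (-(2 * q * qF l (cG l v) u q)) / (2 * cN l v) * ((1 - q ^ 2) / (2 * cN l v))
      = cC l v * (1 - 2 * cN l v * ((1 - q ^ 2) / (2 * cN l v))) *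
      gP (cH l v) (cK l v) (cR l v) (cE l) (cY l v * (u - 1 - v)) ((1 - q ^ 2) / (2 * cN l v)) := by
  have h0 : qF l (cG l v) u q * (1 - q ^ 2)
      = - q * ((1 + 1 / l) * dX l (cG l v) u q + dL l (cG l v) u * (1 - q ^ 2)) := by
    unfold qF; field_simp
  have : (-(2 * q * qF l (cG l v) u q)) / (2 * cN l v) * ((1 - q ^ 2) / (2 * cN l v))
    = - (2 * q * (qF l (cG l v) u q * (1 - q ^ 2))) / (2 * cN l v) / (2 * cN l v) := by ring
  rw [this, h0, dX_eq h]
  unfold gP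
  generalize gQ (cH l v) (cK l v) (cR l v) (cY l v * (u - 1 - v)) ((1 - q ^ 2) / (2 * cN l v)) = G
  have h1 := h.l0; have h2 := h.v0; have h3 := h.p3.ne'; have h4 := h.d.ne'
  have h5 : l + 1 ≠ 0 := by positivity
  have h6 : v + l ≠ 0 := by positivity
  have h7 : 1 + v ≠ 0 := by positivity
  unfold cN cY cE cC dL cG
  field_simp
  ring

end

end

/-! ### Barriers -/

section

/-- A barrier `E = T(Y)` for the phase portrait in the normalized variables. -/
structure Barrier (h κ ρ η ν : ℝ) (n : ℕ) (T T' : ℝ → ℝ) (Y₁ : ℝ) : Prop where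
  pos : 0 < Y₁
  end_lt : η * Y₁ < 1
  hd : ∀ y ∈ Icc 0 Y₁, HasDerivAt T (T' y) y
  T_pos : ∀ y ∈ Ioc 0 Y₁, 0 < T y
  N_pos : ∀ y ∈ Ioc 0 Y₁, 0 < gN h κ ρ η ν y (T y) (T' y)
  Q_end : gQ h κ ρ Y₁ (T Y₁) ≤ 0
  T_zero : T 0 = 0
  an : AnalyticAt ℝ T 0
  N_O : (fun y => gN h κ ρ η ν y (T y) (T' y)) =O[𝓝[>] 0] fun y => y ^ (n + 1)

section
variable {l v : ℝ} {T T' : ℝ → ℝ} {Y₁ : ℝ} {n : ℕ}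

/-- The damping rate of `q` in terms of `Y`. -/
lemma Adm.end_iff (h : Adm l v) (Y : ℝ) :
    l + 3 - (3 - l * cG l v) * (1 + v + Y / cY l v)
      = (l ^ 2 - 3 * v ^ 2) / (v + l) * (1 - cE l * Y) := by
  have h1 := h.l0; have h2 := h.v0; have h3 := h.p3.ne'; have h4 := h.d.ne'
  have h5 : l + 1 ≠ 0 := by positivity
  have h6 : v + l ≠ 0 := by positivity
  have h7 : 1 + v ≠ 0 := by positivity
  unfold cG cY cE
  obtain ⟨D, hD⟩ : ∃ D, D = l ^ 2 - 3 * v ^ 2 := ⟨_, rfl⟩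
  rw [← hD] at h4 ⊢
  field_simp
  rw [hD]
  ring

/-- Phase 1: a trajectory above the barrier with `X₁ < 0` stays above it, hence cannot reach
`Y = Y₁`. -/
lemma phase1 (ha : Adm l v) (hB : Barrier (cH l v) (cK l v) (cR l v) (cE l) (cN l v) n T T' Y₁)
    {u q : ℝ → ℝ} {t₁ : ℝ} (ht₁ : 0 ≤ t₁) (hsol : Sol l (cG l v) u q (Icc 0 t₁))
    (hX : ∀ t ∈ Ico 0 t₁, dX l (cG l v) (u t) (q t) < 0)
    (hY0 : 0 < cY l v * (u 0 - 1 - v)) (hY1 : cY l v * (u 0 - 1 - v) < Y₁)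
    (hE0 : T (cY l v * (u 0 - 1 - v)) < (1 - q 0 ^ 2) / (2 * cN l v)) :
    cY l v * (u 0 - 1 - v) ≤ cY l v * (u t₁ - 1 - v) ∧ cY l v * (u t₁ - 1 - v) < Y₁ ∧
      T (cY l v * (u t₁ - 1 - v)) < (1 - q t₁ ^ 2) / (2 * cN l v) := by
  have hN := ha.hN
  have hYc := ha.hY
  have hC := ha.hC
  have hη := ha.hE
  have hη1 := ha.hE1
  have hR := ha.hR
  set Y : ℝ → ℝ := fun t => cY l v * (u t - 1 - v) with hYdef
  set E : ℝ → ℝ := fun t => (1 - q t ^ 2) / (2 * cN l v) with hEdef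
  have hmono : ∀ a ∈ Icc 0 t₁, ∀ b ∈ Icc 0 t₁, a ≤ b → Y a ≤ Y b := by
    intro a h1 b h2 hab
    have := phase1_u_mono hsol hX h1 h2 hab
    simp only [hYdef]; gcongr
  have hEpos : ∀ t ∈ Icc 0 t₁, 0 < E t := by
    intro t ht
    obtain ⟨-, -, -, h4, h5⟩ := hsol t ht
    have := one_sub_sq_pos h4 h5
    simp only [hEdef]; positivity
  have hYd : ∀ t ∈ Icc 0 t₁, HasDerivAt Y (cY l v * uF l (cG l v) (u t) (q t)) t := by
    intro t ht
    exact ((((hsol t ht).1.sub_const 1).sub_const v).const_mul _)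
  have hEd : ∀ t ∈ Icc 0 t₁,
      HasDerivAt E ((-(2 * q t * qF l (cG l v) (u t) (q t))) / (2 * cN l v)) t := by
    intro t ht
    have := (((hsol t ht).2.1.pow 2).const_sub 1).div_const (2 * cN l v)
    exact this.congr_deriv (by push_cast; ring)
  have hYc' : ContinuousOn Y (Icc 0 t₁) := fun t ht => (hYd t ht).continuousAt.continuousWithinAt
  -- below `Y₁` the trajectory is above the barrier
  have key : ∀ t ∈ Icc 0 t₁, Y t ≤ Y₁ → T (Y t) < E t := by
    intro t ht hYt
    have hsub : Icc 0 t ⊆ Icc 0 t₁ := Icc_subset_Icc_right ht.2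
    have hin : ∀ x ∈ Icc 0 t, Y x ∈ Ioc 0 Y₁ := fun x hx =>
      ⟨lt_of_lt_of_le hY0 (hmono 0 ⟨le_rfl, ht₁⟩ x (hsub hx) hx.1), (hmono x (hsub hx) t ht hx.2).trans hYt⟩
    have := pos_of_barrier (g := fun x => E x - T (Y x)) (s := 0) (T := t)
      (g' := fun x => (-(2 * q x * qF l (cG l v) (u x) (q x))) / (2 * cN l v)
        - T' (Y x) * (cY l v * uF l (cG l v) (u x) (q x)))
      (fun x hx => (hEd x (hsub hx)).sub
        ((hB.hd (Y x) ⟨(hin x hx).1.le, (hin x hx).2⟩).comp x (hYd x (hsub hx))))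
      (sub_pos.2 hE0) (fun x hx _ hx0 => ?_) t ⟨ht.1, le_rfl⟩
    · exact sub_pos.1 this
    · have hx' : x ∈ Icc 0 t := ⟨hx.1.le, hx.2⟩
      have hEx := hEpos x (hsub hx')
      obtain ⟨-, -, -, h4, h5⟩ := hsol x (hsub hx')
      have hq := (one_sub_sq_pos h4 h5).ne'
      have e1 := uF_eq ha (u := u x) hq
      have e2 := qF_eq ha (u := u x) hq
      have hTE : T (Y x) = E x := by linarith
      have hNx := hB.N_pos (Y x) (hin x hx')
      rw [hTE] at hNx
      have : 0 < ((-(2 * q x * qF l (cG l v) (u x) (q x))) / (2 * cN l v)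
        - T' (Y x) * (cY l v * uF l (cG l v) (u x) (q x))) * E x := by
        have e3 : ((-(2 * q x * qF l (cG l v) (u x) (q x))) / (2 * cN l v)
          - T' (Y x) * (cY l v * uF l (cG l v) (u x) (q x))) * E x
          = cC l v * gN (cH l v) (cK l v) (cR l v) (cE l) (cN l v) (Y x) (E x) (T' (Y x)) := by
          rw [sub_mul, mul_assoc (T' (Y x))]
          simp only [hEdef, hYdef]
          rw [e1, e2]
          unfold gN; ring
        rw [e3]; positivity
      exact pos_of_mul_pos_left this hEx.le
  have hlt : Y t₁ < Y₁ := by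
    by_contra! hc
    obtain ⟨t, ht, hYt⟩ := intermediate_value_Icc ht₁ hYc' (show Y₁ ∈ Icc (Y 0) (Y t₁) from ⟨hY1.le, hc⟩)
    have h1 := key t ht hYt.le
    have h2 := hB.Q_end
    have hXt : dX l (cG l v) (u t) (q t) ≤ 0 := by
      refine ContinuousWithinAt.closure_le (s := Ico 0 t₁) (f := fun t => dX l (cG l v) (u t) (q t))
        (g := fun _ => 0) (x := t) ?_ ?_ continuousWithinAt_const (fun y hy => (hX y hy).le)
      · rcases ht₁.eq_or_lt with h | h
        · exfalso
          have : t = 0 := by rw [← h] at ht; exact le_antisymm ht.2 ht.1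
          rw [this] at hYt
          exact absurd hY1 (by rw [← hYt]; exact lt_irrefl _)
        · rw [closure_Ico h.ne]; exact ht
      · exact ((hsol.continuousOn_dX) t ht).mono Ico_subset_Icc_self
    rw [dX_eq ha] at hXt
    have hd := ha.d; have hl := ha.l0; have hv := ha.v0
    have hpos : 0 < 2 * cN l v * ((l ^ 2 - 3 * v ^ 2) / ((l + 1) * (v + l))) := by positivity
    have h3 : 0 ≤ gQ (cH l v) (cK l v) (cR l v) (Y t) (E t) := by
      by_contra! h4
      have := mul_neg_of_pos_of_neg hpos h4
      simp only [hYdef, hEdef] at this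
      linarith
    rw [hYt] at h3 h1
    have h5 : (cR l v + Y₁) * T Y₁ < (cR l v + Y₁) * E t := by
      have := hB.pos
      gcongr
    unfold gQ at h2 h3
    linarith
  exact ⟨hmono 0 ⟨le_rfl, ht₁⟩ t₁ ⟨ht₁, le_rfl⟩ ht₁, hlt, key t₁ ⟨ht₁, le_rfl⟩ hlt.le⟩

/-- Trajectories starting above the barrier converge to `(1, 0)`. -/
lemma dyn_of_barrier (ha : Adm l v)
    (hB : Barrier (cH l v) (cK l v) (cR l v) (cE l) (cN l v) n T T' Y₁)
    {u₀ q₀ : ℝ} (hq0 : 0 < q₀) (hX : dX l (cG l v) u₀ q₀ < 0)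
    (hY0 : 0 < cY l v * (u₀ - 1 - v)) (hY1 : cY l v * (u₀ - 1 - v) < Y₁)
    (hE0 : T (cY l v * (u₀ - 1 - v)) < (1 - q₀ ^ 2) / (2 * cN l v)) :
    ∃ u q : ℝ → ℝ, u 0 = u₀ ∧ q 0 = q₀ ∧ Sol l (cG l v) u q (Ici 0) ∧
      Tendsto u atTop (𝓝 1) ∧ Tendsto q atTop (𝓝 0) := by
  have hN := ha.hN
  have hYc := ha.hY
  set Y₀ := cY l v * (u₀ - 1 - v) with hY₀
  have hcont : ContinuousOn T (Icc Y₀ Y₁) := fun y hy =>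
    (hB.hd y ⟨hY0.le.trans hy.1, hy.2⟩).continuousAt.continuousWithinAt
  obtain ⟨ym, hym, hmin⟩ := isCompact_Icc.exists_isMinOn ⟨Y₀, le_rfl, hY1.le⟩ hcont
  have hm := hB.T_pos ym ⟨hY0.trans_le hym.1, hym.2⟩
  set m := T ym with hmdef
  have hmE : m < (1 - q₀ ^ 2) / (2 * cN l v) := lt_of_le_of_lt (hmin ⟨le_rfl, hY1.le⟩) hE0
  have hlt : ∀ x : ℝ, 0 < x → m < (1 - x ^ 2) / (2 * cN l v) → x < √(1 - 2 * cN l v * m) := by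
    intro x hx h
    rw [lt_div_iff₀ (by positivity)] at h
    apply lt_sqrt_of_sq_lt
    linarith
  have hu0 : 1 + v < u₀ := by
    have := pos_of_mul_pos_right hY0 hYc.le
    linarith
  have hlt1 : ∀ x : ℝ, cY l v * (x - 1 - v) < Y₁ → x < 1 + v + Y₁ / cY l v := by
    intro x hx
    have : x - 1 - v < Y₁ / cY l v := by rw [lt_div_iff₀ hYc]; linarith
    linarith
  refine dyn_global ha.l0 ha.hG ha.hG1 ha.hb (u₁ := 1 + v + Y₁ / cY l v)
    (h := √(1 - 2 * cN l v * m)) (by linarith [ha.v0]) (hlt1 _ hY1) ?_ hq0 (hlt _ hq0 hmE) ?_ hX ?_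
  · have h1 := ha.end_iff Y₁
    have h2 := hB.end_lt
    have hd := ha.d; have hl := ha.l0; have hv := ha.v0
    have : 0 < (l ^ 2 - 3 * v ^ 2) / (v + l) * (1 - cE l * Y₁) :=
      mul_pos (by positivity) (by linarith)
    linarith
  · rw [sqrt_lt' one_pos]
    have : 0 < 2 * cN l v * m := by positivity
    linarith
  · intro u q t₁ ht₁ hu hq hsol hXt
    obtain ⟨h1, h2, h3⟩ := phase1 ha hB ht₁ hsol hXt (by rw [hu]; exact hY0) (by rw [hu]; exact hY1)
      (by rw [hu, hq]; exact hE0)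
    refine ⟨hlt1 _ h2, hlt _ (hsol t₁ ⟨ht₁, le_rfl⟩).2.2.2.1 (lt_of_le_of_lt (hmin ⟨?_, h2.le⟩) h3)⟩
    rw [hu] at h1; exact h1

end

end

/-! ### Contact with the barrier at the sonic point -/

section

section
variable {h κ ρ η ν C L k Y₁ : ℝ} {n : ℕ} {T T' Y E : ℝ → ℝ}

/-- Positive limit criterion: an analytic `f` with `f 0 = 0`, `f' 0 > 0` is positive on the right. -/
lemma eventually_pos_of_deriv {f : ℝ → ℝ} (hf : DifferentiableAt ℝ f 0) (h0 : f 0 = 0)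
    (h1 : 0 < deriv f 0) : ∀ᶠ x in 𝓝[>] (0 : ℝ), 0 < f x := by
  have h2 := hf.hasDerivAt.tendsto_slope.mono_left
    (nhdsWithin_mono 0 (fun x hx => ne_of_gt hx : Ioi (0 : ℝ) ⊆ {0}ᶜ))
  filter_upwards [h2.eventually (lt_mem_nhds h1), self_mem_nhdsWithin] with t ht hts
  rw [slope_def_field, h0, sub_zero, sub_zero] at ht
  exact (div_pos_iff_of_pos_right hts).1 ht

/-- Near the sonic point the analytic solution lies above a barrier having contact of order
`n + 1 > k`. -/
lemma contact (hB : Barrier h κ ρ η ν n T T' Y₁) (hY : AnalyticAt ℝ Y 0) (hE : AnalyticAt ℝ E 0)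
    (hY0 : Y 0 = 0) (hE0 : E 0 = 0) (hY1 : 0 < deriv Y 0) (hE1 : deriv E 0 = C * L)
    (hC : 0 < C) (hL : 0 < L)
    (oY : ∀ᶠ x in 𝓝[>] (0 : ℝ), E x * deriv Y x
      = C * (1 + ν * (1 - η) * Y x) * gQ h κ ρ (Y x) (E x))
    (oE : ∀ᶠ x in 𝓝[>] (0 : ℝ), E x * deriv E x
      = C * (1 - 2 * ν * E x) * gP h κ ρ η (Y x) (E x))
    (hM : 1 + ρ + T' 0 * ρ = k * L) (hk : (n : ℝ) < k) (hk1 : k < n + 1) :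
    ∀ᶠ x in 𝓝[>] (0 : ℝ), (0 < Y x ∧ Y x < Y₁) ∧ 0 < E x ∧ T (Y x) < E x ∧
      0 < gQ h κ ρ (Y x) (E x) := by
  have eY := eventually_pos_of_deriv hY.differentiableAt hY0 hY1
  have eE := eventually_pos_of_deriv hE.differentiableAt hE0 (by rw [hE1]; positivity)
  have tY : Tendsto Y (𝓝[>] 0) (𝓝 0) := by
    have := hY.continuousAt.tendsto; rw [hY0] at this
    exact this.mono_left nhdsWithin_le_nhds
  have tE : Tendsto E (𝓝[>] 0) (𝓝 0) := by
    have := hE.continuousAt.tendsto; rw [hE0] at this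
    exact this.mono_left nhdsWithin_le_nhds
  have tY' : Tendsto Y (𝓝[>] 0) (𝓝[>] 0) := tendsto_nhdsWithin_iff.2 ⟨tY, eY⟩
  have eY1 : ∀ᶠ x in 𝓝[>] (0 : ℝ), Y x < Y₁ := tY.eventually (gt_mem_nhds hB.pos)
  have hTY : AnalyticAt ℝ (fun x => T (Y x)) 0 := by
    have : AnalyticAt ℝ T (Y 0) := by rw [hY0]; exact hB.an
    exact this.comp hY
  have hd : AnalyticAt ℝ (fun x => E x - T (Y x)) 0 := hE.sub hTY
  -- `T'` along the solution
  have tT' : Tendsto (fun x => T' (Y x)) (𝓝[>] 0) (𝓝 (T' 0)) := by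
    have h0 : T' 0 = deriv T 0 := ((hB.hd 0 ⟨le_rfl, hB.pos.le⟩).deriv).symm
    rw [h0]
    refine (hB.an.deriv.continuousAt.tendsto.comp tY).congr' ?_
    filter_upwards [eY, eY1] with x h1 h2
    exact (hB.hd (Y x) ⟨h1.le, h2.le⟩).deriv
  have tT : Tendsto (fun x => T (Y x)) (𝓝[>] 0) (𝓝 0) := by
    have := hB.an.continuousAt.tendsto; rw [hB.T_zero] at this
    exact this.comp tY
  set M : ℝ → ℝ := fun x => (1 - 2 * ν * E x) * (1 + ρ + (1 - η) * Y x)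
    - 2 * ν * gP h κ ρ η (Y x) (T (Y x)) + T' (Y x) * (1 + ν * (1 - η) * Y x) * (ρ + Y x) with hMdef
  have tM : Tendsto M (𝓝[>] 0) (𝓝 (k * L)) := by
    have t1 : Tendsto (fun x => gP h κ ρ η (Y x) (T (Y x))) (𝓝[>] 0) (𝓝 (gP h κ ρ η 0 0)) := by
      unfold gP gQ
      exact ((tendsto_const_nhds.sub (tY.const_mul η)).mul tT).sub
        (((tY.const_mul h).sub ((tY.pow 2).const_mul κ)).sub ((tY.const_add ρ).mul tT))
    have t2 := (((tE.const_mul (2 * ν)).const_sub 1).mul ((tY.const_mul (1 - η)).const_add (1 + ρ))).sub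
      (t1.const_mul (2 * ν))
    have t3 := t2.add ((tT'.mul ((tY.const_mul (ν * (1 - η))).const_add 1)).mul (tY.const_add ρ))
    have e0 : (1 - 2 * ν * 0) * (1 + ρ + (1 - η) * 0) - 2 * ν * gP h κ ρ η 0 0
        + T' 0 * (1 + ν * (1 - η) * 0) * (ρ + 0) = k * L := by
      rw [← hM]; unfold gP gQ; ring
    rw [e0] at t3
    exact t3
  -- the equation for the difference
  have star : ∀ᶠ x in 𝓝[>] (0 : ℝ), E x * deriv (fun x => E x - T (Y x)) x
      = C * (gN h κ ρ η ν (Y x) (T (Y x)) (T' (Y x)) + (E x - T (Y x)) * M x) := by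
    have h1 := hY.eventually_analyticAt.filter_mono (nhdsWithin_le_nhds (s := Ioi 0))
    have h2 := hE.eventually_analyticAt.filter_mono (nhdsWithin_le_nhds (s := Ioi 0))
    filter_upwards [eY, eY1, h1, h2, oY, oE] with x a1 a2 a3 a4 a5 a6
    have hder : deriv (fun x => E x - T (Y x)) x = deriv E x - T' (Y x) * deriv Y x :=
      (a4.differentiableAt.hasDerivAt.sub
        ((hB.hd (Y x) ⟨a1.le, a2.le⟩).comp x a3.differentiableAt.hasDerivAt)).deriv
    rw [hder, mul_sub, a6]
    have : E x * (T' (Y x) * deriv Y x) = T' (Y x) * (E x * deriv Y x) := by ring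
    rw [this, a5]
    simp only [hMdef]
    unfold gN gP gQ; ring
  have eN : ∀ᶠ x in 𝓝[>] (0 : ℝ), 0 < gN h κ ρ η ν (Y x) (T (Y x)) (T' (Y x)) := by
    filter_upwards [eY, eY1] with x h1 h2 using hB.N_pos _ ⟨h1, h2.le⟩
  have hnz : ¬ ∀ᶠ x in 𝓝 (0 : ℝ), E x - T (Y x) = 0 := by
    intro hz
    have hz2 := hz.eventually_nhds.filter_mono (nhdsWithin_le_nhds (s := Ioi 0))
    obtain ⟨x, h1, h2, h3⟩ := (hz2.and (star.and eN)).exists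
    have h4 : deriv (fun x => E x - T (Y x)) x = 0 := by
      have : (fun x => E x - T (Y x)) =ᶠ[𝓝 x] fun _ => 0 := h1
      rw [this.deriv_eq]; simp
    rw [h4, h1.self_of_nhds] at h2
    have : 0 < C * (gN h κ ρ η ν (Y x) (T (Y x)) (T' (Y x)) + 0 * M x) := by
      rw [zero_mul, add_zero]; positivity
    linarith
  obtain ⟨j, g, hg, hg0, hdg⟩ := hd.exists_eventuallyEq_pow_smul_nonzero_iff.2 hnz
  simp only [sub_zero, smul_eq_mul] at hdg
  -- the limit of `N / ξ^j`
  have tg : Tendsto g (𝓝[>] 0) (𝓝 (g 0)) := hg.continuousAt.tendsto.mono_left nhdsWithin_le_nhds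
  have tx : Tendsto (fun x : ℝ => x) (𝓝[>] 0) (𝓝 0) := tendsto_id.mono_left nhdsWithin_le_nhds
  have tg' : Tendsto (deriv g) (𝓝[>] 0) (𝓝 (deriv g 0)) :=
    hg.deriv.continuousAt.tendsto.mono_left nhdsWithin_le_nhds
  have tEx : Tendsto (fun x => E x / x) (𝓝[>] 0) (𝓝 (C * L)) := by
    have h2 := hE.differentiableAt.hasDerivAt.tendsto_slope.mono_left
      (nhdsWithin_mono 0 (fun x hx => ne_of_gt hx : Ioi (0 : ℝ) ⊆ {0}ᶜ))
    rw [hE1] at h2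
    refine h2.congr fun x => ?_
    rw [slope_def_field, hE0, sub_zero, sub_zero]
  have lim : Tendsto (fun x => gN h κ ρ η ν (Y x) (T (Y x)) (T' (Y x)) / x ^ j) (𝓝[>] 0)
      (𝓝 (L * (j - k) * g 0)) := by
    have t1 := (((tEx.div_const C).mul ((tg.const_mul (j : ℝ)).add (tx.mul tg')))).sub (tg.mul tM)
    have e0 : C * L / C * (j * g 0 + 0 * deriv g 0) - g 0 * (k * L) = L * (j - k) * g 0 := by
      field_simp; ring
    rw [e0] at t1
    refine t1.congr' ?_
    have h1 := hg.eventually_analyticAt.filter_mono (nhdsWithin_le_nhds (s := Ioi 0))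
    have h2 := hdg.eventually_nhds.filter_mono (nhdsWithin_le_nhds (s := Ioi 0))
    filter_upwards [star, h1, h2, self_mem_nhdsWithin] with x a1 a2 a3 a4
    have hx : (0 : ℝ) < x := a4
    have hder : deriv (fun x => E x - T (Y x)) x = j * x ^ (j - 1) * g x + x ^ j * deriv g x := by
      have : (fun x => E x - T (Y x)) =ᶠ[𝓝 x] fun x => x ^ j * g x := a3
      rw [this.deriv_eq]
      exact ((hasDerivAt_pow j x).mul a2.differentiableAt.hasDerivAt).deriv
    rw [hder, a3.self_of_nhds] at a1
    have hjx : (j : ℝ) * x ^ (j - 1) = j * x ^ j / x := by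
      rcases j with _ | j
      · simp
      · rw [Nat.add_sub_cancel, pow_succ]; field_simp
    rw [hjx] at a1
    have hxj : x ^ j ≠ 0 := by positivity
    rw [eq_div_iff hxj]
    have : gN h κ ρ η ν (Y x) (T (Y x)) (T' (Y x))
      = E x * (j * x ^ j / x * g x + x ^ j * deriv g x) / C - x ^ j * g x * M x := by
      rw [a1]; field_simp; ring
    rw [this]; field_simp
  have hNO : (fun x => gN h κ ρ η ν (Y x) (T (Y x)) (T' (Y x))) =O[𝓝[>] 0] fun x => x ^ (n + 1) := by
    have h1 := hB.N_O.comp_tendsto tY'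
    refine h1.trans ?_
    have h2 : Y =O[𝓝[>] 0] fun x => x := by
      have := hY.differentiableAt.isBigO_sub
      rw [hY0] at this
      simp only [sub_zero] at this
      exact this.mono nhdsWithin_le_nhds
    exact h2.pow (n + 1)
  have hjn : n < j := by
    by_contra! hjn
    have h1 : (fun x : ℝ => x ^ (n + 1)) =o[𝓝[>] 0] fun x => x ^ j :=
      (Asymptotics.isLittleO_pow_pow (by omega)).mono nhdsWithin_le_nhds
    have h2 := (hNO.trans_isLittleO h1).tendsto_div_nhds_zero
    have h3 := tendsto_nhds_unique h2 lim
    have h4 : (j : ℝ) ≤ n := by exact_mod_cast hjn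
    have : L * (j - k) * g 0 ≠ 0 := by
      refine mul_ne_zero (mul_ne_zero hL.ne' ?_) hg0
      intro h5; linarith
    exact this h3.symm
  have hg0' : 0 < g 0 := by
    have h1 : 0 ≤ L * (j - k) * g 0 := by
      refine ge_of_tendsto lim ?_
      filter_upwards [eN, self_mem_nhdsWithin] with x h1 h2
      have : (0 : ℝ) < x := h2
      positivity
    have h2 : (n : ℝ) + 1 ≤ j := by exact_mod_cast hjn
    have h3 : 0 < L * (j - k) := mul_pos hL (by linarith)
    exact lt_of_le_of_ne (nonneg_of_mul_nonneg_right h1 h3) (Ne.symm hg0)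
  have tD : Tendsto (fun x => deriv Y x) (𝓝[>] 0) (𝓝 (deriv Y 0)) :=
    hY.deriv.continuousAt.tendsto.mono_left nhdsWithin_le_nhds
  have tv : Tendsto (fun x => 1 + ν * (1 - η) * Y x) (𝓝[>] 0) (𝓝 1) := by
    simpa using (tY.const_mul (ν * (1 - η))).const_add 1
  filter_upwards [eY, eY1, eE, hdg.filter_mono nhdsWithin_le_nhds, tg.eventually (lt_mem_nhds hg0'),
    self_mem_nhdsWithin, tD.eventually (lt_mem_nhds hY1), tv.eventually (lt_mem_nhds one_pos), oY]
    with x a1 a2 a3 a4 a5 a6 a7 a8 a9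
  have hx : (0 : ℝ) < x := a6
  refine ⟨⟨a1, a2⟩, a3, ?_, ?_⟩
  · have : 0 < x ^ j * g x := by positivity
    linarith
  · have h1 : 0 < C * (1 + ν * (1 - η) * Y x) * gQ h κ ρ (Y x) (E x) := by rw [← a9]; positivity
    exact (pos_iff_pos_of_mul_pos h1).1 (by positivity)

end

end

/-! ### Return to the variables `(W, Z)` -/

section

/-- `W` in terms of `(u, q)`. -/
def Wq (l u q : ℝ) : ℝ := -1 + 1 / u + l * q / u
/-- `Z` in terms of `(u, q)`. -/
def Zq (l u q : ℝ) : ℝ := -1 + 1 / u - l * q / u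

section
variable {l g : ℝ}

lemma DW_uq (hl : l ≠ 0) {u q : ℝ} (hu : u ≠ 0) :
    DW (1 + 2 / l) (Wq l u q) (Zq l u q) = (1 + q) / u := by
  unfold DW alphaF Wq Zq; field_simp; ring

lemma DZ_uq (hl : l ≠ 0) {u q : ℝ} (hu : u ≠ 0) :
    DZ (1 + 2 / l) (Wq l u q) (Zq l u q) = (1 - q) / u := by
  unfold DZ alphaF Wq Zq; field_simp; ring

lemma ident_u (hl : l ≠ 0) {u q : ℝ} (hu : u ≠ 0) :
    -(u ^ 3 / 2) * ((1 - q) * NW (1 + 2 / l) (1 + g) (Wq l u q) (Zq l u q)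
      + (1 + q) * NZ (1 + 2 / l) (1 + g) (Wq l u q) (Zq l u q)) = -(u * dX l g u q) := by
  unfold NW NZ alphaF Wq Zq dX; field_simp; ring

lemma ident_q (hl : l ≠ 0) {u q : ℝ} (hu : u ≠ 0) :
    u ^ 2 / (2 * l) * ((1 - q) * NW (1 + 2 / l) (1 + g) (Wq l u q) (Zq l u q)
      - (1 + q) * NZ (1 + 2 / l) (1 + g) (Wq l u q) (Zq l u q)) =
      -(q * (1 / l * dX l g u q + dL l g u * (1 - q ^ 2))) := by
  unfold NW NZ alphaF Wq Zq dX dL; field_simp; ring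

/-- The equation of `W` follows from those of `u` and `q`. -/
lemma ode_W (hl : l ≠ 0) {u q : ℝ} (hu : u ≠ 0) (hq : 1 - q ^ 2 ≠ 0) :
    (1 + q) / u * (-uF l g u q / u ^ 2 + l * (qF l g u q * u - q * uF l g u q) / u ^ 2)
      = NW (1 + 2 / l) (1 + g) (Wq l u q) (Zq l u q) := by
  have h1 : 1 + q ≠ 0 := fun h => hq (by linear_combination (1 - q) * h)
  have h2 : 1 - q ≠ 0 := fun h => hq (by linear_combination (1 + q) * h)
  have e : 1 - q ^ 2 = (1 - q) * (1 + q) := by ring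
  unfold NW alphaF Wq Zq uF qF dX dL
  rw [e]
  field_simp
  ring

/-- The equation of `Z` follows from those of `u` and `q`. -/
lemma ode_Z (hl : l ≠ 0) {u q : ℝ} (hu : u ≠ 0) (hq : 1 - q ^ 2 ≠ 0) :
    (1 - q) / u * (-uF l g u q / u ^ 2 - l * (qF l g u q * u - q * uF l g u q) / u ^ 2)
      = NZ (1 + 2 / l) (1 + g) (Wq l u q) (Zq l u q) := by
  have h1 : 1 + q ≠ 0 := fun h => hq (by linear_combination (1 - q) * h)
  have h2 : 1 - q ≠ 0 := fun h => hq (by linear_combination (1 + q) * h)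
  have e : 1 - q ^ 2 = (1 - q) * (1 + q) := by ring
  unfold NZ alphaF Wq Zq uF qF dX dL
  rw [e]
  field_simp
  ring

/-- Solutions of the `(u, q)` system on `(0, ∞)` are smooth. -/
lemma Sol.contDiffOn {u q : ℝ → ℝ} (h : Sol l g u q (Ioi 0)) (n : ℕ) :
    ContDiffOn ℝ n (fun t => (u t, q t)) (Ioi 0) := by
  have hd : ∀ t ∈ Ioi (0 : ℝ), HasDerivAt (fun t => (u t, q t))
      (uF l g (u t) (q t), qF l g (u t) (q t)) t := fun t ht => (h t ht).1.prodMk (h t ht).2.1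
  induction n with
  | zero =>
    rw [Nat.cast_zero, contDiffOn_zero]
    exact fun t ht => (hd t ht).continuousAt.continuousWithinAt
  | succ n ih =>
    push_cast
    rw [contDiffOn_succ_iff_deriv_of_isOpen isOpen_Ioi]
    refine ⟨fun t ht => (hd t ht).differentiableAt.differentiableWithinAt, by simp, ?_⟩
    have hmaps : MapsTo (fun t => (u t, q t)) (Ioi 0) {p : ℝ × ℝ | p.2 ^ 2 < 1} := by
      intro t ht
      obtain ⟨-, -, -, h4, h5⟩ := h t ht
      show q t ^ 2 < 1
      nlinarith
    refine ((contDiffOn_field l g n).comp ih hmaps).congr fun t ht => ?_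
    exact (hd t ht).deriv

end

end

section

section
variable {l v : ℝ} {T T' : ℝ → ℝ} {Y₁ L k y1 : ℝ} {n : ℕ} {Wf Zf : ℝ → ℝ}

lemma Wq_inv (hl : l ≠ 0) {W Z : ℝ} (h : 1 + (W + Z) / 2 ≠ 0) :
    Wq l (1 / (1 + (W + Z) / 2)) (1 / (1 + (W + Z) / 2) * ((W - Z) / (2 * l))) = W ∧
    Zq l (1 / (1 + (W + Z) / 2)) (1 / (1 + (W + Z) / 2) * ((W - Z) / (2 * l))) = Z := by
  unfold Wq Zq
  generalize hs : 1 + (W + Z) / 2 = s at h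
  have hW : W + Z = 2 * s - 2 := by linarith
  constructor
  · field_simp; linarith
  · field_simp; linarith

/-- A solution of the original system gives, in the variables `(u, q)`, the cleared form of the
`(u, q)` system. -/
lemma uq_ode (hl : l ≠ 0) {g W Z W' Z' u q : ℝ} (hu : u ≠ 0) (hW : Wq l u q = W) (hZ : Zq l u q = Z)
    (oW : DW (1 + 2 / l) W Z * W' = NW (1 + 2 / l) (1 + g) W Z)
    (oZ : DZ (1 + 2 / l) W Z * Z' = NZ (1 + 2 / l) (1 + g) W Z) (hq : 1 - q ^ 2 ≠ 0) :
    -(u ^ 2 * ((W' + Z') / 2)) = uF l g u q ∧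
    -(u ^ 2 * ((W' + Z') / 2)) * ((W - Z) / (2 * l)) + u * ((W' - Z') / (2 * l)) = qF l g u q := by
  subst hW hZ
  rw [DW_uq hl hu] at oW
  rw [DZ_uq hl hu] at oZ
  have i1 := ident_u (g := g) hl (q := q) hu
  have i2 := ident_q (g := g) hl (q := q) hu
  rw [← oW, ← oZ] at i1 i2
  have e1 : -(u ^ 2 * ((W' + Z') / 2)) * (1 - q ^ 2) = -(u * dX l g u q) := by
    rw [← i1]; field_simp; ring
  have hA : -(u ^ 2 * ((W' + Z') / 2)) = uF l g u q := by
    unfold uF; rw [← neg_div, eq_div_iff hq]; exact e1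
  refine ⟨hA, ?_⟩
  have e2 : u * ((W' - Z') / (2 * l)) * (1 - q ^ 2)
      = -(q * (1 / l * dX l g u q + dL l g u * (1 - q ^ 2))) := by
    rw [← i2]; field_simp; ring
  have e3 : (Wq l u q - Zq l u q) / (2 * l) = q / u := by
    unfold Wq Zq; field_simp; ring
  rw [hA, e3]
  have e4 : u * ((W' - Z') / (2 * l)) = -(q * (1 / l * dX l g u q + dL l g u * (1 - q ^ 2))) / (1 - q ^ 2) := by
    rw [eq_div_iff hq, e2]
  rw [e4]
  unfold uF qF
  field_simp
  ring

/-- The local analytic solution extends to `[0, ∞)` once a barrier is available. -/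
theorem extend (ha : Adm l v) (hB : Barrier (cH l v) (cK l v) (cR l v) (cE l) (cN l v) n T T' Y₁)
    (hk : (n : ℝ) < k) (hk1 : k < n + 1) (hL : 0 < L) (hM : 1 + cR l v + T' 0 * cR l v = k * L)
    (hW : AnalyticAt ℝ Wf 0) (hZ : AnalyticAt ℝ Zf 0)
    (W0 : Wf 0 = Wq l (1 + v) 1) (Z0 : Zf 0 = Zq l (1 + v) 1)
    (oW : ∀ᶠ x in 𝓝 (0 : ℝ), DW (1 + 2 / l) (Wf x) (Zf x) * deriv Wf x
      = NW (1 + 2 / l) (1 + cG l v) (Wf x) (Zf x))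
    (oZ : ∀ᶠ x in 𝓝 (0 : ℝ), DZ (1 + 2 / l) (Wf x) (Zf x) * deriv Zf x
      = NZ (1 + 2 / l) (1 + cG l v) (Wf x) (Zf x))
    (hy1 : 0 < y1) (hW1 : deriv Wf 0 + deriv Zf 0 = -(2 * y1 / (cY l v * (1 + v) ^ 2)))
    (hZ1 : deriv Wf 0 - deriv Zf 0
      = -(2 * l / (1 + v) * (cN l v * cC l v * L + y1 / (cY l v * (1 + v))))) :
    ∃ W Z : ℝ → ℝ,
        ContDiffOn ℝ (⊤ : ℕ∞) W (Set.Ici 0) ∧ ContDiffOn ℝ (⊤ : ℕ∞) Z (Set.Ici 0) ∧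
        (∀ ξ ∈ Set.Ici (0 : ℝ),
          DW (1 + 2 / l) (W ξ) (Z ξ) * derivWithin W (Set.Ici 0) ξ
            = NW (1 + 2 / l) (1 + cG l v) (W ξ) (Z ξ) ∧
          DZ (1 + 2 / l) (W ξ) (Z ξ) * derivWithin Z (Set.Ici 0) ξ
            = NZ (1 + 2 / l) (1 + cG l v) (W ξ) (Z ξ)) ∧
        (∃ δ : ℝ, 0 < δ ∧ ∀ ξ ∈ Set.Ico (0 : ℝ) δ, W ξ = Wf ξ ∧ Z ξ = Zf ξ) ∧
        Tendsto (fun ξ : ℝ => (W ξ, Z ξ)) atTop (nhds ((0 : ℝ), (0 : ℝ))) ∧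
        (∀ ξ : ℝ, 0 < ξ → 0 < DW (1 + 2 / l) (W ξ) (Z ξ) ∧ 0 < DZ (1 + 2 / l) (W ξ) (Z ξ)) := by
  have hl := ha.l0
  have hv := ha.v0
  have hN := ha.hN
  have hYc := ha.hY
  have hC := ha.hC
  set g := cG l v with hg
  -- the solution in the variables `(u, q)`
  set u : ℝ → ℝ := fun x => 1 / (1 + (Wf x + Zf x) / 2) with hu
  set q : ℝ → ℝ := fun x => u x * ((Wf x - Zf x) / (2 * l)) with hq
  have hs0 : 1 + (Wf 0 + Zf 0) / 2 = 1 / (1 + v) := by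
    rw [W0, Z0]; unfold Wq Zq; field_simp; ring
  have hs0' : 0 < 1 + (Wf 0 + Zf 0) / 2 := by rw [hs0]; positivity
  have hu0 : u 0 = 1 + v := by simp only [hu]; rw [hs0]; field_simp
  have hq0 : q 0 = 1 := by
    simp only [hq]; rw [hu0, W0, Z0]; unfold Wq Zq; field_simp; ring
  have hsan : AnalyticAt ℝ (fun x => 1 + (Wf x + Zf x) / 2) 0 :=
    analyticAt_const.add ((hW.add hZ).div_const)
  have huan : AnalyticAt ℝ u 0 := analyticAt_const.div hsan hs0'.ne'
  have hqan : AnalyticAt ℝ q 0 := huan.mul ((hW.sub hZ).div_const)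
  have hspos : ∀ᶠ x in 𝓝 (0 : ℝ), 0 < 1 + (Wf x + Zf x) / 2 :=
    hsan.continuousAt.eventually (lt_mem_nhds hs0')
  have hder : ∀ᶠ x in 𝓝 (0 : ℝ), HasDerivAt u (-(u x ^ 2 * ((deriv Wf x + deriv Zf x) / 2))) x ∧
      HasDerivAt q (-(u x ^ 2 * ((deriv Wf x + deriv Zf x) / 2)) * ((Wf x - Zf x) / (2 * l))
        + u x * ((deriv Wf x - deriv Zf x) / (2 * l))) x := by
    filter_upwards [hspos, hW.eventually_analyticAt, hZ.eventually_analyticAt] with x h1 h2 h3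
    have d1 := h2.differentiableAt.hasDerivAt
    have d2 := h3.differentiableAt.hasDerivAt
    have d3 := (hasDerivAt_const x (1 : ℝ)).fun_div (((d1.add d2).div_const 2).const_add 1) h1.ne'
    have d4 : HasDerivAt u (-(u x ^ 2 * ((deriv Wf x + deriv Zf x) / 2))) x := by
      refine d3.congr_deriv ?_
      simp only [hu]
      have := h1.ne'
      rw [Pi.add_apply]
      field_simp; ring
    exact ⟨d4, d4.mul ((d1.sub d2).div_const (2 * l))⟩
  have hode : ∀ᶠ x in 𝓝 (0 : ℝ), 1 - q x ^ 2 ≠ 0 →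
      HasDerivAt u (uF l g (u x) (q x)) x ∧ HasDerivAt q (qF l g (u x) (q x)) x := by
    filter_upwards [hder, hspos, oW, oZ] with x h1 h2 h3 h4 h5
    have hux : u x ≠ 0 := by simp only [hu]; positivity
    obtain ⟨i1, i2⟩ := Wq_inv hl.ne' h2.ne'
    obtain ⟨j1, j2⟩ := uq_ode hl.ne' hux i1 i2 h3 h4 h5
    exact ⟨j1 ▸ h1.1, j2 ▸ h1.2⟩
  have hupos : ∀ᶠ x in 𝓝 (0 : ℝ), 0 < u x := by
    filter_upwards [hspos] with x h; simp only [hu]; positivity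
  have hqpos : ∀ᶠ x in 𝓝 (0 : ℝ), 0 < q x :=
    hqan.continuousAt.eventually (lt_mem_nhds (by rw [hq0]; exact one_pos))
  -- normalized variables
  set Y : ℝ → ℝ := fun x => cY l v * (u x - 1 - v) with hYd
  set E : ℝ → ℝ := fun x => (1 - q x ^ 2) / (2 * cN l v) with hEd
  have hYan : AnalyticAt ℝ Y 0 := analyticAt_const.mul ((huan.sub analyticAt_const).sub analyticAt_const)
  have hEan : AnalyticAt ℝ E 0 := (analyticAt_const.sub (hqan.pow 2)).div_const
  have dY : ∀ x u', HasDerivAt u u' x → HasDerivAt Y (cY l v * u') x := fun x u' h =>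
    ((h.sub_const 1).sub_const v).const_mul _
  have dE : ∀ x q', HasDerivAt q q' x → HasDerivAt E (-(2 * q x * q') / (2 * cN l v)) x := by
    intro x q' h
    exact (((h.pow 2).const_sub 1).div_const (2 * cN l v)).congr_deriv (by push_cast; ring)
  obtain ⟨du0, dq0⟩ := hder.self_of_nhds
  have hv1 : (1 + v) ≠ 0 := by positivity
  have hY1 : deriv Y 0 = y1 := by
    rw [(dY 0 _ du0).deriv, hW1, hu0]; field_simp
  have hE1 : deriv E 0 = cC l v * L := by
    have e : (Wf 0 - Zf 0) / (2 * l) = 1 / (1 + v) := by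
      rw [W0, Z0]; unfold Wq Zq; field_simp; ring
    rw [(dE 0 _ dq0).deriv, hW1, hZ1, hu0, hq0, e]; field_simp; ring
  have hY0 : Y 0 = 0 := by simp only [hYd]; rw [hu0]; ring
  have hE0 : E 0 = 0 := by simp only [hEd]; rw [hq0]; ring
  have eE := eventually_pos_of_deriv hEan.differentiableAt hE0 (by rw [hE1]; positivity)
  have hq1ne : ∀ x, 0 < E x → 1 - q x ^ 2 ≠ 0 := by
    intro x hx h; simp only [hEd] at hx; rw [h] at hx; simp at hx
  have hcon := contact hB hYan hEan hY0 hE0 (by rw [hY1]; exact hy1) hE1 hC hL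
    (by
      filter_upwards [eE, hode.filter_mono nhdsWithin_le_nhds] with x h1 h2
      have h3 := hq1ne x h1
      have h4 := uF_eq ha (u := u x) h3
      rw [(dY x _ (h2 h3).1).deriv, mul_comm]
      exact h4)
    (by
      filter_upwards [eE, hode.filter_mono nhdsWithin_le_nhds] with x h1 h2
      have h3 := hq1ne x h1
      have h4 := qF_eq ha (u := u x) h3
      rw [(dE x _ (h2 h3).2).deriv, mul_comm]
      exact h4) hM hk hk1
  -- a good neighbourhood
  obtain ⟨x₁, hx₁, hgood⟩ := (mem_nhdsGT_iff_exists_Ioo_subset' one_pos).1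
    (hcon.and ((hode.and (hspos.and (hupos.and hqpos))).filter_mono nhdsWithin_le_nhds))
  have hx₁' : (0 : ℝ) < x₁ := hx₁
  set x₀ := x₁ / 2 with hx₀
  have hx₀p : 0 < x₀ := by positivity
  have hx₀l : x₀ < x₁ := by rw [hx₀]; linarith
  have hlocal : Sol l g u q (Ioo 0 x₁) := by
    intro x hx
    obtain ⟨⟨-, h1, -, -⟩, h2, -, h4, h5⟩ := hgood hx
    have h6 := h2 (hq1ne x h1)
    refine ⟨h6.1, h6.2, h4, h5, ?_⟩
    simp only [hEd] at h1
    have := (div_pos_iff_of_pos_right (by positivity)).1 h1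
    nlinarith
  obtain ⟨⟨⟨g1, g1'⟩, g2, g3, g4⟩, -, g6, g7, g8⟩ := hgood (show x₀ ∈ Ioo 0 x₁ from ⟨hx₀p, hx₀l⟩)
  have hX : dX l g (u x₀) (q x₀) < 0 := by
    rw [hg, dX_eq ha]
    have hd := ha.d
    have : 0 < 2 * cN l v * ((l ^ 2 - 3 * v ^ 2) / ((l + 1) * (v + l))) := by positivity
    have := mul_pos this g4
    simp only [hYd, hEd] at this
    linarith
  obtain ⟨ub, qb, hub0, hqb0, hsol, hlimu, hlimq⟩ := dyn_of_barrier ha hB g8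
    hX g1 g1' g3
  -- glue
  set uu : ℝ → ℝ := fun x => if x ≤ x₀ then u x else ub (x - x₀) with huu
  set qq : ℝ → ℝ := fun x => if x ≤ x₀ then q x else qb (x - x₀) with hqq
  have hglue : ∀ (f f1 : ℝ → ℝ) (d : ℝ), f x₀ = f1 0 → HasDerivAt f d x₀ → HasDerivAt f1 d 0 →
      HasDerivAt (fun x => if x ≤ x₀ then f x else f1 (x - x₀)) d x₀ := by
    intro f f1 d h0 h1 h2
    have hl1 : HasDerivWithinAt (fun x => if x ≤ x₀ then f x else f1 (x - x₀)) d (Iic x₀) x₀ :=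
      h1.hasDerivWithinAt.congr (fun y hy => if_pos hy) (if_pos le_rfl)
    have h2' : HasDerivAt (fun x => f1 (x - x₀)) d x₀ := by
      have : HasDerivAt f1 d (x₀ - x₀) := by rw [sub_self]; exact h2
      exact this.comp_sub_const x₀ x₀
    have hr1 : HasDerivWithinAt (fun x => if x ≤ x₀ then f x else f1 (x - x₀)) d (Ici x₀) x₀ := by
      refine h2'.hasDerivWithinAt.congr (fun y hy => ?_) ?_
      · rcases (show x₀ ≤ y from hy).eq_or_lt with h | h
        · rw [← h, if_pos le_rfl, sub_self, h0]
        · exact if_neg (not_le.2 h)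
      · rw [if_pos le_rfl, sub_self, h0]
    have := hl1.union hr1
    rwa [Iic_union_Ici, hasDerivWithinAt_univ] at this
  have hSol : Sol l g uu qq (Ioi 0) := by
    intro x hx
    have hx0 : (0 : ℝ) < x := hx
    rcases lt_trichotomy x x₀ with h | h | h
    · obtain ⟨a1, a2, a3, a4, a5⟩ := hlocal x ⟨hx0, h.trans hx₀l⟩
      have e1 : uu =ᶠ[𝓝 x] u := by
        filter_upwards [gt_mem_nhds h] with y hy; exact if_pos hy.le
      have e2 : qq =ᶠ[𝓝 x] q := by
        filter_upwards [gt_mem_nhds h] with y hy; exact if_pos hy.le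
      rw [show uu x = u x from e1.self_of_nhds, show qq x = q x from e2.self_of_nhds]
      exact ⟨a1.congr_of_eventuallyEq e1, a2.congr_of_eventuallyEq e2, a3, a4, a5⟩
    · subst h
      obtain ⟨a1, a2, a3, a4, a5⟩ := hlocal x₀ ⟨hx0, hx₀l⟩
      obtain ⟨b1, b2, -⟩ := hsol 0 (mem_Ici.2 le_rfl)
      rw [hub0, hqb0] at b1 b2
      have e1 : uu x₀ = u x₀ := if_pos le_rfl
      have e2 : qq x₀ = q x₀ := if_pos le_rfl
      rw [e1, e2]
      exact ⟨hglue u ub _ hub0.symm a1 b1, hglue q qb _ hqb0.symm a2 b2, a3, a4, a5⟩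
    · obtain ⟨a1, a2, a3, a4, a5⟩ := hsol (x - x₀) (mem_Ici.2 (by linarith))
      have e1 : uu =ᶠ[𝓝 x] fun y => ub (y - x₀) := by
        filter_upwards [lt_mem_nhds h] with y hy; exact if_neg (not_le.2 hy)
      have e2 : qq =ᶠ[𝓝 x] fun y => qb (y - x₀) := by
        filter_upwards [lt_mem_nhds h] with y hy; exact if_neg (not_le.2 hy)
      rw [show uu x = ub (x - x₀) from e1.self_of_nhds, show qq x = qb (x - x₀) from e2.self_of_nhds]
      exact ⟨(a1.comp_sub_const x x₀).congr_of_eventuallyEq e1,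
        (a2.comp_sub_const x x₀).congr_of_eventuallyEq e2, a3, a4, a5⟩
  set W : ℝ → ℝ := fun x => Wq l (uu x) (qq x) with hWd
  set Z : ℝ → ℝ := fun x => Zq l (uu x) (qq x) with hZd
  have hagree : ∀ᶠ x in 𝓝 (0 : ℝ), W x = Wf x ∧ Z x = Zf x := by
    filter_upwards [gt_mem_nhds hx₀p, hspos] with x h1 h2
    have e1 : uu x = u x := if_pos h1.le
    have e2 : qq x = q x := if_pos h1.le
    simp only [hWd, hZd]
    rw [e1, e2]
    exact Wq_inv hl.ne' h2.ne'
  have hWe : W =ᶠ[𝓝 0] Wf := hagree.mono fun x h => h.1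
  have hZe : Z =ᶠ[𝓝 0] Zf := hagree.mono fun x h => h.2
  have hsm : ContDiffOn ℝ (⊤ : ℕ∞) (fun x => (uu x, qq x)) (Ioi 0) :=
    contDiffOn_infty.2 hSol.contDiffOn
  have hune : ∀ x ∈ Ioi (0 : ℝ), uu x ≠ 0 := fun x hx => (hSol x hx).2.2.1.ne'
  have hWs : ∀ f : ℝ → ℝ, ∀ f₀ : ℝ → ℝ, AnalyticAt ℝ f₀ 0 → f =ᶠ[𝓝 0] f₀ →
      ContDiffOn ℝ (⊤ : ℕ∞) f (Ioi 0) → ContDiffOn ℝ (⊤ : ℕ∞) f (Ici 0) := by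
    intro f f₀ h1 h2 h3 x hx
    rcases (show (0 : ℝ) ≤ x from hx).eq_or_lt with h | h
    · rw [← h]
      exact (h1.contDiffAt.congr_of_eventuallyEq h2).contDiffWithinAt
    · exact (h3.contDiffAt (Ioi_mem_nhds h)).contDiffWithinAt
  refine ⟨W, Z, hWs W Wf hW hWe ?_, hWs Z Zf hZ hZe ?_, ?_, ?_, ?_, ?_⟩
  · have h1 : ContDiffOn ℝ (⊤ : ℕ∞) uu (Ioi 0) := hsm.fst
    have h2 : ContDiffOn ℝ (⊤ : ℕ∞) qq (Ioi 0) := hsm.snd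
    simp only [hWd]; unfold Wq
    exact (contDiffOn_const.add (contDiffOn_const.div h1 hune)).add ((contDiffOn_const.mul h2).div h1 hune)
  · have h1 : ContDiffOn ℝ (⊤ : ℕ∞) uu (Ioi 0) := hsm.fst
    have h2 : ContDiffOn ℝ (⊤ : ℕ∞) qq (Ioi 0) := hsm.snd
    simp only [hZd]; unfold Zq
    exact (contDiffOn_const.add (contDiffOn_const.div h1 hune)).sub ((contDiffOn_const.mul h2).div h1 hune)
  · intro x hx
    rcases (show (0 : ℝ) ≤ x from hx).eq_or_lt with h | h
    · rw [← h]
      have c1 : HasDerivAt W (deriv Wf 0) 0 :=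
        hW.differentiableAt.hasDerivAt.congr_of_eventuallyEq hWe
      have c2 : HasDerivAt Z (deriv Zf 0) 0 :=
        hZ.differentiableAt.hasDerivAt.congr_of_eventuallyEq hZe
      rw [(c1.hasDerivWithinAt (s := Ici 0)).derivWithin (uniqueDiffOn_Ici 0 0 (mem_Ici.2 le_rfl)),
        (c2.hasDerivWithinAt (s := Ici 0)).derivWithin (uniqueDiffOn_Ici 0 0 (mem_Ici.2 le_rfl)),
        hWe.self_of_nhds, hZe.self_of_nhds]
      exact ⟨oW.self_of_nhds, oZ.self_of_nhds⟩
    · obtain ⟨a1, a2, a3, a4, a5⟩ := hSol x h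
      have hq2 := (one_sub_sq_pos a4 a5).ne'
      have d1 := (hasDerivAt_const x (1 : ℝ)).fun_div a1 a3.ne'
      have d2 := (a2.const_mul l).fun_div a1 a3.ne'
      have c1 : HasDerivAt W (-uF l g (uu x) (qq x) / uu x ^ 2
          + l * (qF l g (uu x) (qq x) * uu x - qq x * uF l g (uu x) (qq x)) / uu x ^ 2) x :=
        ((d1.const_add (-1)).add d2).congr_deriv (by ring)
      have c2 : HasDerivAt Z (-uF l g (uu x) (qq x) / uu x ^ 2
          - l * (qF l g (uu x) (qq x) * uu x - qq x * uF l g (uu x) (qq x)) / uu x ^ 2) x :=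
        ((d1.const_add (-1)).sub d2).congr_deriv (by ring)
      rw [(c1.hasDerivWithinAt (s := Ici 0)).derivWithin (uniqueDiffOn_Ici 0 x hx),
        (c2.hasDerivWithinAt (s := Ici 0)).derivWithin (uniqueDiffOn_Ici 0 x hx)]
      simp only [hWd, hZd]
      rw [DW_uq hl.ne' a3.ne', DZ_uq hl.ne' a3.ne']
      exact ⟨ode_W hl.ne' a3.ne' hq2, ode_Z hl.ne' a3.ne' hq2⟩
  · obtain ⟨δ, hδ, h⟩ := Metric.eventually_nhds_iff.1 hagree
    refine ⟨δ, hδ, fun x hx => h ?_⟩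
    rw [dist_zero_right, norm_eq_abs, abs_of_nonneg hx.1]; exact hx.2
  · have hshift : Tendsto (fun x : ℝ => x - x₀) atTop atTop := tendsto_atTop_add_const_right _ (-x₀) tendsto_id
    have t1 : Tendsto uu atTop (𝓝 1) := by
      refine (hlimu.comp hshift).congr' ?_
      filter_upwards [eventually_gt_atTop x₀] with x hx
      exact (if_neg (not_le.2 hx)).symm
    have t2 : Tendsto qq atTop (𝓝 0) := by
      refine (hlimq.comp hshift).congr' ?_
      filter_upwards [eventually_gt_atTop x₀] with x hx
      exact (if_neg (not_le.2 hx)).symm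
    have t3 := (tendsto_const_nhds (x := (1 : ℝ))).div t1 one_ne_zero
    have t4 := (t2.const_mul l).div t1 one_ne_zero
    have t5 := (t3.const_add (-1)).add t4
    have t6 := (t3.const_add (-1)).sub t4
    have e : (-1 : ℝ) + 1 / 1 + l * 0 / 1 = 0 := by ring
    have e' : (-1 : ℝ) + 1 / 1 - l * 0 / 1 = 0 := by ring
    rw [e] at t5
    rw [e'] at t6
    exact t5.prodMk_nhds t6
  · intro x hx
    obtain ⟨-, -, a3, a4, a5⟩ := hSol x hx
    simp only [hWd, hZd]
    rw [DW_uq hl.ne' a3.ne', DZ_uq hl.ne' a3.ne']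
    exact ⟨by positivity, div_pos (by linarith) a3⟩

end

end

/-! ### Power series and the Taylor recursion -/

section

/-- The binomial convolution of a symmetric array, folded onto the asymmetric weights
`binom (m) (j-1)`. -/
lemma symm_conv (F : ℕ → ℕ → ℝ) (hF : ∀ i j, F i j = F j i) (m : ℕ) :
    ∑ j ∈ Finset.range (m + 2), (Nat.choose (m + 1) j : ℝ) * F j (m + 1 - j)
      = 2 * F 0 (m + 1) + 2 * ∑ j ∈ Finset.Ico 1 (m + 1), (Nat.choose m (j - 1) : ℝ) * F (m + 1 - j) j := by
  rw [Finset.sum_range_succ, Finset.range_eq_Ico, Finset.sum_eq_sum_Ico_succ_bot (by omega)]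
  have e1 : ∑ j ∈ Finset.Ico (0 + 1) (m + 1), (Nat.choose (m + 1) j : ℝ) * F j (m + 1 - j)
      = ∑ j ∈ Finset.Ico 1 (m + 1), (Nat.choose m (j - 1) : ℝ) * F (m + 1 - j) j
        + ∑ j ∈ Finset.Ico 1 (m + 1), (Nat.choose m j : ℝ) * F (m + 1 - j) j := by
    rw [← Finset.sum_add_distrib]
    refine Finset.sum_congr rfl fun j hj => ?_
    obtain ⟨i, rfl⟩ : ∃ i, j = i + 1 := ⟨j - 1, by have := (Finset.mem_Ico.1 hj).1; omega⟩
    rw [Nat.choose_succ_succ, hF]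
    push_cast
    simp only [Nat.succ_eq_add_one, add_mul]
  have e2 : ∑ j ∈ Finset.Ico 1 (m + 1), (Nat.choose m j : ℝ) * F (m + 1 - j) j
      = ∑ j ∈ Finset.Ico 1 (m + 1), (Nat.choose m (j - 1) : ℝ) * F (m + 1 - j) j := by
    refine Finset.sum_bij' (fun j _ => m + 1 - j) (fun j _ => m + 1 - j) ?_ ?_ ?_ ?_ ?_
    · intro j hj; simp only [Finset.mem_Ico] at *; omega
    · intro j hj; simp only [Finset.mem_Ico] at *; omega
    · intro j hj; simp only [Finset.mem_Ico] at *; omega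
    · intro j hj; simp only [Finset.mem_Ico] at *; omega
    · intro j hj
      simp only [Finset.mem_Ico] at hj
      have h1 : m + 1 - (m + 1 - j) = j := by omega
      have h2 : m + 1 - j - 1 = m - j := by omega
      rw [h1, h2, hF, Nat.choose_symm (by omega)]
  rw [e1, e2]
  simp only [Nat.choose_zero_right, Nat.choose_self, Nat.sub_zero, Nat.sub_self, hF (m + 1) 0]
  push_cast
  ring

/-- Coefficients of size `M R ^ m m!` define an analytic function. -/
lemma ofScalars_hasFPowerSeriesAt {a : ℕ → ℝ} {M R : ℝ} (hR : 0 < R)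
    (ha : ∀ m, |a m| ≤ M * R ^ m * (m.factorial : ℝ)) :
    HasFPowerSeriesAt (fun x : ℝ => ∑' i : ℕ, a i * x ^ i / (i.factorial : ℝ))
      (FormalMultilinearSeries.ofScalars ℝ (fun n => a n / n.factorial)) 0 := by
  set p := FormalMultilinearSeries.ofScalars ℝ (fun n => a n / (n.factorial : ℝ)) with hp
  have hr : ((Real.toNNReal R⁻¹ : NNReal) : ENNReal) ≤ p.radius := by
    refine p.le_radius_of_bound M fun n => ?_
    rw [hp, FormalMultilinearSeries.ofScalars_norm, norm_eq_abs, abs_div, Nat.abs_cast]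
    have h1 : (0 : ℝ) < n.factorial := by positivity
    have h2 : |a n| / (n.factorial : ℝ) ≤ M * R ^ n := (div_le_iff₀ h1).2 (ha n)
    rw [Real.coe_toNNReal _ (by positivity)]
    calc _ ≤ M * R ^ n * (R⁻¹) ^ n := by gcongr
      _ = M := by rw [mul_assoc, ← mul_pow, mul_inv_cancel₀ hR.ne', one_pow, mul_one]
  have hpos : 0 < p.radius := lt_of_lt_of_le (by
    rw [ENNReal.coe_pos, Real.toNNReal_pos]; positivity) hr
  have := (p.hasFPowerSeriesOnBall hpos).hasFPowerSeriesAt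
  convert this using 1
  funext x
  rw [FormalMultilinearSeries.sum]
  refine tsum_congr fun n => ?_
  rw [hp, FormalMultilinearSeries.ofScalars_apply_eq, smul_eq_mul]
  ring

lemma iteratedDeriv_of_series {a : ℕ → ℝ} {f : ℝ → ℝ}
    (h : HasFPowerSeriesAt f (FormalMultilinearSeries.ofScalars ℝ (fun n => a n / n.factorial)) 0)
    (m : ℕ) : iteratedDeriv m f 0 = a m := by
  have h1 := h.analyticAt.hasFPowerSeriesAt
  have h2 := h.eq_formalMultilinearSeries h1
  have h3 := congrFun (FormalMultilinearSeries.ofScalars_series_injective ℝ ℝ h2) m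
  have h4 : (m.factorial : ℝ) ≠ 0 := by positivity
  field_simp at h3
  exact h3.symm

lemma eventually_zero_of_jets {f : ℝ → ℝ} (hf : AnalyticAt ℝ f 0) (h : ∀ m, iteratedDeriv m f 0 = 0) :
    ∀ᶠ x in 𝓝 (0 : ℝ), f x = 0 := by
  have h1 := hf.hasFPowerSeriesAt
  have h2 : (FormalMultilinearSeries.ofScalars ℝ (fun n => iteratedDeriv n f 0 / n.factorial)) = 0 := by
    rw [FormalMultilinearSeries.ofScalars_series_eq_zero]
    funext n; simp [h n]
  rw [h2] at h1
  exact h1.eventually_eq_zero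

lemma jet_mul {f g : ℝ → ℝ} (hf : AnalyticAt ℝ f 0) (hg : AnalyticAt ℝ g 0) (m : ℕ) :
    iteratedDeriv m (fun x => f x * g x) 0
      = ∑ i ∈ Finset.range (m + 1), (Nat.choose m i : ℝ) * (iteratedDeriv i f 0 * iteratedDeriv (m - i) g 0) := by
  rw [iteratedDeriv_fun_mul hf.contDiffAt hg.contDiffAt]
  exact Finset.sum_congr rfl fun i _ => by ring

lemma jet_add {f g : ℝ → ℝ} (hf : AnalyticAt ℝ f 0) (hg : AnalyticAt ℝ g 0) (m : ℕ) :
    iteratedDeriv m (fun x => f x + g x) 0 = iteratedDeriv m f 0 + iteratedDeriv m g 0 :=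
  iteratedDeriv_fun_add hf.contDiffAt hg.contDiffAt

lemma jet_sub {f g : ℝ → ℝ} (hf : AnalyticAt ℝ f 0) (hg : AnalyticAt ℝ g 0) (m : ℕ) :
    iteratedDeriv m (fun x => f x - g x) 0 = iteratedDeriv m f 0 - iteratedDeriv m g 0 :=
  iteratedDeriv_fun_sub hf.contDiffAt hg.contDiffAt

lemma jet_const_mul {f : ℝ → ℝ} (c : ℝ) (m : ℕ) :
    iteratedDeriv m (fun x => c * f x) 0 = c * iteratedDeriv m f 0 :=
  iteratedDeriv_const_mul_field c f

/-- The `m`-th derivative at `0` of the quadratic polynomial `c₁W + c₂Z + c₃W² + c₄WZ + c₅Z²`. -/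
lemma jet_quad {W Z : ℝ → ℝ} (hW : AnalyticAt ℝ W 0) (hZ : AnalyticAt ℝ Z 0) (c1 c3 c4 c5 d1: ℝ) (m : ℕ) :
    iteratedDeriv m (fun x => c1 * W x + d1 * Z x + (c3 * (W x * W x) + c4 * (W x * Z x + Z x * W x) + c5 * (Z x * Z x))) 0
      = c1 * iteratedDeriv m W 0 + d1 * iteratedDeriv m Z 0 + ∑ j ∈ Finset.range (m + 1), (Nat.choose m j : ℝ) *
        (c3 * (iteratedDeriv j W 0 * iteratedDeriv (m - j) W 0)
          + c4 * (iteratedDeriv j W 0 * iteratedDeriv (m - j) Z 0 + iteratedDeriv j Z 0 * iteratedDeriv (m - j) W 0)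
          + c5 * (iteratedDeriv j Z 0 * iteratedDeriv (m - j) Z 0)) := by
  have a1 := hW.fun_mul hW
  have a2 := hW.fun_mul hZ
  have a3 := hZ.fun_mul hW
  have a4 := hZ.fun_mul hZ
  have a5 := a2.fun_add a3
  rw [jet_add ((analyticAt_const.fun_mul hW).fun_add (analyticAt_const.fun_mul hZ))
      (((analyticAt_const.fun_mul a1).fun_add (analyticAt_const.fun_mul a5)).fun_add (analyticAt_const.fun_mul a4)),
    jet_add (analyticAt_const.fun_mul hW) (analyticAt_const.fun_mul hZ),
    jet_add ((analyticAt_const.fun_mul a1).fun_add (analyticAt_const.fun_mul a5)) (analyticAt_const.fun_mul a4),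
    jet_add (analyticAt_const.fun_mul a1) (analyticAt_const.fun_mul a5),
    jet_const_mul, jet_const_mul, jet_const_mul, jet_const_mul, jet_const_mul, jet_add a2 a3,
    jet_mul hW hW, jet_mul hW hZ, jet_mul hZ hW, jet_mul hZ hZ]
  congr 1
  rw [Finset.mul_sum, Finset.mul_sum, ← Finset.sum_add_distrib, Finset.mul_sum, ← Finset.sum_add_distrib,
    ← Finset.sum_add_distrib]
  exact Finset.sum_congr rfl fun i _ => by ring

section ode
variable {γ r : ℝ} {W Z : ℝ → ℝ}

lemma jet_NW (hW : AnalyticAt ℝ W 0) (hZ : AnalyticAt ℝ Z 0) (m : ℕ) :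
    iteratedDeriv m (fun x => NW γ r (W x) (Z x)) 0
      = NWseq γ r (fun i => iteratedDeriv i W 0) (fun i => iteratedDeriv i Z 0) m := by
  have e : (fun x => NW γ r (W x) (Z x)) = fun x => (-r) * W x + 0 * Z x + (-(1 + 2 * alphaF γ) / 2 * (W x * W x)
      + (-(1 - alphaF γ) / 4) * (W x * Z x + Z x * W x) + alphaF γ / 2 * (Z x * Z x)) := by
    funext x; unfold NW; ring
  rw [e]
  rcases m with _ | m
  · simp only [iteratedDeriv_zero, NWseq, NW]; ring
  rw [jet_quad hW hZ]
  have := symm_conv (fun i j => hessNW γ (iteratedDeriv i W 0) (iteratedDeriv i Z 0) (iteratedDeriv j W 0) (iteratedDeriv j Z 0))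
    (fun i j => by unfold hessNW; ring) m
  have e2 : ∑ j ∈ Finset.range (m + 1 + 1), (Nat.choose (m + 1) j : ℝ) *
        (-(1 + 2 * alphaF γ) / 2 * (iteratedDeriv j W 0 * iteratedDeriv (m + 1 - j) W 0)
          + (-(1 - alphaF γ) / 4) * (iteratedDeriv j W 0 * iteratedDeriv (m + 1 - j) Z 0 + iteratedDeriv j Z 0 * iteratedDeriv (m + 1 - j) W 0)
          + alphaF γ / 2 * (iteratedDeriv j Z 0 * iteratedDeriv (m + 1 - j) Z 0))
      = (1 / 2) * ∑ j ∈ Finset.range (m + 2), (Nat.choose (m + 1) j : ℝ) * hessNW γ (iteratedDeriv j W 0) (iteratedDeriv j Z 0)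
          (iteratedDeriv (m + 1 - j) W 0) (iteratedDeriv (m + 1 - j) Z 0) := by
    rw [Finset.mul_sum]
    exact Finset.sum_congr rfl fun i _ => by unfold hessNW; ring
  rw [e2, this]
  simp only [NWseq, gradNW1, gradNW2, hessNW]
  ring

lemma jet_NZ (hW : AnalyticAt ℝ W 0) (hZ : AnalyticAt ℝ Z 0) (m : ℕ) :
    iteratedDeriv m (fun x => NZ γ r (W x) (Z x)) 0
      = NZseq γ r (fun i => iteratedDeriv i W 0) (fun i => iteratedDeriv i Z 0) m := by
  have e : (fun x => NZ γ r (W x) (Z x)) = fun x => 0 * W x + (-r) * Z x + (alphaF γ / 2 * (W x * W x)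
      + (-(1 - alphaF γ) / 4) * (W x * Z x + Z x * W x) + -(1 + 2 * alphaF γ) / 2 * (Z x * Z x)) := by
    funext x; unfold NZ; ring
  rw [e]
  rcases m with _ | m
  · simp only [iteratedDeriv_zero, NZseq, NZ]; ring
  rw [jet_quad hW hZ]
  have := symm_conv (fun i j => hessNZ γ (iteratedDeriv i W 0) (iteratedDeriv i Z 0) (iteratedDeriv j W 0) (iteratedDeriv j Z 0))
    (fun i j => by unfold hessNZ; ring) m
  have e2 : ∑ j ∈ Finset.range (m + 1 + 1), (Nat.choose (m + 1) j : ℝ) *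
        (alphaF γ / 2 * (iteratedDeriv j W 0 * iteratedDeriv (m + 1 - j) W 0)
          + (-(1 - alphaF γ) / 4) * (iteratedDeriv j W 0 * iteratedDeriv (m + 1 - j) Z 0 + iteratedDeriv j Z 0 * iteratedDeriv (m + 1 - j) W 0)
          + -(1 + 2 * alphaF γ) / 2 * (iteratedDeriv j Z 0 * iteratedDeriv (m + 1 - j) Z 0))
      = (1 / 2) * ∑ j ∈ Finset.range (m + 2), (Nat.choose (m + 1) j : ℝ) * hessNZ γ (iteratedDeriv j W 0) (iteratedDeriv j Z 0)
          (iteratedDeriv (m + 1 - j) W 0) (iteratedDeriv (m + 1 - j) Z 0) := by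
    rw [Finset.mul_sum]
    exact Finset.sum_congr rfl fun i _ => by unfold hessNZ; ring
  rw [e2, this]
  simp only [NZseq, gradNZ1, gradNZ2, hessNZ]
  ring

lemma jet_lin (hW : AnalyticAt ℝ W 0) (hZ : AnalyticAt ℝ Z 0) (c d : ℝ) (m : ℕ) :
    iteratedDeriv (m + 1) (fun x => 1 + (c * W x + d * Z x)) 0
      = c * iteratedDeriv (m + 1) W 0 + d * iteratedDeriv (m + 1) Z 0 := by
  rw [jet_add analyticAt_const ((analyticAt_const.fun_mul hW).fun_add (analyticAt_const.fun_mul hZ)),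
    jet_add (analyticAt_const.fun_mul hW) (analyticAt_const.fun_mul hZ), jet_const_mul, jet_const_mul,
    iteratedDeriv_const]
  simp

lemma jet_DW (hW : AnalyticAt ℝ W 0) (hZ : AnalyticAt ℝ Z 0) (m : ℕ) :
    iteratedDeriv m (fun x => DW γ (W x) (Z x)) 0
      = DWseq γ (fun i => iteratedDeriv i W 0) (fun i => iteratedDeriv i Z 0) m := by
  have e : (fun x => DW γ (W x) (Z x)) = fun x => 1 + ((1 + alphaF γ) / 2 * W x + (1 - alphaF γ) / 2 * Z x) := by
    funext x; unfold DW; ring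
  rw [e]
  rcases m with _ | m
  · simp only [iteratedDeriv_zero, DWseq, DW]; ring
  · rw [jet_lin hW hZ]; rfl

lemma jet_DZ (hW : AnalyticAt ℝ W 0) (hZ : AnalyticAt ℝ Z 0) (m : ℕ) :
    iteratedDeriv m (fun x => DZ γ (W x) (Z x)) 0
      = DZseq γ (fun i => iteratedDeriv i W 0) (fun i => iteratedDeriv i Z 0) m := by
  have e : (fun x => DZ γ (W x) (Z x)) = fun x => 1 + ((1 - alphaF γ) / 2 * W x + (1 + alphaF γ) / 2 * Z x) := by
    funext x; unfold DZ; ring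
  rw [e]
  rcases m with _ | m
  · simp only [iteratedDeriv_zero, DZseq, DZ]; ring
  · rw [jet_lin hW hZ]; rfl

/-- An analytic identity `D f' = G` can be checked on all jets, by the Leibniz rule. -/
lemma ode_of_jets {D f G : ℝ → ℝ} (hD : AnalyticAt ℝ D 0) (hf : AnalyticAt ℝ f 0) (hG : AnalyticAt ℝ G 0)
    (h : ∀ m, ∑ j ∈ Finset.range (m + 1), (Nat.choose m j : ℝ) * (iteratedDeriv (m - j) D 0 * iteratedDeriv (j + 1) f 0)
      = iteratedDeriv m G 0) : ∀ᶠ x in 𝓝 (0 : ℝ), D x * deriv f x = G x := by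
  have h1 := eventually_zero_of_jets (f := fun x => deriv f x * D x - G x) ((hf.deriv.fun_mul hD).fun_sub hG) (by
    intro m
    rw [jet_sub (hf.deriv.fun_mul hD) hG, jet_mul hf.deriv hD, ← h m, sub_eq_zero]
    refine Finset.sum_congr rfl fun j _ => ?_
    rw [iteratedDeriv_succ']
    ring)
  filter_upwards [h1] with x hx
  linarith
end ode

/-- A pair of sequences of at most factorial growth that satisfies the Taylor recursion gives an
analytic solution of the autonomous system. -/
theorem series_ode {γ r : ℝ} {a b : ℕ → ℝ} {M R : ℝ} (hR : 0 < R)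
    (ha : ∀ m, |a m| ≤ M * R ^ m * (m.factorial : ℝ)) (hb : ∀ m, |b m| ≤ M * R ^ m * (m.factorial : ℝ))
    (hW : ∀ m, ∑ j ∈ Finset.range (m + 1), (Nat.choose m j : ℝ) * (DWseq γ a b (m - j) * a (j + 1)) = NWseq γ r a b m)
    (hZ : ∀ m, ∑ j ∈ Finset.range (m + 1), (Nat.choose m j : ℝ) * (DZseq γ a b (m - j) * b (j + 1)) = NZseq γ r a b m)
    {f g : ℝ → ℝ} (hf : f = fun x : ℝ => ∑' i : ℕ, a i * x ^ i / (i.factorial : ℝ))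
    (hg : g = fun x : ℝ => ∑' i : ℕ, b i * x ^ i / (i.factorial : ℝ)) :
    AnalyticAt ℝ f 0 ∧ AnalyticAt ℝ g 0 ∧ f 0 = a 0 ∧ g 0 = b 0 ∧ deriv f 0 = a 1 ∧ deriv g 0 = b 1 ∧
    (∀ᶠ x in 𝓝 (0 : ℝ), DW γ (f x) (g x) * deriv f x = NW γ r (f x) (g x)) ∧
    (∀ᶠ x in 𝓝 (0 : ℝ), DZ γ (f x) (g x) * deriv g x = NZ γ r (f x) (g x)) := by
  have f1 := ofScalars_hasFPowerSeriesAt hR ha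
  have g1 := ofScalars_hasFPowerSeriesAt hR hb
  rw [← hf] at f1
  rw [← hg] at g1
  have fa := f1.analyticAt
  have ga := g1.analyticAt
  have ja : (fun i => iteratedDeriv i f 0) = a := funext (iteratedDeriv_of_series f1)
  have jb : (fun i => iteratedDeriv i g 0) = b := funext (iteratedDeriv_of_series g1)
  have hDW : AnalyticAt ℝ (fun x => DW γ (f x) (g x)) 0 := by unfold DW; fun_prop
  have hDZ : AnalyticAt ℝ (fun x => DZ γ (f x) (g x)) 0 := by unfold DZ; fun_prop
  have hNW : AnalyticAt ℝ (fun x => NW γ r (f x) (g x)) 0 := by unfold NW; fun_prop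
  have hNZ : AnalyticAt ℝ (fun x => NZ γ r (f x) (g x)) 0 := by unfold NZ; fun_prop
  refine ⟨fa, ga, ?_, ?_, ?_, ?_, ode_of_jets hDW fa hNW fun m => ?_, ode_of_jets hDZ ga hNZ fun m => ?_⟩
  · simpa using iteratedDeriv_of_series f1 0
  · simpa using iteratedDeriv_of_series g1 0
  · simpa using iteratedDeriv_of_series f1 1
  · simpa using iteratedDeriv_of_series g1 1
  · rw [jet_NW fa ga, ja, jb, ← hW m]
    refine Finset.sum_congr rfl fun j _ => ?_
    rw [jet_DW fa ga, ja, jb, iteratedDeriv_of_series f1]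
  · rw [jet_NZ fa ga, ja, jb, ← hZ m]
    refine Finset.sum_congr rfl fun j _ => ?_
    rw [jet_DZ fa ga, ja, jb, iteratedDeriv_of_series g1]

end

/-! ### Growth of the Taylor coefficients -/

section

section rec
variable (γ r : ℝ)

lemma coeff_W (m : ℕ) : (coeff γ r (m + 2)).1
    = (NWseq γ r (fun i => (coeff γ r i).1) (fun i => (coeff γ r i).2) (m + 1)
        - ∑ j ∈ Finset.range (m + 1), (Nat.choose (m + 1) j : ℝ)
          * DWseq γ (fun i => (coeff γ r i).1) (fun i => (coeff γ r i).2) (m + 1 - j) * (coeff γ r (j + 1)).1)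
      / DW γ (W₀ γ r) (Z₀ γ r) := by
  rw [coeff]
  simp only
  congr 1
  · congr 1
    · simp only [NWseq]
      congr 1
      · simp
      · refine Finset.sum_congr rfl fun j hj => ?_
        have := Finset.mem_Ico.1 hj
        rw [dif_pos (by omega), dif_pos (by omega), dif_pos (by omega), dif_pos (by omega)]
    · refine Finset.sum_congr rfl fun j hj => ?_
      have := Finset.mem_range.1 hj
      obtain ⟨i, hi⟩ : ∃ i, m + 1 - j = i + 1 := ⟨m - j, by omega⟩
      rw [hi]
      simp only [DWseq]
      rw [dif_pos (by omega), dif_pos (by omega), dif_pos (by omega)]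
  · simp [DWseq, coeff]

lemma coeff_Z (m : ℕ) : (coeff γ r (m + 2)).2
    = (-(∑ j ∈ Finset.Ico 1 (m + 1), (Nat.choose (m + 2) j : ℝ)
          * DZseq γ (fun i => (coeff γ r i).1) (fun i => (coeff γ r i).2) (m + 2 - j) * (coeff γ r (j + 1)).2)
        + (gradNZ1 γ (W₀ γ r) (Z₀ γ r) * (coeff γ r (m + 2)).1
          + ∑ j ∈ Finset.Ico 1 (m + 2), (Nat.choose (m + 1) (j - 1) : ℝ)
            * hessNZ γ (coeff γ r (m + 2 - j)).1 (coeff γ r (m + 2 - j)).2 (coeff γ r j).1 (coeff γ r j).2)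
        - Z₁ γ r * (coeff γ r (m + 2)).1 * ((1 - alphaF γ) / 2))
      / (((1 - alphaF γ) / 2 * W₁ γ r + (1 + alphaF γ) / 2 * Z₁ γ r) * (((m : ℝ) + 2) - kFun γ r)) := by
  obtain ⟨w, hw⟩ : ∃ w, w = (coeff γ r (m + 2)).1 := ⟨_, rfl⟩
  rw [← hw]
  conv_lhs => rw [coeff]
  rw [coeff] at hw
  simp only at hw ⊢
  rw [← hw]
  congr 1
  · congr 1
    · congr 1
      · congr 1
        refine Finset.sum_congr rfl fun j hj => ?_
        have := Finset.mem_Ico.1 hj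
        obtain ⟨i, hi⟩ : ∃ i, m + 2 - j = i + 1 := ⟨m + 1 - j, by omega⟩
        rw [hi]
        simp only [DZseq]
        rw [dif_pos (by omega), dif_pos (by omega), dif_pos (by omega)]
      · congr 1
        · simp [coeff]
        · refine Finset.sum_congr rfl fun j hj => ?_
          have := Finset.mem_Ico.1 hj
          rw [dif_pos (by omega), dif_pos (by omega), dif_pos (by omega), dif_pos (by omega)]
  · simp [DZseq, coeff]

end rec

/-- `Σ 1/(i²j²) ≤ 8/n²` over `i + j = n`, `i, j ≥ 1`. -/
lemma sum_inv_sq_conv (n : ℕ) :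
    ∑ j ∈ Finset.Ico 1 n, (1 / (j : ℝ) ^ 2) * (1 / ((n - j : ℕ) : ℝ) ^ 2) ≤ 8 / (n : ℝ) ^ 2 := by
  have h1 : ∀ n : ℕ, ∑ j ∈ Finset.Ico 1 (n + 2), 1 / (j : ℝ) ^ 2 ≤ 2 - 1 / ((n : ℝ) + 1) := by
    intro n
    induction n with
    | zero => simp; norm_num
    | succ k ih =>
      rw [Finset.sum_Ico_succ_top (by omega)]
      have h2 : (1 : ℝ) / ((k + 1 + 1 : ℕ) : ℝ) ^ 2 ≤ 1 / ((k : ℝ) + 1) - 1 / (((k + 1 : ℕ) : ℝ) + 1) := by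
        push_cast
        rw [div_sub_div _ _ (by positivity) (by positivity), div_le_div_iff₀ (by positivity) (by positivity)]
        nlinarith [(k.cast_nonneg : (0 : ℝ) ≤ k)]
      linarith
  have h1' : ∀ n : ℕ, ∑ j ∈ Finset.Ico 1 n, 1 / (j : ℝ) ^ 2 ≤ 2 := by
    intro n
    match n with
    | 0 => simp
    | 1 => simp
    | n + 2 =>
      have := h1 n
      have h3 : (0 : ℝ) < 1 / ((n : ℝ) + 1) := by positivity
      linarith
  have h2 : ∑ j ∈ Finset.Ico 1 n, 1 / ((n - j : ℕ) : ℝ) ^ 2 = ∑ j ∈ Finset.Ico 1 n, 1 / (j : ℝ) ^ 2 := by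
    refine Finset.sum_bij' (fun j _ => n - j) (fun j _ => n - j) ?_ ?_ ?_ ?_ ?_ <;>
    · intro j hj; simp only [Finset.mem_Ico] at *; try omega
  rcases Nat.eq_zero_or_pos n with h0 | h0
  · subst h0; simp
  have hn : (0 : ℝ) < n := by exact_mod_cast h0
  have h3 : ∀ j ∈ Finset.Ico 1 n, (1 / (j : ℝ) ^ 2) * (1 / ((n - j : ℕ) : ℝ) ^ 2)
      ≤ 2 / (n : ℝ) ^ 2 * (1 / (j : ℝ) ^ 2 + 1 / ((n - j : ℕ) : ℝ) ^ 2) := by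
    intro j hj
    have hj' := Finset.mem_Ico.1 hj
    have p1 : (0 : ℝ) < j := by exact_mod_cast hj'.1
    have p2 : (0 : ℝ) < ((n - j : ℕ) : ℝ) := by exact_mod_cast (by omega : 0 < n - j)
    have e : (n : ℝ) = j + ((n - j : ℕ) : ℝ) := by
      rw [Nat.cast_sub hj'.2.le]; ring
    rw [e]
    rw [div_add_div _ _ (by positivity) (by positivity), div_mul_div_comm, div_mul_div_comm,
      div_le_div_iff₀ (by positivity) (by positivity)]
    have := mul_nonneg (mul_pos (pow_pos p1 2) (pow_pos p2 2)).le (sq_nonneg ((j : ℝ) - ((n - j : ℕ) : ℝ)))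
    nlinarith
  calc _ ≤ ∑ j ∈ Finset.Ico 1 n, 2 / (n : ℝ) ^ 2 * (1 / (j : ℝ) ^ 2 + 1 / ((n - j : ℕ) : ℝ) ^ 2) :=
        Finset.sum_le_sum h3
    _ = 2 / (n : ℝ) ^ 2 * (∑ j ∈ Finset.Ico 1 n, 1 / (j : ℝ) ^ 2 + ∑ j ∈ Finset.Ico 1 n, 1 / (j : ℝ) ^ 2) := by
        rw [← Finset.mul_sum, Finset.sum_add_distrib, h2]
    _ ≤ 2 / (n : ℝ) ^ 2 * (2 + 2) := by gcongr <;> exact h1' n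
    _ = 8 / (n : ℝ) ^ 2 := by ring

/-- A nonnegative sequence satisfying the quadratic majorant recursion grows at most
geometrically: `x m ≤ M R^(m-2)/m²` propagates. -/
lemma growth {x : ℕ → ℝ} (hx : ∀ m, 0 ≤ x m) {C : ℝ} (hC : 0 ≤ C)
    (h : ∀ m, 3 ≤ m → x m ≤ C * (x (m - 1) + ∑ j ∈ Finset.Ico 1 (m - 1), x j * x (m - 1 - j)
      + ∑ j ∈ Finset.Ico 1 m, x j * x (m - j) + ∑ j ∈ Finset.Ico 2 m, x j * x (m + 1 - j))) :
    ∃ M R : ℝ, 0 < R ∧ ∀ m, x m ≤ M * R ^ m := by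
  set M : ℝ := 1 + x 0 + x 1 + 4 * x 2 with hM
  have hM1 : 1 ≤ M := by have := hx 0; have := hx 1; have := hx 2; linarith
  set R : ℝ := 1 + C * (4 + 100 * M) with hR
  have hR1 : 1 ≤ R := by have := mul_nonneg hC (by linarith : 0 ≤ 4 + 100 * M); linarith
  have key : ∀ m, 1 ≤ m → x m ≤ M * R ^ (m - 2) * (1 / (m : ℝ) ^ 2) := by
    intro m
    induction m using Nat.strong_induction_on with
    | _ m ih =>
      intro hm
      rcases Nat.lt_or_ge m 3 with h3 | h3
      · interval_cases m
        · have := hx 0; have := hx 2; norm_num; linarith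
        · have := hx 0; have := hx 1; norm_num; linarith
      -- a convolution of total index `s` whose exponents add up to at most `m - 3`
      have conv : ∀ (S : Finset ℕ) (s : ℕ), S ⊆ Finset.Ico 1 s → m ≤ s + 1 →
          (∀ j ∈ S, j < m ∧ s - j < m ∧ (j - 2) + (s - j - 2) ≤ m - 3) →
          ∑ j ∈ S, x j * x (s - j) ≤ 32 * M ^ 2 * R ^ (m - 3) * (1 / (m : ℝ) ^ 2) := by
        intro S s hS hs hj
        have hs0 : (0 : ℝ) < s := by exact_mod_cast (by omega : 0 < s)
        have hm0 : (0 : ℝ) < m := by exact_mod_cast hm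
        calc ∑ j ∈ S, x j * x (s - j)
            ≤ ∑ j ∈ S, M ^ 2 * R ^ (m - 3) * ((1 / (j : ℝ) ^ 2) * (1 / ((s - j : ℕ) : ℝ) ^ 2)) := by
              refine Finset.sum_le_sum fun j hjS => ?_
              obtain ⟨a1, a2, a3⟩ := hj j hjS
              have a4 := Finset.mem_Ico.1 (hS hjS)
              have b1 := ih j a1 a4.1
              have b2 := ih (s - j) a2 (by omega)
              calc x j * x (s - j) ≤ (M * R ^ (j - 2) * (1 / (j : ℝ) ^ 2))
                    * (M * R ^ (s - j - 2) * (1 / ((s - j : ℕ) : ℝ) ^ 2)) :=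
                    mul_le_mul b1 b2 (hx _) (by positivity)
                _ = M ^ 2 * R ^ ((j - 2) + (s - j - 2)) * ((1 / (j : ℝ) ^ 2) * (1 / ((s - j : ℕ) : ℝ) ^ 2)) := by
                    rw [pow_add]; ring
                _ ≤ _ := by
                    gcongr
          _ ≤ ∑ j ∈ Finset.Ico 1 s, M ^ 2 * R ^ (m - 3) * ((1 / (j : ℝ) ^ 2) * (1 / ((s - j : ℕ) : ℝ) ^ 2)) :=
              Finset.sum_le_sum_of_subset_of_nonneg hS fun j _ _ => by positivity
          _ ≤ M ^ 2 * R ^ (m - 3) * (8 / (s : ℝ) ^ 2) := by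
              rw [← Finset.mul_sum]
              have := sum_inv_sq_conv s
              gcongr
          _ ≤ M ^ 2 * R ^ (m - 3) * (32 / (m : ℝ) ^ 2) := by
              have : (8 : ℝ) / (s : ℝ) ^ 2 ≤ 32 / (m : ℝ) ^ 2 := by
                rw [div_le_div_iff₀ (by positivity) (by positivity)]
                have : (m : ℝ) ≤ 2 * s := by exact_mod_cast (by omega : m ≤ 2 * s)
                nlinarith
              gcongr
          _ = _ := by ring
      have s1 := conv (Finset.Ico 1 (m - 1)) (m - 1) subset_rfl (by omega) (by
        intro j hj; have := Finset.mem_Ico.1 hj; omega)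
      have s2 := conv (Finset.Ico 1 m) m subset_rfl (by omega) (by
        intro j hj; have := Finset.mem_Ico.1 hj; omega)
      have s3 := conv (Finset.Ico 2 m) (m + 1) (by
        intro j hj; simp only [Finset.mem_Ico] at *; omega) (by omega) (by
        intro j hj; have := Finset.mem_Ico.1 hj; omega)
      have hm0 : (0 : ℝ) < m := by exact_mod_cast hm
      have s0 : x (m - 1) ≤ 4 * M * R ^ (m - 3) * (1 / (m : ℝ) ^ 2) := by
        have h1 := ih (m - 1) (by omega) (by omega)
        have h2 : (1 : ℝ) / ((m - 1 : ℕ) : ℝ) ^ 2 ≤ 4 * (1 / (m : ℝ) ^ 2) := by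
          have h4 : (0 : ℝ) < ((m - 1 : ℕ) : ℝ) := by exact_mod_cast (by omega : 0 < m - 1)
          rw [← mul_div_assoc, div_le_div_iff₀ (by positivity) (by positivity)]
          have : (m : ℝ) ≤ 2 * ((m - 1 : ℕ) : ℝ) := by exact_mod_cast (by omega : m ≤ 2 * (m - 1))
          nlinarith
        have h3 : m - 1 - 2 = m - 3 := by omega
        rw [h3] at h1
        calc _ ≤ _ := h1
          _ ≤ M * R ^ (m - 3) * (4 * (1 / (m : ℝ) ^ 2)) := by gcongr
          _ = _ := by ring
      calc x m ≤ _ := h m h3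
        _ ≤ C * (4 * M * R ^ (m - 3) * (1 / (m : ℝ) ^ 2) + 32 * M ^ 2 * R ^ (m - 3) * (1 / (m : ℝ) ^ 2)
            + 32 * M ^ 2 * R ^ (m - 3) * (1 / (m : ℝ) ^ 2) + 32 * M ^ 2 * R ^ (m - 3) * (1 / (m : ℝ) ^ 2)) := by
            gcongr
        _ = (C * (4 + 96 * M)) * (M * R ^ (m - 3) * (1 / (m : ℝ) ^ 2)) := by ring
        _ ≤ R * (M * R ^ (m - 3) * (1 / (m : ℝ) ^ 2)) := by
            gcongr
            rw [hR]
            nlinarith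
        _ = M * R ^ (m - 2) * (1 / (m : ℝ) ^ 2) := by
            have : m - 2 = (m - 3) + 1 := by omega
            rw [this, pow_succ]; ring
  refine ⟨M, R, by linarith, fun m => ?_⟩
  rcases Nat.eq_zero_or_pos m with h0 | h0
  · subst h0; have := hx 1; have := hx 2; rw [pow_zero]; linarith
  · have hm1 : (1 : ℝ) ≤ m := by exact_mod_cast h0
    calc x m ≤ _ := key m h0
      _ ≤ M * R ^ (m - 2) * 1 := by
          gcongr
          rw [div_le_one (by positivity)]; nlinarith
      _ ≤ M * R ^ m := by
          rw [mul_one]; gcongr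
          omega

end

section

lemma choose_fact {p q s : ℕ} (h : q ≤ p) (X Y : ℝ) (hs : s = p - q) :
    (p.choose q : ℝ) * (X * (s.factorial : ℝ)) * (Y * ((q + 1).factorial : ℝ))
      = (p.factorial : ℝ) * (q + 1) * (X * Y) := by
  subst hs
  have := Nat.choose_mul_factorial_mul_factorial h
  have h2 : (p.choose q : ℝ) * (q.factorial : ℝ) * ((p - q).factorial : ℝ) = (p.factorial : ℝ) := by
    exact_mod_cast this
  rw [Nat.factorial_succ, ← h2]; push_cast; ring

/-- Distance of `k` from the integers, measured relative to the integer. -/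
lemma abs_sub_ge {k : ℝ} {n : ℕ} (hk : (n : ℝ) < k) (hk1 : k < n + 1) :
    ∃ c : ℝ, 0 < c ∧ ∀ m : ℕ, c * m ≤ |(m : ℝ) - k| := by
  refine ⟨min (k - n) (n + 1 - k) / (n + 1), div_pos (lt_min (by linarith) (by linarith)) (by positivity), fun m => ?_⟩
  have hn : (0 : ℝ) < n + 1 := by positivity
  rw [div_mul_eq_mul_div, div_le_iff₀ hn]
  have e1 := min_le_left (k - n) (n + 1 - k)
  have e2 := min_le_right (k - n) (n + 1 - k)
  rcases Nat.lt_or_ge n m with h | h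
  · have hm : (n : ℝ) + 1 ≤ m := by exact_mod_cast h
    have := le_abs_self ((m : ℝ) - k)
    have h3 : min (k - n) (n + 1 - k) * m ≤ (n + 1 - k) * m := by gcongr
    nlinarith
  · have hm : (m : ℝ) ≤ n := by exact_mod_cast h
    have := neg_abs_le ((m : ℝ) - k)
    have h3 : min (k - n) (n + 1 - k) * m ≤ (k - n) * m := by gcongr
    have h4 : (k - n) * m ≤ (k - n) * (n + 1) := by
      apply mul_le_mul_of_nonneg_left <;> linarith
    nlinarith

section coeffGrowth
variable {γ r : ℝ} {n : ℕ}

set_option maxHeartbeats 2000000 in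
/-- The recursively defined coefficients grow at most like `M R^m m!`. -/
theorem coeff_growth (hDW : DW γ (W₀ γ r) (Z₀ γ r) ≠ 0)
    (hD1 : (1 - alphaF γ) / 2 * W₁ γ r + (1 + alphaF γ) / 2 * Z₁ γ r ≠ 0)
    (hk : (n : ℝ) < kFun γ r) (hk1 : kFun γ r < n + 1) :
    ∃ M R : ℝ, 0 < R ∧ (∀ m, |(coeff γ r m).1| ≤ M * R ^ m * (m.factorial : ℝ)) ∧
      ∀ m, |(coeff γ r m).2| ≤ M * R ^ m * (m.factorial : ℝ) := by
  obtain ⟨c, hc, hcm⟩ := abs_sub_ge hk hk1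
  set a : ℕ → ℝ := fun i => (coeff γ r i).1 with ha
  set b : ℕ → ℝ := fun i => (coeff γ r i).2 with hb
  set x : ℕ → ℝ := fun i => (|a i| + |b i|) / (i.factorial : ℝ) with hx
  have hf : ∀ i : ℕ, (0 : ℝ) < (i.factorial : ℝ) := fun i => by exact_mod_cast i.factorial_pos
  have x0 : ∀ i, 0 ≤ x i := fun i => by have := hf i; positivity
  have ax : ∀ i, |a i| ≤ x i * (i.factorial : ℝ) := fun i => by
    rw [hx]; simp only; rw [div_mul_cancel₀ _ (hf i).ne']; linarith [abs_nonneg (b i)]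
  have bx : ∀ i, |b i| ≤ x i * (i.factorial : ℝ) := fun i => by
    rw [hx]; simp only; rw [div_mul_cancel₀ _ (hf i).ne']; linarith [abs_nonneg (a i)]
  set α := alphaF γ with hα
  -- one constant dominating every coefficient of the recursion
  set K : ℝ := 4 * (1 + |α|) + |gradNW1 γ r (W₀ γ r) (Z₀ γ r)| + |gradNW2 γ (W₀ γ r) (Z₀ γ r)|
    + |gradNZ1 γ (W₀ γ r) (Z₀ γ r)| + |Z₁ γ r * ((1 - α) / 2)| with hK
  have K1 : 4 * (1 + |α|) ≤ K := by rw [hK]; linarith [abs_nonneg (gradNW1 γ r (W₀ γ r) (Z₀ γ r)), abs_nonneg (gradNW2 γ (W₀ γ r) (Z₀ γ r)), abs_nonneg (gradNZ1 γ (W₀ γ r) (Z₀ γ r)), abs_nonneg (Z₁ γ r * ((1 - α) / 2))]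
  have K2 : |gradNW1 γ r (W₀ γ r) (Z₀ γ r)| + |gradNW2 γ (W₀ γ r) (Z₀ γ r)| ≤ K := by rw [hK]; linarith [abs_nonneg α, abs_nonneg (gradNZ1 γ (W₀ γ r) (Z₀ γ r)), abs_nonneg (Z₁ γ r * ((1 - α) / 2))]
  have K3 : |gradNZ1 γ (W₀ γ r) (Z₀ γ r)| + |Z₁ γ r * ((1 - α) / 2)| ≤ K := by rw [hK]; linarith [abs_nonneg α, abs_nonneg (gradNW1 γ r (W₀ γ r) (Z₀ γ r)), abs_nonneg (gradNW2 γ (W₀ γ r) (Z₀ γ r))]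
  have K0 : 0 ≤ K := by linarith [abs_nonneg α]
  have q1 : |1 + α| ≤ 1 + |α| := by have := abs_add_le 1 α; rwa [abs_one] at this
  have q2 : |1 - α| ≤ 1 + |α| := by have := abs_sub 1 α; rwa [abs_one] at this
  have q3 : |1 + 2 * α| ≤ 1 + 2 * |α| := by
    have := abs_add_le 1 (2 * α); rwa [abs_one, abs_mul, abs_two] at this
  -- bounds for the bilinear pieces
  have lin : ∀ (p q : ℝ) (i : ℕ), |p| + |q| ≤ K → |p * a i + q * b i| ≤ K * (x i * (i.factorial : ℝ)) := by
    intro p q i h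
    have h0 : 0 ≤ x i * (i.factorial : ℝ) := mul_nonneg (x0 i) (hf i).le
    calc |p * a i + q * b i| ≤ |p| * |a i| + |q| * |b i| := by
          rw [← abs_mul, ← abs_mul]; exact abs_add_le _ _
      _ ≤ |p| * (x i * (i.factorial : ℝ)) + |q| * (x i * (i.factorial : ℝ)) := by
          gcongr; exacts [ax i, bx i]
      _ = (|p| + |q|) * (x i * (i.factorial : ℝ)) := by ring
      _ ≤ _ := by gcongr
  have half1 : |(1 + α) / 2| + |(1 - α) / 2| ≤ K := by
    rw [abs_div, abs_div, abs_two]; linarith [abs_nonneg α]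
  have dW : ∀ i : ℕ, 1 ≤ i → |DWseq γ a b i| ≤ K * (x i * (i.factorial : ℝ)) := by
    intro i hi
    obtain ⟨j, rfl⟩ : ∃ j, i = j + 1 := ⟨i - 1, by omega⟩
    exact lin _ _ _ half1
  have dZ : ∀ i : ℕ, 1 ≤ i → |DZseq γ a b i| ≤ K * (x i * (i.factorial : ℝ)) := by
    intro i hi
    obtain ⟨j, rfl⟩ : ∃ j, i = j + 1 := ⟨i - 1, by omega⟩
    exact lin _ _ _ (by rw [add_comm]; exact half1)
  have quad : ∀ (e1 e2 e3 : ℝ) (i j : ℕ), |e1| + 2 * |e2| + |e3| ≤ K →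
      |e1 * a i * a j - e2 * (a i * b j + b i * a j) + e3 * b i * b j|
        ≤ K * (x i * (i.factorial : ℝ)) * (x j * (j.factorial : ℝ)) := by
    intro e1 e2 e3 i j h
    have h0 : 0 ≤ x i * (i.factorial : ℝ) := mul_nonneg (x0 i) (hf i).le
    have h1 : 0 ≤ x j * (j.factorial : ℝ) := mul_nonneg (x0 j) (hf j).le
    have m1 := ax i
    have m2 := bx i
    have m3 := ax j
    have m4 := bx j
    calc _ ≤ |e1| * |a i| * |a j| + |e2| * (|a i| * |b j| + |b i| * |a j|) + |e3| * |b i| * |b j| := by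
          have t1 := abs_add_le (e1 * a i * a j - e2 * (a i * b j + b i * a j)) (e3 * b i * b j)
          have t2 := abs_sub (e1 * a i * a j) (e2 * (a i * b j + b i * a j))
          have t3 := abs_add_le (a i * b j) (b i * a j)
          rw [abs_mul e2] at t2
          rw [abs_mul (e1 * a i), abs_mul e1] at t2
          rw [abs_mul (e3 * b i), abs_mul e3] at t1
          rw [abs_mul, abs_mul] at t3
          have t4 := mul_le_mul_of_nonneg_left t3 (abs_nonneg e2)
          linarith
      _ ≤ |e1| * (x i * (i.factorial : ℝ)) * (x j * (j.factorial : ℝ)) + |e2| * ((x i * (i.factorial : ℝ)) * (x j * (j.factorial : ℝ)) + (x i * (i.factorial : ℝ)) * (x j * (j.factorial : ℝ))) + |e3| * (x i * (i.factorial : ℝ)) * (x j * (j.factorial : ℝ)) := by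
          gcongr
      _ = (|e1| + 2 * |e2| + |e3|) * (x i * (i.factorial : ℝ)) * (x j * (j.factorial : ℝ)) := by ring
      _ ≤ _ := by gcongr
  have hW : ∀ i j, |hessNW γ (a i) (b i) (a j) (b j)| ≤ K * (x i * (i.factorial : ℝ)) * (x j * (j.factorial : ℝ)) := by
    intro i j
    refine quad (-(1 + 2 * α)) ((1 - α) / 2) α i j ?_
    rw [abs_neg, abs_div, abs_two]; linarith [abs_nonneg α]
  have hZ : ∀ i j, |hessNZ γ (a i) (b i) (a j) (b j)| ≤ K * (x i * (i.factorial : ℝ)) * (x j * (j.factorial : ℝ)) := by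
    intro i j
    have := quad α ((1 - α) / 2) (-(1 + 2 * α)) i j (by
      rw [abs_neg, abs_div, abs_two]; linarith [abs_nonneg α])
    convert this using 2
    unfold hessNZ; ring
  -- sums with binomial weights
  have wsum : ∀ (S : Finset ℕ) (p : ℕ) (F : ℕ → ℝ) (G : ℝ) (s : ℕ), (∀ q ∈ S, q ≤ p ∧ (q : ℝ) + 1 ≤ G ∧ s = p + 1) →
      (∀ q ∈ S, |F q| ≤ K * (x (p - q) * ((p - q).factorial : ℝ)) * (x (q + 1) * ((q + 1).factorial : ℝ))) →
      |∑ q ∈ S, (p.choose q : ℝ) * F q| ≤ K * ((p.factorial : ℝ) * G) * ∑ q ∈ S, x (q + 1) * x (s - (q + 1)) := by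
    intro S p F G s hS hF
    refine (Finset.abs_sum_le_sum_abs _ _).trans ?_
    rw [Finset.mul_sum]
    refine Finset.sum_le_sum fun q hq => ?_
    obtain ⟨u1, u2, rfl⟩ := hS q hq
    rw [abs_mul, abs_of_nonneg (by positivity : (0 : ℝ) ≤ (p.choose q : ℝ))]
    have e : p + 1 - (q + 1) = p - q := by omega
    rw [e]
    calc _ ≤ (p.choose q : ℝ) * (K * (x (p - q) * ((p - q).factorial : ℝ)) * (x (q + 1) * ((q + 1).factorial : ℝ))) := by
          gcongr; exact hF q hq
      _ = K * ((p.choose q : ℝ) * (x (p - q) * ((p - q).factorial : ℝ)) * (x (q + 1) * ((q + 1).factorial : ℝ))) := by ring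
      _ = K * ((p.factorial : ℝ) * (q + 1) * (x (p - q) * x (q + 1))) := by rw [choose_fact u1 _ _ rfl]
      _ ≤ K * ((p.factorial : ℝ) * G * (x (p - q) * x (q + 1))) := by
          have := x0 (p - q); have := x0 (q + 1); gcongr
      _ = _ := by ring
  have reix : ∀ (u v : ℕ) (F : ℕ → ℝ), ∑ q ∈ Finset.Ico u v, F (q + 1) = ∑ j ∈ Finset.Ico (u + 1) (v + 1), F j := by
    intro u v F; rw [Finset.sum_Ico_add']
  have reix2 : ∀ (m : ℕ) (F : ℕ → ℕ → ℕ → ℝ), ∑ j ∈ Finset.Ico 1 (m + 1), F (j - 1) (m + 1 - j) j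
      = ∑ q ∈ Finset.Ico 0 m, F q (m - q) (q + 1) := by
    intro m F
    have := reix 0 m (fun j => F (j - 1) (m + 1 - j) j)
    rw [← this]
    refine Finset.sum_congr rfl fun q _ => ?_
    rw [Nat.add_sub_cancel, Nat.add_sub_add_right]
  obtain ⟨d, hd, hd0⟩ : ∃ d, d = |DW γ (W₀ γ r) (Z₀ γ r)| ∧ 0 < d := ⟨_, rfl, abs_pos.2 hDW⟩
  obtain ⟨e, he, he0⟩ : ∃ e, e = |(1 - α) / 2 * W₁ γ r + (1 + α) / 2 * Z₁ γ r| ∧ 0 < e := ⟨_, rfl, abs_pos.2 hD1⟩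
  have step : ∀ m : ℕ, 1 ≤ m → ∀ S1 S2 S3 : ℝ,
      S1 = ∑ j ∈ Finset.Ico 1 (m + 1), x j * x (m + 1 - j) →
      S2 = ∑ j ∈ Finset.Ico 1 (m + 2), x j * x (m + 2 - j) →
      S3 = ∑ j ∈ Finset.Ico 2 (m + 2), x j * x (m + 3 - j) →
      x (m + 2) ≤ (K / d + (K + 2 * K * (K / d)) / (e * c)) * (x (m + 1) + S1 + S2 + S3) := by
    intro m hm S1 S2 S3 hS1 hS2 hS3
    have p1 : 0 ≤ S1 := hS1 ▸ Finset.sum_nonneg fun j _ => mul_nonneg (x0 _) (x0 _)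
    have p2 : 0 ≤ S2 := hS2 ▸ Finset.sum_nonneg fun j _ => mul_nonneg (x0 _) (x0 _)
    have p3 : 0 ≤ S3 := hS3 ▸ Finset.sum_nonneg fun j _ => mul_nonneg (x0 _) (x0 _)
    have f2 : (((m + 2).factorial : ℕ) : ℝ) = (m + 2) * ((m + 1).factorial : ℝ) := by
      rw [Nat.factorial_succ]; push_cast; ring
    have f1 : (((m + 1).factorial : ℕ) : ℝ) = (m + 1) * (m.factorial : ℝ) := by
      rw [Nat.factorial_succ]; push_cast; ring
    have fp0 := hf m
    have fp1 := hf (m + 1)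
    have fp2 := hf (m + 2)
    have m0 : (1 : ℝ) ≤ m := by exact_mod_cast hm
    have bW : d * |a (m + 2)| ≤ K * ((m + 2).factorial : ℝ) * (x (m + 1) + S1 + S2) := by
      have hcW := coeff_W γ r m
      rw [eq_div_iff hDW] at hcW
      have hcW' : |a (m + 2)| * d = |(coeff γ r (m + 2)).1 * DW γ (W₀ γ r) (Z₀ γ r)| := by rw [abs_mul, hd]
      rw [mul_comm, hcW', hcW]
      refine (abs_sub _ _).trans ?_
      have n1 : |NWseq γ r a b (m + 1)| ≤ K * (x (m + 1) * ((m + 1).factorial : ℝ)) + K * ((m.factorial : ℝ) * (m + 1)) * S1 := by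
        rw [NWseq]
        refine (abs_add_le _ _).trans (add_le_add (lin _ _ _ ?_) ?_)
        · simpa [ha, hb, coeff] using K2
        · have := wsum (Finset.Ico 0 m) m (fun q => hessNW γ (a (m - q)) (b (m - q)) (a (q + 1)) (b (q + 1))) (m + 1) (m + 1)
            (fun q hq => by
              have := (Finset.mem_Ico.1 hq).2
              exact ⟨this.le, by have : (q : ℝ) ≤ m := by exact_mod_cast this.le
                                 linarith, rfl⟩) (fun q hq => hW _ _)
          rw [reix 0 m (fun j => x j * x (m + 1 - j)), zero_add, ← hS1] at this
          rwa [← reix2 m (fun q i j => (m.choose q : ℝ) * hessNW γ (a i) (b i) (a j) (b j))] at this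
      have n2 := wsum (Finset.Ico 0 (m + 1)) (m + 1) (fun j => DWseq γ a b (m + 1 - j) * a (j + 1)) (m + 2) (m + 2)
        (fun q hq => by
          have := (Finset.mem_Ico.1 hq).2
          exact ⟨this.le, by have : (q : ℝ) + 1 ≤ m + 1 := by exact_mod_cast this
                             linarith, rfl⟩)
        (fun q hq => by
          have := (Finset.mem_Ico.1 hq).2
          rw [abs_mul]
          exact mul_le_mul (dW _ (by omega)) (ax _) (abs_nonneg _) (mul_nonneg K0 (mul_nonneg (x0 _) (hf _).le)))
      rw [reix 0 (m + 1) (fun j => x j * x (m + 2 - j)), zero_add, ← hS2, ← Finset.range_eq_Ico] at n2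
      simp only [← mul_assoc] at n2 ⊢
      have n3 := add_le_add n1 n2
      refine n3.trans ?_
      rw [f2, f1]
      have := x0 (m + 1)
      have g1 : K * x (m + 1) * ((m + 1) * (m.factorial : ℝ)) ≤ K * ((m + 2) * ((m + 1) * (m.factorial : ℝ))) * x (m + 1) := by
        have h' : 0 ≤ K * x (m + 1) * ((m + 1) * (m.factorial : ℝ)) := by positivity
        have := le_mul_of_one_le_left h' (by linarith : (1 : ℝ) ≤ m + 2)
        linarith
      have g2 : K * ((m.factorial : ℝ) * (m + 1)) * S1 ≤ K * ((m + 2) * ((m + 1) * (m.factorial : ℝ))) * S1 := by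
        have h' : 0 ≤ K * ((m.factorial : ℝ) * (m + 1)) * S1 := by positivity
        have := le_mul_of_one_le_left h' (by linarith : (1 : ℝ) ≤ m + 2)
        linarith
      linarith
    have bZ : e * (c * (m + 2)) * |b (m + 2)| ≤ K * ((m + 2) * ((m + 2).factorial : ℝ)) * (S2 + S3) + 2 * K * |a (m + 2)| := by
      have hcZ := coeff_Z γ r m
      have hkm : (m : ℝ) + 2 - kFun γ r ≠ 0 := by
        have h1 := hcm (m + 2)
        push_cast at h1
        exact abs_pos.1 (lt_of_lt_of_le (by positivity) h1)
      rw [eq_div_iff (mul_ne_zero hD1 hkm)] at hcZ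
      have h1 := hcm (m + 2)
      push_cast at h1
      have hcZ' : e * (c * (m + 2)) * |b (m + 2)| ≤ |(coeff γ r (m + 2)).2 * (((1 - alphaF γ) / 2 * W₁ γ r + (1 + alphaF γ) / 2 * Z₁ γ r) * (((m : ℝ) + 2) - kFun γ r))| := by
        rw [abs_mul, abs_mul, ← he, mul_comm]
        gcongr
      refine hcZ'.trans ?_
      rw [hcZ]
      have n1 := wsum (Finset.Ico 1 (m + 1)) (m + 2) (fun j => DZseq γ a b (m + 2 - j) * b (j + 1)) (m + 2) (m + 3)
        (fun q hq => by
          have := (Finset.mem_Ico.1 hq).2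
          exact ⟨by omega, by have : (q : ℝ) + 1 ≤ m + 1 := by exact_mod_cast this
                              linarith, rfl⟩)
        (fun q hq => by
          have := (Finset.mem_Ico.1 hq).2
          rw [abs_mul]
          exact mul_le_mul (dZ _ (by omega)) (bx _) (abs_nonneg _) (mul_nonneg K0 (mul_nonneg (x0 _) (hf _).le)))
      rw [reix 1 (m + 1) (fun j => x j * x (m + 3 - j)), ← hS3] at n1
      have n2 := wsum (Finset.Ico 0 (m + 1)) (m + 1) (fun q => hessNZ γ (a (m + 1 - q)) (b (m + 1 - q)) (a (q + 1)) (b (q + 1))) (m + 2) (m + 2)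
        (fun q hq => by
          have := (Finset.mem_Ico.1 hq).2
          exact ⟨by omega, by have : (q : ℝ) + 1 ≤ m + 1 := by exact_mod_cast this
                              linarith, rfl⟩) (fun q hq => hZ _ _)
      rw [reix 0 (m + 1) (fun j => x j * x (m + 2 - j)), zero_add, ← hS2,
        ← reix2 (m + 1) (fun q i j => ((m + 1).choose q : ℝ) * hessNZ γ (a i) (b i) (a j) (b j))] at n2
      simp only [← mul_assoc] at n1 n2 ⊢
      have n3 : |gradNZ1 γ (W₀ γ r) (Z₀ γ r) * a (m + 2)| + |Z₁ γ r * a (m + 2) * ((1 - α) / 2)| ≤ K * |a (m + 2)| := by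
        have : Z₁ γ r * a (m + 2) * ((1 - α) / 2) = (Z₁ γ r * ((1 - α) / 2)) * a (m + 2) := by ring
        rw [this, abs_mul, abs_mul (Z₁ γ r * ((1 - α) / 2)), ← add_mul]
        gcongr
      have tri : ∀ A B C D : ℝ, |-A + (B + C) - D| ≤ |A| + |C| + (|B| + |D|) := by
        intro A B C D
        have h1 := abs_sub (-A + (B + C)) D
        have h2 := abs_add_le (-A) (B + C)
        have h3 := abs_add_le B C
        rw [abs_neg] at h2
        linarith
      refine (tri _ _ _ _).trans ?_
      refine (add_le_add (add_le_add n1 n2) n3).trans ?_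
      have t1 : K * ((m + 1).factorial : ℝ) * (m + 2) * S2 ≤ K * ((m + 2) * ((m + 2).factorial : ℝ)) * S2 := by
        have : ((m + 1).factorial : ℝ) ≤ ((m + 2).factorial : ℝ) := by
          exact_mod_cast Nat.factorial_le (by omega)
        calc _ = K * ((m + 2) * ((m + 1).factorial : ℝ)) * S2 := by ring
          _ ≤ _ := by gcongr
      have t2 : 0 ≤ K * |a (m + 2)| := by positivity
      linarith
    -- divide by the factorial and collect
    have p4 := x0 (m + 1)
    have ea : |a (m + 2)| ≤ K / d * ((m + 2).factorial : ℝ) * (x (m + 1) + S1 + S2) := by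
      rw [div_mul_eq_mul_div, div_mul_eq_mul_div, le_div_iff₀ hd0]; linarith
    have eb : |b (m + 2)| ≤ (K + 2 * K * (K / d)) / (e * c) * ((m + 2).factorial : ℝ) * (x (m + 1) + S1 + S2 + S3) := by
      rw [div_mul_eq_mul_div, div_mul_eq_mul_div, le_div_iff₀ (mul_pos he0 hc)]
      have h5 : 2 * K * |a (m + 2)| ≤ 2 * K * (K / d * ((m + 2).factorial : ℝ) * (x (m + 1) + S1 + S2)) := by gcongr
      have h6 : 0 ≤ 2 * K * (K / d * ((m + 2).factorial : ℝ) * (x (m + 1) + S1 + S2)) := by positivity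
      have h7 : e * (c * (m + 2)) * |b (m + 2)| ≤ (m + 2) * (K * ((m + 2).factorial : ℝ) * (S2 + S3)
          + 2 * K * (K / d * ((m + 2).factorial : ℝ) * (x (m + 1) + S1 + S2))) := by
        have h7' := le_mul_of_one_le_left h6 (by linarith : (1 : ℝ) ≤ m + 2)
        linarith
      have h8 : e * c * |b (m + 2)| ≤ K * ((m + 2).factorial : ℝ) * (S2 + S3)
          + 2 * K * (K / d * ((m + 2).factorial : ℝ) * (x (m + 1) + S1 + S2)) := by
        have m2 : (0 : ℝ) < m + 2 := by positivity
        refine le_of_mul_le_mul_left ?_ m2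
        linarith
      have h9 : 0 ≤ K * ((m + 2).factorial : ℝ) * (x (m + 1) + S1) := by positivity
      have h10 : 0 ≤ 2 * K * (K / d) * ((m + 2).factorial : ℝ) * S3 := by positivity
      linarith
    have ex : x (m + 2) = (|a (m + 2)| + |b (m + 2)|) / ((m + 2).factorial : ℝ) := rfl
    rw [ex, div_le_iff₀ fp2]
    have h11 : 0 ≤ K / d * ((m + 2).factorial : ℝ) * S3 := by positivity
    linarith
  obtain ⟨M, R, hR, hMR⟩ := growth x0 (C := K / d + (K + 2 * K * (K / d)) / (e * c)) (by positivity) (fun m hm => by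
    obtain ⟨i, rfl⟩ : ∃ i, m = i + 2 := ⟨m - 2, by omega⟩
    exact step i (by omega) _ _ _ rfl rfl rfl)
  refine ⟨M, R, hR, fun m => (ax m).trans ?_, fun m => (bx m).trans ?_⟩ <;>
  · have := hMR m
    have := hf m
    gcongr

/-- The Taylor recursion at the sonic point, `W`-equation. -/
lemma coeff_recW (hDW : DW γ (W₀ γ r) (Z₀ γ r) ≠ 0)
    (eW : DW γ (W₀ γ r) (Z₀ γ r) * W₁ γ r = NW γ r (W₀ γ r) (Z₀ γ r)) (m : ℕ) :
    ∑ j ∈ Finset.range (m + 1), (Nat.choose m j : ℝ) * (DWseq γ (fun i => (coeff γ r i).1) (fun i => (coeff γ r i).2) (m - j) * (coeff γ r (j + 1)).1)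
      = NWseq γ r (fun i => (coeff γ r i).1) (fun i => (coeff γ r i).2) m := by
  match m with
  | 0 => simpa [DWseq, NWseq, coeff] using eW
  | m + 1 =>
    have h := coeff_W γ r m
    rw [eq_div_iff hDW, eq_sub_iff_add_eq] at h
    rw [Finset.sum_range_succ, ← h, add_comm]
    congr 1
    · simp [DWseq, coeff]; ring
    · exact Finset.sum_congr rfl fun j _ => by ring

/-- The Taylor recursion at the sonic point, `Z`-equation. -/
lemma coeff_recZ (hD1 : (1 - alphaF γ) / 2 * W₁ γ r + (1 + alphaF γ) / 2 * Z₁ γ r ≠ 0)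
    (hk : (n : ℝ) < kFun γ r) (hk1 : kFun γ r < n + 1)
    (eD : DZ γ (W₀ γ r) (Z₀ γ r) = 0) (eN : NZ γ r (W₀ γ r) (Z₀ γ r) = 0)
    (eZ : ((1 - alphaF γ) / 2 * W₁ γ r + (1 + alphaF γ) / 2 * Z₁ γ r) * Z₁ γ r
      = gradNZ1 γ (W₀ γ r) (Z₀ γ r) * W₁ γ r + gradNZ2 γ r (W₀ γ r) (Z₀ γ r) * Z₁ γ r)
    (ek : kFun γ r * ((1 - alphaF γ) / 2 * W₁ γ r + (1 + alphaF γ) / 2 * Z₁ γ r)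
      = gradNZ2 γ r (W₀ γ r) (Z₀ γ r) - Z₁ γ r * ((1 + alphaF γ) / 2)) (m : ℕ) :
    ∑ j ∈ Finset.range (m + 1), (Nat.choose m j : ℝ) * (DZseq γ (fun i => (coeff γ r i).1) (fun i => (coeff γ r i).2) (m - j) * (coeff γ r (j + 1)).2)
      = NZseq γ r (fun i => (coeff γ r i).1) (fun i => (coeff γ r i).2) m := by
  match m with
  | 0 => simp [DZseq, NZseq, coeff, eD, eN]
  | 1 => simpa [DZseq, NZseq, coeff, eD, Finset.sum_range_succ] using eZ
  | m + 2 =>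
    obtain ⟨c, hc, hcm⟩ := abs_sub_ge hk hk1
    have hkm : (m : ℝ) + 2 - kFun γ r ≠ 0 := by
      have h1 := hcm (m + 2)
      push_cast at h1
      exact abs_pos.1 (lt_of_lt_of_le (by positivity) h1)
    have h := coeff_Z γ r m
    rw [eq_div_iff (mul_ne_zero hD1 hkm)] at h
    rw [Finset.sum_range_succ, Finset.sum_range_succ, Finset.range_eq_Ico,
      Finset.sum_eq_sum_Ico_succ_bot (by omega)]
    simp only [← mul_assoc, zero_add]
    have e1 : NZseq γ r (fun i => (coeff γ r i).1) (fun i => (coeff γ r i).2) (m + 2)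
      = gradNZ1 γ (W₀ γ r) (Z₀ γ r) * (coeff γ r (m + 2)).1 + gradNZ2 γ r (W₀ γ r) (Z₀ γ r) * (coeff γ r (m + 2)).2
        + ∑ j ∈ Finset.Ico 1 (m + 2), (Nat.choose (m + 1) (j - 1) : ℝ)
            * hessNZ γ (coeff γ r (m + 2 - j)).1 (coeff γ r (m + 2 - j)).2 (coeff γ r j).1 (coeff γ r j).2 := by
      rw [NZseq]; simp [coeff]
    rw [e1]
    have e2 : DZseq γ (fun i => (coeff γ r i).1) (fun i => (coeff γ r i).2) (m + 2 - 0)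
      = (1 - alphaF γ) / 2 * (coeff γ r (m + 2)).1 + (1 + alphaF γ) / 2 * (coeff γ r (m + 2)).2 := rfl
    have e3 : DZseq γ (fun i => (coeff γ r i).1) (fun i => (coeff γ r i).2) (m + 2 - (m + 1))
      = (1 - alphaF γ) / 2 * W₁ γ r + (1 + alphaF γ) / 2 * Z₁ γ r := by
      have : m + 2 - (m + 1) = 0 + 1 := by omega
      rw [this, DZseq]; simp [coeff]
    have e4 : DZseq γ (fun i => (coeff γ r i).1) (fun i => (coeff γ r i).2) (m + 2 - (m + 2)) = 0 := by
      rw [Nat.sub_self, DZseq]; simpa [coeff] using eD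
    have e5 : (coeff γ r 1).2 = Z₁ γ r := by simp [coeff]
    have e6 : (((m + 2).choose (m + 1) : ℕ) : ℝ) = m + 2 := by
      rw [Nat.choose_succ_self_right]; push_cast; ring
    rw [e2, e3, e4, e5, e6, Nat.choose_zero_right]
    push_cast
    linear_combination h + (coeff γ r (m + 2)).2 * ek
end coeffGrowth

/-- The power series through the sonic point defines an analytic solution. -/
theorem series_solution {γ r : ℝ} {n : ℕ} (hDW : DW γ (W₀ γ r) (Z₀ γ r) ≠ 0)
    (hD1 : (1 - alphaF γ) / 2 * W₁ γ r + (1 + alphaF γ) / 2 * Z₁ γ r ≠ 0)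
    (hk : (n : ℝ) < kFun γ r) (hk1 : kFun γ r < n + 1)
    (eW : DW γ (W₀ γ r) (Z₀ γ r) * W₁ γ r = NW γ r (W₀ γ r) (Z₀ γ r))
    (eD : DZ γ (W₀ γ r) (Z₀ γ r) = 0) (eN : NZ γ r (W₀ γ r) (Z₀ γ r) = 0)
    (eZ : ((1 - alphaF γ) / 2 * W₁ γ r + (1 + alphaF γ) / 2 * Z₁ γ r) * Z₁ γ r
      = gradNZ1 γ (W₀ γ r) (Z₀ γ r) * W₁ γ r + gradNZ2 γ r (W₀ γ r) (Z₀ γ r) * Z₁ γ r)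
    (ek : kFun γ r * ((1 - alphaF γ) / 2 * W₁ γ r + (1 + alphaF γ) / 2 * Z₁ γ r)
      = gradNZ2 γ r (W₀ γ r) (Z₀ γ r) - Z₁ γ r * ((1 + alphaF γ) / 2)) :
    AnalyticAt ℝ (Wfun γ r) 0 ∧ AnalyticAt ℝ (Zfun γ r) 0 ∧ Wfun γ r 0 = W₀ γ r ∧ Zfun γ r 0 = Z₀ γ r ∧
    deriv (Wfun γ r) 0 = W₁ γ r ∧ deriv (Zfun γ r) 0 = Z₁ γ r ∧
    (∀ᶠ x in 𝓝 (0 : ℝ), DW γ (Wfun γ r x) (Zfun γ r x) * deriv (Wfun γ r) x = NW γ r (Wfun γ r x) (Zfun γ r x)) ∧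
    (∀ᶠ x in 𝓝 (0 : ℝ), DZ γ (Wfun γ r x) (Zfun γ r x) * deriv (Zfun γ r) x = NZ γ r (Wfun γ r x) (Zfun γ r x)) := by
  obtain ⟨M, R, hR, ga, gb⟩ := coeff_growth hDW hD1 hk hk1
  have := series_ode hR ga gb (coeff_recW hDW eW) (coeff_recZ hD1 hk hk1 eD eN eZ ek)
    (f := Wfun γ r) (g := Zfun γ r) rfl rfl
  simpa [coeff] using this

end

/-! ### Parametrization of `(γ, r)` and data at the sonic point -/

section

/-- Every admissible `(γ, r)` comes from a pair `(ℓ, v)`. -/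
theorem exists_param {γ r : ℝ} (hγ : 1 < γ) (hr : 1 < r) (hr1 : r < rStar γ) :
    ∃ l v, Adm l v ∧ γ = 1 + 2 / l ∧ r = 1 + cG l v := by
  have hg : 0 < γ - 1 := by linarith
  obtain ⟨l, hl⟩ : ∃ l, l = 2 / (γ - 1) := ⟨_, rfl⟩
  have hl0 : 0 < l := by rw [hl]; positivity
  have hγl : γ = 1 + 2 / l := by rw [hl]; field_simp; ring
  have ivt : ∀ V : ℝ, 0 < V → r - 1 < cG l V → ∃ v, 0 < v ∧ v < V ∧ r = 1 + cG l v := by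
    intro V hV h
    have hc : ContinuousOn (cG l) (Icc 0 V) := by
      unfold cG
      refine ContinuousOn.div (by fun_prop) (by fun_prop) fun x hx => ?_
      have := hx.1; positivity
    have h0 : cG l 0 = 0 := by simp [cG]
    obtain ⟨v, hv, hv2⟩ := intermediate_value_Ioo hV.le hc (show r - 1 ∈ Ioo (cG l 0) (cG l V) from ⟨by rw [h0]; linarith, h⟩)
    exact ⟨v, hv.1, hv.2, by linarith⟩
  unfold rStar at hr1
  split_ifs at hr1 with h53
  · have h3 : 3 < l := by rw [hl, lt_div_iff₀ hg]; linarith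
    have hs : 0 < √l := Real.sqrt_pos.2 hl0
    have hs2 : √l ^ 2 = l := Real.sq_sqrt hl0.le
    obtain ⟨v, hv0, hv1, hrv⟩ := ivt (√l) hs (by
      have : cG l √l = 2 / (√l + 1) ^ 2 := by
        obtain ⟨s, hs'⟩ : ∃ s, s = √l := ⟨_, rfl⟩
        rw [← hs'] at hs hs2 ⊢
        unfold cG; rw [← hs2]; field_simp; ring
      rw [this, hl]; linarith)
    have : v ^ 2 < l := by nlinarith
    exact ⟨l, v, ⟨hl0, hv0, this, by nlinarith⟩, hγl, hrv⟩
  · have h3 : l ≤ 3 := by rw [hl, div_le_iff₀ hg]; linarith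
    have hs : 0 < √(3 : ℝ) := Real.sqrt_pos.2 (by norm_num)
    have hs2 : √(3 : ℝ) ^ 2 = 3 := Real.sq_sqrt (by norm_num)
    obtain ⟨s, hs'⟩ : ∃ s, s = √(3 : ℝ) := ⟨_, rfl⟩
    rw [← hs'] at hs hs2 hr1
    obtain ⟨v, hv0, hv1, hrv⟩ := ivt (l / s) (by positivity) (by
      have : cG l (l / s) = (3 * γ - 1) / (2 + s * (γ - 1)) - 1 := by
        have hg' : γ - 1 = 2 / l := by rw [hγl]; ring
        have e : (3 * γ - 1) / (2 + s * (γ - 1)) - 1 = (3 - s) * (γ - 1) / (2 + s * (γ - 1)) := by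
          rw [div_sub_one (by positivity)]; ring
        rw [e, hg']
        unfold cG
        field_simp
        linear_combination (l + s) * hs2
      rw [this]; linarith)
    have h1 : v * s < l := by rwa [lt_div_iff₀ hs] at hv1
    have h2 : 3 * v ^ 2 < l ^ 2 := by rw [← hs2]; nlinarith [mul_pos hv0 hs]
    exact ⟨l, v, ⟨hl0, hv0, by nlinarith, h2⟩, hγl, hrv⟩

section
variable {l v : ℝ}

/-- Trace of the linearisation at the sonic point, normalised. -/
def cS (l v : ℝ) : ℝ := 1 + cH l v + cR l v
/-- Square root of the discriminant of the linearisation. -/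
def cD (l v : ℝ) : ℝ := √(cS l v ^ 2 - 4 * cH l v)
/-- The smaller eigenvalue. -/
def cL (l v : ℝ) : ℝ := (cS l v - cD l v) / 2

/-- The trace in lowest terms. -/
lemma cS_eq (h : Adm l v) : cS l v = l * (2 * l + 2 * v ^ 2 + l * v + v) / (l ^ 2 - 3 * v ^ 2) := by
  have := h.d
  unfold cS cH cR
  obtain ⟨D, hD⟩ : ∃ D, D = l ^ 2 - 3 * v ^ 2 := ⟨_, rfl⟩
  rw [← hD] at this ⊢
  field_simp; rw [hD]; ring

lemma cD_sq (h : Adm l v) : cD l v ^ 2 = cS l v ^ 2 - 4 * cH l v := by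
  unfold cD
  rw [Real.sq_sqrt]
  have := h.hh; have := h.hR
  unfold cS; nlinarith [sq_nonneg (1 - cH l v)]

lemma cD_nonneg : 0 ≤ cD l v := Real.sqrt_nonneg _

lemma cL_eq (h : Adm l v) : cL l v ^ 2 - cS l v * cL l v + cH l v = 0 := by
  have := cD_sq h
  unfold cL; linear_combination this / 4

lemma cL_pos (h : Adm l v) : 0 < cL l v := by
  have h1 := cD_sq h
  have h2 := h.hh
  have h3 : 0 < cS l v := by have := h.hR; unfold cS; positivity
  have h4 : cD l v < cS l v := by
    by_contra! hc
    nlinarith [@cD_nonneg l v]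
  unfold cL; linarith

lemma cL_lt_one (h : Adm l v) : cL l v < 1 := by
  have h1 := cD_sq h
  have h2 := h.hh
  have h3 := h.hR
  have h4 : cH l v + cR l v - 1 < cD l v := by
    by_contra! hc
    have := @cD_nonneg l v
    have e : cS l v = 1 + cH l v + cR l v := rfl
    rw [e] at h1
    nlinarith
  unfold cL; have e : cS l v = 1 + cH l v + cR l v := rfl
  linarith

lemma R1_eq (h : Adm l v) : R1 (1 + 2 / l) (1 + cG l v) = 4 * (l - v ^ 2) / (l * (1 + v) * (v + l)) := by
  have := h.l0; have := h.v0
  have h0 : 0 < l - v ^ 2 := by linarith [h.v1]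
  unfold R1
  rw [← Real.sqrt_sq (show 0 ≤ 4 * (l - v ^ 2) / (l * (1 + v) * (v + l)) by positivity)]
  congr 1
  unfold cG; field_simp; ring

lemma R2_eq (h : Adm l v) : R2 (1 + 2 / l) (1 + cG l v)
    = 2 * (l ^ 2 - 3 * v ^ 2) / (l * (1 + v) * (v + l)) * cD l v := by
  have h1 := h.l0; have h2 := h.v0; have h3 := h.d
  have h0 : (0 : ℝ) ≤ 2 / l * (2 * (l ^ 2 - 3 * v ^ 2) / (l * (1 + v) * (v + l))) := by positivity
  have e : 1 / (1 + 2 / l - 1) = l / 2 := by field_simp; ring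
  unfold R2
  rw [e, R1_eq h]
  have key : ∀ x : ℝ, x = (2 / l * (2 * (l ^ 2 - 3 * v ^ 2) / (l * (1 + v) * (v + l)))) ^ 2 * (cS l v ^ 2 - 4 * cH l v) →
      l / 2 * √x = 2 * (l ^ 2 - 3 * v ^ 2) / (l * (1 + v) * (v + l)) * cD l v := by
    intro x hx
    rw [hx, Real.sqrt_mul (sq_nonneg _), Real.sqrt_sq h0]
    unfold cD; field_simp
  apply key
  rw [cS_eq h]
  unfold cH cG
  field_simp
  ring

lemma W0_eq (h : Adm l v) : W₀ (1 + 2 / l) (1 + cG l v) = Wq l (1 + v) 1 := by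
  have := h.l0; have := h.v0
  unfold W₀; rw [R1_eq h]; unfold cG Wq
  have : (1 + 2 / l - 1 : ℝ) = 2 / l := by ring
  rw [this]
  field_simp; ring

lemma Z0_eq (h : Adm l v) : Z₀ (1 + 2 / l) (1 + cG l v) = Zq l (1 + v) 1 := by
  have := h.l0; have := h.v0
  unfold Z₀; rw [R1_eq h]; unfold cG Zq
  have : (1 + 2 / l - 1 : ℝ) = 2 / l := by ring
  rw [this]
  field_simp; ring

lemma W1_eq (h : Adm l v) : W₁ (1 + 2 / l) (1 + cG l v) = -((l ^ 2 - 3 * v ^ 2) / ((v + l) * (1 + v))) := by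
  have := h.l0; have := h.v0
  unfold W₁; rw [R1_eq h]; unfold cG
  have : (1 + 2 / l - 1 : ℝ) = 2 / l := by ring
  rw [this]
  field_simp; ring

lemma Z1_eq (h : Adm l v) : Z₁ (1 + 2 / l) (1 + cG l v)
    = (l ^ 2 - 3 * v ^ 2) / ((v + l) * (1 + v)) * ((l - 1 + 2 * cL l v) / (l + 1)) := by
  have := h.l0; have := h.v0; have := h.d
  unfold Z₁; rw [R2_eq h, R1_eq h]; unfold cL; rw [cS_eq h]; unfold cG
  have e1 : (1 + 2 / l - 1 : ℝ) = 2 / l := by ring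
  have e2 : (1 + 2 / l + 1 : ℝ) = 2 * (l + 1) / l := by field_simp; ring
  rw [e1, e2]
  obtain ⟨D, hD⟩ : ∃ D, D = l ^ 2 - 3 * v ^ 2 := ⟨_, rfl⟩
  have hD0 : 0 < D := by rw [hD]; assumption
  rw [← hD]
  field_simp
  rw [hD]
  ring

/-- `k` is the ratio of the eigenvalues `S - L` and `L`. -/
lemma k_eq (h : Adm l v) : kFun (1 + 2 / l) (1 + cG l v) * cL l v = cS l v - cL l v := by
  have h1 := h.l0; have h2 := h.v0; have h3 := h.d
  have e : -4 + (1 + (1 + 2 / l)) * (1 + cG l v - 1) / (1 + 2 / l - 1)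
      = -(2 * (l ^ 2 - 3 * v ^ 2) / (l * (1 + v) * (v + l)) * cS l v) := by
    rw [cS_eq h]; unfold cG
    have e1 : (1 + 2 / l - 1 : ℝ) = 2 / l := by ring
    rw [e1]
    obtain ⟨D, hD⟩ : ∃ D, D = l ^ 2 - 3 * v ^ 2 := ⟨_, rfl⟩
    rw [← hD] at h3 ⊢
    field_simp; ring
  unfold kFun
  rw [e, R2_eq h]
  have hL := cL_pos h
  obtain ⟨c, hc⟩ : ∃ c, c = 2 * (l ^ 2 - 3 * v ^ 2) / (l * (1 + v) * (v + l)) := ⟨_, rfl⟩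
  have hc0 : 0 < c := by rw [hc]; positivity
  rw [← hc]
  have e3 : cD l v = cS l v - 2 * cL l v := by unfold cL; ring
  rw [e3]
  have e4 : -(c * cS l v) + c * (cS l v - 2 * cL l v) = -(2 * c * cL l v) := by ring
  rw [e4]
  field_simp
  ring

end

section
variable {l v : ℝ} {n : ℕ}

/-- A barrier with the right contact at the sonic point yields the global solution. -/
theorem main_of_barrier (ha : Adm l v) {T T' : ℝ → ℝ} {Y₁ : ℝ}
    (hB : Barrier (cH l v) (cK l v) (cR l v) (cE l) (cN l v) n T T' Y₁)
    (hT : T' 0 * cR l v = cH l v - cL l v)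
    (hk : (n : ℝ) < kFun (1 + 2 / l) (1 + cG l v)) (hk1 : kFun (1 + 2 / l) (1 + cG l v) < n + 1) :
    ∃ W Z : ℝ → ℝ,
        ContDiffOn ℝ (⊤ : ℕ∞) W (Set.Ici 0) ∧ ContDiffOn ℝ (⊤ : ℕ∞) Z (Set.Ici 0) ∧
        (∀ ξ ∈ Set.Ici (0 : ℝ),
          DW (1 + 2 / l) (W ξ) (Z ξ) * derivWithin W (Set.Ici 0) ξ
            = NW (1 + 2 / l) (1 + cG l v) (W ξ) (Z ξ) ∧
          DZ (1 + 2 / l) (W ξ) (Z ξ) * derivWithin Z (Set.Ici 0) ξ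
            = NZ (1 + 2 / l) (1 + cG l v) (W ξ) (Z ξ)) ∧
        (∃ δ : ℝ, 0 < δ ∧ ∀ ξ ∈ Set.Ico (0 : ℝ) δ, W ξ = Wfun (1 + 2 / l) (1 + cG l v) ξ
          ∧ Z ξ = Zfun (1 + 2 / l) (1 + cG l v) ξ) ∧
        Tendsto (fun ξ : ℝ => (W ξ, Z ξ)) atTop (nhds ((0 : ℝ), (0 : ℝ))) ∧
        (∀ ξ : ℝ, 0 < ξ → 0 < DW (1 + 2 / l) (W ξ) (Z ξ) ∧ 0 < DZ (1 + 2 / l) (W ξ) (Z ξ)) := by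
  have h1 := ha.l0; have h2 := ha.v0; have h3 := ha.d; have hp := ha.p3
  have hL := cL_pos ha
  have hLe := cL_eq ha
  have hS := cS_eq ha
  have hl : l ≠ 0 := h1.ne'
  have hu : 1 + v ≠ 0 := by positivity
  have eα : alphaF (1 + 2 / l) = 1 / l := by unfold alphaF; field_simp; ring
  have eD1 : (1 - alphaF (1 + 2 / l)) / 2 * W₁ (1 + 2 / l) (1 + cG l v)
      + (1 + alphaF (1 + 2 / l)) / 2 * Z₁ (1 + 2 / l) (1 + cG l v)
      = (l ^ 2 - 3 * v ^ 2) / (l * (v + l) * (1 + v)) * cL l v := by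
    rw [W1_eq ha, Z1_eq ha, eα]; field_simp; ring
  have ekL := k_eq ha
  have hDWv : DW (1 + 2 / l) (W₀ (1 + 2 / l) (1 + cG l v)) (Z₀ (1 + 2 / l) (1 + cG l v)) = (1 + 1) / (1 + v) := by
    rw [W0_eq ha, Z0_eq ha, DW_uq hl hu]
  obtain ⟨s1, s2, s3, s4, s5, s6, s7, s8⟩ := series_solution (γ := 1 + 2 / l) (r := 1 + cG l v) (n := n)
    (by rw [hDWv]; positivity) (by rw [eD1]; positivity) hk hk1
    (by
      rw [hDWv, W0_eq ha, Z0_eq ha, W1_eq ha]; unfold NW Wq Zq cG; rw [eα]; field_simp; ring)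
    (by rw [W0_eq ha, Z0_eq ha, DZ_uq hl hu]; ring)
    (by
      rw [W0_eq ha, Z0_eq ha]; unfold NZ Wq Zq cG; rw [eα]; field_simp; ring)
    (by
      rw [eD1, W0_eq ha, Z0_eq ha, Z1_eq ha, W1_eq ha]
      unfold gradNZ1 gradNZ2 Wq Zq cG
      rw [eα]
      rw [hS] at hLe
      unfold cH at hLe
      obtain ⟨D, hD⟩ : ∃ D, D = l ^ 2 - 3 * v ^ 2 := ⟨_, rfl⟩
      rw [← hD] at hLe h3 ⊢
      field_simp at hLe ⊢
      linear_combination 4 * hLe + 2 * cL l v * (l - 1) * hD)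
    (by
      rw [eD1, W0_eq ha, Z0_eq ha, Z1_eq ha]
      have : kFun (1 + 2 / l) (1 + cG l v) * ((l ^ 2 - 3 * v ^ 2) / (l * (v + l) * (1 + v)) * cL l v)
        = (l ^ 2 - 3 * v ^ 2) / (l * (v + l) * (1 + v)) * (cS l v - cL l v) := by rw [← ekL]; ring
      rw [this, hS]
      unfold gradNZ2 Wq Zq cG
      rw [eα]
      obtain ⟨D, hD⟩ : ∃ D, D = l ^ 2 - 3 * v ^ 2 := ⟨_, rfl⟩
      rw [← hD] at h3 ⊢
      field_simp
      rw [hD]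
      ring)
  have hC := ha.hC
  have hL1 := cL_lt_one ha
  refine extend ha hB hk hk1 hL ?_ s1 s2 (s3.trans (W0_eq ha)) (s4.trans (Z0_eq ha)) s7 s8
    (y1 := cC l v * (1 - cL l v)) (mul_pos hC (by linarith)) ?_ ?_
  · rw [ekL, hT]; unfold cS; ring
  · rw [s5, s6, W1_eq ha, Z1_eq ha]
    unfold cC cY
    obtain ⟨D, hD⟩ : ∃ D, D = l ^ 2 - 3 * v ^ 2 := ⟨_, rfl⟩
    rw [← hD] at h3 ⊢
    field_simp
    ring
  · rw [s5, s6, W1_eq ha, Z1_eq ha]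
    unfold cC cY cN
    obtain ⟨D, hD⟩ : ∃ D, D = l ^ 2 - 3 * v ^ 2 := ⟨_, rfl⟩
    rw [← hD] at h3 ⊢
    field_simp
    ring

end

end

/-! ### Fixed-point interval arithmetic -/

section

/-- Fixed-point interval: `⟨lo, hi⟩ : Iv p` stands for `[lo / 2 ^ p, hi / 2 ^ p]`. -/
structure Iv (p : ℕ) where
  lo : ℤ
  hi : ℤ

/-- Evaluates a natural number before it is passed on: the recursor makes the kernel reduce the
argument to a literal. -/
def forceN {α : Type} (n : ℕ) (f : ℕ → α) : α :=
  Nat.rec (motive := fun _ => α) (f 0) (fun m _ => f (Nat.succ m)) n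

lemma forceN_eq {α : Type} (n : ℕ) (f : ℕ → α) : forceN n f = f n := by
  cases n <;> rfl

/-- The same for integers. -/
def forceZ {α : Type} (x : ℤ) (f : ℤ → α) : α :=
  Int.rec (motive := fun _ => α) (fun n => forceN n fun n => f (Int.ofNat n))
    (fun n => forceN n fun n => f (Int.negSucc n)) x

lemma forceZ_eq {α : Type} (x : ℤ) (f : ℤ → α) : forceZ x f = f x := by
  cases x <;> simp [forceZ, forceN_eq]

/-- Passes the components of an interval to `f`. -/
def withI {α : Type} {p : ℕ} (X : Iv p) (f : ℤ → ℤ → α) : α := Iv.rec (motive := fun _ => α) f X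

lemma withI_eq {α : Type} {p : ℕ} (X : Iv p) (f : ℤ → ℤ → α) : withI X f = f X.lo X.hi := rfl

/-- An interval whose end points are evaluated first. -/
def outI {p : ℕ} (a b : ℤ) : Iv p := forceZ a fun a => forceZ b fun b => ⟨a, b⟩

lemma outI_eq {p : ℕ} (a b : ℤ) : (outI a b : Iv p) = ⟨a, b⟩ := by simp [outI, forceZ_eq]

/-- Passes an interval on, with its components exposed. -/
def bindI {α : Type} {p : ℕ} (X : Iv p) (f : Iv p → α) : α := withI X fun a b => f ⟨a, b⟩

lemma bindI_eq {α : Type} {p : ℕ} (X : Iv p) (f : Iv p → α) : bindI X f = f X := rfl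

namespace Iv
variable {p : ℕ}

/-- `2 ^ p` as an integer. -/
def sc (p : ℕ) : ℤ := Int.ofNat (Nat.pow 2 p)

lemma sc_pos (p : ℕ) : 0 < sc p := by
  unfold sc
  exact Int.natCast_pos.mpr (Nat.pow_pos (by norm_num))

/-- The real number `x` lies in the interval `X`. -/
def mem (x : ℝ) (X : Iv p) : Prop := (X.lo : ℝ) ≤ x * (sc p : ℝ) ∧ x * (sc p : ℝ) ≤ (X.hi : ℝ)

/-- `a / 2 ^ p`, rounded down. -/
def floorDiv (a : ℤ) (p : ℕ) : ℤ := Int.ediv a (sc p)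
/-- `a / 2 ^ p`, rounded up. -/
def ceilDiv (a : ℤ) (p : ℕ) : ℤ := Int.neg (Int.ediv (Int.neg a) (sc p))

lemma ediv_le {a b : ℤ} (hb : 0 < b) : ((Int.ediv a b : ℤ) : ℝ) * b ≤ a := by
  have := Int.ediv_mul_le a hb.ne'
  exact_mod_cast this

lemma floorDiv_le (a : ℤ) (p : ℕ) : (floorDiv a p : ℝ) * sc p ≤ a := ediv_le (sc_pos p)

lemma le_ceilDiv (a : ℤ) (p : ℕ) : (a : ℝ) ≤ (ceilDiv a p : ℝ) * sc p := by
  have := ediv_le (a := Int.neg a) (sc_pos p)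
  unfold ceilDiv
  have e : ((Int.neg a : ℤ) : ℝ) = -(a : ℝ) := by
    rw [show Int.neg a = -a from rfl]; push_cast; ring
  have e2 : ∀ z : ℤ, ((Int.neg z : ℤ) : ℝ) = -(z : ℝ) := by
    intro z; rw [show Int.neg z = -z from rfl]; push_cast; ring
  rw [e2]; rw [e2] at this; linarith

/-- Minimum. -/
def zmin (a b : ℤ) : ℤ := cond (Int.ble' a b) a b
/-- Maximum. -/
def zmax (a b : ℤ) : ℤ := cond (Int.ble' a b) b a

lemma zmin_le_left (a b : ℤ) : zmin a b ≤ a := by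
  unfold zmin; cases h : Int.ble' a b
  · simp at h; simpa using h.le
  · simp
lemma zmin_le_right (a b : ℤ) : zmin a b ≤ b := by
  unfold zmin; cases h : Int.ble' a b
  · simp
  · simp at h; simpa using h
lemma le_zmax_left (a b : ℤ) : a ≤ zmax a b := by
  unfold zmax; cases h : Int.ble' a b
  · simp
  · simp at h; simpa using h
lemma le_zmax_right (a b : ℤ) : b ≤ zmax a b := by
  unfold zmax; cases h : Int.ble' a b
  · simp at h; simpa using h.le
  · simp

/-- The constant `n`. -/
def cst (n : ℕ) : Iv p := forceN (Nat.mul n (Nat.pow 2 p)) fun n => ⟨Int.ofNat n, Int.ofNat n⟩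

/-- `m - n` for natural numbers. -/
def subN (m n : ℕ) : ℤ :=
  Nat.rec (motive := fun _ => ℤ) (Int.ofNat (Nat.sub m n)) (fun k _ => Int.negSucc k) (Nat.sub n m)

lemma subN_eq (m n : ℕ) : subN m n = (m : ℤ) - n := by
  unfold subN
  rcases h : n.sub m with _ | k
  · have h' : n - m = 0 := h
    show ((m - n : ℕ) : ℤ) = _
    lia
  · have h' : n - m = k + 1 := h
    show Int.negSucc k = _
    rw [Int.negSucc_eq]; lia

/-- `Int.add`, arranged for fast evaluation by the kernel; likewise below. -/
def addZ (a b : ℤ) : ℤ := Int.rec (motive := fun _ => ℤ)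
  (fun m => Int.rec (motive := fun _ => ℤ) (fun n => Int.ofNat (Nat.add m n))
     (fun n => subN m (Nat.succ n)) b)
  (fun m => Int.rec (motive := fun _ => ℤ) (fun n => subN n (Nat.succ m))
     (fun n => Int.negSucc (Nat.succ (Nat.add m n))) b) a

def negZ (a : ℤ) : ℤ := Int.rec (motive := fun _ => ℤ)
  (fun m => subN 0 m) (fun m => Int.ofNat (Nat.succ m)) a

def subZ (a b : ℤ) : ℤ := Int.rec (motive := fun _ => ℤ)
  (fun m => Int.rec (motive := fun _ => ℤ) (fun n => subN m n)
     (fun n => Int.ofNat (Nat.add m (Nat.succ n))) b)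
  (fun m => Int.rec (motive := fun _ => ℤ) (fun n => Int.negSucc (Nat.add m n))
     (fun n => subN n m) b) a

lemma addZ_eq (a b : ℤ) : addZ a b = a + b := by
  rcases a with m | m <;> rcases b with n | n
  · rfl
  · show subN m (n + 1) = _
    rw [subN_eq, Int.negSucc_eq]; simp; ring
  · show subN n (m + 1) = _
    rw [subN_eq, Int.negSucc_eq]; simp; ring
  · rfl

lemma negZ_eq (a : ℤ) : negZ a = -a := by
  rcases a with m | m
  · show subN 0 m = _
    rw [subN_eq]; simp
  · rfl

lemma subZ_eq (a b : ℤ) : subZ a b = a - b := by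
  rcases a with m | m <;> rcases b with n | n
  · show subN m n = _
    rw [subN_eq]; rfl
  · show ((m + (n + 1) : ℕ) : ℤ) = _
    rw [Int.negSucc_eq]; simp; ring
  · show Int.negSucc (m + n) = _
    rw [Int.negSucc_eq, Int.negSucc_eq]; simp; ring
  · show subN n m = _
    rw [subN_eq, Int.negSucc_eq, Int.negSucc_eq]; ring

def addI (X Y : Iv p) : Iv p :=
  withI X fun a b => withI Y fun c d => outI (addZ a c) (addZ b d)

def subI (X Y : Iv p) : Iv p :=
  withI X fun a b => withI Y fun c d => outI (subZ a d) (subZ b c)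

def negI (X : Iv p) : Iv p := withI X fun a b => outI (negZ b) (negZ a)

/-- Product of `[a, b]` and `[c, d]` for nonnegative end points. -/
def mulPos (a b c d : ℕ) : Iv p :=
  outI (Int.ofNat (Nat.div (Nat.mul a c) (Nat.pow 2 p)))
    (Int.ofNat (Nat.succ (Nat.div (Nat.mul b d) (Nat.pow 2 p))))

/-- Product of `[a, b]` and `[c, d]` in general. -/
def mulGen (a b c d : ℤ) : Iv p :=
  forceZ (Int.mul a c) fun s => forceZ (Int.mul a d) fun t =>
  forceZ (Int.mul b c) fun u => forceZ (Int.mul b d) fun v =>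
  outI (floorDiv (zmin (zmin s t) (zmin u v)) p) (ceilDiv (zmax (zmax s t) (zmax u v)) p)

def mulI (X Y : Iv p) : Iv p :=
  withI X fun a b => withI Y fun c d =>
    Int.rec (motive := fun _ => Iv p)
      (fun m => Int.rec (motive := fun _ => Iv p) (fun n => mulPos m (Int.toNat b) n (Int.toNat d))
        (fun n => mulGen (Int.ofNat m) b (Int.negSucc n) d) c)
      (fun m => mulGen (Int.negSucc m) b c d) a

/-- Square, with the nonnegativity of the lower end point restored. -/
def sqI (X : Iv p) : Iv p := withI (mulI X X) fun a b => outI (zmax a 0) b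

/-- Reciprocal of an interval of positive numbers. -/
def invI (X : Iv p) : Iv p :=
  withI X fun a b => outI (Int.ediv (Int.mul (sc p) (sc p)) b)
    (Int.add (Int.ediv (Int.mul (sc p) (sc p)) a) 1)

instance : Add (Iv p) := ⟨addI⟩
instance : Sub (Iv p) := ⟨subI⟩
instance : Neg (Iv p) := ⟨negI⟩
instance : Mul (Iv p) := ⟨mulI⟩

lemma mem_cst (n : ℕ) : mem (n : ℝ) (cst n : Iv p) := by
  have : ((Int.ofNat (Nat.mul n (Nat.pow 2 p)) : ℤ) : ℝ) = (n : ℝ) * sc p := by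
    rw [show Int.ofNat (Nat.mul n (Nat.pow 2 p)) = (n : ℤ) * sc p from rfl]; push_cast; ring
  simp only [cst, forceN_eq]
  constructor <;> rw [this]

variable {x y : ℝ} {X Y : Iv p}

lemma mem_add (hx : mem x X) (hy : mem y Y) : mem (x + y) (X + Y) := by
  change mem _ (addI X Y)
  simp only [addI, withI_eq, outI_eq, addZ_eq, mem] at *
  push_cast
  constructor <;> linarith [hx.1, hx.2, hy.1, hy.2]

lemma mem_sub (hx : mem x X) (hy : mem y Y) : mem (x - y) (X - Y) := by
  change mem _ (subI X Y)
  simp only [subI, withI_eq, outI_eq, subZ_eq, mem] at *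
  push_cast
  constructor <;> linarith [hx.1, hx.2, hy.1, hy.2]

lemma mem_neg (hx : mem x X) : mem (-x) (-X) := by
  change mem _ (negI X)
  simp only [negI, withI_eq, outI_eq, negZ_eq, mem] at *
  push_cast
  constructor <;> linarith [hx.1, hx.2]

lemma bilin_bounds {a b c d x y : ℝ} (h1 : a ≤ x) (h2 : x ≤ b) (h3 : c ≤ y) (h4 : y ≤ d)
    {m M : ℝ} (m1 : m ≤ a * c) (m2 : m ≤ a * d) (m3 : m ≤ b * c) (m4 : m ≤ b * d)
    (M1 : a * c ≤ M) (M2 : a * d ≤ M) (M3 : b * c ≤ M) (M4 : b * d ≤ M) :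
    m ≤ x * y ∧ x * y ≤ M := by
  constructor
  · rcases le_total 0 y with hy | hy
    · rcases le_total 0 a with ha | ha
      · nlinarith
      · nlinarith
    · rcases le_total 0 b with hb | hb
      · nlinarith
      · nlinarith
  · rcases le_total 0 y with hy | hy
    · rcases le_total 0 b with hb | hb
      · nlinarith
      · nlinarith
    · rcases le_total 0 a with ha | ha
      · nlinarith
      · nlinarith

lemma mem_mulGen (hx : mem x X) (hy : mem y Y) :
    mem (x * y) (mulGen X.lo X.hi Y.lo Y.hi : Iv p) := by
  simp only [mulGen, outI_eq, forceZ_eq, mem] at *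
  simp only [show ∀ a b : ℤ, Int.mul a b = a * b from fun _ _ => rfl]
  have hs : (0 : ℝ) < sc p := by exact_mod_cast sc_pos p
  set m := zmin (zmin (X.lo * Y.lo) (X.lo * Y.hi)) (zmin (X.hi * Y.lo) (X.hi * Y.hi)) with hm
  set M := zmax (zmax (X.lo * Y.lo) (X.lo * Y.hi)) (zmax (X.hi * Y.lo) (X.hi * Y.hi)) with hM
  have m1 : m ≤ X.lo * Y.lo := (zmin_le_left _ _).trans (zmin_le_left _ _)
  have m2 : m ≤ X.lo * Y.hi := (zmin_le_left _ _).trans (zmin_le_right _ _)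
  have m3 : m ≤ X.hi * Y.lo := (zmin_le_right _ _).trans (zmin_le_left _ _)
  have m4 : m ≤ X.hi * Y.hi := (zmin_le_right _ _).trans (zmin_le_right _ _)
  have M1 : X.lo * Y.lo ≤ M := (le_zmax_left _ _).trans (le_zmax_left _ _)
  have M2 : X.lo * Y.hi ≤ M := (le_zmax_right _ _).trans (le_zmax_left _ _)
  have M3 : X.hi * Y.lo ≤ M := (le_zmax_left _ _).trans (le_zmax_right _ _)
  have M4 : X.hi * Y.hi ≤ M := (le_zmax_right _ _).trans (le_zmax_right _ _)
  obtain ⟨h1, h2⟩ := bilin_bounds hx.1 hx.2 hy.1 hy.2 (m := m) (M := M)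
    (by exact_mod_cast m1) (by exact_mod_cast m2) (by exact_mod_cast m3) (by exact_mod_cast m4)
    (by exact_mod_cast M1) (by exact_mod_cast M2) (by exact_mod_cast M3) (by exact_mod_cast M4)
  have h3 := floorDiv_le m p
  have h4 := le_ceilDiv M p
  constructor
  · refine le_of_mul_le_mul_right ?_ hs
    calc _ ≤ _ := h3
      _ ≤ _ := h1
      _ = _ := by ring
  · refine le_of_mul_le_mul_right ?_ hs
    calc _ = _ := by ring
      _ ≤ _ := h2
      _ ≤ _ := h4

lemma mem_mulPos {a b c d : ℕ} (h1 : (a : ℝ) ≤ x * sc p) (h2 : x * sc p ≤ (b : ℝ))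
    (h3 : (c : ℝ) ≤ y * sc p) (h4 : y * sc p ≤ (d : ℝ)) : mem (x * y) (mulPos a b c d : Iv p) := by
  have hs : (0 : ℝ) < sc p := by exact_mod_cast sc_pos p
  have hs2 : ((sc p : ℤ) : ℝ) = ((2 ^ p : ℕ) : ℝ) := by
    rw [show sc p = ((2 ^ p : ℕ) : ℤ) from rfl]; push_cast; rfl
  simp only [mulPos, outI_eq, mem]
  have e1 := Nat.div_mul_le_self (a * c) (2 ^ p)
  have e1' : (((a * c / 2 ^ p : ℕ) : ℝ)) * sc p ≤ a * c := by rw [hs2]; exact_mod_cast e1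
  have e2 : b * d ≤ (b * d / 2 ^ p).succ * 2 ^ p := by
    have h1 := Nat.div_add_mod (b * d) (2 ^ p)
    have h2 := Nat.mod_lt (b * d) (y := 2 ^ p) (by positivity)
    rw [Nat.succ_mul, mul_comm (b * d / 2 ^ p)]
    lia
  have e2' : (b : ℝ) * d ≤ (((b * d / 2 ^ p).succ : ℕ) : ℝ) * sc p := by
    rw [hs2]; exact_mod_cast e2
  have ha : (0 : ℝ) ≤ a := by positivity
  have hc : (0 : ℝ) ≤ c := by positivity
  constructor
  · refine le_of_mul_le_mul_right ?_ hs
    calc _ ≤ _ := e1'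
      _ ≤ _ := mul_le_mul h1 h3 hc (ha.trans h1)
      _ = _ := by ring
  · refine le_of_mul_le_mul_right ?_ hs
    calc _ = _ := by ring
      _ ≤ _ := mul_le_mul h2 h4 (hc.trans h3) (ha.trans (h1.trans h2))
      _ ≤ _ := e2'

lemma mem_mul (hx : mem x X) (hy : mem y Y) : mem (x * y) (X * Y) := by
  change mem _ (mulI X Y)
  obtain ⟨a, b⟩ := X
  obtain ⟨c, d⟩ := Y
  have tn : ∀ (z : ℤ), (z : ℝ) ≤ (z.toNat : ℝ) := fun z => by exact_mod_cast Int.self_le_toNat z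
  rcases a with m | m
  · rcases c with n | n
    · exact mem_mulPos (by simpa using hx.1) (hx.2.trans (tn _)) (by simpa using hy.1)
        (hy.2.trans (tn _))
    · exact mem_mulGen hx hy
  · exact mem_mulGen hx hy

lemma mem_sq (hx : mem x X) : mem (x ^ 2) (sqI X) := by
  have h := mem_mul hx hx
  change mem _ (mulI X X) at h
  have hs : (0 : ℝ) < sc p := by exact_mod_cast sc_pos p
  simp only [sqI, withI_eq, outI_eq, mem] at *
  rw [sq]
  refine ⟨?_, h.2⟩
  unfold zmax
  cases Int.ble' (mulI X X).lo 0
  · simpa using h.1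
  · simpa using mul_nonneg (mul_self_nonneg x) hs.le

lemma mem_inv (h0 : 0 < X.lo) (hx : mem x X) : 0 < x ∧ mem x⁻¹ (invI X) := by
  have hs : (0 : ℝ) < sc p := by exact_mod_cast sc_pos p
  simp only [invI, withI_eq, outI_eq, mem] at *
  simp only [show ∀ a b : ℤ, Int.mul a b = a * b from fun _ _ => rfl]
  have h0' : (0 : ℝ) < X.lo := by exact_mod_cast h0
  have hx0 : 0 < x := by
    by_contra! hc
    nlinarith [hx.1]
  have hhi : (0 : ℝ) < X.hi := lt_of_lt_of_le (mul_pos hx0 hs) hx.2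
  have hhi' : 0 < X.hi := by exact_mod_cast hhi
  have e1 := ediv_le (a := sc p * sc p) hhi'
  have e2 := Int.lt_ediv_add_one_mul_self (sc p * sc p) h0
  have e2' : ((sc p : ℝ) * sc p) < (((sc p * sc p) / X.lo : ℤ) + 1) * X.lo := by exact_mod_cast e2
  refine ⟨hx0, ?_, ?_⟩
  · push_cast at e1
    rw [inv_mul_eq_div, le_div_iff₀ hx0]
    have : (0 : ℝ) ≤ ((sc p * sc p).ediv X.hi : ℤ) := by
      have : 0 ≤ (sc p * sc p) / X.hi :=
        Int.ediv_nonneg (mul_pos (sc_pos p) (sc_pos p)).le hhi'.le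
      exact_mod_cast this
    refine le_of_mul_le_mul_right ?_ hs
    nlinarith [mul_le_mul_of_nonneg_left hx.2 this]
  · rw [inv_mul_eq_div, div_le_iff₀ hx0]
    have ee : ((((sc p * sc p).ediv X.lo).add 1 : ℤ) : ℝ) = (((sc p * sc p) / X.lo : ℤ) + 1 : ℝ) := by
      rw [show ((sc p * sc p).ediv X.lo).add 1 = (sc p * sc p) / X.lo + 1 from rfl]
      push_cast; ring
    rw [ee]
    have : (0 : ℝ) ≤ (((sc p * sc p) / X.lo : ℤ) : ℝ) := by
      have : 0 ≤ (sc p * sc p) / X.lo :=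
        Int.ediv_nonneg (mul_pos (sc_pos p) (sc_pos p)).le h0.le
      exact_mod_cast this
    refine le_of_mul_le_mul_right ?_ hs
    nlinarith [mul_le_mul_of_nonneg_left hx.1 (by linarith :
      (0 : ℝ) ≤ (((sc p * sc p) / X.lo : ℤ) : ℝ) + 1)]

/-! Steps of a straight-line program: each one names the value of an interval, or tests it. -/

lemma let_step {F : Iv p → Bool} {X : Iv p} (hx : mem x X) (h : bindI X F = true) :
    ∃ X, mem x X ∧ F X = true := ⟨X, hx, by rwa [bindI_eq] at h⟩

/-- Continue with the reciprocal; fail unless the interval is positive. -/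
def withInv (X : Iv p) (F : Iv p → Bool) : Bool :=
  bindI X fun X => cond (Int.ble' 1 X.lo) (bindI (invI X) F) false

lemma inv_step {F : Iv p → Bool} (hx : mem x X) (h : withInv X F = true) :
    ∃ X, 0 < x ∧ mem x⁻¹ X ∧ F X = true := by
  simp only [withInv, bindI_eq] at h
  cases hc : Int.ble' 1 X.lo
  · simp [hc] at h
  · rw [hc] at h
    simp only [Int.ble'_eq_true] at hc
    obtain ⟨h1, h2⟩ := mem_inv (by lia) hx
    exact ⟨_, h1, h2, h⟩

/-- Continue if the interval is positive, fail otherwise. -/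
def assertPos (X : Iv p) (F : Bool) : Bool :=
  bindI X fun X => cond (Int.ble' 1 X.lo) F false

lemma pos_step {F : Bool} (hx : mem x X) (h : assertPos X F = true) : 0 < x ∧ F = true := by
  simp only [assertPos, bindI_eq] at h
  cases hc : Int.ble' 1 X.lo
  · simp [hc] at h
  · rw [hc] at h
    simp only [Int.ble'_eq_true] at hc
    exact ⟨(mem_inv (by lia) hx).1, h⟩

/-- Succeed at once if the interval is nonnegative, continue otherwise. -/
def prune (X : Iv p) (F : Bool) : Bool :=
  bindI X fun X => cond (Int.ble' 0 X.lo) true F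

lemma prune_step {F : Bool} (hx : mem x X) (h : prune X F = true) (h0 : x < 0) : F = true := by
  simp only [prune, bindI_eq] at h
  cases hc : Int.ble' 0 X.lo
  · rwa [hc] at h
  · exfalso
    simp only [Int.ble'_eq_true] at hc
    have hs : (0 : ℝ) < sc p := by exact_mod_cast sc_pos p
    have : (0 : ℝ) ≤ X.lo := by exact_mod_cast hc
    nlinarith [hx.1]

/-- Image under `x ↦ max x 0`. -/
def posPart (X : Iv p) : Iv p := withI X fun a b => outI (zmax a 0) (zmax b 0)

lemma mem_posPart (hx : mem x X) : mem (max x 0) (posPart X) := by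
  have hs : (0 : ℝ) < sc p := by exact_mod_cast sc_pos p
  simp only [posPart, withI_eq, outI_eq, mem] at *
  have hh := le_zmax_left X.hi 0
  have hh' : (X.hi : ℝ) ≤ zmax X.hi 0 := by exact_mod_cast hh
  have h2 := le_zmax_right X.hi 0
  have h2' : (0 : ℝ) ≤ zmax X.hi 0 := by exact_mod_cast h2
  constructor
  · have : (zmax X.lo 0 : ℝ) ≤ max (x * sc p) 0 := by
      unfold zmax
      cases Int.ble' X.lo 0
      · exact le_max_of_le_left (by simpa using hx.1)
      · exact le_max_of_le_right (by simp)
    rwa [max_mul_of_nonneg _ _ hs.le, zero_mul]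
  · rw [max_mul_of_nonneg _ _ hs.le, zero_mul]
    exact max_le (hx.2.trans hh') h2'

/-- Intersection. -/
def meetI (X Y : Iv p) : Iv p :=
  withI X fun a b => withI Y fun c d => outI (zmax a c) (zmin b d)

lemma mem_meet (hx : mem x X) (hy : mem x Y) : mem x (meetI X Y) := by
  simp only [meetI, withI_eq, outI_eq, mem] at *
  unfold zmax zmin
  constructor
  · cases Int.ble' X.lo Y.lo
    · exact hx.1
    · exact hy.1
  · cases Int.ble' X.hi Y.hi
    · exact hy.2
    · exact hx.2

lemma mem_left (hx : mem x X) {m : ℤ} (h : x * sc p ≤ m) : mem x (⟨X.lo, m⟩ : Iv p) := ⟨hx.1, h⟩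
lemma mem_right (hx : mem x X) {m : ℤ} (h : m ≤ x * sc p) : mem x (⟨m, X.hi⟩ : Iv p) := ⟨h, hx.2⟩

end Iv

end

/-! ### The case `n = 3`: inequalities on a rectangle of parameters -/

section

open Iv

/-- Intervals with 24 binary digits. -/
abbrev V := Iv 24

lemma mem_one {p : ℕ} : mem (1 : ℝ) (cst 1 : Iv p) := by simpa using mem_cst (p := p) 1

lemma mem_ofNat {p : ℕ} (n : ℕ) [n.AtLeastTwo] :
    mem (OfNat.ofNat n : ℝ) (cst (OfNat.ofNat n) : Iv p) := by
  have := mem_cst (p := p) (OfNat.ofNat n)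
  rwa [Nat.cast_ofNat] at this

/-- One step of the contraction `L ↦ h / (S - L)`. -/
def itL (h S L : V) (F : V → Bool) : Bool :=
  withInv (S - L) fun J => bindI (h * J) F

lemma itL_step {h S L : ℝ} {H T X : V} {F : V → Bool} (mh : mem h H) (mS : mem S T)
    (mL : mem L X) (e : L * (S - L) = h) (hh : itL H T X F = true) :
    ∃ Y, mem L Y ∧ F Y = true := by
  obtain ⟨J, hp, mJ, hh⟩ := inv_step (Iv.mem_sub mS mL) hh
  refine let_step ?_ hh
  have := Iv.mem_mul mh mJ
  rwa [← div_eq_mul_inv, ← e, mul_div_assoc, div_self hp.ne', mul_one] at this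

def boxTest (E W : V) : Bool :=
  bindI (E * W) fun X =>
  withInv (cst 1 - cst 3 * sqI X) fun J =>
  bindI (W * (cst 1 + cst 3 * X) * J) fun R =>
  bindI ((cst 1 - (cst 1 - E) * (X * W)) * J) fun H =>
  bindI (cst 1 + H + R) fun S =>
  prune (cst 16 * H - cst 3 * sqI S) <|
  prune (cst 4 * sqI S - cst 25 * H) <|
  withInv (cst 5) fun i5 =>
  withInv (cst 4) fun i4 =>
  bindI (⟨(S * i5).lo, (S * i4).hi⟩) fun L =>
  itL H S L fun L => itL H S L fun L => itL H S L fun L => itL H S L fun L => itL H S L fun L =>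
  bindI (cst 1 - L) fun s =>
  withInv L fun Li =>
  bindI (meetI (S * Li - cst 1) ⟨Int.mul 3 (sc 24), Int.mul 4 (sc 24)⟩) fun k =>
  withInv (cst 3 + R * (cst 1 + cst 2 * E)) fun N =>
  bindI ((cst 1 - E) * N) fun N' =>
  bindI (N' * (X * (cst 1 + (cst 1 - E) * W) * J)) fun K =>
  bindI (R + s) fun P =>
  bindI (H * N) fun B =>
  withInv (k - cst 2) fun k2 =>
  bindI ((cst 2 * (cst 1 - B) - N' * P + cst 2 * K * s * Li - E * P * Li) * k2) fun t =>
  bindI (-(L * (cst 1 - cst 2 * B) + P * (cst 2 * L * K * N - cst 2 * E + cst 2 * E * B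
      + cst 2 * K * N' * s) + K * s
      + t * (cst 2 * L * (cst 1 - B) + P * (cst 2 * K - cst 2 - cst 2 * E + B * (cst 1 + E)) + K * s
      + t * (L - cst 2 * P)))) fun M =>
  withInv M fun Mi =>
  bindI ((S - cst 4 * L) * P * Mi) fun u =>
  bindI (cst 2 * N * (L - P * E) + N' * s) fun g =>
  bindI (P * (cst 2 + cst 2 * E - cst 2 * K - B * (cst 1 + E)) - B * (cst 1 - E) * s
      - cst 2 * L * (cst 1 - B) + t * (cst 4 * P - cst 2 * L - H)
    + (K * g - E * (cst 1 - cst 2 * B) + t * (cst 2 * B - cst 1 - cst 2 * E * (cst 1 - B)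
      + K * (cst 1 + g) + t * (cst 2 * B + K - t - cst 2 - E))) * u) fun b =>
  bindI (s + posPart t) fun st =>
  bindI (L - cst 2 * P + H) fun b4 =>
  assertPos (E * (cst 4 - E) + B * (cst 4 - cst 6 * E - cst 2 * sqI E - sqI (cst 3 - E) * B)
      - cst 4 * K + cst 8 * K * N * (P * E - L)
      + t * (cst 4 + cst 2 * E - cst 2 * B * (cst 1 + E) - cst 4 * K + cst 3 * t)
      - cst 4 * K * N * ((cst 2 * E + t * (cst 1 + cst 3 * E + t * (cst 1 + E))) * u
      + cst 2 * st)) <|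
  assertPos (cst 1 - u * st) <|
  assertPos b <|
  assertPos (H - K) <|
  assertPos (cst 1 + cst 3 * E + t * (cst 3 + E)) <|
  prune b4 <|
  assertPos (sqI b * u - sqI b4 * st) true

/-- Bisection of a box, alternating the sides. -/
def bisect (T : V → V → Bool) : ℕ → Bool → V → V → Bool
  | 0, _, E, W => T E W
  | n + 1, false, E, W => cond (T E W) true <|
      forceZ (Int.ediv (addZ E.lo E.hi) 2) fun m =>
      cond (bisect T n true ⟨E.lo, m⟩ W) (bisect T n true ⟨m, E.hi⟩ W) false
  | n + 1, true, E, W => cond (T E W) true <|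
      forceZ (Int.ediv (addZ W.lo W.hi) 2) fun m =>
      cond (bisect T n false E ⟨W.lo, m⟩) (bisect T n false E ⟨m, W.hi⟩) false

set_option maxHeartbeats 2000000 in
/-- The test, passed on a box of `(η, w)`, yields the inequalities behind the barrier for `n = 3`.
Boxes outside the range `4 L < S < 5 L`, that is `3 < k < 4`, are discarded. -/
lemma boxTest_sound {E W : V} {η w x ρ h S L s k ν ν' κ P B t M u g β st b4 : ℝ}
    (mE : mem η E) (mW : mem w W) (hx : x = η * w)
    (hρ : ρ = w * (1 + 3 * x) * (1 - 3 * x ^ 2)⁻¹)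
    (hh : h = (1 - (1 - η) * (x * w)) * (1 - 3 * x ^ 2)⁻¹)
    (hS : S = 1 + h + ρ) (hL : L * (S - L) = h) (hL0 : 0 < L) (hL1 : S < 5 * L) (hL2 : 4 * L < S)
    (hs : s = 1 - L) (hk : k = S * L⁻¹ - 1) (hν : ν = (3 + ρ * (1 + 2 * η))⁻¹)
    (hν' : ν' = (1 - η) * ν)
    (hκ : κ = ν' * (x * (1 + (1 - η) * w) * (1 - 3 * x ^ 2)⁻¹)) (hP : P = ρ + s) (hB : B = h * ν)
    (ht : t = (2 * (1 - B) - ν' * P + 2 * κ * s * L⁻¹ - η * P * L⁻¹) * (k - 2)⁻¹)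
    (hM : M = -(L * (1 - 2 * B) + P * (2 * L * κ * ν - 2 * η + 2 * η * B
      + 2 * κ * ν' * s) + κ * s
      + t * (2 * L * (1 - B) + P * (2 * κ - 2 - 2 * η + B * (1 + η)) + κ * s
      + t * (L - 2 * P))))
    (hu : u = (S - 4 * L) * P * M⁻¹) (hg : g = 2 * ν * (L - P * η) + ν' * s)
    (hβ : β = P * (2 + 2 * η - 2 * κ - B * (1 + η)) - B * (1 - η) * s
      - 2 * L * (1 - B) + t * (4 * P - 2 * L - h)
      + (κ * g - η * (1 - 2 * B) + t * (2 * B - 1 - 2 * η * (1 - B)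
      + κ * (1 + g) + t * (2 * B + κ - t - 2 - η))) * u)
    (hst : st = s + max t 0) (hb4 : b4 = L - 2 * P + h) (hT : boxTest E W = true) :
    0 < M ∧ 0 < η * (4 - η) + B * (4 - 6 * η - 2 * η ^ 2 - (3 - η) ^ 2 * B)
      - 4 * κ + 8 * κ * ν * (P * η - L)
      + t * (4 + 2 * η - 2 * B * (1 + η) - 4 * κ + 3 * t)
      - 4 * κ * ν * ((2 * η + t * (1 + 3 * η + t * (1 + η))) * u + 2 * st) ∧
    0 < 1 - u * st ∧ 0 < β ∧ 0 < h - κ ∧ 0 < 1 + 3 * η + t * (3 + η) ∧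
    (b4 < 0 → 0 < β ^ 2 * u - b4 ^ 2 * st) := by
  unfold boxTest at hT
  obtain ⟨X, mX, hT⟩ := let_step (x := x) (by rw [hx]; exact Iv.mem_mul mE mW) hT
  obtain ⟨J, hJ, mJ, hT⟩ := inv_step (x := 1 - 3 * x ^ 2)
    (by with_reducible repeat' first | exact mem_one | exact mem_ofNat _ | apply Iv.mem_sub | apply Iv.mem_mul | apply Iv.mem_sq | assumption) hT
  obtain ⟨R, mR, hT⟩ := let_step (x := ρ)
    (by rw [hρ]; with_reducible repeat' first | exact mem_one | exact mem_ofNat _ | apply Iv.mem_add | apply Iv.mem_mul | assumption) hT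
  obtain ⟨H, mH, hT⟩ := let_step (x := h)
    (by rw [hh]; with_reducible repeat' first | exact mem_one | apply Iv.mem_sub | apply Iv.mem_mul | assumption) hT
  obtain ⟨T, mS, hT⟩ := let_step (x := S)
    (by rw [hS]; with_reducible repeat' first | exact mem_one | apply Iv.mem_add | assumption) hT
  have hT := prune_step (x := 16 * h - 3 * S ^ 2)
    (by with_reducible repeat' first | exact mem_ofNat _ | apply Iv.mem_sub | apply Iv.mem_mul | apply Iv.mem_sq | assumption) hT
    (by rw [← hL]; nlinarith [mul_pos (sub_pos.2 hL2) (by linarith : 0 < 3 * S - 4 * L)])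
  have hT := prune_step (x := 4 * S ^ 2 - 25 * h)
    (by with_reducible repeat' first | exact mem_ofNat _ | apply Iv.mem_sub | apply Iv.mem_mul | apply Iv.mem_sq | assumption) hT
    (by rw [← hL]; nlinarith [mul_pos (sub_pos.2 hL1) (by linarith : 0 < 4 * S - 5 * L)])
  obtain ⟨i5, -, m5, hT⟩ := inv_step (mem_ofNat 5) hT
  obtain ⟨i4, -, m4, hT⟩ := inv_step (mem_ofNat 4) hT
  have h24 : (0 : ℝ) < sc 24 := by exact_mod_cast sc_pos 24
  obtain ⟨L0, mL, hT⟩ := let_step (x := L) (by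
    constructor
    · refine (Iv.mem_mul mS m5).1.trans ?_
      exact mul_le_mul_of_nonneg_right (by linarith) h24.le
    · refine le_trans ?_ (Iv.mem_mul mS m4).2
      exact mul_le_mul_of_nonneg_right (by linarith) h24.le) hT
  obtain ⟨L1, mL, hT⟩ := itL_step mH mS mL hL hT
  obtain ⟨L2, mL, hT⟩ := itL_step mH mS mL hL hT
  obtain ⟨L3, mL, hT⟩ := itL_step mH mS mL hL hT
  obtain ⟨L4, mL, hT⟩ := itL_step mH mS mL hL hT
  obtain ⟨L5, mL, hT⟩ := itL_step mH mS mL hL hT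
  obtain ⟨s', ms, hT⟩ := let_step (x := s)
    (by rw [hs]; with_reducible repeat' first | exact mem_one | apply Iv.mem_sub | assumption) hT
  obtain ⟨Li, -, mLi, hT⟩ := inv_step mL hT
  have hk3 : 3 ≤ k := by
    rw [hk]; have : 4 ≤ S * L⁻¹ := by rw [← div_eq_mul_inv, le_div_iff₀ hL0]; exact hL2.le
    linarith
  have hk4 : k ≤ 4 := by
    rw [hk]; have : S * L⁻¹ ≤ 5 := by rw [← div_eq_mul_inv, div_le_iff₀ hL0]; exact hL1.le
    linarith
  have e3 : ((Int.mul 3 (sc 24) : ℤ) : ℝ) = 3 * (sc 24 : ℝ) := by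
    change ((3 * sc 24 : ℤ) : ℝ) = _; push_cast; rfl
  have e4 : ((Int.mul 4 (sc 24) : ℤ) : ℝ) = 4 * (sc 24 : ℝ) := by
    change ((4 * sc 24 : ℤ) : ℝ) = _; push_cast; rfl
  obtain ⟨k', mk, hT⟩ := let_step (x := k) (by
    refine Iv.mem_meet ?_ ?_
    · rw [hk]; with_reducible repeat' first | exact mem_one | apply Iv.mem_sub | apply Iv.mem_mul | assumption
    · constructor
      · simp only [e3]; exact mul_le_mul_of_nonneg_right hk3 h24.le
      · simp only [e4]; exact mul_le_mul_of_nonneg_right hk4 h24.le) hT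
  obtain ⟨N, -, mN, hT⟩ := inv_step (x := 3 + ρ * (1 + 2 * η))
    (by with_reducible repeat' first | exact mem_one | exact mem_ofNat _ | apply Iv.mem_add | apply Iv.mem_mul | assumption) hT
  rw [← hν] at mN
  obtain ⟨N', mN', hT⟩ := let_step (x := ν')
    (by rw [hν']; with_reducible repeat' first | exact mem_one | apply Iv.mem_sub | apply Iv.mem_mul | assumption) hT
  obtain ⟨K, mK, hT⟩ := let_step (x := κ)
    (by rw [hκ]; with_reducible repeat' first | exact mem_one | apply Iv.mem_add | apply Iv.mem_sub | apply Iv.mem_mul | assumption) hT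
  obtain ⟨P', mP, hT⟩ := let_step (x := P) (by rw [hP]; exact Iv.mem_add mR ms) hT
  obtain ⟨B', mB, hT⟩ := let_step (x := B) (by rw [hB]; exact Iv.mem_mul mH mN) hT
  obtain ⟨k2, -, mk2, hT⟩ := inv_step (x := k - 2) (Iv.mem_sub mk (mem_ofNat 2)) hT
  obtain ⟨t', mt, hT⟩ := let_step (x := t)
    (by rw [ht]; with_reducible repeat' first | exact mem_one | exact mem_ofNat _ | apply Iv.mem_add | apply Iv.mem_sub | apply Iv.mem_mul | assumption) hT
  obtain ⟨M', mM, hT⟩ := let_step (x := M) (by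
    rw [hM]; with_reducible repeat' first | exact mem_one | exact mem_ofNat _ | apply Iv.mem_add | apply Iv.mem_sub | apply Iv.mem_mul | apply Iv.mem_sq | apply Iv.mem_neg | assumption) hT
  obtain ⟨Mi, hM0, mMi, hT⟩ := inv_step mM hT
  obtain ⟨u', mu, hT⟩ := let_step (x := u)
    (by rw [hu]; with_reducible repeat' first | exact mem_ofNat _ | apply Iv.mem_sub | apply Iv.mem_mul | assumption) hT
  obtain ⟨g', mg, hT⟩ := let_step (x := g)
    (by rw [hg]; with_reducible repeat' first | exact mem_ofNat _ | apply Iv.mem_add | apply Iv.mem_sub | apply Iv.mem_mul | assumption) hT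
  obtain ⟨b', mb, hT⟩ := let_step (x := β)
    (by rw [hβ]; with_reducible repeat' first | exact mem_one | exact mem_ofNat _ | apply Iv.mem_add | apply Iv.mem_sub | apply Iv.mem_mul | assumption) hT
  obtain ⟨st', mst, hT⟩ := let_step (x := st) (by rw [hst]; exact Iv.mem_add ms (mem_posPart mt)) hT
  obtain ⟨b4', mb4, hT⟩ := let_step (x := b4)
    (by rw [hb4]; with_reducible repeat' first | exact mem_ofNat _ | apply Iv.mem_add | apply Iv.mem_sub | apply Iv.mem_mul | assumption) hT
  obtain ⟨p1, hT⟩ := pos_step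
    (x := η * (4 - η) + B * (4 - 6 * η - 2 * η ^ 2 - (3 - η) ^ 2 * B)
      - 4 * κ + 8 * κ * ν * (P * η - L)
      + t * (4 + 2 * η - 2 * B * (1 + η) - 4 * κ + 3 * t)
      - 4 * κ * ν * ((2 * η + t * (1 + 3 * η + t * (1 + η))) * u + 2 * st))
    (by with_reducible repeat' first | exact mem_one | exact mem_ofNat _ | apply Iv.mem_add | apply Iv.mem_sub | apply Iv.mem_mul | apply Iv.mem_sq | assumption) hT
  obtain ⟨p2, hT⟩ := pos_step (x := 1 - u * st) (Iv.mem_sub mem_one (Iv.mem_mul mu mst)) hT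
  obtain ⟨p3, hT⟩ := pos_step mb hT
  obtain ⟨p4, hT⟩ := pos_step (Iv.mem_sub mH mK) hT
  obtain ⟨p5, hT⟩ := pos_step (x := 1 + 3 * η + t * (3 + η))
    (by with_reducible repeat' first | exact mem_one | exact mem_ofNat _ | apply Iv.mem_add | apply Iv.mem_mul | assumption) hT
  refine ⟨hM0, p1, p2, p3, p4, p5, fun h0 => ?_⟩
  have hT := prune_step mb4 hT h0
  exact (pos_step (x := β ^ 2 * u - b4 ^ 2 * st)
    (by with_reducible repeat' first | apply Iv.mem_sub | apply Iv.mem_mul | apply Iv.mem_sq | assumption) hT).1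

/-- A conclusion drawn from the test holds wherever the bisection succeeds. -/
lemma bisect_sound {T : V → V → Bool} {C : Prop} {η w : ℝ}
    (hT : ∀ E W, mem η E → mem w W → T E W = true → C) :
    ∀ (n : ℕ) (b : Bool) (E W : V), mem η E → mem w W → bisect T n b E W = true → C
  | 0, _, E, W, hE, hW, h => hT E W hE hW h
  | n + 1, false, E, W, hE, hW, h => by
    rw [bisect] at h
    cases h1 : T E W
    · rw [h1, cond_false, forceZ_eq] at h
      revert h
      generalize Int.ediv (addZ E.lo E.hi) 2 = m
      intro h
      cases h2 : bisect T n true ⟨E.lo, m⟩ W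
      · rw [h2] at h; exact absurd h (by simp)
      · rw [h2, cond_true] at h
        rcases le_total (η * sc 24) m with hm | hm
        · exact bisect_sound hT n true _ W (mem_left hE hm) hW h2
        · exact bisect_sound hT n true _ W (mem_right hE hm) hW h
    · exact hT E W hE hW h1
  | n + 1, true, E, W, hE, hW, h => by
    rw [bisect] at h
    cases h1 : T E W
    · rw [h1, cond_false, forceZ_eq] at h
      revert h
      generalize Int.ediv (addZ W.lo W.hi) 2 = m
      intro h
      cases h2 : bisect T n false E ⟨W.lo, m⟩
      · rw [h2] at h; exact absurd h (by simp)
      · rw [h2, cond_true] at h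
        rcases le_total (w * sc 24) m with hm | hm
        · exact bisect_sound hT n false E _ hE (mem_left hW hm) h2
        · exact bisect_sound hT n false E _ hE (mem_right hW hm) h
    · exact hT E W hE hW h1

end

section

open Iv

set_option maxRecDepth 100000 in
set_option maxHeartbeats 0 in
/-- The rectangle is `0 ≤ η ≤ 1`, `0 ≤ w ≤ 9 / 16`, in units of `2 ^ (-24)`. -/
lemma bisect_all : bisect boxTest 20 false ⟨0, 16777216⟩ ⟨0, 9437184⟩ = true := by
  decide +kernel

end

/-! ### The case `n = 3`: the rational barrier -/

/-- The residual of the rational barrier, up to positive factors: `ht` and `hq`, which define `t` and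
`q`, cancel its two lowest orders. -/
lemma res3_identity {h κ P η ν L t q Y b1 b2 b3 b4 k4 k5 c5 M g : ℝ}
    (hs : h * (1 - L) = P * L)
    (ht : 2 * (1 + t - ν * h) * L - P * (η + t) - h * t - (1 - η) * ν * h * (1 - L)
      + 2 * κ * (1 - L) = 0)
    (hM : M = -(L * (1 - 2 * (h * ν)) + P * (2 * L * κ * ν - 2 * η + 2 * η * (h * ν)
      + 2 * κ * ((1 - η) * ν) * (1 - L)) + κ * (1 - L)
      + t * (2 * L * (1 - h * ν) + P * (2 * κ - 2 - 2 * η + h * ν * (1 + η)) + κ * (1 - L)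
      + t * (L - 2 * P))))
    (hq : q * (P * (P + h - 3 * L)) = M)
    (hg : g = 2 * ν * (L - P * η) + (1 - η) * ν * (1 - L))
    (hb1 : b1 = P * (2 + 2 * η - 2 * κ - h * ν * (1 + η)) - h * ν * (1 - η) * (1 - L)
      - 2 * L * (1 - h * ν) + t * (4 * P - 2 * L - h))
    (hb2 : b2 = κ * g - η * (1 - 2 * (h * ν)) + t * (2 * (h * ν) - 1 - 2 * η * (1 - h * ν)
      + κ * (1 + g) + t * (2 * (h * ν) + κ - t - 2 - η)))
    (hb3 : b3 = 1 + 2 * η - κ - 2 * (h * ν) * (1 + η) + 2 * κ * ν * (P * η - L)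
      + t * (4 + 2 * η - κ - 5 * (h * ν) + η * (h * ν) + 3 * t))
    (hb4 : b4 = L - 2 * P + h) (hc5 : c5 = -2 - η - 3 * t + h * ν * (3 - η))
    (hk4 : k4 = -κ * ν * (2 * η + t * (1 + 3 * η + t * (1 + η))))
    (hk5 : k5 = κ * ν * (1 + 3 * η + t * (3 + η))) :
    (P + (1 + t) * Y - q * Y ^ 2) * (P + (1 + t) * Y - q * Y ^ 2 - 2 * ν * (h * Y - κ * Y ^ 2))
      * (1 - η * Y - (1 - L + t * Y - q * Y ^ 2))
      - (1 + (1 - η) * ν * Y) * ((h - 2 * κ * Y) * (P + (1 + t) * Y - q * Y ^ 2)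
        - (h * Y - κ * Y ^ 2) * (1 + t - 2 * q * Y)) * (1 - L + t * Y - q * Y ^ 2)
    = Y ^ 3 * ((b2 + q * b1) + Y * (k4 + q * b3 + q ^ 2 * b4) + Y ^ 2 * (q * k5 + q ^ 2 * c5)
      + Y ^ 3 * (q ^ 3 - 2 * κ * ν * q ^ 2)) := by
  subst hb1 hb2 hb3 hb4 hc5 hk4 hk5 hg
  rw [hM] at hq
  linear_combination P * Y * ht + Y ^ 2 * hq + (-P - q * Y ^ 2) * hs

/-- Sign of the residual divided by `q Y ^ 2`: the quadratic form in `(Y, q Y ^ 2)` is positive. -/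
lemma res3_pos {κ ν β u q s t st c b4 k5 c5 Y : ℝ} (hq : 0 < q) (hqu : q * u = 1)
    (hκ : 0 ≤ κ) (hν : 0 ≤ ν) (hst : st = s + max t 0) (hs : 0 < s) (hβ : 0 < β)
    (hb4 : b4 < 0 → 0 < β ^ 2 * u - b4 ^ 2 * st) (hk5 : 0 ≤ k5)
    (hc : c5 ^ 2 < 4 * (c - 2 * κ * ν * st))
    (hY : 0 < Y) (hB : q * Y ^ 2 ≤ st) :
    0 < Y * β + Y ^ 2 * c + b4 * (q * Y ^ 2) + k5 * Y ^ 3 + c5 * (q * Y ^ 2) * Y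
      - 2 * κ * ν * (q * Y ^ 2) * Y ^ 2 + (q * Y ^ 2) ^ 2 := by
  have hst0 : 0 < st := by rw [hst]; linarith [le_max_right t 0]
  have h1 : 0 < Y * β + b4 * (q * Y ^ 2) := by
    rcases lt_or_ge b4 0 with h | h
    · have h2 := hb4 h
      have h3 : b4 ^ 2 * (q * st) < β ^ 2 := by
        have := mul_pos hq h2
        have e : q * (β ^ 2 * u - b4 ^ 2 * st) = β ^ 2 * (q * u) - b4 ^ 2 * (q * st) := by ring
        rw [e, hqu] at this; linarith
      have h4 : (-b4 * (q * Y)) ^ 2 < β ^ 2 := by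
        refine lt_of_le_of_lt ?_ h3
        have := mul_le_mul_of_nonneg_left hB (mul_nonneg (sq_nonneg b4) hq.le)
        nlinarith
      have h5 : -b4 * (q * Y) < β := lt_of_pow_lt_pow_left₀ 2 hβ.le h4
      nlinarith
    · positivity
  have h6 : 2 * κ * ν * (q * Y ^ 2) * Y ^ 2 ≤ 2 * κ * ν * st * Y ^ 2 := by gcongr
  have h7 : 0 ≤ k5 * Y ^ 3 := by positivity
  have h8 : 0 ≤ (2 * (q * Y ^ 2) + c5 * Y) ^ 2 := sq_nonneg _
  have h9 : 0 < (4 * (c - 2 * κ * ν * st) - c5 ^ 2) * Y ^ 2 := mul_pos (by linarith) (by positivity)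
  nlinarith

/-- The endpoint and the range of `Y`: `Θ = s + t Y - q Y ^ 2` vanishes at some `Y₁ ≤ 1`. -/
lemma theta_root {q u s t st : ℝ} (hq : 0 < q) (hqu : q * u = 1) (hs : 0 < s)
    (hst : st = s + max t 0) (hu : u * st < 1) :
    ∃ Y₁, 0 < Y₁ ∧ Y₁ < 1 ∧ s + t * Y₁ - q * Y₁ ^ 2 = 0 ∧
      ∀ y ∈ Icc 0 Y₁, 0 ≤ s + t * y - q * y ^ 2 ∧ q * y ^ 2 ≤ st := by
  set d := √(t ^ 2 + 4 * q * s) with hd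
  have hd2 : d ^ 2 = t ^ 2 + 4 * q * s := Real.sq_sqrt (by positivity)
  have hdt : |t| < d := by
    rw [← Real.sqrt_sq_eq_abs]; exact Real.sqrt_lt_sqrt (sq_nonneg t) (by linarith [mul_pos hq hs])
  have h1 := (abs_lt.1 hdt).1
  have h2 := (abs_lt.1 hdt).2
  have hstq : st < q := by
    have := mul_lt_mul_of_pos_left hu hq
    rwa [← mul_assoc, hqu, one_mul, mul_one] at this
  have e1 : s + t * ((t + d) / (2 * q)) - q * ((t + d) / (2 * q)) ^ 2 = 0 := by
    field_simp; nlinarith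
  have hY0 : 0 < (t + d) / (2 * q) := div_pos (by linarith) (by linarith)
  generalize (t + d) / (2 * q) = Y₁ at e1 hY0
  have hY1 : Y₁ < 1 := by
    by_contra! hc
    have ht : t ≤ max t 0 := le_max_left _ _
    have h0 : 0 ≤ max t 0 := le_max_right _ _
    have : t * Y₁ ≤ max t 0 * Y₁ := by gcongr
    have : s ≤ s * Y₁ := by nlinarith
    have : q * Y₁ ≤ q * Y₁ ^ 2 := by
      nlinarith [mul_nonneg (mul_nonneg hq.le hY0.le) (sub_nonneg.2 hc)]
    have : st * Y₁ < q * Y₁ := by gcongr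
    rw [hst] at this
    nlinarith
  refine ⟨Y₁, hY0, hY1, e1, fun y hy => ?_⟩
  have hth : 0 ≤ s + t * y - q * y ^ 2 := by
    have : Y₁ * (s + t * y - q * y ^ 2) = (Y₁ - y) * (s + q * y * Y₁) := by
      linear_combination y * e1
    have h3 : 0 ≤ Y₁ * (s + t * y - q * y ^ 2) := by
      rw [this]; have := hy.1; have := sub_nonneg.2 hy.2; positivity
    exact nonneg_of_mul_nonneg_right h3 hY0
  refine ⟨hth, ?_⟩
  have ht : t * y ≤ max t 0 := by
    rcases le_total t 0 with h | h
    · exact (mul_nonpos_of_nonpos_of_nonneg h hy.1).trans (le_max_right _ _)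
    · rw [max_eq_left h]; have : y ≤ 1 := hy.2.trans hY1.le
      nlinarith
  rw [hst]; linarith

/-- The rational barrier `T = A / Ψ`, from the polynomial form `y ^ 3 * p y` of its residual. -/
lemma barrier_rat {h κ ρ P η ν L t q Y₁ : ℝ} {p : ℝ → ℝ} (hP : P = ρ + (1 - L)) (hρ : 0 < ρ)
    (hκ : 0 ≤ κ) (hη : 0 < η) (hη1 : η < 1) (hhκ : κ < h) (hpc : ContinuousAt p 0)
    (hY0 : 0 < Y₁) (hY1 : Y₁ < 1) (e1 : 1 - L + t * Y₁ - q * Y₁ ^ 2 = 0) (hP0 : P ≠ 0)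
    (hθ : ∀ y ∈ Icc 0 Y₁, 0 ≤ 1 - L + t * y - q * y ^ 2)
    (hpp : ∀ y ∈ Ioc 0 Y₁, 0 < p y)
    (hid : ∀ Y, (P + (1 + t) * Y - q * Y ^ 2) *
      (P + (1 + t) * Y - q * Y ^ 2 - 2 * ν * (h * Y - κ * Y ^ 2))
      * (1 - η * Y - (1 - L + t * Y - q * Y ^ 2))
      - (1 + (1 - η) * ν * Y) * ((h - 2 * κ * Y) * (P + (1 + t) * Y - q * Y ^ 2)
        - (h * Y - κ * Y ^ 2) * (1 + t - 2 * q * Y)) * (1 - L + t * Y - q * Y ^ 2)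
      = Y ^ 3 * p Y) :
    ∃ T T' : ℝ → ℝ, Barrier h κ ρ η ν 3 T T' Y₁ ∧ T' 0 = h / P := by
  set Ψ : ℝ → ℝ := fun y => P + (1 + t) * y - q * y ^ 2 with hΨ
  set A : ℝ → ℝ := fun y => h * y - κ * y ^ 2 with hA
  set T' : ℝ → ℝ := fun y =>
    ((h - 2 * κ * y) * Ψ y - A y * (1 + t - 2 * q * y)) / Ψ y ^ 2 with hT'
  have hΨ0 : ∀ y ∈ Icc 0 Y₁, 0 < Ψ y := fun y hy => by
    have := hθ y hy; have := hy.1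
    simp only [hΨ]; rw [hP]; linarith
  have hN : ∀ y ∈ Icc 0 Y₁, gN h κ ρ η ν y (A y / Ψ y) (T' y)
      = y ^ 4 * ((h - κ * y) / Ψ y ^ 3 * p y) := fun y hy => by
    have h0 := (hΨ0 y hy).ne'
    have h1 := hid y
    have e2 : gN h κ ρ η ν y (A y / Ψ y) (T' y) = A y / Ψ y ^ 3 * (Ψ y * (Ψ y - 2 * ν * A y)
      * (1 - η * y - (Ψ y - ρ - y))
      - (1 + (1 - η) * ν * y) * ((h - 2 * κ * y) * Ψ y
        - A y * (1 + t - 2 * q * y)) * (Ψ y - ρ - y)) := by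
      have e3 : h * y - κ * y ^ 2 = A y := rfl
      unfold gN gP gQ
      simp only [hT', e3]
      field_simp
      ring
    have e4 : Ψ y - ρ - y = 1 - L + t * y - q * y ^ 2 := by simp only [hΨ]; rw [hP]; ring
    rw [e2, e4]
    have h1' : Ψ y * (Ψ y - 2 * ν * A y)
      * (1 - η * y - (1 - L + t * y - q * y ^ 2))
      - (1 + (1 - η) * ν * y) * ((h - 2 * κ * y) * Ψ y
        - A y * (1 + t - 2 * q * y)) * (1 - L + t * y - q * y ^ 2) = y ^ 3 * p y := h1
    rw [h1']
    simp only [hA]; ring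
  refine ⟨fun y => A y / Ψ y, T', ⟨hY0, by nlinarith, fun y hy => ?_, fun y hy => ?_,
    fun y hy => ?_, ?_, ?_, ?_, ?_⟩, ?_⟩
  · have d1 : HasDerivAt A (h - 2 * κ * y) y := by
      refine (((hasDerivAt_id y).const_mul h).sub (((hasDerivAt_id y).pow 2).const_mul κ)).congr_deriv ?_
      simp; ring
    have d2 : HasDerivAt Ψ (1 + t - 2 * q * y) y := by
      refine ((((hasDerivAt_id y).const_mul (1 + t)).const_add P).sub
        (((hasDerivAt_id y).pow 2).const_mul q)).congr_deriv ?_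
      simp; ring
    exact d1.div d2 (hΨ0 y hy).ne'
  · have h1 := hΨ0 y ⟨hy.1.le, hy.2⟩
    have h2 := hy.1; have h3 := hy.2
    have : 0 < A y := by
      have e : A y = y * (h - κ * y) := by simp only [hA]; ring
      rw [e]; exact mul_pos h2 (by nlinarith)
    exact div_pos this h1
  · have h1 := hΨ0 y ⟨hy.1.le, hy.2⟩
    have h2 := hy.1; have h3 := hy.2
    rw [hN y ⟨hy.1.le, hy.2⟩]
    have h4 : 0 < h - κ * y := by nlinarith
    have h7 := hpp y hy
    positivity
  · have h1 := (hΨ0 Y₁ ⟨hY0.le, le_rfl⟩).ne'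
    have e4 : ρ + Y₁ = Ψ Y₁ := by simp only [hΨ]; rw [hP]; linear_combination -e1
    unfold gQ
    rw [e4]
    have : Ψ Y₁ * (A Y₁ / Ψ Y₁) = A Y₁ := by field_simp
    rw [this]
    simp [hA]
  · simp [hA]
  · have a1 : AnalyticAt ℝ A 0 := by simp only [hA]; fun_prop
    have a2 : AnalyticAt ℝ Ψ 0 := by simp only [hΨ]; fun_prop
    exact a1.div a2 (hΨ0 0 ⟨le_rfl, hY0.le⟩).ne'
  · have hc : ContinuousAt (fun y => (h - κ * y) / Ψ y ^ 3 * p y) 0 := by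
      have a2 : ContinuousAt Ψ 0 := by simp only [hΨ]; fun_prop
      have a4 : Ψ 0 ^ 3 ≠ 0 := pow_ne_zero _ (hΨ0 0 ⟨le_rfl, hY0.le⟩).ne'
      exact ((by fun_prop : ContinuousAt (fun y => h - κ * y) 0).div (a2.pow 3) a4).mul hpc
    have h1 : (fun y => y ^ 4 * ((h - κ * y) / Ψ y ^ 3 * p y)) =O[𝓝[>] (0 : ℝ)]
        fun y => y ^ (3 + 1) * 1 :=
      (Asymptotics.isBigO_refl _ _).mul ((hc.tendsto.isBigO_one ℝ).mono nhdsWithin_le_nhds)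
    simp only [mul_one] at h1
    refine h1.congr' ?_ EventuallyEq.rfl
    filter_upwards [Ioc_mem_nhdsGT hY0] with y hy
    exact (hN y ⟨hy.1.le, hy.2⟩).symm
  · simp [hT', hΨ, hA]
    field_simp

/-- Sufficient inequalities for the rational barrier. -/
lemma barrier3 {h κ ρ P η ν L t q u b1 b2 b3 b4 k4 k5 c5 M g st : ℝ}
    (hs : h * (1 - L) = P * L)
    (ht : 2 * (1 + t - ν * h) * L - P * (η + t) - h * t - (1 - η) * ν * h * (1 - L)
      + 2 * κ * (1 - L) = 0)
    (hM : M = -(L * (1 - 2 * (h * ν)) + P * (2 * L * κ * ν - 2 * η + 2 * η * (h * ν)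
      + 2 * κ * ((1 - η) * ν) * (1 - L)) + κ * (1 - L)
      + t * (2 * L * (1 - h * ν) + P * (2 * κ - 2 - 2 * η + h * ν * (1 + η)) + κ * (1 - L)
      + t * (L - 2 * P))))
    (hq : q * (P * (P + h - 3 * L)) = M)
    (hg : g = 2 * ν * (L - P * η) + (1 - η) * ν * (1 - L))
    (hb1 : b1 = P * (2 + 2 * η - 2 * κ - h * ν * (1 + η)) - h * ν * (1 - η) * (1 - L)
      - 2 * L * (1 - h * ν) + t * (4 * P - 2 * L - h))
    (hb2 : b2 = κ * g - η * (1 - 2 * (h * ν)) + t * (2 * (h * ν) - 1 - 2 * η * (1 - h * ν)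
      + κ * (1 + g) + t * (2 * (h * ν) + κ - t - 2 - η)))
    (hb3 : b3 = 1 + 2 * η - κ - 2 * (h * ν) * (1 + η) + 2 * κ * ν * (P * η - L)
      + t * (4 + 2 * η - κ - 5 * (h * ν) + η * (h * ν) + 3 * t))
    (hb4 : b4 = L - 2 * P + h) (hc5 : c5 = -2 - η - 3 * t + h * ν * (3 - η))
    (hk4 : k4 = -κ * ν * (2 * η + t * (1 + 3 * η + t * (1 + η))))
    (hk5 : k5 = κ * ν * (1 + 3 * η + t * (3 + η)))
    (hP : P = ρ + (1 - L)) (hρ : 0 < ρ) (hL : L < 1) (hκ : 0 ≤ κ)  (hν : 0 ≤ ν) (hη : 0 < η)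
    (hη1 : η < 1)
    (hq0 : 0 < q) (hqu : q * u = 1) (hst : st = (1 - L) + max t 0) (hu : u * st < 1)
    (hβ : 0 < b1 + b2 * u) (hhκ : κ < h) (hk50 : 0 ≤ k5)
    (hdisc : c5 ^ 2 < 4 * ((b3 + k4 * u) - 2 * κ * ν * st))
    (hb40 : b4 < 0 → 0 < (b1 + b2 * u) ^ 2 * u - b4 ^ 2 * st) :
    ∃ T T' : ℝ → ℝ, ∃ Y₁, Barrier h κ ρ η ν 3 T T' Y₁ ∧ T' 0 = h / P := by
  obtain ⟨Y₁, hY0, hY1, e1, hθ⟩ := theta_root hq0 hqu (by linarith : 0 < 1 - L) hst hu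
  have hid := fun Y => res3_identity (Y := Y) hs ht hM hq hg hb1 hb2 hb3 hb4 hc5 hk4 hk5
  have hpos := fun Y (hY : Y ∈ Ioc 0 Y₁) => res3_pos hq0 hqu hκ hν hst (by linarith) hβ hb40 hk50
    hdisc hY.1 (hθ Y ⟨hY.1.le, hY.2⟩).2
  clear hb1 hb2 hb3 hb4 hc5 hk4 hk5 hdisc hb40 hβ hM hg hs ht
  have hp : ∀ Y ∈ Ioc 0 Y₁, 0 < (b2 + q * b1) + Y * (k4 + q * b3 + q ^ 2 * b4)
      + Y ^ 2 * (q * k5 + q ^ 2 * c5) + Y ^ 3 * (q ^ 3 - 2 * κ * ν * q ^ 2) := by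
    intro Y hY
    have h5 := hpos Y hY
    have h6 : Y * (b1 + b2 * u) + Y ^ 2 * (b3 + k4 * u) + b4 * (q * Y ^ 2) + k5 * Y ^ 3
        + c5 * (q * Y ^ 2) * Y - 2 * κ * ν * (q * Y ^ 2) * Y ^ 2 + (q * Y ^ 2) ^ 2
        = Y * (u * ((b2 + q * b1) + Y * (k4 + q * b3 + q ^ 2 * b4)
          + Y ^ 2 * (q * k5 + q ^ 2 * c5) + Y ^ 3 * (q ^ 3 - 2 * κ * ν * q ^ 2))) := by
      linear_combination (-Y * b1 - Y ^ 2 * (b3 + q * b4) - Y ^ 3 * (k5 + q * c5)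
        - Y ^ 4 * (q ^ 2 - 2 * κ * ν * q)) * hqu
    rw [h6] at h5
    have hu0 : 0 < u := by
      by_contra! hc
      nlinarith
    exact pos_of_mul_pos_right (pos_of_mul_pos_right h5 hY.1.le) hu0.le
  obtain ⟨T, T', h1, h2⟩ := barrier_rat hP hρ hκ hη hη1 hhκ (by fun_prop) hY0 hY1 e1
    (by rw [hP]; linarith) (fun y hy => (hθ y hy).1) hp hid
  exact ⟨T, T', Y₁, h1, h2⟩

section

open Iv

lemma box3_mem {x : ℝ} {b : ℤ} (h0 : 0 ≤ x) (h1 : x * 16777216 ≤ b) : mem x (⟨0, b⟩ : V) := by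
  have e : ((sc 24 : ℤ) : ℝ) = 16777216 := by norm_num [sc]
  constructor
  · rw [e]; push_cast; positivity
  · rwa [e]

set_option maxHeartbeats 1000000 in
/-- The barrier for `n = 3`. -/
lemma exists_barrier3 {l v : ℝ} (ha : Adm l v) (hk : 3 < kFun (1 + 2 / l) (1 + cG l v))
    (hk1 : kFun (1 + 2 / l) (1 + cG l v) < 4) :
    ∃ T T' : ℝ → ℝ, ∃ Y₁, Barrier (cH l v) (cK l v) (cR l v) (cE l) (cN l v) 3 T T' Y₁ ∧
      T' 0 * cR l v = cH l v - cL l v := by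
  have hl := ha.l0; have hv := ha.v0; have hd := ha.d; have hp3 := ha.p3
  have hL0 := cL_pos ha; have hL1 := cL_lt_one ha
  have hLe := cL_eq ha
  have hke := k_eq ha
  have hSd : cS l v = 1 + cH l v + cR l v := rfl
  have hR := ha.hR; have hH := ha.hh; have hN := ha.hN; have hK := ha.hK
  have hE := ha.hE; have hE1 := ha.hE1
  obtain ⟨D, hD⟩ : ∃ D, D = l ^ 2 - 3 * v ^ 2 := ⟨_, rfl⟩
  -- the box coordinates `η`, `w = v (ℓ + 1) / ℓ`
  obtain ⟨w, hw⟩ : ∃ w, w = v * (l + 1) / l := ⟨_, rfl⟩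
  obtain ⟨x, hx⟩ : ∃ x, x = v / l := ⟨_, rfl⟩
  have fx : x = cE l * w := by rw [hx, hw, cE]; field_simp
  have fJ : (1 - 3 * x ^ 2)⁻¹ = l ^ 2 / (l ^ 2 - 3 * v ^ 2) := by
    rw [hx, ← hD]; rw [← hD] at hd
    have : 1 - 3 * (v / l) ^ 2 = D / l ^ 2 := by rw [hD]; field_simp
    rw [this, inv_div]
  have fR : cR l v = w * (1 + 3 * x) * (1 - 3 * x ^ 2)⁻¹ := by
    rw [fJ, hx, hw, cR, ← hD]; rw [← hD] at hd; field_simp; ring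
  have fH : cH l v = (1 - (1 - cE l) * (x * w)) * (1 - 3 * x ^ 2)⁻¹ := by
    rw [fJ, hx, hw, cH, cE, ← hD]; rw [← hD] at hd; field_simp; ring
  have fN : cN l v = (3 + cR l v * (1 + 2 * cE l))⁻¹ := by
    rw [cN, cR, cE, ← hD]; rw [← hD] at hd
    have : 3 + (l + 1) * v * (3 * v + l) / D * (1 + 2 * (1 / (l + 1)))
        = l * (3 * v ^ 2 + (l + 3) * v + 3 * l) / D := by
      field_simp; rw [hD]; ring
    rw [this, inv_div]
  have fK : cK l v = (1 - cE l) * cN l v *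
      (x * (1 + (1 - cE l) * w) * (1 - 3 * x ^ 2)⁻¹) := by
    rw [fJ, hx, hw, cK, cE, cN, ← hD]; rw [← hD] at hd; field_simp; ring
  have hwR : w ≤ cR l v := by
    have hw0 : 0 < w := by rw [hw]; positivity
    have hx0 : 0 < x := by rw [hx]; positivity
    have hJ : 1 ≤ (1 - 3 * x ^ 2)⁻¹ := by
      rw [fJ, one_le_div hd]; nlinarith
    rw [fR]
    have : 1 ≤ (1 + 3 * x) * (1 - 3 * x ^ 2)⁻¹ := by nlinarith
    rw [mul_assoc]; nlinarith
  generalize cS l v = S at *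
  generalize cH l v = h at *
  generalize cR l v = ρ at *
  generalize cL l v = L at *
  generalize cN l v = ν at *
  generalize cK l v = κ at *
  generalize cE l = η at *
  generalize kFun (1 + 2 / l) (1 + cG l v) = k at *
  clear fJ hD hp3 hd
  have hS4 : 4 * L < S := by nlinarith
  have hS5 : S < 5 * L := by nlinarith
  have hL' : L * (S - L) = h := by linarith
  have hk' : k = S * L⁻¹ - 1 := by field_simp; linarith
  have hh : h = k * L ^ 2 := by rw [← hL', ← hke]; ring
  obtain ⟨P, hP⟩ : ∃ P, P = ρ + (1 - L) := ⟨_, rfl⟩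
  have hP0 : 0 < P := by linarith
  have hPL : P = k * L * (1 - L) := by linear_combination hP - hSd - hke - hh
  have hρ9 : w ≤ 9 / 16 := by
    have e : ρ = (1 - L) * (k * L - 1) := by linear_combination hPL - hP
    have h1 : 4 * k * ρ = (k - 1) ^ 2 - (2 * k * L - k - 1) ^ 2 := by rw [e]; ring
    have h2 : 4 * k * ρ ≤ 4 * k * (9 / 16) := by
      rw [h1]
      nlinarith only [sq_nonneg (2 * k * L - k - 1),
        mul_pos (by linarith : 0 < 4 - k) (by linarith : 0 < k - 1 / 4)]
    have : ρ ≤ 9 / 16 := le_of_mul_le_mul_left h2 (by linarith)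
    linarith
  have hw0 : 0 < w := by rw [hw]; positivity
  obtain ⟨B, hB⟩ : ∃ B, B = h * ν := ⟨_, rfl⟩
  obtain ⟨t, ht⟩ : ∃ t, t = (2 * (1 - B) - (1 - η) * ν * P + 2 * κ * (1 - L) * L⁻¹
    - η * P * L⁻¹) * (k - 2)⁻¹ := ⟨_, rfl⟩
  obtain ⟨M, hM⟩ : ∃ M, M = -(L * (1 - 2 * B) + P * (2 * L * κ * ν - 2 * η + 2 * η * B
      + 2 * κ * ((1 - η) * ν) * (1 - L)) + κ * (1 - L)
      + t * (2 * L * (1 - B) + P * (2 * κ - 2 - 2 * η + B * (1 + η)) + κ * (1 - L)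
      + t * (L - 2 * P))) := ⟨_, rfl⟩
  obtain ⟨u, hu⟩ : ∃ u, u = (S - 4 * L) * P * M⁻¹ := ⟨_, rfl⟩
  obtain ⟨g, hg⟩ : ∃ g, g = 2 * ν * (L - P * η) + (1 - η) * ν * (1 - L) := ⟨_, rfl⟩
  obtain ⟨β, hβ⟩ : ∃ β, β = P * (2 + 2 * η - 2 * κ - B * (1 + η)) - B * (1 - η) * (1 - L)
      - 2 * L * (1 - B) + t * (4 * P - 2 * L - h)
      + (κ * g - η * (1 - 2 * B) + t * (2 * B - 1 - 2 * η * (1 - B)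
      + κ * (1 + g) + t * (2 * B + κ - t - 2 - η))) * u := ⟨_, rfl⟩
  have key := bisect_sound (η := η) (w := w) (C := _) (fun E W mE mW hT =>
    boxTest_sound mE mW fx fR fH hSd hL' hL0 hS5 hS4 rfl hk' fN rfl fK hP hB ht hM hu hg hβ
      rfl rfl hT) 20 false _ _
    (box3_mem hE.le (by push_cast; linarith)) (box3_mem hw0.le (by push_cast; linarith)) bisect_all
  obtain ⟨hM0, hdisc, hust, hβ0, hhκ, hk5, hb4⟩ := key
  have hu0 : 0 < u := by rw [hu]; have : 0 < S - 4 * L := by linarith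
                         positivity
  have hk2 : k - 2 ≠ 0 := by linarith
  obtain ⟨T, T', Y₁, h1, h2⟩ := barrier3 (h := h) (κ := κ) (ρ := ρ) (P := P) (η := η) (ν := ν)
    (L := L) (t := t) (q := u⁻¹) (u := u) (M := M) (g := g) (st := 1 - L + max t 0)
    (by rw [hh, hPL]; ring)
    (by
      have : t * (k - 2) * L = 2 * (1 - B) * L - (1 - η) * ν * P * L + 2 * κ * (1 - L)
          - η * P := by
        rw [ht]; field_simp
      rw [hB] at this
      have e : h * (1 - L) = P * L := by rw [hh, hPL]; ring
      linear_combination -this - (1 - η) * ν * e - t * hPL - t * hh)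
    (by rw [hM, hB])
    (by
      have : P + h - 3 * L = S - 4 * L := by rw [hP, hSd]; ring
      rw [this, hu]
      have : 0 < S - 4 * L := by linarith
      field_simp)
    hg rfl rfl rfl rfl rfl rfl rfl hP hR hL1 hK.le hN.le hE hE1 (inv_pos.2 hu0)
    (inv_mul_cancel₀ hu0.ne') rfl (by linarith)
    (by
      have := hβ0; rw [hβ, hB] at this; linarith)
    (by linarith) (by positivity)
    (by
      rw [hB] at hdisc; linear_combination hdisc)
    (by
      intro h0
      have := hb4 h0
      rw [hβ, hB] at this
      linarith)
  refine ⟨T, T', Y₁, h1, ?_⟩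
  have hρ : ρ = (1 - L) * (k * L - 1) := by linear_combination hPL - hP
  rw [h2, hPL, hρ, hh]
  have : 0 < 1 - L := by linarith
  have : k ≠ 0 := by linarith
  field_simp

end

/-! ### The case `γ = 7/5`: Taylor coefficients of the invariant curve -/

section

/-- Self-convolution `∑ e i * e j` over `i + j = m`, `i, j ≥ 1`. -/
def conv1 (e : ℕ → ℝ) (m : ℕ) : ℝ := ∑ i ∈ Finset.Ico 1 m, e i * e (m - i)

/-- Self-convolution `∑ e i * e j` over `i + j = m`, `i, j ≥ 2`. -/
def conv2 (e : ℕ → ℝ) (m : ℕ) : ℝ := ∑ i ∈ Finset.Ico 2 (m - 1), e i * e (m - i)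

/-- The right-hand side of the recursion for the alternating Taylor coefficients of the
invariant curve `T` at `γ = 7/5`; it involves `e i` for `i < m` only. -/
def rhsE (h κ ρ ν : ℝ) (e : ℕ → ℝ) (m : ℕ) : ℝ :=
  (5 / 6 + 2 * ν * h + (κ - 5 / 6 * ν * h) * ((m : ℝ) - 1)) * e (m - 1)
    - κ * (5 / 6 * ν * ((m : ℝ) - 2) - 2 * ν) * e (m - 2)
    - ρ / 2 * ((m : ℝ) + 1) * conv2 e (m + 1)
    + ((1 + 5 / 6 * ν * ρ) / 2 * m - 2 * ν * (1 + ρ)) * conv1 e m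
    - (5 / 12 * ν * ((m : ℝ) - 1) - 5 / 3 * ν) * conv1 e (m - 1)
    + if m = 2 then κ else 0

lemma conv1_congr {e f : ℕ → ℝ} {m : ℕ} (H : ∀ i < m, e i = f i) : conv1 e m = conv1 f m := by
  apply Finset.sum_congr rfl
  intro i hi
  rw [Finset.mem_Ico] at hi
  rw [H i (by omega), H (m - i) (by omega)]

lemma conv2_congr {e f : ℕ → ℝ} {m : ℕ} (H : ∀ i < m - 1, e i = f i) :
    conv2 e m = conv2 f m := by
  apply Finset.sum_congr rfl
  intro i hi
  rw [Finset.mem_Ico] at hi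
  rw [H i (by omega), H (m - i) (by omega)]

lemma rhsE_congr {h κ ρ ν : ℝ} {e f : ℕ → ℝ} {m : ℕ} (hm : 2 ≤ m) (H : ∀ i < m, e i = f i) :
    rhsE h κ ρ ν e m = rhsE h κ ρ ν f m := by
  unfold rhsE
  rw [H (m - 1) (by omega), H (m - 2) (by omega), conv1_congr H,
    conv1_congr (m := m - 1) (fun i hi => H i (by omega)),
    conv2_congr (m := m + 1) (fun i hi => H i (by omega))]

/-- The alternating Taylor coefficients: `T y = ∑ (-1) ^ (m + 1) * epsE m * y ^ m`. -/
def epsE (h κ ρ ν S L : ℝ) : ℕ → ℝ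
  | 0 => 0
  | 1 => (h - L) / ρ
  | m + 2 => rhsE h κ ρ ν (fun i => if _ : i < m + 2 then epsE h κ ρ ν S L i else 0) (m + 2)
      / (S - ((m : ℝ) + 3) * L)

lemma epsE_zero (h κ ρ ν S L : ℝ) : epsE h κ ρ ν S L 0 = 0 := by rw [epsE]
lemma epsE_one (h κ ρ ν S L : ℝ) : epsE h κ ρ ν S L 1 = (h - L) / ρ := by rw [epsE]

lemma epsE_rec {h κ ρ ν S L : ℝ} {m : ℕ} (hm : 2 ≤ m) (hD : S - ((m : ℝ) + 1) * L ≠ 0) :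
    (S - ((m : ℝ) + 1) * L) * epsE h κ ρ ν S L m = rhsE h κ ρ ν (epsE h κ ρ ν S L) m := by
  obtain ⟨j, rfl⟩ : ∃ j, m = j + 2 := ⟨m - 2, by omega⟩
  have h1 : ((j + 2 : ℕ) : ℝ) + 1 = (j : ℝ) + 3 := by push_cast; ring
  rw [h1] at hD ⊢
  rw [epsE, mul_div_cancel₀ _ hD]
  apply rhsE_congr hm
  intro i hi
  simp [hi]

/-! coefficients of the polynomial -/

open Polynomial in
/-- `gN` along `y ↦ -p (-y)`, as a polynomial in `-y`. -/
def polyN (h κ ρ ν : ℝ) (p : ℝ[X]) : ℝ[X] :=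
  C h * X + C κ * X ^ 2 - C (1 + ρ) * p + C (5 / 6 + 2 * ν * h) * (p * X)
    + C (2 * ν * κ) * (p * X ^ 2)
    + C h * (derivative p * X) + C (κ - 5 / 6 * ν * h) * (derivative p * X ^ 2)
    - C (5 / 6 * ν * κ) * (derivative p * X ^ 3)
    - C (2 * ν * (1 + ρ)) * (p * p) + C (5 / 3 * ν) * (p * p * X)
    - C (ρ / 2) * derivative (p * p) + C ((1 + 5 / 6 * ν * ρ) / 2) * (derivative (p * p) * X)
    - C (5 / 12 * ν) * (derivative (p * p) * X ^ 2)

open Polynomial in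
lemma polyN_eval (h κ ρ ν : ℝ) (p : ℝ[X]) (y : ℝ) :
    gN h κ ρ (1 / 6) ν y (-p.eval (-y)) ((derivative p).eval (-y))
      = (polyN h κ ρ ν p).eval (-y) := by
  unfold gN gP gQ polyN
  simp only [derivative_mul, eval_add, eval_sub, eval_mul, eval_C, eval_X, eval_pow]
  ring

open Polynomial in
lemma polyN_coeff (h κ ρ ν : ℝ) (p : ℝ[X]) (m : ℕ) (hm : 2 ≤ m) (h0 : p.coeff 0 = 0) :
    (polyN h κ ρ ν p).coeff m =
      (5 / 6 + 2 * ν * h + (κ - 5 / 6 * ν * h) * ((m : ℝ) - 1)) * p.coeff (m - 1)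
    - κ * (5 / 6 * ν * ((m : ℝ) - 2) - 2 * ν) * p.coeff (m - 2)
    + (h * m - (1 + ρ)) * p.coeff m
    - ρ / 2 * ((m : ℝ) + 1) * (p * p).coeff (m + 1)
    + ((1 + 5 / 6 * ν * ρ) / 2 * m - 2 * ν * (1 + ρ)) * (p * p).coeff m
    - (5 / 12 * ν * ((m : ℝ) - 1) - 5 / 3 * ν) * (p * p).coeff (m - 1)
    + if m = 2 then κ else 0 := by
  obtain ⟨j, rfl⟩ : ∃ j, m = j + 2 := ⟨m - 2, by omega⟩
  unfold polyN
  have e1 : ∀ q : ℝ[X], (q * X).coeff (j + 2) = q.coeff (j + 1) := fun q => coeff_mul_X q (j + 1)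
  have e2 : ∀ q : ℝ[X], (q * X ^ 2).coeff (j + 2) = q.coeff j := fun q => coeff_mul_X_pow q 2 j
  simp only [coeff_add, coeff_sub, coeff_C_mul, e1, e2, coeff_derivative]
  have e3 : (derivative p * X ^ 3).coeff (j + 2) = p.coeff j * (j : ℝ) := by
    rcases j with _ | i
    · rw [coeff_mul_X_pow']; simp
    · have := coeff_mul_X_pow (derivative p) 3 i
      rw [show i + 1 + 2 = i + 3 from rfl, this, coeff_derivative]
      push_cast; ring
  rw [e3]
  have : (j + 2 : ℕ) - 1 = j + 1 := rfl
  rw [this, show j + 2 - 2 = j from rfl]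
  have e4 : (1 : ℕ) ≠ j + 2 := by omega
  rcases j with _ | i
  · simp [h0, coeff_C]; ring
  · simp; ring

/-- The Taylor polynomial, up to signs. -/
def polyE (e : ℕ → ℝ) (n : ℕ) : Polynomial ℝ :=
  ∑ i ∈ Finset.range (n + 1), Polynomial.C (e i) * Polynomial.X ^ i

lemma polyE_coeff (e : ℕ → ℝ) (n m : ℕ) :
    (polyE e n).coeff m = if m ≤ n then e m else 0 := by
  unfold polyE
  rw [Polynomial.finsetSum_coeff]
  simp only [Polynomial.coeff_C_mul, Polynomial.coeff_X_pow, mul_ite, mul_one, mul_zero]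
  rw [Finset.sum_ite_eq]
  simp

/-- Convolution restricted to indices in `[1, n]`. -/
def convT (e : ℕ → ℝ) (n m : ℕ) : ℝ :=
  ∑ i ∈ (Finset.Ico 1 m).filter (fun i => i ≤ n ∧ m - i ≤ n), e i * e (m - i)

lemma polyE_sq_coeff {e : ℕ → ℝ} (h0 : e 0 = 0) (n m : ℕ) :
    (polyE e n * polyE e n).coeff m = convT e n m := by
  rw [Polynomial.coeff_mul, Finset.Nat.sum_antidiagonal_eq_sum_range_succ
    (fun i j => (polyE e n).coeff i * (polyE e n).coeff j), convT, Finset.sum_filter,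
    Finset.range_eq_Ico]
  have hc0 : (polyE e n).coeff 0 = 0 := by rw [polyE_coeff]; simp [h0]
  rcases Nat.eq_zero_or_pos m with rfl | hm
  · simp [hc0]
  · rw [Finset.sum_Ico_succ_top (by omega), Nat.sub_self, hc0, mul_zero, add_zero,
      Finset.sum_eq_sum_Ico_succ_bot hm, hc0, zero_mul, zero_add]
    apply Finset.sum_congr rfl
    intro i _
    rw [polyE_coeff, polyE_coeff]
    by_cases h1 : i ≤ n <;> by_cases h2 : m - i ≤ n <;> simp [h1, h2]

lemma convT_of_le {e : ℕ → ℝ} {n m : ℕ} (hm : m ≤ n + 1) : convT e n m = conv1 e m := by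
  unfold convT conv1
  rw [Finset.filter_true_of_mem]
  intro i hi
  rw [Finset.mem_Ico] at hi
  omega

/-- For `m ≤ n` the coefficients vanish exactly when the recursion holds. -/
lemma polyN_low {h κ ρ ν S L : ℝ} (hS : S = 1 + h + ρ) (hρ : ρ ≠ 0) {n : ℕ} (hn : 2 ≤ n)
    (hL : L ^ 2 - S * L + h = 0)
    {e : ℕ → ℝ} (h0 : e 0 = 0) (h1 : e 1 = (h - L) / ρ)
    (hrec : ∀ m, 2 ≤ m → m ≤ n → (S - ((m : ℝ) + 1) * L) * e m = rhsE h κ ρ ν e m)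
    (m : ℕ) (hm : m ≤ n) : (polyN h κ ρ ν (polyE e n)).coeff m = 0 := by
  have hρe : ρ * e 1 = h - L := by rw [h1]; field_simp
  have hc0 : (polyE e n).coeff 0 = 0 := by rw [polyE_coeff]; simp [h0]
  by_cases hm2 : 2 ≤ m
  · rw [polyN_coeff _ _ _ _ _ _ hm2 hc0, polyE_sq_coeff h0, polyE_sq_coeff h0, polyE_sq_coeff h0]
    simp only [polyE_coeff]
    rw [if_pos (by omega), if_pos (by omega), if_pos hm]
    rw [convT_of_le (m := m + 1) (by omega), convT_of_le (m := m) (by omega),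
      convT_of_le (m := m - 1) (by omega)]
    have h3 := hrec m hm2 hm
    unfold rhsE at h3
    have h4 : conv1 e (m + 1) = conv2 e (m + 1) + 2 * e 1 * e m := by
      unfold conv1 conv2
      rw [Finset.sum_Ico_succ_top (by omega), Finset.sum_eq_sum_Ico_succ_bot (by omega)]
      simp
      ring
    rw [h4]
    subst hS
    linear_combination -h3 - ((m : ℝ) + 1) * e m * hρe
  · have hsq : (polyE e n * polyE e n).coeff 0 = 0 ∧ (polyE e n * polyE e n).coeff 1 = 0 ∧
        (polyE e n * polyE e n).coeff 2 = e 1 ^ 2 := by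
      rw [polyE_sq_coeff h0, polyE_sq_coeff h0, polyE_sq_coeff h0, convT_of_le (by omega),
        convT_of_le (by omega), convT_of_le (by omega)]
      refine ⟨rfl, by simp [conv1], by simp [conv1]; ring⟩
    have hc1 : (polyE e n).coeff 1 = e 1 := by rw [polyE_coeff, if_pos (by omega)]
    obtain ⟨s0, s1, s2⟩ := hsq
    have e2 : ∀ q : Polynomial ℝ, (q * Polynomial.X ^ 2).coeff 1 = 0 := fun q => by
      rw [Polynomial.coeff_mul_X_pow']; simp
    have e3 : ∀ q : Polynomial ℝ, (q * Polynomial.X ^ 3).coeff 1 = 0 := fun q => by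
      rw [Polynomial.coeff_mul_X_pow']; simp
    have f1 : ∀ q : Polynomial ℝ, (q * Polynomial.X).coeff 1 = q.coeff 0 :=
      fun q => Polynomial.coeff_mul_X q 0
    have e4 : ∀ q : Polynomial ℝ, (q * Polynomial.X ^ 2).coeff 0 = 0 := fun q => by
      rw [Polynomial.coeff_mul_X_pow']; simp
    have e5 : ∀ q : Polynomial ℝ, (q * Polynomial.X ^ 3).coeff 0 = 0 := fun q => by
      rw [Polynomial.coeff_mul_X_pow']; simp
    interval_cases m
    · unfold polyN
      simp only [Polynomial.coeff_add, Polynomial.coeff_sub,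
        Polynomial.coeff_derivative, Polynomial.mul_coeff_zero, Polynomial.coeff_X_zero, hc0, e4,
        e5, s0, s1, s2]
      simp
    · unfold polyN
      simp only [Polynomial.coeff_add, Polynomial.coeff_sub, Polynomial.coeff_C_mul,
        Polynomial.coeff_derivative, e2, e3, f1, hc0, hc1, s0, s1, s2]
      norm_num [s2]
      subst hS
      have h5 : ρ * (h - (1 + ρ) * e 1 + h * e 1 - ρ * e 1 ^ 2) = 0 := by
        linear_combination -hL + (-1 + L - ρ - (ρ * e 1)) * hρe
      rcases mul_eq_zero.mp h5 with h6 | h6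
      · exact absurd h6 hρ
      · linear_combination h6

end

/-! ### Enclosure of the first coefficients -/

section

open Iv

/-- `[e (k + 1), …, e 2]`. -/
def dlist (e : ℕ → ℝ) : ℕ → List ℝ
  | 0 => []
  | k + 1 => e (k + 2) :: dlist e k

/-- `[e a, …, e (a + k - 1)]`. -/
def alist (e : ℕ → ℝ) : ℕ → ℕ → List ℝ
  | _, 0 => []
  | a, k + 1 => e a :: alist e (a + 1) k

lemma reverse_dlist (e : ℕ → ℝ) (k j : ℕ) :
    (dlist e k).reverseAux (alist e (k + 2) j) = alist e 2 (k + j) := by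
  induction k generalizing j with
  | zero => simp [dlist]
  | succ k ih =>
    rw [dlist, List.reverseAux, show k + 1 + j = k + (j + 1) by ring, ← ih (j + 1)]
    rfl

lemma zip_sum (e : ℕ → ℝ) (k a : ℕ) : (List.zipWith (· * ·) (dlist e k) (alist e a k)).sum
    = ∑ i ∈ Finset.range k, e (a + i) * e (k + 1 - i) := by
  induction k generalizing a with
  | zero => simp [dlist]
  | succ k ih =>
    rw [dlist, alist, List.zipWith_cons_cons, List.sum_cons, ih, Finset.sum_range_succ']
    rw [add_comm, mul_comm]
    congr 1
    apply Finset.sum_congr rfl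
    intro i _
    rw [show a + 1 + i = a + (i + 1) by ring, show k + 1 + 1 - (i + 1) = k + 1 - i by omega]

lemma zip_conv2 (e : ℕ → ℝ) (k : ℕ) :
    (List.zipWith (· * ·) (dlist e k) (alist e 2 k)).sum = conv2 e (k + 3) := by
  rw [zip_sum, conv2, Finset.sum_Ico_eq_sum_range]
  apply Finset.sum_congr (by congr 1)
  intro i _
  rw [show k + 3 - (2 + i) = k + 1 - i by omega]

variable {p : ℕ}

/-- The interval contains the nonnegative real `x`. -/
def Mem0 (x : ℝ) (X : Iv p) : Prop := mem x X ∧ 0 ≤ x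

/-- `l` reversed and put in front of `acc`. -/
def revA (l : List (Iv p)) : List (Iv p) → List (Iv p) :=
  List.rec (motive := fun _ => List (Iv p) → List (Iv p)) (fun acc => acc)
    (fun X _ ih acc => ih (X :: acc)) l

lemma mem_revA {xs : List ℝ} {l : List (Iv p)} (h : List.Forall₂ Mem0 xs l) :
    ∀ {ys : List ℝ} {acc : List (Iv p)}, List.Forall₂ Mem0 ys acc →
      List.Forall₂ Mem0 (xs.reverseAux ys) (revA l acc) := by
  induction h with
  | nil => intro ys acc h2; exact h2
  | cons hx _ ih => intro ys acc h2; exact ih (List.Forall₂.cons hx h2)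

/-- Scalar product; the accumulators are scaled by `4 ^ p`. -/
def dotI (l : List (Iv p)) : List (Iv p) → ℕ → ℕ → Iv p :=
  List.rec (motive := fun _ => List (Iv p) → ℕ → ℕ → Iv p)
    (fun _ a b => outI (Int.ofNat (Nat.div a (Nat.pow 2 p)))
      (Int.ofNat (Nat.succ (Nat.div b (Nat.pow 2 p)))))
    (fun X _ ih l2 a b => List.rec (motive := fun _ => Iv p)
      (outI (Int.ofNat (Nat.div a (Nat.pow 2 p))) (Int.ofNat (Nat.succ (Nat.div b (Nat.pow 2 p)))))
      (fun Y t _ => withI X fun x x' => withI Y fun y y' =>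
        forceN (Nat.add a (Nat.mul (Int.toNat x) (Int.toNat y))) fun a =>
        forceN (Nat.add b (Nat.mul (Int.toNat x') (Int.toNat y'))) fun b => ih t a b) l2) l

lemma mem_acc {s : ℝ} {a b : ℕ} (h1 : (a : ℝ) ≤ s * (sc p : ℝ) ^ 2)
    (h2 : s * (sc p : ℝ) ^ 2 ≤ b) : mem s (outI (Int.ofNat (Nat.div a (Nat.pow 2 p)))
      (Int.ofNat (Nat.succ (Nat.div b (Nat.pow 2 p)))) : Iv p) := by
  have hs : (0 : ℝ) < sc p := by exact_mod_cast sc_pos p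
  have hs2 : ((sc p : ℤ) : ℝ) = ((2 ^ p : ℕ) : ℝ) := by
    rw [show sc p = ((2 ^ p : ℕ) : ℤ) from rfl]; push_cast; rfl
  simp only [outI_eq, mem]
  have e1 := Nat.div_mul_le_self a (2 ^ p)
  have e1' : ((a / 2 ^ p : ℕ) : ℝ) * sc p ≤ a := by rw [hs2]; exact_mod_cast e1
  have e2 : b ≤ (b / 2 ^ p).succ * 2 ^ p := by
    have h1 := Nat.div_add_mod b (2 ^ p)
    have h2 := Nat.mod_lt b (y := 2 ^ p) (by positivity)
    rw [Nat.succ_mul, mul_comm (b / 2 ^ p)]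
    lia
  have e2' : (b : ℝ) ≤ (((b / 2 ^ p).succ : ℕ) : ℝ) * sc p := by
    rw [hs2]; exact_mod_cast e2
  constructor
  · refine le_of_mul_le_mul_right ?_ hs
    calc _ ≤ _ := e1'
      _ ≤ _ := h1
      _ = _ := by ring
  · refine le_of_mul_le_mul_right ?_ hs
    calc _ = s * (sc p : ℝ) ^ 2 := by ring
      _ ≤ _ := h2
      _ ≤ _ := e2'

lemma toNat_le {x c : ℝ} {z : ℤ} (h : (z : ℝ) ≤ x * c) (hx : 0 ≤ x * c) :
    ((Int.toNat z : ℕ) : ℝ) ≤ x * c := by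
  rcases z with m | m
  · simpa using h
  · simpa using hx

lemma mem_dotI {xs : List ℝ} {l : List (Iv p)} (h : List.Forall₂ Mem0 xs l) :
    ∀ {ys : List ℝ} {l2 : List (Iv p)}, List.Forall₂ Mem0 ys l2 → ∀ {s : ℝ} {a b : ℕ},
      (a : ℝ) ≤ s * (sc p : ℝ) ^ 2 → s * (sc p : ℝ) ^ 2 ≤ b →
      mem (s + (List.zipWith (· * ·) xs ys).sum) (dotI l l2 a b) := by
  have hs : (0 : ℝ) < sc p := by exact_mod_cast sc_pos p
  induction h with
  | nil =>
    intro ys l2 _ s a b h1 h2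
    rw [List.zipWith_nil_left, List.sum_nil, add_zero]
    exact mem_acc h1 h2
  | @cons x X xs l hx _ ih =>
    intro ys l2 hy s a b h1 h2
    cases hy with
    | nil =>
      rw [List.zipWith_nil_right, List.sum_nil, add_zero]
      exact mem_acc h1 h2
    | @cons y Y ys l2 hy hys =>
      have e : dotI (X :: l) (Y :: l2) a b = dotI l l2 (a + X.lo.toNat * Y.lo.toNat)
          (b + X.hi.toNat * Y.hi.toNat) := by
        change forceN (Nat.add a (Nat.mul X.lo.toNat Y.lo.toNat)) (fun a =>
          forceN (Nat.add b (Nat.mul X.hi.toNat Y.hi.toNat)) fun b => dotI l l2 a b) = _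
        simp only [forceN_eq]; rfl
      rw [e, List.zipWith_cons_cons, List.sum_cons, ← add_assoc]
      have x0 := mul_nonneg hx.2 hs.le
      have y0 := mul_nonneg hy.2 hs.le
      have tn : ∀ (z : ℤ), (z : ℝ) ≤ (z.toNat : ℝ) := fun z => by
        exact_mod_cast Int.self_le_toNat z
      apply ih hys
      · have := mul_le_mul (toNat_le hx.1.1 x0) (toNat_le hy.1.1 y0) (by positivity) x0
        push_cast
        linarith
      · have := mul_le_mul (hx.1.2.trans (tn _)) (hy.1.2.trans (tn _)) y0 (by positivity)
        push_cast
        linarith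

/-- First entry of a list, with a default. -/
def headI (l : List (Iv p)) (X : Iv p) : Iv p :=
  List.rec (motive := fun _ => Iv p) X (fun Y _ _ => Y) l

/-- Continue with head and tail. -/
def takeI (l : List (Iv p)) (F : Iv p → List (Iv p) → Bool) : Bool :=
  List.rec (motive := fun _ => Bool) false (fun X t _ => F X t) l

lemma take_step {x : ℝ} {xs : List ℝ} {l : List (Iv p)} {F : Iv p → List (Iv p) → Bool}
    (h : List.Forall₂ Mem0 (x :: xs) l) (hF : takeI l F = true) :
    ∃ X t, mem x X ∧ List.Forall₂ Mem0 xs t ∧ F X t = true := by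
  cases h with
  | cons h1 h2 => exact ⟨_, _, h1.1, h2, hF⟩

/-- Enclosures of the parameters of the recursion. -/
structure Env (p : ℕ) where
  (h κ ρ ν S L β e1 : Iv p)

/-- `540` for `m ≤ 252` and `2 * m + 36` beyond. -/
def bnd (m : ℕ) : ℕ := 540 + (2 * m - 504)

/-- One step of the recursion: from `l = [e (k + 1), …, e 2]`, `H = conv2 e (k + 2)` and
`G₀ = conv1 e (k + 1)` to `e (k + 2)`, testing the inequalities that the induction starts from. -/
def stepI (E : Env p) (k : ℕ) (l : List (Iv p)) (H G₀ : Iv p)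
    (F : ℕ → List (Iv p) → Iv p → Iv p → Bool) : Bool :=
  takeI l fun X t =>
  bindI (headI t E.e1) fun X2 =>
  bindI (H + cst 2 * (E.e1 * X)) fun G =>
  bindI (dotI l (revA l []) 0 0) fun H' =>
  bindI ((cst 10 + cst 24 * (E.ν * E.h)
      + (cst 12 * E.κ - cst 10 * (E.ν * E.h)) * cst (k + 1)) * X
    - E.κ * (cst 10 * E.ν * cst k - cst 24 * E.ν) * X2
    - cst 6 * E.ρ * cst (k + 3) * H'
    + ((cst 6 + cst 5 * (E.ν * E.ρ)) * cst (k + 2) - cst 24 * (E.ν * (cst 1 + E.ρ))) * G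
    - (cst 5 * E.ν * cst (k + 1) - cst 20 * E.ν) * G₀) fun r =>
  withInv (cst 12 * (E.S - cst (k + 3) * E.L)) fun J =>
  bindI (r * J) fun Y =>
  assertPos Y <|
  assertPos (r - cst (12 * (k + 52)) * (E.β * X)) <|
  assertPos (cst (12 * bnd (k + 2)) * (E.β * X) - r) <|
  cond (cond (Nat.ble k 1) true (assertPos (Y * X2 - sqI X) true))
    (forceN (k + 1) fun k => F k (Y :: l) H' G) false

/-- Iterates `stepI`, then applies the test `F` to the list of coefficients. -/
def runI (E : Env p) (F : List (Iv p) → Bool) (f : ℕ) : ℕ → List (Iv p) → Iv p → Iv p → Bool :=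
  Nat.rec (motive := fun _ => ℕ → List (Iv p) → Iv p → Iv p → Bool) (fun _ l _ _ => F l)
    (fun _ ih k l H G₀ => stepI E k l H G₀ ih) f

/-- The bounds on consecutive coefficients proved by induction. -/
structure Step (S L β : ℝ) (e : ℕ → ℝ) (m : ℕ) : Prop where
  pos : 0 < e m
  low : β * (m + 50) * e (m - 1) ≤ (S - (m + 1) * L) * e m
  upp : (S - (m + 1) * L) * e m ≤ β * bnd m * e (m - 1)

/-- The second conclusion is log-convexity, that is, increasing ratios of the coefficients. -/
lemma step_sound {E : Env p} {h κ ρ ν S L β : ℝ} {e : ℕ → ℝ}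
    (mh : mem h E.h) (mκ : mem κ E.κ) (mρ : mem ρ E.ρ) (mν : mem ν E.ν) (mS : mem S E.S)
    (mL : mem L E.L) (mβ : mem β E.β) (me : mem (e 1) E.e1)
    {k : ℕ} (hk : 1 ≤ k) (hrec : (S - ((k + 2 : ℕ) + 1) * L) * e (k + 2) = rhsE h κ ρ ν e (k + 2))
    {l : List (Iv p)} {H G₀ : Iv p} {F : ℕ → List (Iv p) → Iv p → Iv p → Bool}
    (hl : List.Forall₂ Mem0 (dlist e k) l) (hH : mem (conv2 e (k + 2)) H)
    (hG : mem (conv1 e (k + 1)) G₀) (hT : stepI E k l H G₀ F = true) :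
    Step S L β e (k + 2) ∧ (2 ≤ k → e (k + 1) ^ 2 ≤ e (k + 2) * e k) ∧
    ∃ l H G₀, List.Forall₂ Mem0 (dlist e (k + 1)) l ∧ mem (conv2 e (k + 3)) H ∧
      mem (conv1 e (k + 2)) G₀ ∧ F (k + 1) l H G₀ = true := by
  obtain ⟨j, rfl⟩ : ∃ j, k = j + 1 := ⟨k - 1, by omega⟩
  unfold stepI at hT
  have hl' := hl
  rw [dlist] at hl'
  obtain ⟨X, t, mX, ht, hT⟩ := take_step hl' hT
  have mX2 : mem (e (j + 1)) (headI t E.e1) := by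
    rcases j with _ | i
    · rw [dlist] at ht
      cases ht
      exact me
    · rw [dlist] at ht
      cases ht with
      | cons h1 h2 => exact h1.1
  obtain ⟨X2, mX2, hT⟩ := let_step mX2 hT
  obtain ⟨G, mG, hT⟩ := let_step (x := conv1 e (j + 1 + 2)) (by
    have : conv1 e (j + 1 + 2) = conv2 e (j + 1 + 2) + 2 * (e 1 * e (j + 2)) := by
      unfold conv1 conv2
      rw [show j + 1 + 2 - 1 = j + 2 from rfl, Finset.sum_Ico_succ_top (by omega),
        Finset.sum_eq_sum_Ico_succ_bot (by omega)]
      rw [show j + 1 + 2 - (j + 2) = 1 by omega, show j + 1 + 2 - 1 = j + 2 by omega]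
      ring
    rw [this]
    exact Iv.mem_add hH (Iv.mem_mul (mem_ofNat 2) (Iv.mem_mul me mX))) hT
  obtain ⟨H', mH', hT⟩ := let_step (x := conv2 e (j + 1 + 3)) (by
    have h1 := mem_revA hl (ys := alist e (j + 1 + 2) 0) List.Forall₂.nil
    rw [reverse_dlist] at h1
    have h2 := mem_dotI hl h1 (s := 0) (a := 0) (b := 0) (by simp) (by simp)
    rwa [add_zero, zip_conv2, zero_add] at h2) hT
  obtain ⟨r, mr, hT⟩ := let_step (x := 12 * rhsE h κ ρ ν e (j + 1 + 2)) (by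
    have : 12 * rhsE h κ ρ ν e (j + 1 + 2) =
        (10 + 24 * (ν * h) + (12 * κ - 10 * (ν * h)) * ((j + 1 + 1 : ℕ) : ℝ)) * e (j + 2)
        - κ * (10 * ν * ((j + 1 : ℕ) : ℝ) - 24 * ν) * e (j + 1)
        - 6 * ρ * ((j + 1 + 3 : ℕ) : ℝ) * conv2 e (j + 1 + 3)
        + ((6 + 5 * (ν * ρ)) * ((j + 1 + 2 : ℕ) : ℝ) - 24 * (ν * (1 + ρ))) * conv1 e (j + 1 + 2)
        - (5 * ν * ((j + 1 + 1 : ℕ) : ℝ) - 20 * ν) * conv1 e (j + 1 + 1) := by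
      unfold rhsE
      rw [if_neg (by omega)]
      simp only [show j + 1 + 2 - 1 = j + 2 from rfl, show j + 1 + 2 - 2 = j + 1 from rfl]
      push_cast
      ring
    rw [this]
    with_reducible repeat' first | exact mem_one | exact mem_ofNat _ | apply Iv.mem_add | apply Iv.mem_sub | apply Iv.mem_mul | assumption | exact mem_cst _) hT
  obtain ⟨J, hD, mJ, hT⟩ := inv_step (x := 12 * (S - ((j + 1 + 3 : ℕ) : ℝ) * L))
    (Iv.mem_mul (mem_ofNat 12) (Iv.mem_sub mS (Iv.mem_mul (mem_cst _) mL))) hT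
  have hD' : 12 * (S - ((j + 1 + 3 : ℕ) : ℝ) * L) = 12 * (S - ((j + 1 + 2 : ℕ) + 1) * L) := by
    push_cast; ring
  rw [← hrec] at mr
  obtain ⟨Y, mY, hT⟩ := let_step (x := e (j + 1 + 2)) (by
    have := Iv.mem_mul mr mJ
    rw [hD'] at this hD
    rwa [← mul_assoc, mul_comm _ (e _), mul_assoc, mul_inv_cancel₀ hD.ne', mul_one] at this) hT
  obtain ⟨q1, hT⟩ := pos_step mY hT
  obtain ⟨q2, hT⟩ := pos_step (Iv.mem_sub mr (Iv.mem_mul (mem_cst _) (Iv.mem_mul mβ mX))) hT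
  obtain ⟨q3, hT⟩ := pos_step (Iv.mem_sub (Iv.mem_mul (mem_cst _) (Iv.mem_mul mβ mX)) mr) hT
  cases hc : cond (Nat.ble (j + 1) 1) true (assertPos (Y * X2 - sqI X) true)
  · rw [hc] at hT; exact absurd hT (by simp)
  rw [hc, cond_true, forceN_eq] at hT
  refine ⟨⟨q1, ?_, ?_⟩, ?_, _, _, _, ?_, mH', mG, hT⟩
  · have : j + 1 + 2 - 1 = j + 2 := rfl
    rw [this]
    push_cast at q2 ⊢
    linarith
  · have : j + 1 + 2 - 1 = j + 2 := rfl
    rw [this]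
    push_cast at q3 ⊢
    linarith
  · intro h2
    have : Nat.ble (j + 1) 1 = false := by
      rw [← Bool.not_eq_true, Nat.ble_eq]; omega
    rw [this, cond_false] at hc
    have := (pos_step (Iv.mem_sub (Iv.mem_mul mY mX2) (Iv.mem_sq mX)) hc).1
    linarith
  · rw [dlist]
    exact List.Forall₂.cons ⟨mY, q1.le⟩ hl

lemma run_sound {E : Env p} {h κ ρ ν S L β : ℝ} {e : ℕ → ℝ}
    (mh : mem h E.h) (mκ : mem κ E.κ) (mρ : mem ρ E.ρ) (mν : mem ν E.ν) (mS : mem S E.S)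
    (mL : mem L E.L) (mβ : mem β E.β) (me : mem (e 1) E.e1) {F : List (Iv p) → Bool} (f : ℕ) :
    ∀ {k : ℕ} (_ : 1 ≤ k) (_ : ∀ m, 2 ≤ m → m < k + 2 + f →
      (S - (m + 1) * L) * e m = rhsE h κ ρ ν e m)
    {l : List (Iv p)} {H G₀ : Iv p}
    (_ : List.Forall₂ Mem0 (dlist e k) l) (_ : mem (conv2 e (k + 2)) H)
    (_ : mem (conv1 e (k + 1)) G₀) (_ : runI E F f k l H G₀ = true),
    (∀ m, k + 2 ≤ m → m < k + 2 + f → Step S L β e m ∧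
      (4 ≤ m → e (m - 1) ^ 2 ≤ e m * e (m - 2))) ∧
    ∃ l, List.Forall₂ Mem0 (dlist e (k + f)) l ∧ F l = true := by
  induction f with
  | zero => intro k _ _ l H G₀ hl _ _ hT; exact ⟨fun m h1 h2 => by omega, l, hl, hT⟩
  | succ f ih =>
    intro k hk hrec l H G₀ hl hH hG hT
    obtain ⟨s1, s2, l', H', G', hl', hH', hG', hT'⟩ := step_sound mh mκ mρ mν mS mL mβ me hk
      (hrec (k + 2) (by omega) (by omega)) hl hH hG hT
    obtain ⟨r1, r2⟩ := ih (k := k + 1) (by omega) (fun m h1 h2 => hrec m h1 (by omega)) hl' hH'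
      hG' hT'
    refine ⟨fun m h1 h2 => ?_, ?_⟩
    · rcases Nat.eq_or_lt_of_le h1 with rfl | h3
      · exact ⟨s1, fun h4 => s2 (by omega)⟩
      · exact r1 m (by omega) (by omega)
    · rwa [show k + (f + 1) = k + 1 + f by ring]

end

section

open Iv

/-- Slope in `m` of the coefficient with which `e (m - s)` enters the recursion, for `s ≥ 3`. -/
def sg (ρ ν : ℝ) (e : ℕ → ℝ) (s : ℕ) : ℝ :=
  -ρ * e (s + 1) + (1 + 5 / 6 * (ν * ρ)) * e s - 5 / 6 * ν * e (s - 1)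

/-- Constant term in `m` of the same coefficient. -/
def io (ρ ν : ℝ) (e : ℕ → ℝ) (s : ℕ) : ℝ :=
  -ρ * e (s + 1) - 4 * ν * (1 + ρ) * e s + 25 / 6 * ν * e (s - 1)

/-- `0 ≤ σ * m + ι ≤ (m + 41) / G` for `m ≥ 501`, reduced to its two linear constituents. -/
structure Lin (σ ι G : ℝ) : Prop where
  a : 0 ≤ σ
  b : 0 ≤ σ * 501 + ι
  c : G * σ ≤ 1
  d : G * (σ * 501 + ι) ≤ 542

/-- Numerical facts on the first coefficients. -/
structure Base (h κ ρ ν S β : ℝ) (e : ℕ → ℝ) : Prop where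
  β0 : 7535 < 1000000 * β
  β1 : 10000 * β < 76
  S0 : 16700 < 1000 * S
  S1 : 10000 * S < 167083
  ρ0 : 15700 < 1000 * ρ
  ρ1 : 1000 * ρ < 15709
  κ0 : 1250 < 10000 * κ
  κ1 : 1000 * κ < 126
  ν0 : 417 < 10000 * ν
  ν1 : 10000 * ν < 418
  e20 : 75 < 10000 * e 2
  e21 : 10000 * e 2 < 76
  i0 : 580 < 1000 * (5 / 6 + 2 * (ν * h) - κ + 5 / 6 * (ν * h) - ρ * e 2 - 4 * ν * (1 + ρ) * e 1)
  i1 : 1000 * (5 / 6 + 2 * (ν * h) - κ + 5 / 6 * (ν * h) - ρ * e 2 - 4 * ν * (1 + ρ) * e 1) < 600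
  e9 : 10 ^ 13 * e 9 < 140
  e10 : 10 ^ 15 * e 10 < 860
  e11 : 10 ^ 16 * e 11 < 540
  l2 : Lin (sg ρ ν e 2 - 5 / 6 * (κ * ν)) (io ρ ν e 2 + 11 / 3 * (κ * ν)) 787
  l3 : Lin (sg ρ ν e 3) (io ρ ν e 3) (1000 * 4 ^ 4)
  l4 : Lin (sg ρ ν e 4) (io ρ ν e 4) (1000 * 4 ^ 5)
  l5 : Lin (sg ρ ν e 5) (io ρ ν e 5) (1000 * 4 ^ 6)
  l6 : Lin (sg ρ ν e 6) (io ρ ν e 6) (1000 * 4 ^ 7)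
  l7 : Lin (sg ρ ν e 7) (io ρ ν e 7) (1000 * 4 ^ 8)
  l8 : Lin (sg ρ ν e 8) (io ρ ν e 8) (1000 * 4 ^ 9)
  l9 : Lin (sg ρ ν e 9) (io ρ ν e 9) (1000 * 4 ^ 10)

variable {p : ℕ}

/-- Test of `Lin`, for six times `σ` and `ι`. -/
def linT (A B : Iv p) (g : ℕ) (F : Bool) : Bool :=
  bindI A fun A => bindI (A * cst 501 + B) fun C =>
  assertPos A <| assertPos C <| assertPos (cst 6 - cst g * A) <|
  assertPos (cst 3252 - cst g * C) F

lemma lin_step {A B : Iv p} {g : ℕ} {F : Bool} {σ ι : ℝ} (hA : mem (6 * σ) A)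
    (hB : mem (6 * ι) B) (h : linT A B g F = true) : Lin σ ι g ∧ F = true := by
  unfold linT at h
  obtain ⟨A, hA, h⟩ := let_step hA h
  obtain ⟨C, hC, h⟩ := let_step (Iv.mem_add (Iv.mem_mul hA (mem_ofNat 501)) hB) h
  obtain ⟨h1, h⟩ := pos_step hA h
  obtain ⟨h2, h⟩ := pos_step hC h
  obtain ⟨h3, h⟩ := pos_step (Iv.mem_sub (mem_ofNat 6) (Iv.mem_mul (mem_cst g) hA)) h
  obtain ⟨h4, h⟩ := pos_step (Iv.mem_sub (mem_ofNat 3252) (Iv.mem_mul (mem_cst g) hC)) h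
  exact ⟨⟨by linarith, by linarith, by linarith, by linarith⟩, h⟩

/-- Test of `Lin` for three consecutive coefficients. -/
def linE (R N NR X Y Z : Iv p) (g : ℕ) (F : Bool) : Bool :=
  linT (-(cst 6 * R * Z) + (cst 6 + cst 5 * NR) * Y - cst 5 * N * X)
    (-(cst 6 * R * Z) - cst 24 * N * (cst 1 + R) * Y + cst 25 * N * X) g F

lemma linE_step {R N NR X Y Z : Iv p} {g : ℕ} {F : Bool} {ρ ν : ℝ} {e : ℕ → ℝ} {s : ℕ}
    (mR : mem ρ R) (mN : mem ν N) (mNR : mem (ν * ρ) NR) (mX : mem (e (s - 1)) X)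
    (mY : mem (e s) Y) (mZ : mem (e (s + 1)) Z) (h : linE R N NR X Y Z g F = true) :
    Lin (sg ρ ν e s) (io ρ ν e s) g ∧ F = true := by
  unfold linE at h
  refine lin_step ?_ ?_ h
  · have : 6 * sg ρ ν e s = -(6 * ρ * e (s + 1)) + (6 + 5 * (ν * ρ)) * e s
        - 5 * ν * e (s - 1) := by unfold sg; ring
    rw [this]
    with_reducible repeat' first | exact mem_one | exact mem_ofNat _ | apply Iv.mem_add | apply Iv.mem_sub | apply Iv.mem_mul | apply Iv.mem_neg | assumption
  · have : 6 * io ρ ν e s = -(6 * ρ * e (s + 1)) - 24 * ν * (1 + ρ) * e s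
        + 25 * ν * e (s - 1) := by unfold io; ring
    rw [this]
    with_reducible repeat' first | exact mem_one | exact mem_ofNat _ | apply Iv.mem_add | apply Iv.mem_sub | apply Iv.mem_mul | apply Iv.mem_neg | assumption

/-- The test of `Base`, for the list of all computed coefficients. -/
def finT (E : Env p) (l : List (Iv p)) : Bool :=
  takeI (revA l []) fun X2 l => takeI l fun X3 l => takeI l fun X4 l => takeI l fun X5 l =>
  takeI l fun X6 l => takeI l fun X7 l => takeI l fun X8 l => takeI l fun X9 l =>
  takeI l fun X10 l => takeI l fun X11 _ =>
  bindI (E.ν * E.ρ) fun NR =>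
  bindI (E.κ * E.ν) fun KN =>
  bindI (E.ν * E.h) fun NH =>
  assertPos (cst 1000000 * E.β - cst 7535) <|
  assertPos (cst 76 - cst 10000 * E.β) <|
  assertPos (cst 1000 * E.S - cst 16700) <|
  assertPos (cst 167083 - cst 10000 * E.S) <|
  assertPos (cst 1000 * E.ρ - cst 15700) <|
  assertPos (cst 15709 - cst 1000 * E.ρ) <|
  assertPos (cst 10000 * E.κ - cst 1250) <|
  assertPos (cst 126 - cst 1000 * E.κ) <|
  assertPos (cst 10000 * E.ν - cst 417) <|
  assertPos (cst 418 - cst 10000 * E.ν) <|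
  assertPos (cst 10000 * X2 - cst 75) <|
  assertPos (cst 76 - cst 10000 * X2) <|
  bindI (cst 5 + cst 12 * NH - cst 6 * E.κ + cst 5 * NH - cst 6 * E.ρ * X2
    - cst 24 * E.ν * (cst 1 + E.ρ) * E.e1) fun I =>
  assertPos (cst 1000 * I - cst 3480) <|
  assertPos (cst 3600 - cst 1000 * I) <|
  assertPos (cst 140 - cst (10 ^ 13) * X9) <|
  assertPos (cst 860 - cst (10 ^ 15) * X10) <|
  assertPos (cst 540 - cst (10 ^ 16) * X11) <|
  linT (-(cst 6 * E.ρ * X3) + (cst 6 + cst 5 * NR) * X2 - cst 5 * E.ν * E.e1 - cst 5 * KN)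
    (-(cst 6 * E.ρ * X3) - cst 24 * E.ν * (cst 1 + E.ρ) * X2 + cst 25 * E.ν * E.e1
      + cst 22 * KN) 787 <|
  linE E.ρ E.ν NR X2 X3 X4 (1000 * 4 ^ 4) <|
  linE E.ρ E.ν NR X3 X4 X5 (1000 * 4 ^ 5) <|
  linE E.ρ E.ν NR X4 X5 X6 (1000 * 4 ^ 6) <|
  linE E.ρ E.ν NR X5 X6 X7 (1000 * 4 ^ 7) <|
  linE E.ρ E.ν NR X6 X7 X8 (1000 * 4 ^ 8) <|
  linE E.ρ E.ν NR X7 X8 X9 (1000 * 4 ^ 9) <|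
  linE E.ρ E.ν NR X8 X9 X10 (1000 * 4 ^ 10) true

lemma fin_sound {E : Env p} {h κ ρ ν S β : ℝ} {e : ℕ → ℝ}
    (mh : mem h E.h) (mκ : mem κ E.κ) (mρ : mem ρ E.ρ) (mν : mem ν E.ν) (mS : mem S E.S)
    (mβ : mem β E.β) (me : mem (e 1) E.e1) {k : ℕ} (hk : 10 ≤ k) {l : List (Iv p)}
    (hl : List.Forall₂ Mem0 (dlist e k) l) (hT : finT E l = true) : Base h κ ρ ν S β e := by
  have h1 := mem_revA hl (ys := alist e (k + 2) 0) List.Forall₂.nil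
  obtain ⟨j, rfl⟩ : ∃ j, k = j + 10 := ⟨k - 10, by omega⟩
  rw [reverse_dlist] at h1
  change List.Forall₂ Mem0 (e 2 :: e 3 :: e 4 :: e 5 :: e 6 :: e 7 :: e 8 :: e 9 :: e 10 ::
    e 11 :: alist e 12 j) _ at h1
  unfold finT at hT
  obtain ⟨X2, l2, m2, h1, hT⟩ := take_step h1 hT
  obtain ⟨X3, l3, m3, h1, hT⟩ := take_step h1 hT
  obtain ⟨X4, l4, m4, h1, hT⟩ := take_step h1 hT
  obtain ⟨X5, l5, m5, h1, hT⟩ := take_step h1 hT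
  obtain ⟨X6, l6, m6, h1, hT⟩ := take_step h1 hT
  obtain ⟨X7, l7, m7, h1, hT⟩ := take_step h1 hT
  obtain ⟨X8, l8, m8, h1, hT⟩ := take_step h1 hT
  obtain ⟨X9, l9, m9, h1, hT⟩ := take_step h1 hT
  obtain ⟨X10, l10, m10, h1, hT⟩ := take_step h1 hT
  obtain ⟨X11, l11, m11, h1, hT⟩ := take_step h1 hT
  obtain ⟨NR, mNR, hT⟩ := let_step (Iv.mem_mul mν mρ) hT
  obtain ⟨KN, mKN, hT⟩ := let_step (Iv.mem_mul mκ mν) hT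
  obtain ⟨NH, mNH, hT⟩ := let_step (Iv.mem_mul mν mh) hT
  obtain ⟨p1, hT⟩ := pos_step (Iv.mem_sub (Iv.mem_mul (mem_ofNat 1000000) mβ) (mem_ofNat 7535)) hT
  obtain ⟨p2, hT⟩ := pos_step (Iv.mem_sub (mem_ofNat 76) (Iv.mem_mul (mem_ofNat 10000) mβ)) hT
  obtain ⟨p3, hT⟩ := pos_step (Iv.mem_sub (Iv.mem_mul (mem_ofNat 1000) mS) (mem_ofNat 16700)) hT
  obtain ⟨p4, hT⟩ := pos_step (Iv.mem_sub (mem_ofNat 167083) (Iv.mem_mul (mem_ofNat 10000) mS)) hT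
  obtain ⟨p5, hT⟩ := pos_step (Iv.mem_sub (Iv.mem_mul (mem_ofNat 1000) mρ) (mem_ofNat 15700)) hT
  obtain ⟨p6, hT⟩ := pos_step (Iv.mem_sub (mem_ofNat 15709) (Iv.mem_mul (mem_ofNat 1000) mρ)) hT
  obtain ⟨p7, hT⟩ := pos_step (Iv.mem_sub (Iv.mem_mul (mem_ofNat 10000) mκ) (mem_ofNat 1250)) hT
  obtain ⟨p8, hT⟩ := pos_step (Iv.mem_sub (mem_ofNat 126) (Iv.mem_mul (mem_ofNat 1000) mκ)) hT
  obtain ⟨p9, hT⟩ := pos_step (Iv.mem_sub (Iv.mem_mul (mem_ofNat 10000) mν) (mem_ofNat 417)) hT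
  obtain ⟨p10, hT⟩ := pos_step (Iv.mem_sub (mem_ofNat 418) (Iv.mem_mul (mem_ofNat 10000) mν)) hT
  obtain ⟨p11, hT⟩ := pos_step (Iv.mem_sub (Iv.mem_mul (mem_ofNat 10000) m2) (mem_ofNat 75)) hT
  obtain ⟨p12, hT⟩ := pos_step (Iv.mem_sub (mem_ofNat 76) (Iv.mem_mul (mem_ofNat 10000) m2)) hT
  obtain ⟨I, mI, hT⟩ := let_step (x := 5 + 12 * (ν * h) - 6 * κ + 5 * (ν * h) - 6 * ρ * e 2
      - 24 * ν * (1 + ρ) * e 1)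
    (by with_reducible repeat' first | exact mem_one | exact mem_ofNat _ | apply Iv.mem_add | apply Iv.mem_sub | assumption | apply Iv.mem_mul) hT
  obtain ⟨p13, hT⟩ := pos_step (Iv.mem_sub (Iv.mem_mul (mem_ofNat 1000) mI) (mem_ofNat 3480)) hT
  obtain ⟨p14, hT⟩ := pos_step (Iv.mem_sub (mem_ofNat 3600) (Iv.mem_mul (mem_ofNat 1000) mI)) hT
  obtain ⟨p15, hT⟩ := pos_step (Iv.mem_sub (mem_ofNat 140) (Iv.mem_mul (mem_cst (10 ^ 13)) m9)) hT
  obtain ⟨p16, hT⟩ := pos_step (Iv.mem_sub (mem_ofNat 860) (Iv.mem_mul (mem_cst (10 ^ 15)) m10)) hT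
  obtain ⟨p17, hT⟩ := pos_step (Iv.mem_sub (mem_ofNat 540) (Iv.mem_mul (mem_cst (10 ^ 16)) m11)) hT
  obtain ⟨l2, hT⟩ := lin_step (σ := sg ρ ν e 2 - 5 / 6 * (κ * ν))
    (ι := io ρ ν e 2 + 11 / 3 * (κ * ν))
    (by
      have : 6 * (sg ρ ν e 2 - 5 / 6 * (κ * ν)) = -(6 * ρ * e 3) + (6 + 5 * (ν * ρ)) * e 2
        - 5 * ν * e 1 - 5 * (κ * ν) := by unfold sg; ring
      rw [this]
      with_reducible repeat' first | exact mem_one | exact mem_ofNat _ | assumption | apply Iv.mem_add | apply Iv.mem_sub | apply Iv.mem_mul | apply Iv.mem_neg)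
    (by
      have : 6 * (io ρ ν e 2 + 11 / 3 * (κ * ν)) = -(6 * ρ * e 3) - 24 * ν * (1 + ρ) * e 2
        + 25 * ν * e 1 + 22 * (κ * ν) := by unfold io; ring
      rw [this]
      with_reducible repeat' first | exact mem_one | exact mem_ofNat _ | assumption | apply Iv.mem_add | apply Iv.mem_sub | apply Iv.mem_mul | apply Iv.mem_neg) hT
  obtain ⟨l3, hT⟩ := linE_step (s := 3) mρ mν mNR m2 m3 m4 hT
  obtain ⟨l4, hT⟩ := linE_step (s := 4) mρ mν mNR m3 m4 m5 hT
  obtain ⟨l5, hT⟩ := linE_step (s := 5) mρ mν mNR m4 m5 m6 hT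
  obtain ⟨l6, hT⟩ := linE_step (s := 6) mρ mν mNR m5 m6 m7 hT
  obtain ⟨l7, hT⟩ := linE_step (s := 7) mρ mν mNR m6 m7 m8 hT
  obtain ⟨l8, hT⟩ := linE_step (s := 8) mρ mν mNR m7 m8 m9 hT
  obtain ⟨l9, hT⟩ := linE_step (s := 9) mρ mν mNR m8 m9 m10 hT
  push_cast at p15 p16 p17 l2
  rw [show ((1000 * 4 ^ 4 : ℕ) : ℝ) = 1000 * 4 ^ 4 by norm_num] at l3
  rw [show ((1000 * 4 ^ 5 : ℕ) : ℝ) = 1000 * 4 ^ 5 by norm_num] at l4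
  rw [show ((1000 * 4 ^ 6 : ℕ) : ℝ) = 1000 * 4 ^ 6 by norm_num] at l5
  rw [show ((1000 * 4 ^ 7 : ℕ) : ℝ) = 1000 * 4 ^ 7 by norm_num] at l6
  rw [show ((1000 * 4 ^ 8 : ℕ) : ℝ) = 1000 * 4 ^ 8 by norm_num] at l7
  rw [show ((1000 * 4 ^ 9 : ℕ) : ℝ) = 1000 * 4 ^ 9 by norm_num] at l8
  rw [show ((1000 * 4 ^ 10 : ℕ) : ℝ) = 1000 * 4 ^ 10 by norm_num] at l9
  exact ⟨by linarith, by linarith, by linarith, by linarith, by linarith, by linarith, by linarith,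
    by linarith, by linarith, by linarith, by linarith, by linarith, by linarith, by linarith,
    by linarith, by linarith, by linarith, l2, l3, l4, l5, l6, l7, l8, l9⟩

/-- The whole test, for an enclosure `V` of `v`. -/
def baseT (f : ℕ) (V : Iv p) : Bool :=
  bindI (sqI V) fun X =>
  withInv (cst 25 - cst 3 * X) fun J =>
  bindI (cst 6 * V * (cst 3 * V + cst 5) * J) fun R =>
  bindI (posPart (cst 5 * (cst 5 - X) * J)) fun H =>
  bindI (cst 3 * X + cst 8 * V + cst 15) fun P =>
  withInv (cst 5 * P) fun P5 =>
  withInv (cst 6 * P) fun P6 =>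
  bindI (cst 5 * (V * (cst 1 + V)) * P6) fun K =>
  bindI ((cst 25 - cst 3 * X) * P5) fun N =>
  bindI (cst 1 + H + R) fun S =>
  bindI ⟨0, H.hi⟩ fun L =>
  withInv (cst 6 * (S - cst 3 * L)) fun J =>
  withInv (cst 6) fun i6 =>
  bindI (((cst 5 + cst 12 * (N * H) + cst 6 * K - cst 5 * (N * H)) * L
    + (cst 6 + cst 5 * (N * R) - cst 12 * (N * (cst 1 + R))) * (L * L) + cst 6 * K) * J) fun X2 =>
  bindI (K - cst 5 * (N * H) * i6 - R * X2 + L * (cst 1 + cst 5 * (N * R) * i6)) fun B =>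
  bindI (L * L) fun G =>
  assertPos X2 <|
  runI ⟨H, K, R, N, S, L, B, L⟩ (finT ⟨H, K, R, N, S, L, B, L⟩) f 1 [X2] (cst 0) G

lemma base_sound {V : Iv p} {f : ℕ} (hf : 9 ≤ f) {v h κ ρ ν S L β : ℝ} {e : ℕ → ℝ}
    (mV : mem v V)
    (hh : h = 5 * (5 - v ^ 2) * (25 - 3 * v ^ 2)⁻¹)
    (hρ : ρ = 6 * v * (3 * v + 5) * (25 - 3 * v ^ 2)⁻¹)
    (hκ : κ = 5 * (v * (1 + v)) * (6 * (3 * v ^ 2 + 8 * v + 15))⁻¹)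
    (hν : ν = (25 - 3 * v ^ 2) * (5 * (3 * v ^ 2 + 8 * v + 15))⁻¹)
    (h0 : 0 ≤ h) (hS : S = 1 + h + ρ) (hL0 : 0 ≤ L) (hL1 : L ≤ h) (he0 : e 0 = 0) (he1 : 0 ≤ e 1)
    (he1' : e 1 ≤ h)
    (hrec : ∀ m, 2 ≤ m → m < 3 + f → (S - (m + 1) * L) * e m = rhsE h κ ρ ν e m)
    (hβ : β = κ - 5 / 6 * ν * h - ρ * e 2 + e 1 * (1 + 5 / 6 * ν * ρ)) (hT : baseT f V = true) :
    0 < e 2 ∧ (∀ m, 3 ≤ m → m < 3 + f → Step S L β e m ∧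
      (4 ≤ m → e (m - 1) ^ 2 ≤ e m * e (m - 2))) ∧ Base h κ ρ ν S β e := by
  unfold baseT at hT
  obtain ⟨X, mX, hT⟩ := let_step (Iv.mem_sq mV) hT
  obtain ⟨J, -, mJ, hT⟩ := inv_step (x := 25 - 3 * v ^ 2)
    (Iv.mem_sub (mem_ofNat 25) (Iv.mem_mul (mem_ofNat 3) mX)) hT
  obtain ⟨R, mR, hT⟩ := let_step (x := ρ)
    (by rw [hρ]; with_reducible repeat' first | exact mem_ofNat _ | assumption | apply Iv.mem_add | apply Iv.mem_sub | apply Iv.mem_mul) hT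
  obtain ⟨H, mH, hT⟩ := let_step (x := h)
    (by
      rw [← max_eq_left h0]
      apply Iv.mem_posPart
      rw [hh]; with_reducible repeat' first | exact mem_ofNat _ | assumption | apply Iv.mem_add | apply Iv.mem_sub | apply Iv.mem_mul) hT
  obtain ⟨P, mP, hT⟩ := let_step (x := 3 * v ^ 2 + 8 * v + 15)
    (by with_reducible repeat' first | exact mem_ofNat _ | assumption | apply Iv.mem_add | apply Iv.mem_sub | apply Iv.mem_mul) hT
  obtain ⟨P5, -, mP5, hT⟩ := inv_step (Iv.mem_mul (mem_ofNat 5) mP) hT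
  obtain ⟨P6, -, mP6, hT⟩ := inv_step (Iv.mem_mul (mem_ofNat 6) mP) hT
  obtain ⟨K, mK, hT⟩ := let_step (x := κ)
    (by rw [hκ]; with_reducible repeat' first | exact mem_one | exact mem_ofNat _ | assumption | apply Iv.mem_add | apply Iv.mem_sub | apply Iv.mem_mul) hT
  obtain ⟨N, mN, hT⟩ := let_step (x := ν)
    (by rw [hν]; with_reducible repeat' first | exact mem_ofNat _ | assumption | apply Iv.mem_add | apply Iv.mem_sub | apply Iv.mem_mul) hT
  obtain ⟨T, mS, hT⟩ := let_step (x := S)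
    (by rw [hS]; with_reducible repeat' first | exact mem_one | exact mem_ofNat _ | assumption | apply Iv.mem_add | apply Iv.mem_sub | apply Iv.mem_mul) hT
  have hs : (0 : ℝ) < sc p := by exact_mod_cast sc_pos p
  have sub : ∀ x : ℝ, 0 ≤ x → x ≤ h → mem x (⟨0, H.hi⟩ : Iv p) := fun x h1 h2 => by
    refine ⟨?_, (mul_le_mul_of_nonneg_right h2 hs.le).trans mH.2⟩
    simpa using mul_nonneg h1 hs.le
  have hT2 := hT
  obtain ⟨L', mL, me⟩ : ∃ X : Iv p, mem L X ∧ mem (e 1) X ∧ X = ⟨0, H.hi⟩ :=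
    ⟨_, sub L hL0 hL1, sub _ he1 he1', rfl⟩
  obtain ⟨me, hL'⟩ := me
  rw [bindI_eq, ← hL'] at hT
  obtain ⟨J2, hD, mJ2, hT⟩ := inv_step (x := 6 * (S - 3 * L))
    (Iv.mem_mul (mem_ofNat 6) (Iv.mem_sub mS (Iv.mem_mul (mem_ofNat 3) mL))) hT
  obtain ⟨i6, -, mi6, hT⟩ := inv_step (mem_ofNat 6) hT
  have hr2 := hrec 2 le_rfl (by omega)
  obtain ⟨X2, mX2, hT⟩ := let_step (x := e 2) (by
    have : e 2 = ((5 + 12 * (ν * h) + 6 * κ - 5 * (ν * h)) * e 1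
        + (6 + 5 * (ν * ρ) - 12 * (ν * (1 + ρ))) * (e 1 * e 1) + 6 * κ) * (6 * (S - 3 * L))⁻¹ := by
      rw [← div_eq_mul_inv, eq_div_iff hD.ne']
      have h1 : (S - ((2 : ℕ) + 1) * L) = S - 3 * L := by push_cast; ring
      rw [h1] at hr2
      have h3 : conv2 e (2 + 1) = 0 := by simp [conv2]
      have h4 : conv1 e 2 = e 1 * e 1 := by simp [conv1]
      have h5 : conv1 e (2 - 1) = 0 := by simp [conv1]
      unfold rhsE at hr2
      rw [h3, h4, h5, if_pos rfl, show 2 - 2 = 0 from rfl, he0, show 2 - 1 = 1 from rfl] at hr2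
      push_cast at hr2
      linear_combination 6 * hr2
    rw [this]
    with_reducible repeat' first | exact mem_one | exact mem_ofNat _ | assumption | apply Iv.mem_add | apply Iv.mem_sub | apply Iv.mem_mul) hT
  obtain ⟨B, mB, hT⟩ := let_step (x := β) (by
    have : β = κ - 5 * (ν * h) * 6⁻¹ - ρ * e 2 + e 1 * (1 + 5 * (ν * ρ) * 6⁻¹) := by rw [hβ]; ring
    rw [this]
    with_reducible repeat' first | exact mem_one | exact mem_ofNat _ | assumption | apply Iv.mem_add | apply Iv.mem_sub | apply Iv.mem_mul) hT
  obtain ⟨G, mG, hT⟩ := let_step (Iv.mem_mul me me) hT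
  obtain ⟨q2, hT⟩ := pos_step mX2 hT
  obtain ⟨r1, l, r2, r3⟩ := run_sound (E := ⟨H, K, R, N, T, L', B, L'⟩) mH mK mR mN mS mL mB me f
    le_rfl (fun m h1 h2 => hrec m h1 (by omega)) (l := [X2])
    (by rw [dlist, dlist]; exact List.Forall₂.cons ⟨mX2, q2.le⟩ List.Forall₂.nil)
    (by simpa [conv2] using mem_cst (p := p) 0) (by simpa [conv1] using mG) hT
  exact ⟨q2, fun m h1 h2 => r1 m (by omega) (by omega),
    fin_sound (E := ⟨H, K, R, N, T, L', B, L'⟩) mH mK mR mN mS mB me (by omega) r2 r3⟩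

end

section

open Iv

/-- Newton iteration for `√5 * 2 ^ p`. -/
def newt (p : ℕ) (k : ℕ) : ℕ → ℕ :=
  Nat.rec (motive := fun _ => ℕ → ℕ) (fun x => x)
    (fun _ ih x => forceN (Nat.div (Nat.add x (Nat.div (Nat.mul 5 (Nat.pow 4 p)) x)) 2) ih) k

/-- Enclosure of all `v < √5` with `5 - v ^ 2 ≤ 2 ^ (-2300)`. -/
def V5 : Iv 3072 :=
  forceN (newt 3072 14 (Nat.mul 3 (Nat.pow 2 3072))) fun A =>
    ⟨Int.ofNat (Nat.sub A (Nat.pow 2 772)), Int.ofNat (Nat.add A 1)⟩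

set_option maxRecDepth 100000 in
set_option maxHeartbeats 0 in
/-- The enclosure is checked by squaring, so that the iteration need not be analysed. -/
lemma V5_ok : (0 ≤ V5.lo ∧ 0 ≤ V5.hi ∧ V5.lo ^ 2 + 2 ^ 3844 ≤ 5 * 2 ^ 6144 ∧
    5 * 2 ^ 6144 ≤ V5.hi ^ 2) := by
  decide +kernel

set_option maxRecDepth 100000 in
set_option maxHeartbeats 0 in
/-- The first 500 coefficients, computed with 3072 binary digits. -/
lemma base_test : baseT 498 V5 = true := by
  decide +kernel

lemma mem_aux {v x y s q w : ℝ} (h0 : 0 < v) (h1 : v ^ 2 < 5) (hs : 0 < s) (hq : 0 < q)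
    (hw : w * q = s ^ 2) (h2 : (5 - v ^ 2) * q ≤ 1) (y0 : 0 ≤ y)
    (a : x ^ 2 + w ≤ 5 * s ^ 2) (b : 5 * s ^ 2 ≤ y ^ 2) : x ≤ v * s ∧ v * s ≤ y := by
  have e : (5 - v ^ 2) * s ^ 2 ≤ w := by
    have hw0 : 0 < w := by
      by_contra! hc
      have := mul_nonpos_of_nonpos_of_nonneg hc hq.le
      nlinarith [pow_pos hs 2]
    rw [← hw]
    nlinarith
  constructor
  · refine abs_le_of_sq_le_sq' ?_ (by positivity) |>.2
    rw [mul_pow]; linarith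
  · refine abs_le_of_sq_le_sq' ?_ y0 |>.2
    rw [mul_pow]
    nlinarith [pow_pos hs 2]

lemma mem_V5 {v : ℝ} (h0 : 0 < v) (h1 : v ^ 2 < 5) (h2 : (5 - v ^ 2) * 2 ^ 2300 ≤ 1) :
    mem v V5 := by
  obtain ⟨a0, b0, a, b⟩ := V5_ok
  have b0' : (0 : ℝ) ≤ V5.hi := by exact_mod_cast b0
  have a' : ((V5.lo ^ 2 + 2 ^ 3844 : ℤ) : ℝ) ≤ ((5 * 2 ^ 6144 : ℤ) : ℝ) := Int.cast_le.2 a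
  have b' : ((5 * 2 ^ 6144 : ℤ) : ℝ) ≤ ((V5.hi ^ 2 : ℤ) : ℝ) := Int.cast_le.2 b
  have hs : ((sc 3072 : ℤ) : ℝ) = 2 ^ 3072 := by
    rw [show sc 3072 = ((2 ^ 3072 : ℕ) : ℤ) from rfl, Int.cast_natCast, Nat.cast_pow]; rfl
  have h6 : (2 : ℝ) ^ 6144 = (2 ^ 3072) ^ 2 := by rw [← pow_mul]
  rw [Int.cast_mul, Int.cast_pow, Int.cast_pow, Int.cast_ofNat, Int.cast_ofNat, h6] at b'
  rw [Int.cast_add, Int.cast_mul, Int.cast_pow, Int.cast_pow, Int.cast_pow, Int.cast_ofNat,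
    Int.cast_ofNat, h6] at a'
  unfold mem
  rw [hs]
  exact mem_aux h0 h1 (by positivity) (q := 2 ^ 2300) (by positivity)
    (by rw [← pow_add, ← h6]) h2 b0' a' b'

end

/-! ### Growth of the coefficients -/

section

/-- The part `a ≤ i ≤ T - a` of the convolution square. -/
def convg (e : ℕ → ℝ) (a T : ℕ) : ℝ := ∑ i ∈ Finset.Ico a (T + 1 - a), e i * e (T - i)

lemma conv1_eq (e : ℕ → ℝ) (m : ℕ) : conv1 e m = convg e 1 m := rfl

lemma conv2_eq (e : ℕ → ℝ) (m : ℕ) : conv2 e m = convg e 2 m := rfl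

lemma convg_peel (e : ℕ → ℝ) {a T : ℕ} (h : 2 * a < T) :
    convg e a T = 2 * (e a * e (T - a)) + convg e (a + 1) T := by
  unfold convg
  rw [show T + 1 - a = T - a + 1 by omega, Finset.sum_Ico_succ_top (by omega),
    Finset.sum_eq_sum_Ico_succ_bot (by omega), show T + 1 - (a + 1) = T - a by omega,
    show T - (T - a) = a by omega]
  ring

lemma convg_nonneg {e : ℕ → ℝ} {a T : ℕ} (h : ∀ i, a ≤ i → i ≤ T - a → 0 ≤ e i) :
    0 ≤ convg e a T := by
  apply Finset.sum_nonneg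
  intro i hi
  rw [Finset.mem_Ico] at hi
  exact mul_nonneg (h _ (by omega) (by omega)) (h _ (by omega) (by omega))

/-- The hypotheses on a solution `e` of the recursion up to the index `n`. -/
structure Rec (h κ ρ ν S L β : ℝ) (e : ℕ → ℝ) (n : ℕ) : Prop where
  base : Base h κ ρ ν S β e
  L0 : 0 < L
  D0 : (n + 1) * L < S
  e0 : e 0 = 0
  e1 : 0 ≤ e 1
  hβ : β = κ - 5 / 6 * ν * h - ρ * e 2 + e 1 * (1 + 5 / 6 * ν * ρ)
  rcr : ∀ m, 2 ≤ m → m ≤ n → (S - (m + 1) * L) * e m = rhsE h κ ρ ν e m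
  st : ∀ m, 3 ≤ m → m ≤ 500 → Step S L β e m ∧ (4 ≤ m → e (m - 1) ^ 2 ≤ e m * e (m - 2))

section
variable {h κ ρ ν S L β : ℝ} {e : ℕ → ℝ} {n : ℕ}

lemma Rec.e2 (H : Rec h κ ρ ν S L β e n) : 0 < e 2 := by linarith [H.base.e20]

lemma Rec.β0 (H : Rec h κ ρ ν S L β e n) : 0 < β := by linarith [H.base.β0]

/-- The ratios `e t / e (t - 1)` increase up to the index `500`, and roughly increase beyond. -/
lemma Rec.qm (H : Rec h κ ρ ν S L β e n) {m t u : ℕ} (hm : ∀ j, 3 ≤ j → j < m → Step S L β e j)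
    (ht : 3 ≤ t) (htu : t ≤ u) (hu : u < m) (h2 : 2 * t ≤ u + 14) :
    e t * e (u - 1) ≤ e u * e (t - 1) := by
  have hp : ∀ j, 2 ≤ j → j < m → 0 < e j := fun j h1 h2 => by
    rcases Nat.eq_or_lt_of_le h1 with rfl | h3
    · exact H.e2
    · exact (hm j h3 h2).pos
  by_cases h5 : u ≤ 500
  · clear h2
    induction u, htu using Nat.le_induction with
    | base => rw [mul_comm]
    | succ u htu ih =>
      have i1 := ih (by omega) (by omega)
      have i2 := (H.st (u + 1) (by omega) h5).2 (by omega)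
      rw [show u + 1 - 1 = u by omega, show u + 1 - 2 = u - 1 by omega] at *
      have p1 := hp (u - 1) (by omega) (by omega)
      have p2 := hp u (by omega) (by omega)
      have p3 := hp (t - 1) (by omega) (by omega)
      refine le_of_mul_le_mul_right ?_ p1
      nlinarith [mul_le_mul_of_nonneg_right i1 p2.le, mul_le_mul_of_nonneg_right i2 p3.le]
  · have s1 := (hm t ht (by omega)).upp
    have s2 := (hm u (by omega) hu).low
    have p0 := hp t (by omega) (by omega)
    have p1 := hp (u - 1) (by omega) (by omega)
    have p2 := hp u (by omega) (by omega)
    have p3 := hp (t - 1) (by omega) (by omega)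
    have hb : bnd t ≤ u + 50 := by unfold bnd; omega
    have hb' : (bnd t : ℝ) ≤ u + 50 := by exact_mod_cast hb
    have htu' : (t : ℝ) ≤ u := by exact_mod_cast htu
    have hβ := H.β0
    have hc : 0 < β * (u + 50) := by positivity
    refine le_of_mul_le_mul_left ?_ hc
    calc β * (u + 50) * (e t * e (u - 1)) = e t * (β * (u + 50) * e (u - 1)) := by ring
      _ ≤ e t * ((S - (u + 1) * L) * e u) := by gcongr
      _ ≤ e t * ((S - (t + 1) * L) * e u) := by have := H.L0; gcongr
      _ = e u * ((S - (t + 1) * L) * e t) := by ring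
      _ ≤ e u * (β * bnd t * e (t - 1)) := by gcongr
      _ ≤ e u * (β * (u + 50) * e (t - 1)) := by gcongr
      _ = _ := by ring

/-- If ratios increase, products `e i e j` with `i + j` fixed grow towards the extreme indices. -/
lemma pair_le {e : ℕ → ℝ} {i j c : ℕ} (hp : ∀ k, i ≤ k → k ≤ j + c → 0 < e k)
    (hij : i ≤ j)
    (hq : ∀ d, d < c → e (i + d + 1) * e (j + d) ≤ e (j + d + 1) * e (i + d)) :
    e (i + c) * e j ≤ e i * e (j + c) := by
  induction c with
  | zero => exact le_rfl
  | succ c ih =>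
    have i1 := ih (fun k h1 h2 => hp k h1 (by omega)) (fun d hd => hq d (by omega))
    have i2 := hq c (by omega)
    have p1 := hp (j + c) (by omega) (by omega)
    have p2 := hp j (by omega) (by omega)
    have p3 := hp (j + c + 1) (by omega) (by omega)
    rw [← add_assoc, ← add_assoc]
    refine le_of_mul_le_mul_right ?_ p1
    nlinarith [mul_le_mul_of_nonneg_right i2 p2.le, mul_le_mul_of_nonneg_right i1 p3.le]

lemma convg_le_of_pair {e : ℕ → ℝ} {a T : ℕ} (hp : ∀ k, a ≤ k → k ≤ T - a → 0 < e k)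
    (h : ∀ i, a ≤ i → i ≤ T - i → e i * e (T - i) ≤ e a * e (T - a)) (ha : 1 ≤ a) (hT : 2 * a ≤ T) :
    convg e a T ≤ T * (e a * e (T - a)) := by
  have p : 0 ≤ e a * e (T - a) := by
    have := hp a le_rfl (by omega)
    have := hp (T - a) (by omega) le_rfl
    positivity
  unfold convg
  calc _ ≤ ∑ i ∈ Finset.Ico a (T + 1 - a), e a * e (T - a) := by
        apply Finset.sum_le_sum
        intro i hi
        rw [Finset.mem_Ico] at hi
        by_cases h1 : i ≤ T - i
        · exact h i hi.1 h1
        · have := h (T - i) (by omega) (by omega)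
          rwa [show T - (T - i) = i by omega, mul_comm (e (T - i))] at this
    _ = (T + 1 - a - a : ℕ) * (e a * e (T - a)) := by simp
    _ ≤ _ := by
      have : ((T + 1 - a - a : ℕ) : ℝ) ≤ T := by
        have : T + 1 - a - a ≤ T := by omega
        exact_mod_cast this
      gcongr

/-- The truncated convolution is bounded by its extreme terms. -/
lemma Rec.convg_le (H : Rec h κ ρ ν S L β e n) {m a T : ℕ}
    (hm : ∀ j, 3 ≤ j → j < m → Step S L β e j) (ha : 2 ≤ a) (ha2 : a ≤ 14) (hT : 2 * a ≤ T)
    (hTm : T < m + a) : convg e a T ≤ T * (e a * e (T - a)) := by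
  have hp : ∀ j, 2 ≤ j → j < m → 0 < e j := fun j h1 h2 => by
    rcases Nat.eq_or_lt_of_le h1 with rfl | h3
    · exact H.e2
    · exact (hm j h3 h2).pos
  refine convg_le_of_pair (fun k h1 h2 => hp k (by omega) (by omega)) (fun i h1 h2 => ?_) (by omega) hT
  have := pair_le (e := e) (i := a) (j := T - i) (c := i - a)
    (fun k h3 h4 => hp k (by omega) (by omega)) (by omega) (fun d hd => by
      have := H.qm hm (t := a + d + 1) (u := T - i + d + 1) (by omega) (by omega) (by omega)
        (by omega)
      exact this)
  rwa [show a + (i - a) = i by omega, show T - i + (i - a) = T - a by omega] at this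

end

end

section

/-- Slow growth of the coefficients just below `m`: with `M = m + 41`, the ratios
`e (t - 1) / e t` are at most `x = 2217.5 / M < 4.0914`. -/
lemma hist {M : ℝ} (hM : 542 ≤ M) {y : ℕ → ℝ} (hy : ∀ s, s ≤ 9 → 0 ≤ y s)
    (h : ∀ s, s < 9 → M * y (s + 1) ≤ 2217.5 * y s) :
    (∀ s, s ≤ 9 → y s ≤ 4.0914 ^ s * y 0) ∧
    (∀ s, s < 9 → M * y (s + 1) ≤ 2217.5 * 4.0914 ^ s * y 0) ∧
    M ^ 2 * y 9 ≤ 9.5 * 10 ^ 10 * y 0 := by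
  have h1 : ∀ s, s < 9 → y (s + 1) ≤ 4.0914 * y s := fun s hs => by
    have := h s hs
    nlinarith [hy (s + 1) (by omega), hy s (by omega)]
  have h2 : ∀ s, s ≤ 9 → y s ≤ 4.0914 ^ s * y 0 := fun s => by
    induction s with
    | zero => intro _; simp
    | succ s ih =>
      intro hs
      have := ih (by omega)
      rw [pow_succ]
      linarith [h1 s (by omega)]
  have h3 : ∀ s, s < 9 → M * y (s + 1) ≤ 2217.5 * 4.0914 ^ s * y 0 := fun s hs => by
    linarith [h s hs, h2 s (by omega)]
  refine ⟨h2, h3, ?_⟩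
  have h4 := h 8 (by omega)
  have h5 := h3 7 (by omega)
  have h0 := hy 0 (by omega)
  calc M ^ 2 * y 9 = M * (M * y (8 + 1)) := by ring
    _ ≤ M * (2217.5 * y 8) := by gcongr
    _ = 2217.5 * (M * y (7 + 1)) := by ring
    _ ≤ 2217.5 * (2217.5 * 4.0914 ^ 7 * y 0) := by gcongr
    _ = 2217.5 * (2217.5 * 4.0914 ^ 7) * y 0 := by ring
    _ ≤ _ := mul_le_mul_of_nonneg_right (by norm_num) h0

lemma Lin.bd {σ ι G : ℝ} (hl : Lin σ ι G) {m : ℝ} (hm : 501 ≤ m) :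
    0 ≤ σ * m + ι ∧ G * (σ * m + ι) ≤ m + 41 := by
  obtain ⟨a, b, c, d⟩ := hl
  constructor
  · nlinarith
  · nlinarith

section
variable {h κ ρ ν S L β : ℝ} {e : ℕ → ℝ} {n : ℕ}

/-- The recursion with the contributions of `e (m - 1), …, e (m - 9)` split off. -/
lemma Rec.expand (H : Rec h κ ρ ν S L β e n) {m : ℕ} (hm : 40 ≤ m) : rhsE h κ ρ ν e m =
    (β * m + (5 / 6 + 2 * (ν * h) - κ + 5 / 6 * (ν * h) - ρ * e 2 - 4 * ν * (1 + ρ) * e 1))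
      * e (m - 1)
    + ((sg ρ ν e 2 - 5 / 6 * (κ * ν)) * m + (io ρ ν e 2 + 11 / 3 * (κ * ν))) * e (m - 2)
    + (sg ρ ν e 3 * m + io ρ ν e 3) * e (m - 3)
    + (sg ρ ν e 4 * m + io ρ ν e 4) * e (m - 4)
    + (sg ρ ν e 5 * m + io ρ ν e 5) * e (m - 5)
    + (sg ρ ν e 6 * m + io ρ ν e 6) * e (m - 6)
    + (sg ρ ν e 7 * m + io ρ ν e 7) * e (m - 7)
    + (sg ρ ν e 8 * m + io ρ ν e 8) * e (m - 8)
    + (sg ρ ν e 9 * m + io ρ ν e 9) * e (m - 9)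
    - ρ / 2 * (m + 1) * convg e 11 (m + 1)
    + ((1 + 5 / 6 * ν * ρ) / 2 * m - 2 * ν * (1 + ρ)) * convg e 10 m
    - (5 / 12 * ν * (m - 1) - 5 / 3 * ν) * convg e 9 (m - 1) := by
  unfold rhsE
  rw [conv1_eq, conv1_eq, conv2_eq, if_neg (by omega)]
  iterate 9 rw [convg_peel e (T := m + 1) (by omega)]
  iterate 9 rw [convg_peel e (T := m) (by omega)]
  iterate 8 rw [convg_peel e (T := m - 1) (by omega)]
  simp only [Nat.reduceAdd]
  rw [show m + 1 - 2 = m - 1 by omega, show m + 1 - 3 = m - 2 by omega,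
    show m + 1 - 4 = m - 3 by omega, show m + 1 - 5 = m - 4 by omega,
    show m + 1 - 6 = m - 5 by omega, show m + 1 - 7 = m - 6 by omega,
    show m + 1 - 8 = m - 7 by omega, show m + 1 - 9 = m - 8 by omega,
    show m + 1 - 10 = m - 9 by omega, show m - 1 - 1 = m - 2 by omega,
    show m - 1 - 2 = m - 3 by omega, show m - 1 - 3 = m - 4 by omega,
    show m - 1 - 4 = m - 5 by omega, show m - 1 - 5 = m - 6 by omega,
    show m - 1 - 6 = m - 7 by omega, show m - 1 - 7 = m - 8 by omega,
    show m - 1 - 8 = m - 9 by omega]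
  rw [H.hβ]
  simp only [sg, io, Nat.reduceAdd, Nat.reduceSub]
  ring

/-- Size of the remainder of the recursion after nine terms. -/
lemma tail_bound {ν ρ m E y x₁ x₂ x₃ C₁ C₂ C₃ : ℝ} (hm1 : 501 ≤ m) (ρ0 : 15700 < 1000 * ρ)
    (ρ1 : 1000 * ρ < 15709) (ν0 : 417 < 10000 * ν) (ν1 : 10000 * ν < 418)
    (e9 : 10 ^ 13 * x₃ < 140) (e10 : 10 ^ 15 * x₂ < 860) (e11 : 10 ^ 16 * x₁ < 540)
    (p9 : 0 < x₃) (p10 : 0 < x₂) (p11 : 0 < x₁) (q10 : 0 < y) (hE : 0 < E)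
    (g3 : (m + 41) ^ 2 * y ≤ 9.5 * 10 ^ 10 * E)
    (n1 : 0 ≤ C₁) (n2 : 0 ≤ C₂) (n3 : 0 ≤ C₃) (t1 : C₁ ≤ (m + 1) * (x₁ * y))
    (t2 : C₂ ≤ m * (x₂ * y)) (t3 : C₃ ≤ (m - 1) * (x₃ * y)) :
    (0 ≤ ρ / 2 * (m + 1) * C₁ ∧ ρ / 2 * (m + 1) * C₁ ≤ 0.05 * E) ∧
    (0 ≤ ((1 + 5 / 6 * ν * ρ) / 2 * m - 2 * ν * (1 + ρ)) * C₂ ∧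
      ((1 + 5 / 6 * ν * ρ) / 2 * m - 2 * ν * (1 + ρ)) * C₂ ≤ 0.07 * E) ∧
    (0 ≤ (5 / 12 * ν * (m - 1) - 5 / 3 * ν) * C₃ ∧
      (5 / 12 * ν * (m - 1) - 5 / 3 * ν) * C₃ ≤ 0.03 * E) := by
  have ρp : 0 < ρ := by linarith
  have νp : 0 < ν := by linarith
  have νρ : ν * ρ ≤ 0.66 := by nlinarith
  have T1 : 0 ≤ ρ / 2 * (m + 1) * C₁ := by positivity
  have T1' : ρ / 2 * (m + 1) * C₁ ≤ 0.05 * E := by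
    calc _ ≤ 7.86 * (m + 1) * ((m + 1) * (x₁ * y)) := by
          gcongr; linarith
      _ = 7.86 * x₁ * ((m + 1) ^ 2 * y) := by ring
      _ ≤ 7.86 * x₁ * ((m + 41) ^ 2 * y) := by gcongr; norm_num
      _ ≤ 7.86 * (540 / 10 ^ 16) * (9.5 * 10 ^ 10 * E) := by
        gcongr
        rw [le_div_iff₀ (by norm_num)]; linarith
      _ ≤ _ := by nlinarith
  have c1p : 0 ≤ (1 + 5 / 6 * ν * ρ) / 2 * m - 2 * ν * (1 + ρ) := by
    have : 0 ≤ ν * ρ := by positivity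
    nlinarith
  have c1q : (1 + 5 / 6 * ν * ρ) / 2 * m - 2 * ν * (1 + ρ) ≤ 0.78 * m := by
    have : 0 ≤ ν * ρ := by positivity
    nlinarith
  have T2 : 0 ≤ ((1 + 5 / 6 * ν * ρ) / 2 * m - 2 * ν * (1 + ρ)) * C₂ := by positivity
  have T2' : ((1 + 5 / 6 * ν * ρ) / 2 * m - 2 * ν * (1 + ρ)) * C₂ ≤ 0.07 * E := by
    calc _ ≤ 0.78 * m * (m * (x₂ * y)) := by gcongr
      _ = 0.78 * x₂ * (m ^ 2 * y) := by ring
      _ ≤ 0.78 * x₂ * ((m + 41) ^ 2 * y) := by gcongr; linarith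
      _ ≤ 0.78 * (860 / 10 ^ 15) * (9.5 * 10 ^ 10 * E) := by
        gcongr
        rw [le_div_iff₀ (by norm_num)]; linarith
      _ ≤ _ := by nlinarith
  have c2p : 0 ≤ 5 / 12 * ν * (m - 1) - 5 / 3 * ν := by nlinarith
  have c2q : 5 / 12 * ν * (m - 1) - 5 / 3 * ν ≤ 0.02 * m := by nlinarith
  have T3 : 0 ≤ (5 / 12 * ν * (m - 1) - 5 / 3 * ν) * C₃ := by positivity
  have T3' : (5 / 12 * ν * (m - 1) - 5 / 3 * ν) * C₃ ≤ 0.03 * E := by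
    calc _ ≤ 0.02 * m * ((m - 1) * (x₃ * y)) := by gcongr
      _ = 0.02 * x₃ * (m * (m - 1) * y) := by ring
      _ ≤ 0.02 * x₃ * ((m + 41) ^ 2 * y) := by gcongr; nlinarith
      _ ≤ 0.02 * (140 / 10 ^ 13) * (9.5 * 10 ^ 10 * E) := by
        gcongr
        rw [le_div_iff₀ (by norm_num)]; linarith
      _ ≤ _ := by nlinarith
  exact ⟨⟨T1, T1'⟩, ⟨T2, T2'⟩, T3, T3'⟩

set_option maxHeartbeats 1000000 in
/-- The inductive step: `e (m - 1)` contributes `β m + O(1)` to the recursion; the next eight terms and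
the remainder change the constant only within `[50, 537]`. -/
lemma Rec.step (H : Rec h κ ρ ν S L β e n) {m : ℕ} (h1 : 501 ≤ m) (h2 : m ≤ n)
    (hm : ∀ j, 3 ≤ j → j < m → Step S L β e j) :
    Step S L β e m ∧ (S - (m + 1) * L) * e m ≤ β * (m + 537) * e (m - 1) := by
  have hp : ∀ j, 2 ≤ j → j < m → 0 < e j := fun j h1 h2 => by
    rcases Nat.eq_or_lt_of_le h1 with rfl | h3
    · exact H.e2
    · exact (hm j h3 h2).pos
  have hm1 : (501 : ℝ) ≤ m := by exact_mod_cast h1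
  have hmn : (m : ℝ) ≤ n := by exact_mod_cast h2
  have hβ := H.β0
  have hL := H.L0
  obtain ⟨β0, β1, S0, S1, ρ0, ρ1, κ0, κ1, ν0, ν1, e20, e21, i0, i1, e9, e10, e11, l2, l3, l4, l5,
    l6, l7, l8, l9⟩ := H.base
  have hD : 0 < S - (m + 1) * L := by nlinarith [H.D0]
  obtain ⟨g1, g2, g3⟩ := hist (M := m + 41) (by linarith) (y := fun s => e (m - 1 - s))
    (fun s hs => (hp _ (by omega) (by omega)).le) (fun s hs => by
      have s1 := (hm (m - 1 - s) (by omega) (by omega)).low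
      have q0 := hp (m - 1 - s) (by omega) (by omega)
      have q1 := hp (m - 1 - (s + 1)) (by omega) (by omega)
      rw [show m - 1 - s - 1 = m - 1 - (s + 1) by omega] at s1
      have c1 : ((m - 1 - s : ℕ) : ℝ) + 50 ≥ m + 41 := by
        have : m - 1 - s + 50 ≥ m + 41 := by omega
        exact_mod_cast this
      have c2 : β * ((m + 41) * e (m - 1 - (s + 1))) ≤ β * (2217.5 * e (m - 1 - s)) := by
        calc _ = β * (m + 41) * e (m - 1 - (s + 1)) := by ring
          _ ≤ β * (((m - 1 - s : ℕ) : ℝ) + 50) * e (m - 1 - (s + 1)) := by gcongr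
          _ ≤ _ := s1
          _ ≤ S * e (m - 1 - s) := by
            gcongr
            have : 0 ≤ (((m - 1 - s : ℕ) : ℝ) + 1) * L := by positivity
            linarith
          _ ≤ β * 2217.5 * e (m - 1 - s) := by
            gcongr
            linarith
          _ = _ := by ring
      exact le_of_mul_le_mul_left c2 hβ)
  have hE := hp (m - 1) (by omega) (by omega)
  rw [Nat.sub_zero] at g3
  set E := e (m - 1) with hEd
  -- the individual terms
  have term : ∀ s : ℕ, 2 ≤ s → s ≤ 9 → ∀ σ ι G : ℝ, 0 < G → Lin σ ι G →
      0 ≤ (σ * m + ι) * e (m - s) ∧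
      G * ((σ * m + ι) * e (m - s)) ≤ 2217.5 * 4.0914 ^ (s - 2) * E := by
    intro s hs hs' σ ι G hG hl
    obtain ⟨k1, k2⟩ := hl.bd hm1
    have p := hp (m - s) (by omega) (by omega)
    refine ⟨by positivity, ?_⟩
    have := g2 (s - 2) (by omega)
    rw [show m - 1 - (s - 2 + 1) = m - s by omega, Nat.sub_zero] at this
    calc _ = G * (σ * m + ι) * e (m - s) := by ring
      _ ≤ (m + 41) * e (m - s) := by gcongr
      _ ≤ _ := this
  obtain ⟨a2, b2⟩ := term 2 (by norm_num) (by norm_num) _ _ _ (by norm_num) l2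
  obtain ⟨a3, b3⟩ := term 3 (by norm_num) (by norm_num) _ _ _ (by norm_num) l3
  obtain ⟨a4, b4⟩ := term 4 (by norm_num) (by norm_num) _ _ _ (by norm_num) l4
  obtain ⟨a5, b5⟩ := term 5 (by norm_num) (by norm_num) _ _ _ (by norm_num) l5
  obtain ⟨a6, b6⟩ := term 6 (by norm_num) (by norm_num) _ _ _ (by norm_num) l6
  obtain ⟨a7, b7⟩ := term 7 (by norm_num) (by norm_num) _ _ _ (by norm_num) l7
  obtain ⟨a8, b8⟩ := term 8 (by norm_num) (by norm_num) _ _ _ (by norm_num) l8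
  obtain ⟨a9, b9⟩ := term 9 (by norm_num) (by norm_num) _ _ _ (by norm_num) l9
  -- the tails
  have p9 := hp 9 (by norm_num) (by omega)
  have p10 := hp 10 (by norm_num) (by omega)
  have p11 := hp 11 (by norm_num) (by omega)
  have q10 := hp (m - 10) (by omega) (by omega)
  have t1 := H.convg_le (a := 11) (T := m + 1) hm (by norm_num) (by norm_num) (by omega) (by omega)
  have t2 := H.convg_le (a := 10) (T := m) hm (by norm_num) (by norm_num) (by omega) (by omega)
  have t3 := H.convg_le (a := 9) (T := m - 1) hm (by norm_num) (by norm_num) (by omega) (by omega)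
  have n1 : 0 ≤ convg e 11 (m + 1) :=
    convg_nonneg fun i h3 h4 => (hp i (by omega) (by omega)).le
  have n2 : 0 ≤ convg e 10 m := convg_nonneg fun i h3 h4 => (hp i (by omega) (by omega)).le
  have n3 : 0 ≤ convg e 9 (m - 1) := convg_nonneg fun i h3 h4 => (hp i (by omega) (by omega)).le
  rw [show m + 1 - 11 = m - 10 by omega] at t1
  rw [show m - 1 - 9 = m - 10 by omega] at t3
  rw [show m - 1 - 9 = m - 10 by omega] at g3
  have hm1' : ((m - 1 : ℕ) : ℝ) = m - 1 := by rw [Nat.cast_sub (by omega)]; simp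
  rw [hm1'] at t3
  push_cast at t1
  obtain ⟨⟨T1, T1'⟩, ⟨T2, T2'⟩, T3, T3'⟩ := tail_bound hm1 ρ0 ρ1 ν0 ν1 e9 e10 e11 p9 p10 p11 q10 hE
    g3 n1 n2 n3 t1 t2 t3
  have hrc := H.rcr m (by omega) h2
  rw [H.expand (by omega), ← hEd] at hrc
  norm_num at b2 b3 b4 b5 b6 b7 b8 b9
  generalize 5 / 6 + 2 * (ν * h) - κ + 5 / 6 * (ν * h) - ρ * e 2 - 4 * ν * (1 + ρ) * e 1 = ι at *
  have ui : ι * E ≤ 0.6 * E := by gcongr; linarith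
  have li : 0.58 * E ≤ ι * E := by gcongr; linarith
  have lβ : β * E * 50 ≤ 0.38 * E := by
    have : β * 50 ≤ 0.38 := by linarith
    have := mul_le_mul_of_nonneg_right this hE.le
    clear * - this; linarith
  have uβ : 4.046 * E ≤ β * E * 537 := by
    have : 4.046 ≤ β * 537 := by linarith
    have := mul_le_mul_of_nonneg_right this hE.le
    clear * - this; linarith
  have hlow : β * (m + 50) * E ≤ (S - (m + 1) * L) * e m := by
    rw [hrc]; linarith
  have hup : (S - (m + 1) * L) * e m ≤ β * (m + 537) * E := by
    rw [hrc]; linarith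
  refine ⟨⟨?_, hlow, hup.trans ?_⟩, hup⟩
  · have : 0 < (S - (m + 1) * L) * e m := lt_of_lt_of_le (by positivity) hlow
    exact pos_of_mul_pos_right this hD.le
  · have : m + 537 ≤ bnd m := by unfold bnd; omega
    have : (m : ℝ) + 537 ≤ bnd m := by exact_mod_cast this
    gcongr

lemma Rec.steps (H : Rec h κ ρ ν S L β e n) (m : ℕ) (h1 : 3 ≤ m) (h2 : m ≤ n) :
    Step S L β e m := by
  induction m using Nat.strong_induction_on with
  | _ m ih =>
    by_cases h3 : m ≤ 500
    · exact (H.st m h1 h3).1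
    · exact (H.step (by omega) h2 fun j h4 h5 => ih j h5 h4 (by omega)).1

/-- Upper bound on the growth that is linear with slope one. -/
lemma Rec.upp (H : Rec h κ ρ ν S L β e n) {m : ℕ} (h1 : 3 ≤ m) (h2 : m ≤ n) :
    (S - (m + 1) * L) * e m ≤ β * (m + 537) * e (m - 1) := by
  by_cases h3 : m ≤ 500
  · refine (H.steps m h1 h2).upp.trans ?_
    have : bnd m ≤ m + 537 := by unfold bnd; omega
    have : (bnd m : ℝ) ≤ m + 537 := by exact_mod_cast this
    have := H.β0
    have : 0 < e (m - 1) := by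
      rcases Nat.eq_or_lt_of_le h1 with rfl | h4
      · exact H.e2
      · exact (H.steps (m - 1) (by omega) (by omega)).pos
    gcongr
  · exact (H.step (by omega) h2 fun j h4 h5 => H.steps j h4 (by omega)).2

lemma Rec.pos (H : Rec h κ ρ ν S L β e n) {m : ℕ} (h1 : 2 ≤ m) (h2 : m ≤ n) : 0 < e m := by
  rcases Nat.eq_or_lt_of_le h1 with rfl | h4
  · exact H.e2
  · exact (H.steps m h4 h2).pos

end

end

/-! ### Terms of the barrier at the end point -/

section

/-- A sequence on `[2, n]` whose ratios lie between `X (t + 50) / (n + 1 - t)` and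
`X (t + 537) / (n - t)`. It models `e t * Y ^ (t - 2)`, where `Y` is the end point of the barrier
and `X = β Y / L`. -/
structure Rat (n : ℕ) (X β : ℝ) (y : ℕ → ℝ) : Prop where
  hX : 0 < X
  β0 : 0.0075 < β
  β1 : β < 0.0076
  pos : ∀ j, 2 ≤ j → j ≤ n → 0 < y j
  y2 : 0.0075 < y 2
  y2' : y 2 < 0.0076
  yn : X * y n = β
  low : ∀ t : ℕ, 3 ≤ t → t ≤ n → X * (t + 50) * y (t - 1) ≤ (n + 1 - t) * y t
  upp : ∀ t : ℕ, 3 ≤ t → t ≤ n → (n - t) * y t ≤ X * (t + 537) * y (t - 1)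

variable {n : ℕ} {X β : ℝ} {y : ℕ → ℝ}

/-- If `X > 1`, the ratios force `y n ≥ 53 y 2`, against `X y n = β`. -/
lemma Rat.X_le (H : Rat n X β y) (hn : 100 ≤ n) : X ≤ 1 := by
  by_contra! hX
  -- `d` is kept opaque, so that `(d + 2)!` is never evaluated
  obtain ⟨d, hd⟩ : ∃ d : ℕ, d = 50 := ⟨_, rfl⟩
  have hdr : (d : ℝ) = 50 := by rw [hd]; norm_num
  have key : ∀ t, 2 ≤ t → t ≤ n → y 2 * ((t + d).factorial * (n - t).factorial : ℕ)
      ≤ y t * ((d + 2).factorial * (n - 2).factorial : ℕ) := by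
    intro t ht
    induction t, ht using Nat.le_induction with
    | base => intro _; rw [Nat.add_comm 2 d]
    | succ t ht ih =>
      intro h1
      have i1 := ih (by omega)
      have l1 := H.low (t + 1) (by omega) h1
      obtain ⟨j, hj⟩ : ∃ j, n - t = j + 1 := ⟨n - t - 1, by omega⟩
      have hj' : n - (t + 1) = j := by omega
      have hn' : (n : ℝ) = t + j + 1 := by
        have : n = t + j + 1 := by omega
        exact_mod_cast this
      rw [hj, Nat.factorial_succ j] at i1
      rw [hj', show t + 1 + d = t + d + 1 by ring, Nat.factorial_succ (t + d)]
      rw [Nat.add_sub_cancel, hn'] at l1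
      have p := H.pos t (by omega) (by omega)
      have q : (0 : ℝ) < (j + 1) := by positivity
      push_cast [hdr] at i1 l1 ⊢
      refine le_of_mul_le_mul_left ?_ q
      set A : ℝ := ((t + d).factorial : ℝ)
      set B : ℝ := (j.factorial : ℝ)
      set C : ℝ := ((d + 2).factorial : ℝ) * ((n - 2).factorial : ℝ)
      have hC : 0 < C := by positivity
      calc _ = (t + 50 + 1) * (y 2 * (A * ((j + 1) * B))) := by ring
        _ ≤ (t + 50 + 1) * (y t * C) := by gcongr
        _ = 1 * (t + 1 + 50) * y t * C := by ring
        _ ≤ X * (t + 1 + 50) * y t * C := by gcongr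
        _ ≤ _ := by
          have := mul_le_mul_of_nonneg_right l1 hC.le
          linarith
  have h1 := key n (by omega) le_rfl
  rw [Nat.sub_self, Nat.factorial_zero, mul_one] at h1
  have h2 := Nat.add_choose_mul_factorial_mul_factorial (n - 2) (d + 2)
  rw [show n - 2 + (d + 2) = n + d by omega] at h2
  have h3 : 53 ≤ (n + d).choose (d + 2) := by
    calc 53 = Nat.choose (d + 2 + 1) (d + 2) := by rw [Nat.choose_succ_self_right, hd]
      _ ≤ _ := Nat.choose_le_choose _ (by omega)
  have h4 : 53 * ((d + 2).factorial * (n - 2).factorial) ≤ (n + d).factorial := by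
    rw [← h2]
    calc _ ≤ (n + d).choose (d + 2) * ((d + 2).factorial * (n - 2).factorial) := by gcongr
      _ = _ := by ring
  have hC : (0 : ℝ) < ((d + 2).factorial * (n - 2).factorial : ℕ) := by positivity
  have h5 : (53 : ℝ) * ((d + 2).factorial * (n - 2).factorial : ℕ) ≤ (n + d).factorial := by
    exact_mod_cast h4
  have p2 := H.y2
  have h6 : y 2 * 53 ≤ y n := by
    refine le_of_mul_le_mul_right ?_ hC
    calc _ = y 2 * (53 * ((d + 2).factorial * (n - 2).factorial : ℕ)) := by ring
      _ ≤ y 2 * (n + d).factorial := by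
        apply mul_le_mul_of_nonneg_left h5; linarith
      _ ≤ _ := h1
  have := H.yn
  nlinarith [H.β1]

/-- Rapid decay when `X` is small. -/
lemma Rat.small (H : Rat n X β y) (hn : 100 ≤ n) (hX : 360 * X < 1) {j : ℕ} (h2 : 2 ≤ j)
    (hj : j < n) : 2 ^ (j - 2) * y j ≤ n ^ 2 := by
  have key : ∀ j, 2 ≤ j → j < n → 2 ^ (j - 2) * y j * (2 * (n - 3).factorial : ℕ)
      ≤ y 2 * (j.factorial * (n - 1 - j).factorial : ℕ) := by
    intro t ht
    induction t, ht using Nat.le_induction with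
    | base =>
      intro _
      rw [show n - 1 - 2 = n - 3 by omega]
      simp
    | succ t ht ih =>
      intro h1
      have i1 := ih (by omega)
      have l1 := H.upp (t + 1) (by omega) h1.le
      obtain ⟨j, hj⟩ : ∃ j, n - 1 - t = j + 1 := ⟨n - 1 - t - 1, by omega⟩
      have hj' : n - 1 - (t + 1) = j := by omega
      have hn' : (n : ℝ) = t + j + 2 := by
        have : n = t + j + 2 := by omega
        exact_mod_cast this
      rw [hj, Nat.factorial_succ] at i1
      rw [hj', Nat.factorial_succ, show t + 1 - 2 = t - 2 + 1 by omega, pow_succ]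
      rw [Nat.add_sub_cancel, hn'] at l1
      have p := H.pos t (by omega) (by omega)
      have ht' : (2 : ℝ) ≤ t := by exact_mod_cast ht
      have q : (0 : ℝ) < (j + 1) := by positivity
      push_cast at i1 l1 ⊢
      refine le_of_mul_le_mul_left ?_ q
      set A : ℝ := (t.factorial : ℝ)
      set B : ℝ := (j.factorial : ℝ)
      set C : ℝ := ((n - 3).factorial : ℝ)
      set P : ℝ := 2 ^ (t - 2)
      have hC : 0 < C := by positivity
      have hP : 0 < P := by positivity
      have l2 : 2 * ((j + 1) * y (t + 1)) ≤ (t + 1) * y t := by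
        have : X * (t + 1 + 537) * y t ≤ (t + 1) / 2 * y t := by
          gcongr
          nlinarith [H.hX]
        linarith
      calc _ = (2 * ((j + 1) * y (t + 1))) * (P * (2 * C)) := by ring
        _ ≤ (t + 1) * y t * (P * (2 * C)) := by gcongr
        _ = (t + 1) * (P * y t * (2 * C)) := by ring
        _ ≤ (t + 1) * (y 2 * (A * ((j + 1) * B))) := by gcongr
        _ = _ := by ring
  have h1 := key j h2 hj
  have h3 : j.factorial * (n - 1 - j).factorial ≤ (n - 1).factorial := by
    have := Nat.factorial_mul_factorial_dvd_factorial (show j ≤ n - 1 by omega)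
    exact Nat.le_of_dvd (Nat.factorial_pos _) this
  have h4 : (n - 1).factorial ≤ n ^ 2 * (n - 3).factorial := by
    obtain ⟨k, rfl⟩ : ∃ k, n = k + 3 := ⟨n - 3, by omega⟩
    simp only [Nat.add_sub_cancel, show k + 3 - 1 = k + 1 + 1 by omega, Nat.factorial_succ]
    have : (k + 1 + 1) * (k + 1) ≤ (k + 3) ^ 2 := by nlinarith
    calc _ = (k + 1 + 1) * (k + 1) * k.factorial := by ring
      _ ≤ _ := by gcongr
  have h5 : ((j.factorial * (n - 1 - j).factorial : ℕ) : ℝ) ≤ n ^ 2 * (n - 3).factorial := by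
    exact_mod_cast h3.trans h4
  have hC : (0 : ℝ) < (n - 3).factorial := by positivity
  refine le_of_mul_le_mul_right ?_ hC
  push_cast at h1 h5
  have p2 := H.y2
  have p2' := H.y2'
  have := H.pos j h2 hj.le
  have h7 : 0 ≤ 2 ^ (j - 2) * y j * ((n - 3).factorial : ℝ) := by positivity
  have h8 : y 2 * ((j.factorial : ℝ) * (n - 1 - j).factorial) ≤ 1 * (n ^ 2 * (n - 3).factorial) := by
    gcongr
    linarith
  linarith

set_option maxRecDepth 10000 in
/-- Before the turning point `n - j = X (j + 51)` the sequence decreases, up to a constant. -/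
lemma Rat.forward (H : Rat n X β y) (hX1 : X ≤ 1) {j : ℕ} (h5 : 5 ≤ j) (hj : j + 486 ≤ n)
    (hc : X * (j + 51) < n - j) : y j ≤ 2 ^ 488 * y 5 := by
  have hj' : (j : ℝ) + 486 ≤ n := by exact_mod_cast hj
  have key : ∀ t, 5 ≤ t → t ≤ j → y t ≤ 2 ^ (t - (j - 488)) * y 5 := by
    intro t ht
    induction t, ht using Nat.le_induction with
    | base =>
      intro _
      have : (1 : ℝ) ≤ 2 ^ (5 - (j - 488)) := one_le_pow₀ (by norm_num)
      have p := H.pos 5 (by omega) (by omega)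
      nlinarith
    | succ t ht ih =>
      intro h1
      have i1 := ih (by omega)
      have u := H.upp (t + 1) (by omega) (by omega)
      rw [Nat.add_sub_cancel] at u
      push_cast at u
      have p := H.pos t (by omega) (by omega)
      have p' := H.pos (t + 1) (by omega) (by omega)
      have ht1 : (t : ℝ) + 1 ≤ j := by exact_mod_cast h1
      have hX := H.hX
      have hq : 0 < (n : ℝ) - (t + 1) := by linarith
      by_cases hc2 : t + 1 ≤ j - 488
      · have e1 : t + 1 - (j - 488) = t - (j - 488) := by omega
        have hc3 : (t : ℝ) + 1 + 488 ≤ j := by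
          have : t + 1 + 488 ≤ j := by omega
          exact_mod_cast this
        rw [e1]
        refine le_trans ?_ i1
        refine le_of_mul_le_mul_left (u.trans ?_) hq
        gcongr
        nlinarith
      · have e1 : t + 1 - (j - 488) = t - (j - 488) + 1 := by omega
        rw [e1, pow_succ]
        have : y (t + 1) ≤ 2 * y t := by
          refine le_of_mul_le_mul_left (u.trans ?_) hq
          rw [← mul_assoc]
          exact mul_le_mul_of_nonneg_right (by nlinarith) p.le
        linarith
  refine (key j h5 le_rfl).trans ?_
  have p := H.pos 5 (by omega) (by omega)
  gcongr
  · norm_num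
  · omega

/-- Beyond the turning point the sequence increases. -/
lemma Rat.backward (H : Rat n X β y) {j : ℕ} (h2 : 2 ≤ j) (hc : (n : ℝ) - j ≤ X * (j + 51)) :
    ∀ i, j ≤ i → i ≤ n → y j ≤ y i := by
  intro t ht
  induction t, ht using Nat.le_induction with
  | base => intro _; exact le_rfl
  | succ t ht ih =>
    intro h1
    refine (ih (by omega)).trans ?_
    have l := H.low (t + 1) (by omega) h1
    rw [Nat.add_sub_cancel] at l
    push_cast at l
    have h1' : (t : ℝ) + 1 ≤ n := by exact_mod_cast h1
    have ht' : (j : ℝ) ≤ t := by exact_mod_cast ht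
    have hX := H.hX
    have p := H.pos t (by omega) (by omega)
    have hq : 0 < (n : ℝ) - t := by linarith
    refine le_of_mul_le_mul_left ?_ hq
    calc (n - t) * y t ≤ X * (t + 1 + 50) * y t := by
          gcongr
          nlinarith
      _ ≤ _ := l
      _ = _ := by ring

end

section

variable {n : ℕ} {X β : ℝ} {y : ℕ → ℝ}

lemma Rat.small_far (H : Rat n X β y) (hn : 1000 ≤ n) (hX : 360 * X < 1) {j : ℕ} (hj : j < n)
    (h2 : n < 2 * j) : (n : ℝ) ^ 4 * y j ≤ 13 ^ 6 := by
  have h1 := H.small (by omega) hX (by omega) hj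
  have hp := H.pos j (by omega) hj.le
  obtain ⟨m, hm⟩ : ∃ m, m = (j - 2) / 6 := ⟨_, rfl⟩
  have e1 : (n : ℝ) ≤ 13 * m := by
    have : n ≤ 13 * m := by omega
    exact_mod_cast this
  have e2 : (m : ℝ) ≤ 2 ^ m := by exact_mod_cast Nat.lt_two_pow_self.le
  have e3 : (n : ℝ) ^ 6 ≤ 13 ^ 6 * 2 ^ (j - 2) := by
    calc (n : ℝ) ^ 6 ≤ (13 * 2 ^ m) ^ 6 := by gcongr; linarith
      _ = 13 ^ 6 * 2 ^ (m * 6) := by rw [mul_pow, ← pow_mul]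
      _ ≤ _ := by
        gcongr
        · norm_num
        · omega
  have n0 : (0 : ℝ) < n := by
    have : 0 < n := by omega
    exact_mod_cast this
  refine le_of_mul_le_mul_left ?_ (pow_pos n0 2)
  calc (n : ℝ) ^ 2 * (n ^ 4 * y j) = n ^ 6 * y j := by ring
    _ ≤ 13 ^ 6 * 2 ^ (j - 2) * y j := by gcongr
    _ = 13 ^ 6 * (2 ^ (j - 2) * y j) := by ring
    _ ≤ 13 ^ 6 * n ^ 2 := by gcongr
    _ = _ := by ring

/-- A sum is small if its outer terms are `O(1 / n)` and its inner terms are `O(1 / n ^ 2)`. -/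
lemma sum_small {K : ℝ} {n : ℕ} {y : ℕ → ℝ} (hn : 10 ≤ n) (h3 : n * y 3 ≤ K) (h4 : n * y 4 ≤ K)
    (h1 : n * y (n - 1) ≤ K) (h2 : n * y (n - 2) ≤ K)
    (hm : ∀ j, 5 ≤ j → j + 3 ≤ n → (n : ℝ) ^ 2 * y j ≤ K) (hK : 0 ≤ K) :
    n * ∑ j ∈ Finset.Ico 3 n, y j ≤ 5 * K := by
  obtain ⟨k, rfl⟩ : ∃ k, n = k + 2 := ⟨n - 2, by omega⟩
  rw [Nat.add_sub_cancel] at h2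
  rw [show k + 2 - 1 = k + 1 by omega] at h1
  rw [Finset.sum_Ico_succ_top (by omega), Finset.sum_Ico_succ_top (by omega),
    Finset.sum_eq_sum_Ico_succ_bot (by omega), Finset.sum_eq_sum_Ico_succ_bot (by omega)]
  have n0 : (0 : ℝ) < ((k + 2 : ℕ) : ℝ) := by positivity
  have h5 : ((k + 2 : ℕ) : ℝ) * ∑ j ∈ Finset.Ico (3 + 1 + 1) k, y j ≤ K := by
    have : ∑ j ∈ Finset.Ico (3 + 1 + 1) k, (((k + 2 : ℕ) : ℝ) ^ 2 * y j)
        ≤ ∑ j ∈ Finset.Ico (3 + 1 + 1) k, K := by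
      refine Finset.sum_le_sum fun j hj => ?_
      rw [Finset.mem_Ico] at hj
      exact hm j (by omega) (by omega)
    rw [← Finset.mul_sum, Finset.sum_const, Nat.card_Ico, nsmul_eq_mul] at this
    refine le_of_mul_le_mul_left ?_ n0
    calc _ = ((k + 2 : ℕ) : ℝ) ^ 2 * ∑ j ∈ Finset.Ico (3 + 1 + 1) k, y j := by ring
      _ ≤ _ := this
      _ ≤ _ := by
        gcongr
        omega
  linarith

set_option exponentiation.threshold 1000 in
/-- For large `n` all terms strictly between the ends are negligible. -/
lemma Rat.final (H : Rat n X β y) (hn : (2 : ℝ) ^ 600 ≤ n) :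
    X ≤ 1 ∧ n * y (n - 1) ≤ 360 * y n ∧ ∑ j ∈ Finset.Ico 3 n, y j ≤ 1 / 10 ^ 8 := by
  obtain ⟨B, hB⟩ : ∃ B : ℝ, B = 2 ^ 488 := ⟨_, rfl⟩
  obtain ⟨K, hK⟩ : ∃ K : ℝ, K = 2 ^ 512 := ⟨_, rfl⟩
  have hB1 : 1 ≤ B := by rw [hB]; norm_num
  have hKB : B * (11 * 10 ^ 6) ≤ K := by rw [hB, hK]; norm_num
  have hnK : K * 10 ^ 10 ≤ n := le_trans (by rw [hK]; norm_num) hn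
  clear hn hK
  have hn1 : (10 : ℝ) ^ 10 ≤ n := by nlinarith
  have hn2 : 10 ^ 10 ≤ n := by exact_mod_cast hn1
  have hX := H.X_le (by omega)
  have hX0 := H.hX
  have fw : ∀ {j : ℕ}, 5 ≤ j → j + 486 ≤ n → X * (j + 51) < n - j → y j ≤ B * y 5 := by
    rw [hB]; exact H.forward hX
  clear hB
  have n0 : (0 : ℝ) < n := by linarith
  have p2 := H.y2'
  have p2' := H.y2
  have p3 := H.pos 3 (by omega) (by omega)
  have p4 := H.pos 4 (by omega) (by omega)
  have p5 := H.pos 5 (by omega) (by omega)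
  have q3 : n * y 3 ≤ 9 := by
    have := H.upp 3 (by omega) (by omega)
    norm_num at this
    have : X * (3 + 537) * y 2 ≤ 1 * (3 + 537) * 0.0076 := by gcongr
    nlinarith
  have q4 : n ^ 2 * y 4 ≤ 10 ^ 4 := by
    have := H.upp 4 (by omega) (by omega)
    norm_num at this
    have h1 : X * 541 * y 3 ≤ 1 * 541 * y 3 := by gcongr
    have h2 : n * y 4 ≤ 2 * (541 * y 3) := by nlinarith
    calc n ^ 2 * y 4 = n * (n * y 4) := by ring
      _ ≤ n * (2 * (541 * y 3)) := by gcongr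
      _ ≤ _ := by linarith
  have q5 : n ^ 3 * y 5 ≤ 11 * 10 ^ 6 := by
    have := H.upp 5 (by omega) (by omega)
    norm_num at this
    have h1 : X * 542 * y 4 ≤ 1 * 542 * y 4 := by gcongr
    have h2 : n * y 5 ≤ 2 * (542 * y 4) := by nlinarith
    calc n ^ 3 * y 5 = n ^ 2 * (n * y 5) := by ring
      _ ≤ n ^ 2 * (2 * (542 * y 4)) := by gcongr
      _ ≤ _ := by linarith
  have r4 : n * y 4 ≤ K := by nlinarith
  have fw' : ∀ {j : ℕ}, 5 ≤ j → j + 486 ≤ n → X * (j + 51) < n - j → (n : ℝ) ^ 2 * y j ≤ K := by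
    intro j h1 h2 h3
    have := fw h1 h2 h3
    have n2 : (n : ℝ) ^ 2 ≤ n ^ 3 := by
      apply pow_le_pow_right₀ (by linarith) (by omega)
    calc (n : ℝ) ^ 2 * y j ≤ n ^ 3 * (B * y 5) := by
          have := H.pos j (by omega) (by omega)
          gcongr
      _ = B * (n ^ 3 * y 5) := by ring
      _ ≤ B * (11 * 10 ^ 6) := by gcongr
      _ ≤ K := hKB
  have pn := H.pos n (by omega) le_rfl
  have yn := H.yn
  have b0 := H.β0
  have b1 := H.β1
  suffices h : n * y (n - 1) ≤ 360 * y n ∧ n * y (n - 1) ≤ K ∧ n * y (n - 2) ≤ K ∧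
      ∀ j, 5 ≤ j → j + 3 ≤ n → (n : ℝ) ^ 2 * y j ≤ K by
    refine ⟨hX, h.1, ?_⟩
    have := sum_small (by omega) (by linarith) r4 h.2.1 h.2.2.1 h.2.2.2 (by linarith)
    refine le_of_mul_le_mul_left (this.trans ?_) n0
    linarith
  by_cases hc : 360 * X < 1
  · have far : ∀ {j : ℕ}, j < n → n < 2 * j →
        n * y j ≤ 1 ∧ (n : ℝ) ^ 2 * y j ≤ 1 := fun {j} h1 h2 => by
      have h3 := H.small_far (by omega) hc h1 h2
      have h4 := H.pos j (by omega) (by omega)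
      have h5 : (n : ℝ) ^ 2 * y j ≤ 1 := by
        refine le_of_mul_le_mul_left ?_ (pow_pos n0 2)
        calc _ = (n : ℝ) ^ 4 * y j := by ring
          _ ≤ 13 ^ 6 := h3
          _ ≤ _ := by nlinarith
      have h6 : 0 < n * y j := by positivity
      exact ⟨by nlinarith, h5⟩
    refine ⟨?_, ?_, ?_, fun j h1 h2 => ?_⟩
    · have := (far (j := n - 1) (by omega) (by omega)).1
      nlinarith
    · have := (far (j := n - 1) (by omega) (by omega)).1
      linarith
    · have := (far (j := n - 2) (by omega) (by omega)).1
      linarith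
    · by_cases h3 : n < 2 * j
      · have := (far (by omega) h3).2
        linarith
      · have h4 : 2 * (j : ℝ) ≤ n := by exact_mod_cast not_lt.1 h3
        exact fw' h1 (by omega) (by nlinarith)
  · push Not at hc
    have yn3 : y n ≤ 2.8 := by nlinarith
    have c2 : ((n - 1 : ℕ) : ℝ) = n - 1 := by push_cast [show 1 ≤ n by omega]; ring
    have c3 : ((n - 2 : ℕ) : ℝ) = n - 2 := by push_cast [show 2 ≤ n by omega]; ring
    have l1 := H.low n (by omega) le_rfl
    have l2 := H.low (n - 1) (by omega) (by omega)
    have l3 := H.low (n - 2) (by omega) (by omega)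
    rw [c2, show n - 1 - 1 = n - 2 by omega] at l2
    rw [c3, show n - 2 - 1 = n - 3 by omega] at l3
    have a1 := H.pos (n - 1) (by omega) (by omega)
    have a2 := H.pos (n - 2) (by omega) (by omega)
    have a3 := H.pos (n - 3) (by omega) (by omega)
    have m1 : n * y (n - 1) ≤ 360 * y n := by
      have : n * y (n - 1) ≤ 360 * X * (n * y (n - 1)) := le_mul_of_one_le_left (by positivity) hc
      have : 0 < X * y (n - 1) := by positivity
      linarith
    have m2 : n * y (n - 2) ≤ 720 * y (n - 1) := by
      have : n * y (n - 2) ≤ 360 * X * (n * y (n - 2)) := le_mul_of_one_le_left (by positivity) hc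
      have : 0 < X * y (n - 2) := by positivity
      linarith
    have m3 : n * y (n - 3) ≤ 1080 * y (n - 2) := by
      have : n * y (n - 3) ≤ 360 * X * (n * y (n - 3)) := le_mul_of_one_le_left (by positivity) hc
      have : 0 < X * y (n - 3) := by positivity
      linarith
    have m4 : (n : ℝ) ^ 2 * y (n - 3) ≤ K := by
      have : n * (n * y (n - 3)) ≤ n * (1080 * y (n - 2)) := by gcongr
      nlinarith
    refine ⟨m1, by linarith, by nlinarith, fun j h1 h2 => ?_⟩
    by_cases h3 : (n : ℝ) - j ≤ X * (j + 51)
    · have := H.backward (by omega) h3 (n - 3) (by omega) (by omega)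
      refine le_trans ?_ m4
      gcongr
    · push Not at h3
      have hj : (j : ℝ) + 3 ≤ n := by exact_mod_cast h2
      have : (j : ℝ) + 51 ≤ 360 * X * (j + 51) := le_mul_of_one_le_left (by positivity) hc
      have h5 : (j : ℝ) + 486 ≤ n := by linarith
      exact fw' h1 (by exact_mod_cast h5) h3

end

section

variable {h κ ρ ν S L β : ℝ} {e : ℕ → ℝ} {n : ℕ}

/-- The end point `Y` of the barrier and the bounds valid there. -/
structure EndPt (L β : ℝ) (e : ℕ → ℝ) (n : ℕ) (Y : ℝ) : Prop where
  pos : 0 < Y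
  eq : e n * Y ^ (n - 1) = L
  le : β * Y ≤ L
  pen : n * e (n - 1) ≤ 360 * (e n * Y)
  sum : ∑ j ∈ Finset.Ico 3 n, e j * Y ^ (j - 2) ≤ 1 / 10 ^ 8

lemma Rec.rat (H : Rec h κ ρ ν S L β e n) (hS : S < (n + 2) * L) (hn : 3 ≤ n)
    {Y : ℝ} (hY : 0 < Y) (hE : e n * Y ^ (n - 1) = L) :
    Rat n (β * Y / L) β fun j => e j * Y ^ (j - 2) where
  hX := by have := H.β0; have := H.L0; positivity
  β0 := by linarith [H.base.β0]
  β1 := by linarith [H.base.β1]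
  pos j h1 h2 := by have := H.pos h1 h2; positivity
  y2 := by simp; linarith [H.base.e20]
  y2' := by simp; linarith [H.base.e21]
  yn := by
    have := H.L0
    have e1 : n - 1 = n - 2 + 1 := by omega
    rw [e1, pow_succ] at hE
    rw [div_mul_eq_mul_div, div_eq_iff this.ne', ← hE]
    ring
  low t h1 h2 := by
    have hL := H.L0
    have s := (H.steps t h1 h2).low
    have p := H.pos (by omega) h2
    have e1 : t - 2 = t - 1 - 2 + 1 := by omega
    rw [e1, pow_succ]
    have hP : 0 < Y ^ (t - 1 - 2) * Y := by positivity
    refine le_of_mul_le_mul_left ?_ hL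
    calc _ = (β * (t + 50) * e (t - 1)) * (Y ^ (t - 1 - 2) * Y) := by field_simp
      _ ≤ ((S - (t + 1) * L) * e t) * (Y ^ (t - 1 - 2) * Y) := by gcongr
      _ ≤ ((n + 1 - t) * L * e t) * (Y ^ (t - 1 - 2) * Y) := by gcongr; linarith
      _ = _ := by ring
  upp t h1 h2 := by
    have hL := H.L0
    have s := H.upp h1 h2
    have p := H.pos (by omega) h2
    have D := H.D0
    have e1 : t - 2 = t - 1 - 2 + 1 := by omega
    rw [e1, pow_succ]
    have hP : 0 < Y ^ (t - 1 - 2) * Y := by positivity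
    refine le_of_mul_le_mul_left ?_ hL
    calc _ = ((n - t) * L * e t) * (Y ^ (t - 1 - 2) * Y) := by ring
      _ ≤ ((S - (t + 1) * L) * e t) * (Y ^ (t - 1 - 2) * Y) := by gcongr; linarith
      _ ≤ (β * (t + 537) * e (t - 1)) * (Y ^ (t - 1 - 2) * Y) := by gcongr
      _ = _ := by field_simp

lemma Rec.endPt (H : Rec h κ ρ ν S L β e n) (hS : S < (n + 2) * L) (hn : (2 : ℝ) ^ 600 ≤ n) :
    ∃ Y, EndPt L β e n Y := by
  have hn3 : 3 ≤ n := by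
    have : (3 : ℝ) ≤ 2 ^ 600 := by
      calc (3 : ℝ) ≤ 2 ^ 2 := by norm_num
        _ ≤ _ := pow_le_pow_right₀ (by norm_num) (by norm_num)
    exact_mod_cast this.trans hn
  have hL := H.L0
  have pn := H.pos (by omega) le_rfl
  have pq : 0 < L / e n := by positivity
  obtain ⟨Y, hY, hE⟩ : ∃ Y : ℝ, 0 < Y ∧ e n * Y ^ (n - 1) = L := by
    refine ⟨(L / e n) ^ (((n - 1 : ℕ) : ℝ)⁻¹), Real.rpow_pos_of_pos pq _, ?_⟩
    rw [Real.rpow_inv_natCast_pow pq.le (by omega)]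
    field_simp
  have R := H.rat hS hn3 hY hE
  obtain ⟨f1, f2, f3⟩ := R.final hn
  refine ⟨Y, hY, hE, by rwa [div_le_one hL] at f1, ?_, f3⟩
  have e1 : n - 2 = n - 1 - 2 + 1 := by omega
  simp only [e1, pow_succ] at f2
  have hP : 0 < Y ^ (n - 1 - 2) := by positivity
  refine le_of_mul_le_mul_right ?_ hP
  linarith

end

/-! ### Residual of the Taylor polynomial -/

section

variable {h κ ρ ν S L β : ℝ} {e : ℕ → ℝ} {n : ℕ}

/-- Near the last index the ratios `e t / e (t - 1)` increase because of the denominators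
`S - (t + 1) L`. -/
lemma Rec.qm_top (H : Rec h κ ρ ν S L β e n) (hS : S < (n + 2) * L) {t u : ℕ} (ht : 3 ≤ t)
    (hu : u < n) (htu : t + n ≤ 2 * u) (h9 : 924 ≤ u) :
    e t * e (u - 1) ≤ e u * e (t - 1) := by
  have s1 := H.upp ht (by omega)
  have s2 := (H.steps u (by omega) hu.le).low
  have p0 := H.pos (m := t) (by omega) (by omega)
  have p1 := H.pos (m := u - 1) (by omega) (by omega)
  have p2 := H.pos (m := u) (by omega) (by omega)
  have p3 := H.pos (m := t - 1) (by omega) (by omega)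
  have hL := H.L0
  have hβ := H.β0
  have D := H.D0
  have c1 : (t : ℝ) + n ≤ 2 * u := by exact_mod_cast htu
  have c2 : (924 : ℝ) ≤ u := by exact_mod_cast h9
  have c3 : (u : ℝ) + 1 ≤ n := by exact_mod_cast hu
  have c4 : (t : ℝ) + 1 ≤ u := by linarith
  have hP : 0 < S - (t + 1) * L := by nlinarith
  have hQ : 3 * (S - (u + 1) * L) ≤ 2 * (S - (t + 1) * L) := by nlinarith
  have hc : 0 < (S - (t + 1) * L) * (β * (u + 50)) := by positivity
  refine le_of_mul_le_mul_left ?_ hc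
  calc _ = ((S - (t + 1) * L) * e t) * (β * (u + 50) * e (u - 1)) := by ring
    _ ≤ (β * (t + 537) * e (t - 1)) * ((S - (u + 1) * L) * e u) := by
      apply mul_le_mul s1 s2 (by positivity) (by positivity)
    _ = ((t + 537) * (S - (u + 1) * L)) * (β * (e u * e (t - 1))) := by ring
    _ ≤ ((S - (t + 1) * L) * (u + 50)) * (β * (e u * e (t - 1))) := by
      gcongr ?_ * _
      nlinarith
    _ = _ := by ring

/-- `e` cut off to `[2, n)`. -/
def cut (e : ℕ → ℝ) (n j : ℕ) : ℝ := if 2 ≤ j ∧ j < n then e j else 0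

lemma convT_add (e : ℕ → ℝ) (n : ℕ) {i : ℕ} (hi : 1 ≤ i) :
    convT e n (n + i) = ∑ j ∈ Finset.Ico i (n + 1), e j * e (n + i - j) := by
  unfold convT
  congr 1
  ext j
  simp only [Finset.mem_filter, Finset.mem_Ico]
  omega

/-- The part of the convolution square beyond the index `n`. -/
lemma Rec.conv_high (H : Rec h κ ρ ν S L β e n) (hS : S < (n + 2) * L) (hn : 2000 ≤ n) {i : ℕ}
    (h2 : 2 ≤ i) (hi : i < n) :
    convT e n (n + i) ≤ 2 * (e n * cut e n i) + n * (e (n - 1) * cut e n (i + 1)) := by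
  rw [convT_add _ _ (by omega), Finset.sum_Ico_succ_top (by omega),
    Finset.sum_eq_sum_Ico_succ_bot (by omega), Nat.add_sub_cancel, Nat.add_sub_cancel_left]
  have hci : cut e n i = e i := if_pos ⟨h2, hi⟩
  rw [hci]
  have key : ∀ j ∈ Finset.Ico (i + 1) n, e j * e (n + i - j) ≤ e (n - 1) * cut e n (i + 1) := by
    have half : ∀ j, i + 1 ≤ j → j ≤ n + i - j → e j * e (n + i - j) ≤ e (i + 1) * e (n - 1) := by
      intro j h1 h2
      have := pair_le (e := e) (i := i + 1) (j := n + i - j) (c := j - (i + 1))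
        (fun k h3 h4 => H.pos (by omega) (by omega)) (by omega) (fun d hd => by
          have := H.qm_top hS (t := i + 1 + d + 1) (u := n + i - j + d + 1) (by omega) (by omega)
            (by omega) (by omega)
          exact this)
      rwa [show i + 1 + (j - (i + 1)) = j by omega,
        show n + i - j + (j - (i + 1)) = n - 1 by omega] at this
    intro j hj
    rw [Finset.mem_Ico] at hj
    have hc : cut e n (i + 1) = e (i + 1) := if_pos ⟨by omega, by omega⟩
    rw [hc, mul_comm (e (n - 1))]
    by_cases h1 : j ≤ n + i - j
    · exact half j hj.1 h1
    · have := half (n + i - j) (by omega) (by omega)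
      rwa [show n + i - (n + i - j) = j by omega, mul_comm (e (n + i - j))] at this
  have hs := Finset.sum_le_card_nsmul _ _ _ key
  rw [Nat.card_Ico, nsmul_eq_mul] at hs
  have hc0 : 0 ≤ cut e n (i + 1) := by
    unfold cut
    split_ifs with hc
    · exact (H.pos (by omega) (by omega)).le
    · exact le_rfl
  have p1 := H.pos (m := n - 1) (by omega) (by omega)
  have hcard : ((n - (i + 1) : ℕ) : ℝ) ≤ n := by
    have : n - (i + 1) ≤ n := by omega
    exact_mod_cast this
  have : ((n - (i + 1) : ℕ) : ℝ) * (e (n - 1) * cut e n (i + 1))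
      ≤ n * (e (n - 1) * cut e n (i + 1)) := by gcongr
  linarith

lemma Rec.conv_nonneg (H : Rec h κ ρ ν S L β e n) (m : ℕ) : 0 ≤ convT e n m := by
  refine Finset.sum_nonneg fun i hi => ?_
  have p : ∀ j, 1 ≤ j → j ≤ n → 0 ≤ e j := fun j h1 h2 => by
    rcases Nat.eq_or_lt_of_le h1 with rfl | h3
    · exact H.e1
    · exact (H.pos h3 h2).le
  simp only [Finset.mem_filter, Finset.mem_Ico] at hi
  exact mul_nonneg (p _ (by omega) (by omega)) (p _ (by omega) (by omega))

lemma Rec.conv_top (H : Rec h κ ρ ν S L β e n) (hS : S < (n + 2) * L) (hn : 2000 ≤ n)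
    (hL : 2 * L ≤ β) (he1 : e 1 ≤ 1 / 10) : convT e n n ≤ e (n - 1) := by
  have hpeel : convg e 1 n = _ := convg_peel e (show 2 * 1 < n by omega)
  rw [convT_of_le (by omega), conv1_eq, hpeel]
  have h1 := H.convg_le (m := n) (a := 2) (T := n) (fun j h1 h2 => H.steps j h1 (by omega)) le_rfl
    (by norm_num) (by omega) (by omega)
  have h2 := (H.steps (n - 1) (by omega) (by omega)).low
  have c2 : ((n - 1 : ℕ) : ℝ) = n - 1 := by push_cast [show 1 ≤ n by omega]; ring
  rw [c2, show n - 1 - 1 = n - 2 by omega] at h2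
  have p1 := H.pos (m := n - 1) (by omega) (by omega)
  have p2 := H.pos (m := n - 2) (by omega) (by omega)
  have hβ := H.β0
  have h3 : n * e (n - 2) ≤ e (n - 1) := by
    refine le_of_mul_le_mul_left ?_ hβ
    calc _ ≤ β * (n - 1 + 50) * e (n - 2) := by nlinarith [mul_pos hβ p2]
      _ ≤ _ := h2
      _ ≤ _ := by gcongr; linarith
  have h4 := H.base.e20
  have h5 := H.base.e21
  have h6 : e 2 * (n * e (n - 2)) ≤ e 2 * e (n - 1) := by gcongr; linarith
  have h7 : e 1 * e (n - 1) ≤ 1 / 10 * e (n - 1) := by gcongr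
  have h8 : e 2 * e (n - 1) ≤ 76 / 10000 * e (n - 1) := by gcongr; linarith
  norm_num at h1 ⊢
  linarith

end

section

variable {h κ ρ ν S L β : ℝ} {e : ℕ → ℝ} {n : ℕ} {Y₁ Y : ℝ}

/-- The terms of the barrier at its end point, strictly between the linear and the last one. -/
def endT (e : ℕ → ℝ) (n : ℕ) (Y₁ : ℝ) (j : ℕ) : ℝ := cut e n j * Y₁ ^ (j - 2)

/-- The bound for the odd terms of the convolution square, relative to `e n * Y ^ (n + 1)`. -/
def endD (e : ℕ → ℝ) (n : ℕ) (Y₁ : ℝ) (j : ℕ) : ℝ := 2 * endT e n Y₁ j + 360 * endT e n Y₁ (j + 1)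

lemma Rec.cut_nonneg (H : Rec h κ ρ ν S L β e n) (j : ℕ) : 0 ≤ cut e n j := by
  unfold cut
  split_ifs with hc
  · exact (H.pos (by omega) (by omega)).le
  · exact le_rfl

lemma Rec.endT_nonneg (H : Rec h κ ρ ν S L β e n) (hY : 0 < Y₁) (j : ℕ) : 0 ≤ endT e n Y₁ j :=
  mul_nonneg (H.cut_nonneg j) (by positivity)

lemma Rec.endD_nonneg (H : Rec h κ ρ ν S L β e n) (hY : 0 < Y₁) (j : ℕ) : 0 ≤ endD e n Y₁ j := by
  have := H.endT_nonneg hY j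
  have := H.endT_nonneg hY (j + 1)
  unfold endD
  positivity

lemma endD_zero {j : ℕ} (hj : n ≤ j) : endD e n Y₁ j = 0 := by
  unfold endD endT cut
  rw [if_neg (by omega), if_neg (by omega)]
  simp

lemma Rec.sum_endT (H : Rec h κ ρ ν S L β e n) (E : EndPt L β e n Y₁) (s : Finset ℕ)
    (hs : ∀ j ∈ s, 3 ≤ j) : ∑ j ∈ s, endT e n Y₁ j ≤ 1 / 10 ^ 8 := by
  refine le_trans ?_ E.sum
  calc _ ≤ ∑ j ∈ s ∪ Finset.Ico 3 n, endT e n Y₁ j :=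
        Finset.sum_le_sum_of_subset_of_nonneg Finset.subset_union_left
          fun j _ _ => H.endT_nonneg E.pos j
    _ = ∑ j ∈ Finset.Ico 3 n, endT e n Y₁ j := by
      refine (Finset.sum_subset Finset.subset_union_right fun j hj hj' => ?_).symm
      have h3 : 3 ≤ j := by
        rcases Finset.mem_union.1 hj with h | h
        · exact hs j h
        · exact absurd h hj'
      rw [Finset.mem_Ico] at hj'
      unfold endT cut
      rw [if_neg (by omega), zero_mul]
    _ = _ := by
      refine Finset.sum_congr rfl fun j hj => ?_
      rw [Finset.mem_Ico] at hj
      unfold endT cut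
      rw [if_pos (by omega)]

lemma Rec.sum_endT' (H : Rec h κ ρ ν S L β e n) (E : EndPt L β e n Y₁) (s : Finset ℕ) :
    ∑ j ∈ s, endT e n Y₁ j ≤ 1 / 100 := by
  rw [← Finset.sum_filter_add_sum_filter_not s (fun j => 3 ≤ j)]
  have h1 := H.sum_endT E (s.filter fun j => 3 ≤ j) (by simp)
  have h2 : ∑ j ∈ s.filter (fun j => ¬ 3 ≤ j), endT e n Y₁ j
      ≤ ∑ j ∈ Finset.range 3, endT e n Y₁ j := by
    refine Finset.sum_le_sum_of_subset_of_nonneg (fun j hj => ?_)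
      fun j _ _ => H.endT_nonneg E.pos j
    simp only [Finset.mem_filter, Finset.mem_range] at hj ⊢
    omega
  have h3 : ∑ j ∈ Finset.range 3, endT e n Y₁ j ≤ e 2 := by
    have := H.e2
    simp only [Finset.sum_range_succ, Finset.sum_range_zero, endT, cut]
    by_cases h : 2 < n <;> simp [h, this.le]
  have := H.base.e21
  linarith

/-- Each term of the convolution square beyond `n` is either nonnegative with its sign or bounded
by `endD`. The extreme term `e n ^ 2` belongs to the even index `2 n`. -/
lemma Rec.sign (H : Rec h κ ρ ν S L β e n) (hS : S < (n + 2) * L) (hn : 2000 ≤ n) (ho : Odd n)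
    (E : EndPt L β e n Y₁) (hY : 0 < Y) (hY1 : Y ≤ Y₁) {i : ℕ} (hi : 1 ≤ i) :
    -((-1) ^ (n + i) * convT e n (n + i) * Y ^ (n + i - 1)) ≤ e n * Y ^ (n + 1) * endD e n Y₁ i := by
  have pn := H.pos (m := n) (by omega) le_rfl
  have d0 := H.endD_nonneg E.pos i
  have hr : 0 ≤ e n * Y ^ (n + 1) * endD e n Y₁ i := by positivity
  have c0 := H.conv_nonneg (n + i)
  rcases Nat.even_or_odd i with he | ho'
  · rw [(ho.add_even he).neg_one_pow]
    by_cases h1 : i < n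
    · have i2 : 2 ≤ i := by
        obtain ⟨r, hr⟩ := he
        omega
      have hc := H.conv_high hS hn i2 h1
      have e1 : n + i - 1 = n + 1 + (i - 2) := by omega
      have e2 : i + 1 - 2 = i - 2 + 1 := by omega
      have g0 := H.cut_nonneg i
      have g1 := H.cut_nonneg (i + 1)
      have p1 := H.pos (m := n - 1) (by omega) (by omega)
      have hE := E.pos
      rw [e1, pow_add]
      have hP : Y ^ (i - 2) ≤ Y₁ ^ (i - 2) := by gcongr
      calc _ = convT e n (n + i) * (Y ^ (n + 1) * Y ^ (i - 2)) := by ring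
        _ ≤ (2 * (e n * cut e n i) + n * (e (n - 1) * cut e n (i + 1)))
            * (Y ^ (n + 1) * Y₁ ^ (i - 2)) := by gcongr
        _ = (2 * (e n * cut e n i) + n * e (n - 1) * cut e n (i + 1))
            * (Y ^ (n + 1) * Y₁ ^ (i - 2)) := by ring
        _ ≤ (2 * (e n * cut e n i) + 360 * (e n * Y₁) * cut e n (i + 1))
            * (Y ^ (n + 1) * Y₁ ^ (i - 2)) := by
          have := E.pen
          gcongr
        _ = _ := by
          unfold endD endT
          rw [e2, pow_succ]
          ring
    · have i3 : n < i := by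
        rcases Nat.lt_or_ge n i with h | h
        · exact h
        · have : i = n := by omega
          exact absurd (this ▸ he) (Nat.not_even_iff_odd.2 ho)
      have : convT e n (n + i) = 0 := by
        rw [convT_add _ _ hi, Finset.Ico_eq_empty (by omega), Finset.sum_empty]
      rw [this]
      simpa using hr
  · rw [(ho.add_odd ho').neg_one_pow]
    refine le_trans ?_ hr
    have : 0 ≤ convT e n (n + i) * Y ^ (n + i - 1) := by positivity
    linarith

set_option maxHeartbeats 1000000 in
/-- The coefficients beyond `n + 1`. -/
lemma Rec.term (H : Rec h κ ρ ν S L β e n) (hS : S < (n + 2) * L) (hn : 2000 ≤ n) (ho : Odd n)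
    (E : EndPt L β e n Y₁) (hY : 0 < Y) (hY1 : Y ≤ Y₁) (hYs : Y ≤ 1) {k : ℕ} (hk : 1 ≤ k) :
    -(3 * n * (e n * Y ^ (n + 1))
      * (8 * endD e n Y₁ (k + 2) + Y * endD e n Y₁ (k + 1) + Y * endD e n Y₁ k))
    ≤ (polyN h κ ρ ν (polyE e n)).coeff (n + 1 + k) * (-Y) ^ (n + 1 + k) := by
  have pn := H.pos (m := n) (by omega) le_rfl
  have ha : 0 < e n * Y ^ (n + 1) := by positivity
  obtain ⟨a, hae⟩ : ∃ a, a = e n * Y ^ (n + 1) := ⟨_, rfl⟩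
  have s2 := H.sign hS hn ho E hY hY1 (i := k + 2) (by omega)
  have s1 := H.sign hS hn ho E hY hY1 (i := k + 1) (by omega)
  have s0 := H.sign hS hn ho E hY hY1 (i := k) hk
  have d2 := H.endD_nonneg E.pos (k + 2)
  have d1 := H.endD_nonneg E.pos (k + 1)
  have d0 := H.endD_nonneg E.pos k
  rw [polyN_coeff _ _ _ _ _ _ (by omega) (by rw [polyE_coeff]; simp [H.e0]),
    polyE_sq_coeff H.e0, polyE_sq_coeff H.e0, polyE_sq_coeff H.e0]
  simp only [polyE_coeff]
  rw [if_neg (show ¬ n + 1 + k - 1 ≤ n by omega), if_neg (show ¬ n + 1 + k ≤ n by omega),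
    if_neg (show n + 1 + k ≠ 2 by omega)]
  rw [show n + (k + 2) - 1 = n + 1 + k by omega, ← hae] at s2
  rw [show n + (k + 1) - 1 = n + k by omega, ← hae] at s1
  rw [← hae] at s0
  rw [← hae]
  rw [← hae] at ha
  have z2 : ((n + 1 + k : ℕ) + 1 : ℝ) * endD e n Y₁ (k + 2) ≤ 3 * n * endD e n Y₁ (k + 2) := by
    by_cases hc : k + 2 < n
    · gcongr
      have : n + 1 + k + 1 ≤ 3 * n := by omega
      exact_mod_cast this
    · rw [endD_zero (by omega)]; simp
  have z1 : ((n + 1 + k : ℕ) : ℝ) * endD e n Y₁ (k + 1) ≤ 3 * n * endD e n Y₁ (k + 1) := by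
    by_cases hc : k + 1 < n
    · gcongr
      have : n + 1 + k ≤ 3 * n := by omega
      exact_mod_cast this
    · rw [endD_zero (by omega)]; simp
  have z0 : ((n + 1 + k : ℕ) : ℝ) * endD e n Y₁ k ≤ 3 * n * endD e n Y₁ k := by
    by_cases hc : k < n
    · gcongr
      have : n + 1 + k ≤ 3 * n := by omega
      exact_mod_cast this
    · rw [endD_zero (by omega)]; simp
  have m0 : (2000 : ℝ) ≤ ((n + 1 + k : ℕ) : ℝ) := by
    have : 2000 ≤ n + 1 + k := by omega
    exact_mod_cast this
  have hν : 0 < ν := by linarith [H.base.ν0]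
  have hν1 : ν < 1 / 20 := by linarith [H.base.ν1]
  have hρ : 0 < ρ := by linarith [H.base.ρ0]
  have hρ1 : ρ < 16 := by linarith [H.base.ρ1]
  have hκ : 0 < κ := by linarith [H.base.κ0]
  have hνρ : ν * ρ < 8 / 10 := by nlinarith
  have hνρ0 : 0 < ν * ρ := by positivity
  -- the linear term has the right sign
  have lin : 0 ≤ -(κ * (5 / 6 * ν * (((n + 1 + k : ℕ) : ℝ) - 2) - 2 * ν)
      * (if n + 1 + k - 2 ≤ n then e (n + 1 + k - 2) else 0)) * (-Y) ^ (n + 1 + k) := by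
    by_cases hc : k = 1
    · subst hc
      rw [if_pos (by omega), show n + 1 + 1 - 2 = n by omega,
        (show Odd (n + 1 + 1) from ho.add_one.add_one).neg_pow]
      have : 0 ≤ 5 / 6 * ν * (((n + 1 + 1 : ℕ) : ℝ) - 2) - 2 * ν := by nlinarith
      have : 0 ≤ κ * (5 / 6 * ν * (((n + 1 + 1 : ℕ) : ℝ) - 2) - 2 * ν) * e n * Y ^ (n + 1 + 1) := by
        positivity
      linarith
    · rw [if_neg (by omega)]; simp
  obtain ⟨M, hM⟩ : ∃ M : ℝ, M = ((n + 1 + k : ℕ) : ℝ) := ⟨_, rfl⟩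
  rw [← hM] at z2 z1 z0 m0 lin ⊢
  obtain ⟨F2, hF2⟩ : ∃ F, F = (-1) ^ (n + (k + 2)) * convT e n (n + (k + 2)) * Y ^ (n + 1 + k) :=
    ⟨_, rfl⟩
  obtain ⟨F1, hF1⟩ : ∃ F, F = (-1) ^ (n + (k + 1)) * convT e n (n + (k + 1)) * Y ^ (n + k) :=
    ⟨_, rfl⟩
  obtain ⟨F0, hF0⟩ : ∃ F, F = (-1) ^ (n + k) * convT e n (n + k) * Y ^ (n + k - 1) := ⟨_, rfl⟩
  rw [← hF2] at s2
  rw [← hF1] at s1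
  rw [← hF0] at s0
  have t2 : -(3 * n * a * (8 * endD e n Y₁ (k + 2))) ≤ ρ / 2 * (M + 1) * F2 := by
    have : ρ / 2 * (M + 1) * (-F2) ≤ ρ / 2 * (M + 1) * (a * endD e n Y₁ (k + 2)) := by gcongr
    have : ρ / 2 * (M + 1) * (a * endD e n Y₁ (k + 2)) ≤ 8 * (M + 1) * (a * endD e n Y₁ (k + 2)) := by
      gcongr; linarith
    have := mul_le_mul_of_nonneg_left z2 ha.le
    linarith
  have cc (C F d : ℝ) (hC0 : 0 ≤ C) (hC : C ≤ M) (hs : -F ≤ a * d) (hz : M * d ≤ 3 * n * d)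
      (hd : 0 ≤ d) : -(3 * n * a * (Y * d)) ≤ C * F * Y := by
    have h1 : C * (-F) * Y ≤ C * (a * d) * Y := by gcongr
    have h2 : C * (a * d) * Y ≤ M * (a * d) * Y := by gcongr
    have h3 : (a * Y) * (M * d) ≤ (a * Y) * (3 * n * d) := by gcongr
    linarith
  have t1 := cc ((1 + 5 / 6 * ν * ρ) / 2 * M - 2 * ν * (1 + ρ)) F1 _ (by nlinarith) (by nlinarith)
    s1 z1 d1
  have t0 := cc ((5 / 12 * ν * (M - 1) - 5 / 3 * ν)) F0 _ (by nlinarith) (by nlinarith) s0 z0 d0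
  have t0' : -(3 * n * a * (Y * endD e n Y₁ k))
      ≤ (5 / 12 * ν * (M - 1) - 5 / 3 * ν) * F0 * Y * Y := by
    have : 0 ≤ 3 * n * a * (Y * endD e n Y₁ k) := by positivity
    have h2 := mul_le_mul_of_nonneg_right t0 hY.le
    nlinarith
  have f2 : convT e n (n + 1 + k + 1) * (-Y) ^ (n + 1 + k) = -F2 := by
    rw [hF2, show n + 1 + k + 1 = n + (k + 2) by omega, neg_pow Y,
      show n + (k + 2) = n + 1 + k + 1 by omega, pow_succ (-1 : ℝ)]
    ring
  have f1 : convT e n (n + 1 + k) * (-Y) ^ (n + 1 + k) = F1 * Y := by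
    rw [hF1, show n + (k + 1) = n + 1 + k by omega, neg_pow Y,
      show n + 1 + k = n + k + 1 by omega, pow_succ Y]
    ring
  have f0 : convT e n (n + 1 + k - 1) * (-Y) ^ (n + 1 + k) = -(F0 * Y * Y) := by
    rw [hF0, show n + 1 + k - 1 = n + k by omega, neg_pow Y,
      show n + 1 + k = n + k + 1 by omega, pow_succ (-1 : ℝ), pow_succ Y (n + k)]
    obtain ⟨q, hq⟩ : ∃ q, n + k = q + 1 := ⟨n + k - 1, by omega⟩
    rw [hq, Nat.add_sub_cancel, pow_succ Y]
    ring
  calc _ ≤ -(κ * (5 / 6 * ν * (M - 2) - 2 * ν)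
      * (if n + 1 + k - 2 ≤ n then e (n + 1 + k - 2) else 0)) * (-Y) ^ (n + 1 + k)
      + ρ / 2 * (M + 1) * F2 + ((1 + 5 / 6 * ν * ρ) / 2 * M - 2 * ν * (1 + ρ)) * F1 * Y
      + (5 / 12 * ν * (M - 1) - 5 / 3 * ν) * F0 * Y * Y := by linarith
    _ = _ := by
      linear_combination (ρ / 2 * (M + 1)) * f2
        - ((1 + 5 / 6 * ν * ρ) / 2 * M - 2 * ν * (1 + ρ)) * f1
        + (5 / 12 * ν * (M - 1) - 5 / 3 * ν) * f0

end

section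

variable {h κ ρ ν S L β : ℝ} {e : ℕ → ℝ} {n : ℕ} {Y₁ Y : ℝ}

lemma Rec.sum_endD (H : Rec h κ ρ ν S L β e n) (E : EndPt L β e n Y₁) (a b c : ℕ) :
    ∑ k ∈ Finset.Ico a b, endD e n Y₁ (k + c) ≤ 4 := by
  unfold endD
  rw [Finset.sum_add_distrib, ← Finset.mul_sum, ← Finset.mul_sum]
  simp only [add_assoc]
  rw [Finset.sum_Ico_add' (endT e n Y₁), Finset.sum_Ico_add' (endT e n Y₁)]
  linarith [H.sum_endT' E (Finset.Ico (a + c) (b + c)),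
    H.sum_endT' E (Finset.Ico (a + (c + 1)) (b + (c + 1)))]

lemma Rec.sum_endD' (H : Rec h κ ρ ν S L β e n) (E : EndPt L β e n Y₁) (a b c : ℕ)
    (hac : 3 ≤ a + c) : ∑ k ∈ Finset.Ico a b, endD e n Y₁ (k + c) ≤ 362 / 10 ^ 8 := by
  unfold endD
  rw [Finset.sum_add_distrib, ← Finset.mul_sum, ← Finset.mul_sum]
  simp only [add_assoc]
  rw [Finset.sum_Ico_add' (endT e n Y₁), Finset.sum_Ico_add' (endT e n Y₁)]
  have h1 := H.sum_endT E (Finset.Ico (a + c) (b + c)) (fun j hj => by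
    rw [Finset.mem_Ico] at hj; omega)
  have h2 := H.sum_endT E (Finset.Ico (a + (c + 1)) (b + (c + 1))) (fun j hj => by
    rw [Finset.mem_Ico] at hj; omega)
  linarith

set_option maxHeartbeats 1000000 in
/-- The leading coefficient of the residual. Its main part is a positive multiple of `n e n`, and the
sign of `(-Y) ^ (n + 1)` is positive because `n` is odd. -/
lemma Rec.lead (H : Rec h κ ρ ν S L β e n) (hS : S < (n + 2) * L) (hn : (10 : ℝ) ^ 9 ≤ n)
    (ho : Odd n) (E : EndPt L β e n Y₁) (hY : 0 < Y) (hY1 : Y ≤ Y₁) (hYs : 1000 * Y₁ ≤ 1)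
    (hL : 2 * L ≤ β) (he1 : e 1 ≤ 1 / 10) (h0 : 0 ≤ h) (h1 : h ≤ 1 / 10 ^ 4) :
    n * (e n * Y ^ (n + 1)) * (1 / 200)
      ≤ (polyN h κ ρ ν (polyE e n)).coeff (n + 1) * (-Y) ^ (n + 1) := by
  have hn2 : 10 ^ 9 ≤ n := by exact_mod_cast hn
  have pn := H.pos (m := n) (by omega) le_rfl
  have p1 := H.pos (m := n - 1) (by omega) (by omega)
  have s2 := H.sign hS (by omega) ho E hY hY1 (i := 2) (by omega)
  rw [(ho.add_even (by decide)).neg_one_pow, show n + 2 - 1 = n + 1 by omega] at s2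
  have t3 := H.sum_endT E {3} (by simp)
  rw [Finset.sum_singleton] at t3
  have t2 : endT e n Y₁ 2 = e 2 := by
    unfold endT cut
    rw [if_pos (by omega)]
    simp
  have hd : endD e n Y₁ 2 ≤ 2 * e 2 + 4 / 10 ^ 6 := by
    unfold endD
    rw [t2]
    linarith
  have hct := H.conv_top hS (by omega) hL he1
  have c0 := H.conv_nonneg (n + 1)
  have c1 := H.conv_nonneg n
  have hpen : n * e (n - 1) ≤ e n := by
    have := E.pen
    nlinarith
  rw [polyN_coeff _ _ _ _ _ _ (by omega) (by rw [polyE_coeff]; simp [H.e0]),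
    polyE_sq_coeff H.e0, polyE_sq_coeff H.e0, polyE_sq_coeff H.e0]
  simp only [polyE_coeff]
  rw [if_pos (show n + 1 - 1 ≤ n by omega), if_neg (show ¬ n + 1 ≤ n by omega),
    if_pos (show n + 1 - 2 ≤ n by omega),
    if_neg (show n + 1 ≠ 2 by omega), (ho.add_one).neg_pow, show n + 1 - 1 = n by omega,
    show n + 1 - 2 = n - 1 by omega, show n + 1 + 1 = n + 2 by omega]
  push_cast
  have hν : 0 < ν := by linarith [H.base.ν0]
  have hν1 : ν < 1 / 20 := by linarith [H.base.ν1]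
  have hρ : 0 < ρ := by linarith [H.base.ρ0]
  have hρ1 : ρ < 15.709 := by linarith [H.base.ρ1]
  have hκ : 0.125 < κ := by linarith [H.base.κ0]
  have hκ1 : κ < 1 := by linarith [H.base.κ1]
  have e2 := H.e2
  have e21 : e 2 < 0.0076 := by linarith [H.base.e21]
  have hP : 0 < Y ^ (n + 1) := by positivity
  have hνh : ν * h ≤ 1 / 10 ^ 5 := by nlinarith
  have hνh0 : 0 ≤ ν * h := by positivity
  -- the products of extreme coefficients
  have f1 : ρ / 2 * (n + 2) * convT e n (n + 2) * Y ^ (n + 1)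
      ≤ n * (e n * Y ^ (n + 1)) * 0.1195 := by
    have b1 : convT e n (n + 2) * Y ^ (n + 1) ≤ e n * Y ^ (n + 1) * endD e n Y₁ 2 := by linarith
    have b2 : ρ / 2 * (n + 2) * endD e n Y₁ 2 ≤ n * 0.1195 := by
      have d0 := H.endD_nonneg E.pos 2
      have : ρ / 2 * (n + 2) * endD e n Y₁ 2 ≤ 15.709 / 2 * (n + 2) * (2 * 0.0076 + 4 / 10 ^ 6) := by
        gcongr
        linarith
      linarith
    calc _ = ρ / 2 * (n + 2) * (convT e n (n + 2) * Y ^ (n + 1)) := by ring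
      _ ≤ ρ / 2 * (n + 2) * (e n * Y ^ (n + 1) * endD e n Y₁ 2) := by gcongr
      _ = (e n * Y ^ (n + 1)) * (ρ / 2 * (n + 2) * endD e n Y₁ 2) := by ring
      _ ≤ (e n * Y ^ (n + 1)) * (n * 0.1195) := by gcongr
      _ = _ := by ring
  have f2 : 0 ≤ ((1 + 5 / 6 * ν * ρ) / 2 * (n + 1) - 2 * ν * (1 + ρ)) * convT e n (n + 1) := by
    refine mul_nonneg ?_ c0
    nlinarith [mul_pos hν hρ]
  have f3 : (5 / 12 * ν * (n + 1 - 1) - 5 / 3 * ν) * convT e n n ≤ e n := by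
    have : (5 / 12 * ν * (n + 1 - 1) - 5 / 3 * ν) ≤ n := by nlinarith
    calc _ ≤ n * convT e n n := by gcongr
      _ ≤ n * e (n - 1) := by gcongr
      _ ≤ _ := hpen
  have f4 : κ * (5 / 6 * ν * (n + 1 - 2) - 2 * ν) * e (n - 1) ≤ e n := by
    have b1 : 0 ≤ (5 / 6 * ν * ((n : ℝ) + 1 - 2) - 2 * ν) := by nlinarith
    have b2 : (5 / 6 * ν * ((n : ℝ) + 1 - 2) - 2 * ν) ≤ n := by nlinarith
    calc _ ≤ 1 * n * e (n - 1) := by gcongr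
      _ ≤ _ := by linarith
  have f5 : n * 0.1249 * e n
      ≤ (5 / 6 + 2 * ν * h + (κ - 5 / 6 * ν * h) * (n + 1 - 1)) * e n := by
    have := mul_le_mul_of_nonneg_right (show 0.1249 ≤ κ - 5 / 6 * (ν * h) by linarith)
      (Nat.cast_nonneg (α := ℝ) n)
    refine mul_le_mul_of_nonneg_right ?_ pn.le
    clear * - this hνh0
    linarith
  have g3 := mul_le_mul_of_nonneg_right f3 hP.le
  have g4 := mul_le_mul_of_nonneg_right f4 hP.le
  have g5 := mul_le_mul_of_nonneg_right f5 hP.le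
  have g2 := mul_nonneg f2 hP.le
  have ga : (10 : ℝ) ^ 9 * (e n * Y ^ (n + 1)) ≤ n * (e n * Y ^ (n + 1)) := by gcongr
  have gb : 0 < e n * Y ^ (n + 1) := by positivity
  clear * - f1 g2 g3 g4 g5 ga gb
  generalize Y ^ (n + 1) = P at *
  generalize convT e n (n + 1) = C1 at *
  generalize convT e n (n + 2) = C2 at *
  generalize convT e n n = C0 at *
  generalize e n = a at *
  generalize e (n - 1) = b at *
  generalize (n : ℝ) = m at *
  norm_num at f1 g5 ⊢
  linarith

/-- Positivity of `gN` along the barrier. -/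
lemma Rec.gN_pos (H : Rec h κ ρ ν S L β e n) (hS : S < (n + 2) * L) (hn : (10 : ℝ) ^ 9 ≤ n)
    (ho : Odd n) (E : EndPt L β e n Y₁) (hY : 0 < Y) (hY1 : Y ≤ Y₁) (hYs : 10 ^ 7 * Y₁ ≤ 1)
    (hL : 2 * L ≤ β) (he1 : e 1 ≤ 1 / 10) (h0 : 0 ≤ h) (h1 : h ≤ 1 / 10 ^ 4)
    (hlow : ∀ m ≤ n, (polyN h κ ρ ν (polyE e n)).coeff m = 0) :
    0 < (polyN h κ ρ ν (polyE e n)).eval (-Y) := by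
  have hn2 : 10 ^ 9 ≤ n := by exact_mod_cast hn
  have pn := H.pos (m := n) (by omega) le_rfl
  obtain ⟨N, hN1, hN2⟩ : ∃ N, 1 ≤ N ∧ (polyN h κ ρ ν (polyE e n)).natDegree < n + 1 + N :=
    ⟨(polyN h κ ρ ν (polyE e n)).natDegree + 1, by omega, by omega⟩
  have hl := H.lead hS hn ho E hY hY1 (by linarith [E.pos]) hL he1 h0 h1
  have ht := fun k (hk : 1 ≤ k) => H.term hS (by omega) ho E hY hY1 (by linarith [E.pos]) hk
  generalize polyN h κ ρ ν (polyE e n) = p at *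
  have hs : p.eval (-Y) = p.coeff (n + 1) * (-Y) ^ (n + 1)
      + ∑ k ∈ Finset.Ico 1 N, p.coeff (n + 1 + k) * (-Y) ^ (n + 1 + k) := by
    rw [Polynomial.eval_eq_sum_range' hN2, Finset.sum_range_add, Finset.sum_eq_zero, zero_add,
      Finset.range_eq_Ico, Finset.sum_eq_sum_Ico_succ_bot hN1, add_zero]
    intro i hi
    rw [Finset.mem_range] at hi
    rw [hlow i (by omega), zero_mul]
  obtain ⟨a, ha⟩ : ∃ a, a = e n * Y ^ (n + 1) := ⟨_, rfl⟩
  have ha0 : 0 < a := by rw [ha]; positivity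
  rw [← ha] at hl ht
  have n0 : (0 : ℝ) < n := by linarith
  have hb : -(3 * n * a * (8 * (362 / 10 ^ 8) + Y * 4 + Y * 4))
      ≤ ∑ k ∈ Finset.Ico 1 N, p.coeff (n + 1 + k) * (-Y) ^ (n + 1 + k) := by
    refine le_trans ?_ (Finset.sum_le_sum fun k hk => ht k (Finset.mem_Ico.1 hk).1)
    rw [Finset.sum_neg_distrib, ← Finset.mul_sum, Finset.sum_add_distrib, Finset.sum_add_distrib,
      ← Finset.mul_sum, ← Finset.mul_sum, ← Finset.mul_sum]
    have s2 := H.sum_endD' E 1 N 2 (by norm_num)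
    have s1 := H.sum_endD E 1 N 1
    have s0 := H.sum_endD E 1 N 0
    simp only [add_zero] at s0
    gcongr
  have hY7 : Y ≤ 1 / 10 ^ 7 := by linarith
  have hna : 0 < n * a := by positivity
  have : n * a * Y ≤ n * a * (1 / 10 ^ 7) := by gcongr
  rw [hs]
  linarith

end

/-! ### The barrier for large odd `n` -/

section

variable {h κ ρ ν S L β : ℝ} {e : ℕ → ℝ} {n : ℕ} {Y₁ Y : ℝ}

lemma polyE_eval (hn : 3 ≤ n) (h0 : e 0 = 0) (x : ℝ) : (polyE e n).eval x
    = e 1 * x + e 2 * x ^ 2 + ∑ j ∈ Finset.Ico 3 n, e j * x ^ j + e n * x ^ n := by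
  unfold polyE
  rw [Polynomial.eval_finsetSum, Finset.sum_range_succ, Finset.range_eq_Ico,
    ← Finset.sum_Ico_consecutive _ (show 0 ≤ 3 by omega) hn]
  simp [Finset.sum_Ico_eq_sum_range, Finset.sum_range_succ, h0]

lemma polyE_eval' (hn : 3 ≤ n) (x : ℝ) : (polyE e n).derivative.eval x
    = e 1 + e 2 * (2 * x) + ∑ j ∈ Finset.Ico 3 n, e j * (j * x ^ (j - 1))
      + e n * (n * x ^ (n - 1)) := by
  unfold polyE
  rw [Polynomial.derivative_sum, Polynomial.eval_finsetSum, Finset.sum_range_succ,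
    Finset.range_eq_Ico, ← Finset.sum_Ico_consecutive _ (show 0 ≤ 3 by omega) hn]
  simp [Finset.sum_Ico_eq_sum_range, Finset.sum_range_succ, Polynomial.derivative_X_pow]

/-- Lower bound for `T (Y) = -p (-Y)`. -/
lemma Rec.T_low (H : Rec h κ ρ ν S L β e n) (hn : 3 ≤ n) (ho : Odd n) (E : EndPt L β e n Y₁)
    (hY : 0 < Y) (hY1 : Y ≤ Y₁) :
    Y * (e 1 - (e 2 + 1 / 10 ^ 8) * Y) + e n * Y ^ n ≤ -(polyE e n).eval (-Y) := by
  rw [polyE_eval hn H.e0, ho.neg_pow]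
  have : ∑ j ∈ Finset.Ico 3 n, e j * (-Y) ^ j ≤ Y ^ 2 * (1 / 10 ^ 8) := by
    refine le_trans ?_ (mul_le_mul_of_nonneg_left E.sum (sq_nonneg Y))
    rw [Finset.mul_sum]
    refine Finset.sum_le_sum fun j hj => ?_
    rw [Finset.mem_Ico] at hj
    have := H.pos (m := j) (by omega) (by omega)
    calc e j * (-Y) ^ j ≤ e j * Y ^ j := by
          refine mul_le_mul_of_nonneg_left ((le_abs_self _).trans ?_) this.le
          rw [abs_pow, abs_neg, abs_of_pos hY]
      _ = Y ^ 2 * (e j * Y ^ (j - 2)) := by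
          rw [mul_left_comm, ← pow_add, show 2 + (j - 2) = j by omega]
      _ ≤ _ := by gcongr
  linarith

/-- The barrier is not steeply decreasing. -/
lemma Rec.T'_low (H : Rec h κ ρ ν S L β e n) (hn : 3 ≤ n) (ho : Odd n) (E : EndPt L β e n Y₁)
    (hY : 0 < Y) (hY1 : Y ≤ Y₁) (hYs : 10 ^ 7 * Y₁ ≤ 1) :
    -(1 / 2) ≤ (polyE e n).derivative.eval (-Y) := by
  have hev : Even (n - 1) := by
    obtain ⟨k, rfl⟩ := ho
    exact ⟨k, by omega⟩
  rw [polyE_eval' hn, hev.neg_pow]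
  have hY0 := E.pos
  have hnY : n * Y₁ ≤ 3000 := by
    have h1 := mul_le_mul_of_nonneg_left E.le (Nat.cast_nonneg (α := ℝ) n)
    have h2 := H.D0
    have h3 := H.base.β0
    have h4 := H.base.S1
    have h5 := H.L0
    have h6 : β * (n * Y₁) ≤ β * 3000 := by linarith
    exact le_of_mul_le_mul_left h6 (by linarith)
  have : -(3000 * (1 / 10 ^ 8)) ≤ ∑ j ∈ Finset.Ico 3 n, e j * (j * (-Y) ^ (j - 1)) := by
    refine le_trans (neg_le_neg (mul_le_mul_of_nonneg_left E.sum (by norm_num))) ?_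
    rw [Finset.mul_sum, ← Finset.sum_neg_distrib]
    refine Finset.sum_le_sum fun j hj => ?_
    rw [Finset.mem_Ico] at hj
    have hp := H.pos (m := j) (by omega) (by omega)
    have hjn : (j : ℝ) ≤ n := by exact_mod_cast hj.2.le
    rw [neg_le]
    calc -(e j * (j * (-Y) ^ (j - 1))) = e j * (j * -(-Y) ^ (j - 1)) := by ring
      _ ≤ e j * (j * Y ^ (j - 1)) := by
          gcongr
          exact (neg_le_abs _).trans (by rw [abs_pow, abs_neg, abs_of_pos hY])
      _ ≤ e j * (n * Y₁ ^ (j - 1)) := by gcongr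
      _ = n * Y₁ * (e j * Y₁ ^ (j - 2)) := by
          rw [show j - 1 = j - 2 + 1 by omega, pow_succ]; ring
      _ ≤ _ := by gcongr
  have p : 0 ≤ e n * (n * Y ^ (n - 1)) := by
    have := H.pos (m := n) (by omega) le_rfl
    positivity
  have h1 := H.e1
  have h2 := H.base.e21
  have h3 := H.e2
  nlinarith

set_option exponentiation.threshold 1000 in
set_option maxHeartbeats 1000000 in
/-- The Taylor polynomial of the invariant curve is a barrier. -/
theorem Rec.barrier (H : Rec h κ ρ ν S L β e n) (hS : S < (n + 2) * L) (hn : (2 : ℝ) ^ 600 ≤ n)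
    (ho : Odd n) (hSd : S = 1 + h + ρ) (hL : L ^ 2 - S * L + h = 0) (h1 : e 1 = (h - L) / ρ) :
    ∃ T T' Y, Barrier h κ ρ (1 / 6) ν n T T' Y ∧ T' 0 * ρ = h - L := by
  obtain ⟨Y₁, E⟩ := H.endPt hS hn
  have hn12 : (10 : ℝ) ^ 12 ≤ n := by
    refine le_trans ?_ hn
    norm_num
  have hn3 : 3 ≤ n := by
    have : (3 : ℝ) ≤ n := le_trans (by norm_num) hn12
    exact_mod_cast this
  have L0 := H.L0
  have Y0 := E.pos
  have b := H.base
  have b1 := b.β0; have b2 := b.β1; have b3 := b.S0; have b4 := b.S1; have b5 := b.ρ0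
  have b6 := b.ρ1; have b7 := b.κ0; have b9 := b.ν0; have b10 := b.ν1
  have b11 := b.e20; have b12 := b.e21
  have hLs : 10 ^ 10 * L ≤ 1 := by
    have := mul_le_mul_of_nonneg_right hn12 L0.le
    have := H.D0
    linarith
  have hYs : 10 ^ 7 * Y₁ ≤ 1 := by
    have := E.le
    have : 7535 / 1000000 * Y₁ ≤ β * Y₁ := by gcongr; linarith
    linarith
  have hρe : ρ * e 1 = h - L := by
    rw [h1]
    have : ρ ≠ 0 := by linarith
    field_simp
  have hh : h = L * (S - L) := by linarith
  have hh1 : h ≤ L * 17 := by rw [hh]; gcongr; linarith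
  have hh0 : L * 16 ≤ h := by rw [hh]; gcongr; linarith
  have he1 : 0 < e 1 := by rw [h1]; exact div_pos (by linarith) (by linarith)
  have he1' : e 1 ≤ 1 / 10 := by nlinarith
  have hκ0 : 0 < κ := by linarith
  have low := polyN_low hSd (by linarith) (by omega) hL H.e0 h1 H.rcr
  have Npos : ∀ y, 0 < y → y ≤ Y₁ →
      0 < gN h κ ρ (1 / 6) ν y (-(polyE e n).eval (-y)) ((polyE e n).derivative.eval (-y)) := by
    intro y hy hy1
    rw [polyN_eval]
    exact H.gN_pos hS (le_trans (by norm_num) hn12) ho E hy hy1 hYs (by linarith) he1'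
      (by linarith) (by linarith) low
  obtain ⟨δ, hδ⟩ : ∃ δ, δ = min Y₁ (h / κ) := ⟨_, rfl⟩
  have hδ1 : δ ≤ Y₁ := by rw [hδ]; exact min_le_left _ _
  have hδ2 : κ * δ ≤ h := by
    have : δ ≤ h / κ := by rw [hδ]; exact min_le_right _ _
    rwa [le_div_iff₀' hκ0] at this
  have hδ0 : 0 < δ := by
    rw [hδ]
    have : 0 < h := by linarith
    positivity
  have hd : ∀ y, HasDerivAt (fun y => -(polyE e n).eval (-y))
      ((polyE e n).derivative.eval (-y)) y := by
    intro y
    have := ((polyE e n).hasDerivAt (-y)).comp y (hasDerivAt_neg y)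
    exact this.neg.congr_deriv (by ring)
  have hne : ∀ y ∈ Ioc 0 δ, -(polyE e n).eval (-y) ≠ 0 := by
    intro y hy h0
    have hN := Npos y hy.1 (hy.2.trans hδ1)
    have hT := H.T'_low hn3 ho E hy.1 (hy.2.trans hδ1) hYs
    rw [h0] at hN
    generalize (polyE e n).derivative.eval (-y) = T at *
    have hA : 0 ≤ y * (h - κ * y) := by
      have := mul_le_mul_of_nonneg_left hy.2 hκ0.le
      exact mul_nonneg hy.1.le (by linarith)
    have e1 : gN h κ ρ (1 / 6) ν y 0 T = -(y * (h - κ * y) * (1 + T * (1 + 5 / 6 * (ν * y)))) := by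
      unfold gN gP gQ; ring
    have hνy : ν * y ≤ 1 / 10 := by
      have := hy.2.trans hδ1
      have := hy.1
      nlinarith
    have hνy0 : 0 ≤ ν * y := by
      have := hy.1
      have : 0 < ν := by linarith
      positivity
    have : 0 ≤ 1 + T * (1 + 5 / 6 * (ν * y)) := by nlinarith
    have := mul_nonneg hA this
    linarith
  have hpos : ∀ y ∈ Ioc 0 δ, 0 < -(polyE e n).eval (-y) := by
    intro y hy
    by_contra hc
    push Not at hc
    obtain ⟨z, hz⟩ : ∃ z, z = min δ (e 1) := ⟨_, rfl⟩
    have hz0 : 0 < z := by rw [hz]; positivity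
    have hzδ : z ≤ δ := by rw [hz]; exact min_le_left _ _
    have hze : z ≤ e 1 := by rw [hz]; exact min_le_right _ _
    have hTz : 0 ≤ -(polyE e n).eval (-z) := by
      have h2 := H.T_low hn3 ho E hz0 (hzδ.trans hδ1)
      have h3 : 0 ≤ e n * z ^ n := by
        have := H.pos (m := n) (by omega) le_rfl
        positivity
      have h4 : 0 ≤ z * (e 1 - (e 2 + 1 / 10 ^ 8) * z) := by
        refine mul_nonneg hz0.le ?_
        have := mul_le_mul_of_nonneg_right (show e 2 + 1 / 10 ^ 8 ≤ 1 by linarith) hz0.le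
        linarith
      linarith
    have hcon : ContinuousOn (fun y => -(polyE e n).eval (-y)) (Ioc 0 δ) :=
      fun y _ => (hd y).continuousAt.continuousWithinAt
    obtain ⟨x, hx, hx0⟩ := (isPreconnected_Ioc (a := (0 : ℝ)) (b := δ)).intermediate_value hy ⟨hz0, hzδ⟩ hcon
      (show (0 : ℝ) ∈ Icc _ _ from ⟨hc, hTz⟩)
    exact hne x hx hx0
  refine ⟨fun y => -(polyE e n).eval (-y), fun y => (polyE e n).derivative.eval (-y), δ,
    ⟨hδ0, by linarith, fun y _ => hd y, hpos, fun y hy => Npos y hy.1 (hy.2.trans hδ1), ?_, ?_, ?_,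
      ?_⟩, ?_⟩
  · have hT := hpos δ ⟨hδ0, le_rfl⟩
    have hl := H.T_low hn3 ho E hδ0 hδ1
    show gQ h κ ρ δ (-(polyE e n).eval (-δ)) ≤ 0
    generalize -(polyE e n).eval (-δ) = T at *
    unfold gQ
    rcases le_total Y₁ (h / κ) with hc | hc
    · rw [min_eq_left hc] at hδ
      have hend : e n * δ ^ n = δ * L := by
        rw [← E.eq, hδ, mul_left_comm, ← pow_succ', show n - 1 + 1 = n by omega]
      rw [hend] at hl
      have h2 : ρ * (δ * (e 1 - (e 2 + 1 / 10 ^ 8) * δ) + δ * L) ≤ ρ * T := by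
        have : 0 < ρ := by linarith
        gcongr
      have h3 : ρ * (δ * (e 1 - (e 2 + 1 / 10 ^ 8) * δ) + δ * L) - (h * δ - κ * δ ^ 2)
          = δ * ((ρ - 1) * L + (κ - ρ * (e 2 + 1 / 10 ^ 8)) * δ) := by
        linear_combination δ * hρe
      have h4 : ρ * (e 2 + 1 / 10 ^ 8) ≤ 15.709 * (76 / 10000 + 1 / 10 ^ 8) := by
        gcongr <;> linarith
      have h5 : 0 ≤ δ * ((ρ - 1) * L + (κ - ρ * (e 2 + 1 / 10 ^ 8)) * δ) := by
        refine mul_nonneg hδ0.le (add_nonneg (mul_nonneg ?_ L0.le) (mul_nonneg ?_ hδ0.le))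
        · linarith
        · norm_num at h4; linarith
      have := mul_pos hδ0 hT
      linarith
    · rw [min_eq_right hc] at hδ
      have : h = κ * δ := by rw [hδ]; field_simp
      have : h * δ - κ * δ ^ 2 = 0 := by rw [this]; ring
      have := mul_pos (show 0 < ρ + δ by linarith) hT
      linarith
  · simp [polyE_eval hn3 H.e0, show n ≠ 0 by omega]
    rw [Finset.sum_eq_zero]
    intro j hj
    rw [Finset.mem_Ico] at hj
    simp [show j ≠ 0 by omega]
  · apply AnalyticAt.neg
    have := (analyticAt_id (𝕜 := ℝ) (z := (0 : ℝ))).neg.aeval_polynomial (polyE e n)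
    simpa [Polynomial.coe_aeval_eq_eval] using this
  · simp only [polyN_eval]
    obtain ⟨q, hq⟩ := Polynomial.X_pow_dvd_iff.2 (fun m hm => low m (Nat.lt_succ_iff.1 hm))
    rw [hq]
    simp only [Polynomial.eval_mul, Polynomial.eval_pow, Polynomial.eval_X]
    have h2 : (fun y : ℝ => q.eval (-y)) =O[𝓝[>] 0] fun _ => (1 : ℝ) := by
      have : Continuous fun y : ℝ => q.eval (-y) := by fun_prop
      exact ((this.tendsto 0).isBigO_one ℝ).mono nhdsWithin_le_nhds
    have h3 : (fun y : ℝ => (-y) ^ n.succ) =O[𝓝[>] 0] fun y => y ^ (n + 1) :=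
      Asymptotics.isBigO_of_le _ fun y => by rw [norm_pow, norm_neg, norm_pow]
    simpa using h3.mul h2
  · show (polyE e n).derivative.eval (-0) * ρ = h - L
    rw [neg_zero, ← Polynomial.coeff_zero_eq_eval_zero, Polynomial.coeff_derivative, polyE_coeff,
      if_pos (by omega)]
    push_cast
    linarith

end

section

set_option exponentiation.threshold 3000 in
set_option maxHeartbeats 1000000 in
/-- The barrier for `γ = 7/5`, that is `l = 5`, and large odd `n`. -/
theorem exists_barrier_odd {v : ℝ} {n : ℕ} (ha : Adm 5 v) (ho : Odd n) (hn : 2 ^ 2311 ≤ n)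
    (hk : n < kFun (1 + 2 / 5) (1 + cG 5 v)) (hk1 : kFun (1 + 2 / 5) (1 + cG 5 v) < n + 1) :
    ∃ T T' : ℝ → ℝ, ∃ Y₁, Barrier (cH 5 v) (cK 5 v) (cR 5 v) (cE 5) (cN 5 v) n T T' Y₁ ∧
      T' 0 * cR 5 v = cH 5 v - cL 5 v := by
  have hL2 := cL_eq ha
  have hL0 := cL_pos ha
  have hke := k_eq ha
  have hSe := cS_eq ha
  have hR := ha.hR
  have hH := ha.hh
  have hv0 := ha.v0
  have hv1 := ha.v1
  have fh : cH 5 v = 5 * (5 - v ^ 2) * (25 - 3 * v ^ 2)⁻¹ := by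
    unfold cH; rw [div_eq_mul_inv]; norm_num
  have fρ : cR 5 v = 6 * v * (3 * v + 5) * (25 - 3 * v ^ 2)⁻¹ := by
    unfold cR; rw [div_eq_mul_inv]; norm_num
  have fκ : cK 5 v = 5 * (v * (1 + v)) * (6 * (3 * v ^ 2 + 8 * v + 15))⁻¹ := by
    unfold cK; rw [mul_inv]; ring
  have fν : cN 5 v = (25 - 3 * v ^ 2) * (5 * (3 * v ^ 2 + 8 * v + 15))⁻¹ := by
    unfold cN; rw [div_eq_mul_inv]; norm_num
  have fη : cE 5 = 1 / 6 := by unfold cE; norm_num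
  have hSd : cS 5 v = 1 + cH 5 v + cR 5 v := rfl
  rw [fη]
  generalize cS 5 v = S at *
  generalize cH 5 v = h at *
  generalize cR 5 v = ρ at *
  generalize cL 5 v = L at *
  generalize cN 5 v = ν at *
  generalize cK 5 v = κ at *
  generalize kFun (1 + 2 / 5) (1 + cG 5 v) = k at *
  have hn' : (2 : ℝ) ^ 2311 ≤ n := by exact_mod_cast hn
  have n1 : (1000 : ℝ) ≤ n := by
    refine le_trans ?_ hn'
    norm_num
  have hn3 : 1000 ≤ n := by exact_mod_cast n1
  have hd : 0 < 25 - 3 * v ^ 2 := by linarith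
  have hS17 : S ≤ 17 := by
    rw [hSe, div_le_iff₀ (by linarith)]
    nlinarith
  -- `S - L = k L` gives the two inequalities between `n`, `S` and `L`
  have hD : (n + 1) * L < S := by
    have := mul_lt_mul_of_pos_right hk hL0
    linarith
  have hS : S < (n + 2) * L := by
    have := mul_lt_mul_of_pos_right hk1 hL0
    linarith
  have hh : h = L * (S - L) := by linarith
  have hh1 : n * h ≤ 17 * 17 := by
    have : n * L ≤ 17 := by linarith
    have h2 : 0 ≤ S - L := by nlinarith
    calc n * h = (n * L) * (S - L) := by rw [hh]; ring
      _ ≤ 17 * 17 := by gcongr; linarith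
  have hvh : n * (5 - v ^ 2) ≤ 1445 := by
    have : 5 - v ^ 2 ≤ 5 * h := by
      rw [fh, ← div_eq_mul_inv, ← mul_div_assoc, le_div_iff₀ hd]
      nlinarith
    nlinarith
  have hv5 : (5 - v ^ 2) * 2 ^ 2300 ≤ 1 := by
    have h1 : (2 : ℝ) ^ 2311 = 2048 * 2 ^ 2300 := by rw [pow_add _ 2300 11]; norm_num
    have h2 : (2 : ℝ) ^ 2311 * (5 - v ^ 2) ≤ 1445 :=
      le_trans (mul_le_mul_of_nonneg_right hn' (by linarith)) hvh
    rw [h1] at h2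
    linarith
  have hv2 : 2 ≤ v := by
    by_contra hc
    push Not at hc
    have : v ^ 2 < 4 := by nlinarith
    nlinarith
  have hS6 : 6 ≤ S := by
    rw [hSe, le_div_iff₀ (by linarith)]
    nlinarith
  have hLs : L ≤ 1 := by nlinarith
  have hLh : L ≤ h := by rw [hh]; nlinarith
  have hρ1 : 1 ≤ ρ := by nlinarith
  obtain ⟨e, he⟩ : ∃ e, e = epsE h κ ρ ν S L := ⟨_, rfl⟩
  have e0 : e 0 = 0 := by rw [he, epsE_zero]
  have e1 : e 1 = (h - L) / ρ := by rw [he, epsE_one]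
  have e1n : 0 ≤ e 1 := by rw [e1]; exact div_nonneg (by linarith) (by linarith)
  have e1h : e 1 ≤ h := by
    rw [e1, div_le_iff₀ hR]
    nlinarith
  have hrec : ∀ m : ℕ, 2 ≤ m → m ≤ n → (S - (m + 1) * L) * e m = rhsE h κ ρ ν e m := by
    intro m h2 hm
    rw [he]
    refine epsE_rec h2 (ne_of_gt ?_)
    have : (m : ℝ) ≤ n := by exact_mod_cast hm
    have : ((m : ℝ) + 1) * L ≤ (n + 1) * L := by gcongr
    linarith
  obtain ⟨-, st, b⟩ := base_sound (f := 498) (by norm_num) (mem_V5 hv0 hv1 hv5) fh fρ fκ fν hH.le hSd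
    hL0.le hLh e0 e1n e1h (fun m h1 h2 => hrec m h1 (by omega)) rfl base_test
  have H : Rec h κ ρ ν S L _ e n :=
    ⟨b, hL0, hD, e0, e1n, rfl, hrec, fun m h1 h2 => st m h1 (by omega)⟩
  refine H.barrier hS (le_trans ?_ hn') ho hSd hL2 e1
  exact pow_le_pow_right₀ (by norm_num) (by norm_num)

end

set_option exponentiation.threshold 3000 in
theorem statement9 :
    ∃ N : ℕ, ∀ (γ : ℝ) (n : ℕ), 1 < γ →
      (n = 3 ∨ (γ = 7 / 5 ∧ Odd n ∧ N ≤ n)) →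
      ∀ r : ℝ, 1 < r → r < rStar γ → (n : ℝ) < kFun γ r → kFun γ r < (n : ℝ) + 1 →
      ∃ W Z : ℝ → ℝ,
        ContDiffOn ℝ (⊤ : ℕ∞) W (Set.Ici 0) ∧ ContDiffOn ℝ (⊤ : ℕ∞) Z (Set.Ici 0) ∧
        (∀ ξ ∈ Set.Ici (0 : ℝ),
          DW γ (W ξ) (Z ξ) * derivWithin W (Set.Ici 0) ξ = NW γ r (W ξ) (Z ξ) ∧
          DZ γ (W ξ) (Z ξ) * derivWithin Z (Set.Ici 0) ξ = NZ γ r (W ξ) (Z ξ)) ∧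
        (∃ δ : ℝ, 0 < δ ∧ ∀ ξ ∈ Set.Ico (0 : ℝ) δ, W ξ = Wfun γ r ξ ∧ Z ξ = Zfun γ r ξ) ∧
        Tendsto (fun ξ : ℝ => (W ξ, Z ξ)) atTop (nhds ((0 : ℝ), (0 : ℝ))) ∧
        (∀ ξ : ℝ, 0 < ξ → 0 < DW γ (W ξ) (Z ξ) ∧ 0 < DZ γ (W ξ) (Z ξ)) := by
  refine ⟨2 ^ 2311, fun γ n hγ hn r hr hr1 hk hk1 => ?_⟩
  obtain ⟨l, v, ha, rfl, rfl⟩ := exists_param hγ hr hr1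
  rcases hn with rfl | ⟨h7, ho, hN⟩
  · obtain ⟨T, T', Y₁, hB, hT⟩ := exists_barrier3 ha (by exact_mod_cast hk)
      (by push_cast at hk1; linarith)
    exact main_of_barrier ha hB hT hk hk1
  · obtain rfl : l = 5 := by
      have := ha.l0
      field_simp at h7
      linarith
    obtain ⟨T, T', Y₁, hB, hT⟩ := exists_barrier_odd ha ho hN hk hk1
    exact main_of_barrier ha hB hT hk hk1

end SelfSimilarImplosion
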